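/- Let ξ ∈ L^∞_{𝓕_T}(Ω;ℝᵏ) and let f = f(t,y,z) satisfy: f(·,0,0) ∈ L^∞_𝔽(Ω;L¹(s,T;ℝᵏ)) and |f(·,α₁,α₂) − f(·,β₁,β₂)| ≤ f₁(·)|α₁−β₁| + f₂(·)|α₂−β₂| for all α₁,α₂,β₁,β₂ ∈ ℝᵏ, where f₁ ∈ L^∞_𝔽(Ω;L¹(s,T;ℝ)) and f₂ ∈ L^∞_𝔽(Ω;L²(s,T;ℝ)). Then for every p > 1 the backward stochastic differential equation dy = f(t,y,z)dt + z dW on [s,T] with y(T) = ξ admits one and only one 𝔽-adapted solution (y,z) ∈ L^∞_𝔽(Ω;C([s,T];ℝᵏ)) × L^p_𝔽(Ω;L²(s,T;ℝᵏ)). -/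

import Mathlib

/-!
A solution of the equation with generator `f` is a fixed point of the Picard map, which sends
`(y, z)` to the solution of the equation whose drift is frozen to `f(·, y, z)`. Since the Lipschitz
coefficients are only integrable (resp. square-integrable) in time, the natural distance is not an
`L²` norm but a weighted conditional one: the class `Bmo` controls `E[∫_t^T g dr | 𝓕_t]` uniformly
in `t` and `ω`, and with `g = quad`, built on the weight `exp (17 ∫ (α + β²))`, the Picard map
divides the squared distance by `16` (`Gen.contract`). Its iterates converge (`Gen.limit`) to a
solution with `y` bounded and `E[∫_t^T |z|² dr | 𝓕_t]` bounded (`Gen.exists_sol`). Bounded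
conditional tails give all moments of `∫ |z|²` (`Bmo.moments`), so this one solution works for
every `p`.

*Energy inequality.* Every estimate comes from `Energy.main`, the consequence of the Itô formula
for `exp (∫ a) |Y|²`. No Itô calculus is needed: an Itô integral `M` of `z` comes with the martingale
`M² - ∫ z²`, and the product of a martingale with an adapted process of finite variation is handled
by integration by parts (`ibp`). As the drift is not known to be integrable on `[s,T] × Ω`, the
formula is applied with an additional exponential damping factor, which is then removed in the limit.

*Frozen drift.* The equation with frozen drift is solved by the martingale representation theorem
(`representation`, `linear_bsde`). Stochastic integrals are encoded by `Good`: continuous martingales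
with prescribed covariation against every square-integrable martingale having an absolutely
continuous covariation with `W`. They contain the integrals of elementary processes (`Good.simple`)
and their terminal values are closed in `L²` (`Good.closed`, through Doob's inequality `doob`). An
`L²` variable orthogonal to all of them vanishes when multiplied by exponentials of Brownian
increments and integrated (`Orth.exp_incr`, `Orth.finite`), hence is zero because `𝓕_T` is generated
by `W` (`Orth.eq_zero`).

*Uniqueness.* For any bounded solution the energy inequality yields `E ∫ |z|² < ∞` (`Cand.psi2`),
whatever the exponent `p`. Its martingale part is then an admissible test martingale in `Good`, so
its covariation with the constructed solution is known, and the energy inequality for the difference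
of the two solutions forces it to vanish (`Cand.unique`).
-/

open MeasureTheory ProbabilityTheory Filter Set Matrix

noncomputable section

namespace SLQ

variable {Ω : Type} {mΩ : MeasurableSpace Ω}

/-- Squared Euclidean norm of a vector. -/
def enorm2 {k : ℕ} (v : Fin k → ℝ) : ℝ := ∑ i, (v i) ^ 2

/-- Squared Frobenius norm of a matrix. -/
def frob2 {k l : ℕ} (M : Matrix (Fin k) (Fin l) ℝ) : ℝ := ∑ i, ∑ j, (M i j) ^ 2

/-- The martingale property on the time interval `[s,T]`. -/
def MartOn (μ : Measure Ω) (F : Filtration ℝ mΩ) (s T : ℝ) (M : ℝ → Ω → ℝ) : Prop :=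
  (∀ t ∈ Icc s T, Measurable[F t] (M t)) ∧
  (∀ t ∈ Icc s T, Integrable (M t) μ) ∧
  ∀ t₁ t₂, s ≤ t₁ → t₁ ≤ t₂ → t₂ ≤ T → μ[M t₂ | F t₁] =ᵐ[μ] M t₁

/-- `W` is a standard one-dimensional Brownian motion and `F` is its natural filtration. -/
structure IsBrownian (μ : Measure Ω) (F : Filtration ℝ mΩ) (W : ℝ → Ω → ℝ) : Prop where
  meas : ∀ t, Measurable[F t] (W t)
  cont : ∀ᵐ ω ∂μ, Continuous fun t => W t ω
  start : ∀ᵐ ω ∂μ, W 0 ω = 0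
  gauss : ∀ s t : ℝ, 0 ≤ s → s ≤ t →
    Measure.map (fun ω => W t ω - W s ω) μ = gaussianReal 0 (Real.toNNReal (t - s))
  indep : ∀ s t : ℝ, 0 ≤ s → s ≤ t →
    Indep (MeasurableSpace.comap (fun ω => W t ω - W s ω) (borel ℝ)) (F s) μ
  natural : ∀ t : ℝ, 0 ≤ t →
    F t = ⨆ s ∈ Icc (0:ℝ) t, MeasurableSpace.comap (fun ω => W s ω) (borel ℝ)

/-- `M = ∫_s^· φ dW` on `[s,T]`: `M` is a continuous square-integrable martingale starting from `0`
at time `s`, whose quadratic variation is `∫_s^· φ² dr` and whose covariation with `W` is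
`∫_s^· φ dr`.  This characterizes the Itô integral of `φ` with respect to `W`. -/
def IsItoInt (μ : Measure Ω) (F : Filtration ℝ mΩ) (W : ℝ → Ω → ℝ) (s T : ℝ)
    (φ M : ℝ → Ω → ℝ) : Prop :=
  (∀ᵐ ω ∂μ, M s ω = 0) ∧
  (∀ᵐ ω ∂μ, ContinuousOn (fun t => M t ω) (Icc s T)) ∧
  MartOn μ F s T M ∧
  MartOn μ F s T (fun t ω => M t ω * W t ω - ∫ r in s..t, φ r ω) ∧
  MartOn μ F s T (fun t ω => (M t ω) ^ 2 - ∫ r in s..t, (φ r ω) ^ 2)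

/-- Componentwise Itô integral for `ℝᵏ`-valued integrands. -/
def IsItoIntVec {k : ℕ} (μ : Measure Ω) (F : Filtration ℝ mΩ) (W : ℝ → Ω → ℝ) (s T : ℝ)
    (φ M : ℝ → Ω → Fin k → ℝ) : Prop :=
  ∀ i, IsItoInt μ F W s T (fun t ω => φ t ω i) (fun t ω => M t ω i)

/-- `x` is a solution of the SDE `dx = b dt + σ dW` on `[s,T]` with `x(s) = η`. -/
def SolvesSDE {k : ℕ} (μ : Measure Ω) (F : Filtration ℝ mΩ) (W : ℝ → Ω → ℝ) (s T : ℝ)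
    (b σ : ℝ → Ω → Fin k → ℝ) (η : Ω → Fin k → ℝ) (x : ℝ → Ω → Fin k → ℝ) : Prop :=
  (∀ t ∈ Icc s T, ∀ i, Measurable[F t] fun ω => x t ω i) ∧
  (∀ᵐ ω ∂μ, ContinuousOn (fun t => x t ω) (Icc s T)) ∧
  (∀ᵐ ω ∂μ, IntegrableOn (fun r => b r ω) (Icc s T)) ∧
  ∃ M : ℝ → Ω → Fin k → ℝ, IsItoIntVec μ F W s T σ M ∧
    ∀ᵐ ω ∂μ, ∀ t ∈ Icc s T, x t ω = η ω + (∫ r in s..t, b r ω) + M t ω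

/-- `(y,z)` is a solution of the BSDE `dy = f dt + z dW` on `[s,T]` with `y(T) = ξ`. -/
def SolvesBSDE {k : ℕ} (μ : Measure Ω) (F : Filtration ℝ mΩ) (W : ℝ → Ω → ℝ) (s T : ℝ)
    (f : ℝ → Ω → Fin k → ℝ) (ξ : Ω → Fin k → ℝ) (y z : ℝ → Ω → Fin k → ℝ) : Prop :=
  (∀ t ∈ Icc s T, ∀ i, Measurable[F t] fun ω => y t ω i) ∧
  (∀ t ∈ Icc s T, ∀ i, Measurable[F t] fun ω => z t ω i) ∧
  (∀ᵐ ω ∂μ, ContinuousOn (fun t => y t ω) (Icc s T)) ∧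
  (∀ᵐ ω ∂μ, IntegrableOn (fun r => f r ω) (Icc s T)) ∧
  ∃ M : ℝ → Ω → Fin k → ℝ, IsItoIntVec μ F W s T z M ∧
    ∀ᵐ ω ∂μ, ∀ t ∈ Icc s T, y t ω = ξ ω - (∫ r in t..T, f r ω) - (M T ω - M t ω)

/-! ### Spaces of processes -/

/-- `φ ∈ L^∞_𝔽(Ω; L¹(a,b; ℝ^{k×l}))`. -/
def MatMemLinfL1 {k l : ℕ} (μ : Measure Ω) (F : Filtration ℝ mΩ) (a b : ℝ)
    (φ : ℝ → Ω → Matrix (Fin k) (Fin l) ℝ) : Prop :=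
  (∀ t i j, Measurable[F t] fun ω => φ t ω i j) ∧
  (∀ i j, Measurable fun p : ℝ × Ω => φ p.1 p.2 i j) ∧
  ∃ c : ℝ, ∀ᵐ ω ∂μ, (∀ i j, IntegrableOn (fun r => φ r ω i j) (Icc a b)) ∧
    (∫ r in a..b, Real.sqrt (frob2 (φ r ω))) ≤ c

/-- `φ ∈ L^∞_𝔽(Ω; L²(a,b; ℝ^{k×l}))`. -/
def MatMemLinfL2 {k l : ℕ} (μ : Measure Ω) (F : Filtration ℝ mΩ) (a b : ℝ)
    (φ : ℝ → Ω → Matrix (Fin k) (Fin l) ℝ) : Prop :=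
  (∀ t i j, Measurable[F t] fun ω => φ t ω i j) ∧
  (∀ i j, Measurable fun p : ℝ × Ω => φ p.1 p.2 i j) ∧
  ∃ c : ℝ, ∀ᵐ ω ∂μ, (IntegrableOn (fun r => frob2 (φ r ω)) (Icc a b)) ∧
    (∫ r in a..b, frob2 (φ r ω)) ≤ c

/-- `φ ∈ L^∞_𝔽(a,b; ℝ^{k×l})` (essentially bounded in `(t,ω)`). -/
def MatMemLinfLinf {k l : ℕ} (μ : Measure Ω) (F : Filtration ℝ mΩ) (a b : ℝ)
    (φ : ℝ → Ω → Matrix (Fin k) (Fin l) ℝ) : Prop :=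
  (∀ t i j, Measurable[F t] fun ω => φ t ω i j) ∧
  (∀ i j, Measurable fun p : ℝ × Ω => φ p.1 p.2 i j) ∧
  ∃ c : ℝ, ∀ᵐ p ∂(((volume : Measure ℝ).restrict (Icc a b)).prod μ), frob2 (φ p.1 p.2) ≤ c

/-- `Λ ∈ L^p_𝔽(Ω; L²(a,b; ℝ^{k×l}))` for all `p ≥ 1`. -/
def MatMemLpAllL2 {k l : ℕ} (μ : Measure Ω) (F : Filtration ℝ mΩ) (a b : ℝ)
    (φ : ℝ → Ω → Matrix (Fin k) (Fin l) ℝ) : Prop :=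
  (∀ t i j, Measurable[F t] fun ω => φ t ω i j) ∧
  (∀ i j, Measurable fun p : ℝ × Ω => φ p.1 p.2 i j) ∧
  (∀ᵐ ω ∂μ, IntegrableOn (fun r => frob2 (φ r ω)) (Icc a b)) ∧
  ∀ p : ℝ, 1 ≤ p →
    (∫⁻ ω, ENNReal.ofReal ((∫ r in a..b, frob2 (φ r ω)) ^ (p / 2)) ∂μ) < ⊤

/-- `P ∈ L^∞_𝔽(Ω; C([a,b]; ℝ^{k×k}))`. -/
def MatMemLinfC {k : ℕ} (μ : Measure Ω) (F : Filtration ℝ mΩ) (a b : ℝ)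
    (φ : ℝ → Ω → Matrix (Fin k) (Fin k) ℝ) : Prop :=
  (∀ t i j, Measurable[F t] fun ω => φ t ω i j) ∧
  (∀ᵐ ω ∂μ, ∀ i j, ContinuousOn (fun t => φ t ω i j) (Icc a b)) ∧
  ∃ c : ℝ, ∀ᵐ ω ∂μ, ∀ t ∈ Icc a b, frob2 (φ t ω) ≤ c

/-- `u ∈ L²_𝔽(s,T; ℝᵏ)`. -/
def VecMemL2 {k : ℕ} (μ : Measure Ω) (F : Filtration ℝ mΩ) (s T : ℝ)
    (u : ℝ → Ω → Fin k → ℝ) : Prop :=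
  (∀ t i, Measurable[F t] fun ω => u t ω i) ∧
  (∀ i, Measurable fun p : ℝ × Ω => u p.1 p.2 i) ∧
  (∫⁻ p, ENNReal.ofReal (enorm2 (u p.1 p.2)) ∂(((volume : Measure ℝ).restrict (Icc s T)).prod μ)) < ⊤

/-- `x ∈ L²_𝔽(Ω; C([s,T]; ℝᵏ))`. -/
def VecMemL2C {k : ℕ} (μ : Measure Ω) (F : Filtration ℝ mΩ) (s T : ℝ)
    (x : ℝ → Ω → Fin k → ℝ) : Prop :=
  (∀ t ∈ Icc s T, ∀ i, Measurable[F t] fun ω => x t ω i) ∧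
  (∀ᵐ ω ∂μ, ContinuousOn (fun t => x t ω) (Icc s T)) ∧
  (∫⁻ ω, ⨆ t : Icc s T, ENNReal.ofReal (enorm2 (x t ω)) ∂μ) < ⊤

/-- `η ∈ L²_{𝓕_s}(Ω; ℝᵏ)`. -/
def MemL2Rnd {k : ℕ} (μ : Measure Ω) (F : Filtration ℝ mΩ) (s : ℝ) (η : Ω → Fin k → ℝ) : Prop :=
  (∀ i, Measurable[F s] fun ω => η ω i) ∧ (∫⁻ ω, ENNReal.ofReal (enorm2 (η ω)) ∂μ) < ⊤

end SLQ
namespace SLQ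

variable {Ω : Type} {mΩ : MeasurableSpace Ω}

/-! ### The stochastic linear quadratic problem -/

/-- The state equation `dx = (Ax+Bu)dr + (Cx+Du)dW` on `[s,T]`, `x(s)=η`. -/
def SolvesState {n m : ℕ} (μ : Measure Ω) (F : Filtration ℝ mΩ) (W : ℝ → Ω → ℝ) (s T : ℝ)
    (A : ℝ → Ω → Matrix (Fin n) (Fin n) ℝ) (B : ℝ → Ω → Matrix (Fin n) (Fin m) ℝ)
    (C : ℝ → Ω → Matrix (Fin n) (Fin n) ℝ) (D : ℝ → Ω → Matrix (Fin n) (Fin m) ℝ)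
    (η : Ω → Fin n → ℝ) (u : ℝ → Ω → Fin m → ℝ) (x : ℝ → Ω → Fin n → ℝ) : Prop :=
  SolvesSDE μ F W s T
    (fun r ω => A r ω *ᵥ x r ω + B r ω *ᵥ u r ω)
    (fun r ω => C r ω *ᵥ x r ω + D r ω *ᵥ u r ω) η x

/-- The quadratic cost functional
`J(s,η;u) = ½ E[∫_s^T (⟨Qx,x⟩+⟨Ru,u⟩) dr + ⟨Gx(T),x(T)⟩]`. -/
def cost {n m : ℕ} (μ : Measure Ω) (s T : ℝ)
    (Q : ℝ → Ω → Matrix (Fin n) (Fin n) ℝ) (R : ℝ → Ω → Matrix (Fin m) (Fin m) ℝ)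
    (G : Ω → Matrix (Fin n) (Fin n) ℝ)
    (u : ℝ → Ω → Fin m → ℝ) (x : ℝ → Ω → Fin n → ℝ) : ℝ :=
  (1/2) * ∫ ω, ((∫ r in s..T,
      ((Q r ω *ᵥ x r ω) ⬝ᵥ x r ω + (R r ω *ᵥ u r ω) ⬝ᵥ u r ω))
    + (G ω *ᵥ x T ω) ⬝ᵥ x T ω) ∂μ

/-- Assumption (AS1) on the coefficients of Problem (SLQ). -/
structure AS1 {n m : ℕ} (μ : Measure Ω) (F : Filtration ℝ mΩ) (T : ℝ)
    (A : ℝ → Ω → Matrix (Fin n) (Fin n) ℝ) (B : ℝ → Ω → Matrix (Fin n) (Fin m) ℝ)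
    (C : ℝ → Ω → Matrix (Fin n) (Fin n) ℝ) (D : ℝ → Ω → Matrix (Fin n) (Fin m) ℝ)
    (Q : ℝ → Ω → Matrix (Fin n) (Fin n) ℝ) (R : ℝ → Ω → Matrix (Fin m) (Fin m) ℝ)
    (G : Ω → Matrix (Fin n) (Fin n) ℝ) : Prop where
  hA : MatMemLinfL1 μ F 0 T A
  hB : MatMemLinfL2 μ F 0 T B
  hC : MatMemLinfL2 μ F 0 T C
  hD : MatMemLinfLinf μ F 0 T D
  hQ : MatMemLinfL1 μ F 0 T Q
  hQsymm : ∀ r ω, (Q r ω)ᵀ = Q r ω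
  hR : MatMemLinfLinf μ F 0 T R
  hRsymm : ∀ r ω, (R r ω)ᵀ = R r ω
  hG : ∀ i j, Measurable[F T] fun ω => G ω i j
  hGbdd : ∃ c : ℝ, ∀ᵐ ω ∂μ, frob2 (G ω) ≤ c
  hGsymm : ∀ ω, (G ω)ᵀ = G ω

/-- `Θ` is an optimal feedback operator for Problem (SLQ) on `[0,T]`:
`Θ ∈ L^∞_𝔽(Ω;L²(0,T;ℝ^{m×n}))` and, for every initial pair `(s,η)`, every closed-loop state `x̄`
(which solves the state equation with control `Θx̄`, the latter being admissible) and every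
admissible control `u` with state `x`, one has `J(s,η;Θx̄) ≤ J(s,η;u)`. -/
def IsOptimalFeedback {n m : ℕ} (μ : Measure Ω) (F : Filtration ℝ mΩ) (W : ℝ → Ω → ℝ) (T : ℝ)
    (A : ℝ → Ω → Matrix (Fin n) (Fin n) ℝ) (B : ℝ → Ω → Matrix (Fin n) (Fin m) ℝ)
    (C : ℝ → Ω → Matrix (Fin n) (Fin n) ℝ) (D : ℝ → Ω → Matrix (Fin n) (Fin m) ℝ)
    (Q : ℝ → Ω → Matrix (Fin n) (Fin n) ℝ) (R : ℝ → Ω → Matrix (Fin m) (Fin m) ℝ)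
    (G : Ω → Matrix (Fin n) (Fin n) ℝ)
    (Θ : ℝ → Ω → Matrix (Fin m) (Fin n) ℝ) : Prop :=
  MatMemLinfL2 μ F 0 T Θ ∧
  ∀ s, 0 ≤ s → s < T → ∀ η : Ω → Fin n → ℝ, MemL2Rnd μ F s η →
    ∀ xb : ℝ → Ω → Fin n → ℝ,
      SolvesState μ F W s T A B C D η (fun r ω => Θ r ω *ᵥ xb r ω) xb →
      VecMemL2C μ F s T xb →
      VecMemL2 μ F s T (fun r ω => Θ r ω *ᵥ xb r ω) ∧
      ∀ (u : ℝ → Ω → Fin m → ℝ) (x : ℝ → Ω → Fin n → ℝ),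
        VecMemL2 μ F s T u → SolvesState μ F W s T A B C D η u x → VecMemL2C μ F s T x →
        cost μ s T Q R G (fun r ω => Θ r ω *ᵥ xb r ω) xb ≤ cost μ s T Q R G u x

/-! ### The backward stochastic Riccati equation -/

/-- `N` is the Moore–Penrose pseudo-inverse of `M`. -/
def IsMPInv {k l : ℕ} (M : Matrix (Fin k) (Fin l) ℝ) (N : Matrix (Fin l) (Fin k) ℝ) : Prop :=
  M * N * M = M ∧ N * M * N = N ∧ (M * N)ᵀ = M * N ∧ (N * M)ᵀ = N * M

/-- `K := R + DᵀPD`. -/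
def Kof {n m : ℕ} (D : ℝ → Ω → Matrix (Fin n) (Fin m) ℝ)
    (R : ℝ → Ω → Matrix (Fin m) (Fin m) ℝ) (P : ℝ → Ω → Matrix (Fin n) (Fin n) ℝ)
    (t : ℝ) (ω : Ω) : Matrix (Fin m) (Fin m) ℝ :=
  R t ω + (D t ω)ᵀ * P t ω * D t ω

/-- `L := BᵀP + Dᵀ(PC+Λ)`. -/
def Lof {n m : ℕ} (B : ℝ → Ω → Matrix (Fin n) (Fin m) ℝ)
    (C : ℝ → Ω → Matrix (Fin n) (Fin n) ℝ) (D : ℝ → Ω → Matrix (Fin n) (Fin m) ℝ)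
    (P Λ : ℝ → Ω → Matrix (Fin n) (Fin n) ℝ) (t : ℝ) (ω : Ω) : Matrix (Fin m) (Fin n) ℝ :=
  (B t ω)ᵀ * P t ω + (D t ω)ᵀ * (P t ω * C t ω + Λ t ω)

/-- `(P,Λ)` solves the backward stochastic Riccati equation
`dP = -(PA + AᵀP + ΛC + CᵀΛ + CᵀPC + Q - Lᵀ K† L) dt + Λ dW`, `P(T) = G`,
where `Kd` is a given process substituted for `K†` in the drift. -/
def SolvesRiccatiGen {n m : ℕ} (μ : Measure Ω) (F : Filtration ℝ mΩ) (W : ℝ → Ω → ℝ) (T : ℝ)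
    (A : ℝ → Ω → Matrix (Fin n) (Fin n) ℝ) (B : ℝ → Ω → Matrix (Fin n) (Fin m) ℝ)
    (C : ℝ → Ω → Matrix (Fin n) (Fin n) ℝ) (D : ℝ → Ω → Matrix (Fin n) (Fin m) ℝ)
    (Q : ℝ → Ω → Matrix (Fin n) (Fin n) ℝ) (R : ℝ → Ω → Matrix (Fin m) (Fin m) ℝ)
    (G : Ω → Matrix (Fin n) (Fin n) ℝ)
    (P Λ : ℝ → Ω → Matrix (Fin n) (Fin n) ℝ)
    (Kd : ℝ → Ω → Matrix (Fin m) (Fin m) ℝ) : Prop :=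
  ∃ M : ℝ → Ω → Matrix (Fin n) (Fin n) ℝ,
    (∀ i j, IsItoInt μ F W 0 T (fun t ω => Λ t ω i j) (fun t ω => M t ω i j)) ∧
    (∀ᵐ ω ∂μ, ∀ i j, IntegrableOn (fun r =>
        (P r ω * A r ω + (A r ω)ᵀ * P r ω + Λ r ω * C r ω + (C r ω)ᵀ * Λ r ω
          + (C r ω)ᵀ * P r ω * C r ω + Q r ω
          - (Lof B C D P Λ r ω)ᵀ * Kd r ω * Lof B C D P Λ r ω) i j) (Icc 0 T)) ∧
    ∀ᵐ ω ∂μ, ∀ t ∈ Icc (0:ℝ) T, ∀ i j,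
      P t ω i j = G ω i j
        + (∫ r in t..T,
            (P r ω * A r ω + (A r ω)ᵀ * P r ω + Λ r ω * C r ω + (C r ω)ᵀ * Λ r ω
              + (C r ω)ᵀ * P r ω * C r ω + Q r ω
              - (Lof B C D P Λ r ω)ᵀ * Kd r ω * Lof B C D P Λ r ω) i j)
        - (M T ω i j - M t ω i j)

/-- `(P,Λ)` solves the backward stochastic Riccati equation, with `Kd` being the pointwise
Moore–Penrose pseudo-inverse of `K = R + DᵀPD`. -/
def SolvesRiccati {n m : ℕ} (μ : Measure Ω) (F : Filtration ℝ mΩ) (W : ℝ → Ω → ℝ) (T : ℝ)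
    (A : ℝ → Ω → Matrix (Fin n) (Fin n) ℝ) (B : ℝ → Ω → Matrix (Fin n) (Fin m) ℝ)
    (C : ℝ → Ω → Matrix (Fin n) (Fin n) ℝ) (D : ℝ → Ω → Matrix (Fin n) (Fin m) ℝ)
    (Q : ℝ → Ω → Matrix (Fin n) (Fin n) ℝ) (R : ℝ → Ω → Matrix (Fin m) (Fin m) ℝ)
    (G : Ω → Matrix (Fin n) (Fin n) ℝ)
    (P Λ : ℝ → Ω → Matrix (Fin n) (Fin n) ℝ)
    (Kd : ℝ → Ω → Matrix (Fin m) (Fin m) ℝ) : Prop :=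
  (∀ t ω, IsMPInv (Kof D R P t ω) (Kd t ω)) ∧
  SolvesRiccatiGen μ F W T A B C D Q R G P Λ Kd

/-- The regularity/positivity class in Theorem 5.7-th1: `P ∈ L^∞_𝔽(Ω;C([0,T];S(ℝⁿ)))`,
`Λ ∈ L^p_𝔽(Ω;L²(0,T;S(ℝⁿ)))` for all `p ≥ 1`, `Range K ⊇ Range L` and `K ≥ 0` a.e.,
and `K†L ∈ L^∞_𝔽(Ω;L²(0,T;ℝ^{m×n}))`. -/
def RiccatiClass {n m : ℕ} (μ : Measure Ω) (F : Filtration ℝ mΩ) (T : ℝ)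
    (B : ℝ → Ω → Matrix (Fin n) (Fin m) ℝ)
    (C : ℝ → Ω → Matrix (Fin n) (Fin n) ℝ) (D : ℝ → Ω → Matrix (Fin n) (Fin m) ℝ)
    (R : ℝ → Ω → Matrix (Fin m) (Fin m) ℝ)
    (P Λ : ℝ → Ω → Matrix (Fin n) (Fin n) ℝ)
    (Kd : ℝ → Ω → Matrix (Fin m) (Fin m) ℝ) : Prop :=
  MatMemLinfC μ F 0 T P ∧ (∀ᵐ ω ∂μ, ∀ t ∈ Icc (0:ℝ) T, (P t ω)ᵀ = P t ω) ∧
  MatMemLpAllL2 μ F 0 T Λ ∧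
  (∀ᵐ p ∂(((volume : Measure ℝ).restrict (Icc 0 T)).prod μ), (Λ p.1 p.2)ᵀ = Λ p.1 p.2) ∧
  (∀ᵐ p ∂(((volume : Measure ℝ).restrict (Icc 0 T)).prod μ),
      Set.range (Matrix.mulVec (Lof B C D P Λ p.1 p.2)) ⊆
        Set.range (Matrix.mulVec (Kof D R P p.1 p.2)) ∧
      (Kof D R P p.1 p.2).PosSemidef) ∧
  MatMemLinfL2 μ F 0 T (fun t ω => Kd t ω * Lof B C D P Λ t ω)

end SLQ
namespace SLQ

variable {Ω : Type} {mΩ : MeasurableSpace Ω}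

/-- `φ ∈ L^∞_𝔽(Ω; L¹(a,b; ℝᵏ))` (vector-valued). -/
def VecMemLinfL1 {k : ℕ} (μ : Measure Ω) (F : Filtration ℝ mΩ) (a b : ℝ)
    (φ : ℝ → Ω → Fin k → ℝ) : Prop :=
  (∀ t i, Measurable[F t] fun ω => φ t ω i) ∧
  (∀ i, Measurable fun p : ℝ × Ω => φ p.1 p.2 i) ∧
  ∃ c : ℝ, ∀ᵐ ω ∂μ, IntegrableOn (fun r => Real.sqrt (enorm2 (φ r ω))) (Icc a b) ∧
    (∫ r in a..b, Real.sqrt (enorm2 (φ r ω))) ≤ c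

/-- `y ∈ L^∞_𝔽(Ω; C([a,b]; ℝᵏ))`. -/
def VecMemLinfC {k : ℕ} (μ : Measure Ω) (F : Filtration ℝ mΩ) (a b : ℝ)
    (y : ℝ → Ω → Fin k → ℝ) : Prop :=
  (∀ t ∈ Icc a b, ∀ i, Measurable[F t] fun ω => y t ω i) ∧
  (∀ᵐ ω ∂μ, ContinuousOn (fun t => y t ω) (Icc a b)) ∧
  ∃ c : ℝ, ∀ᵐ ω ∂μ, ∀ t ∈ Icc a b, enorm2 (y t ω) ≤ c

/-- `z ∈ L^p_𝔽(Ω; L²(a,b; ℝᵏ))` for a single exponent `p`. -/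
def VecMemLpL2 {k : ℕ} (μ : Measure Ω) (F : Filtration ℝ mΩ) (a b p : ℝ)
    (z : ℝ → Ω → Fin k → ℝ) : Prop :=
  (∀ t ∈ Icc a b, ∀ i, Measurable[F t] fun ω => z t ω i) ∧
  (∀ i, Measurable fun q : ℝ × Ω => z q.1 q.2 i) ∧
  (∀ᵐ ω ∂μ, IntegrableOn (fun r => enorm2 (z r ω)) (Icc a b)) ∧
  (∫⁻ ω, ENNReal.ofReal ((∫ r in a..b, enorm2 (z r ω)) ^ (p / 2)) ∂μ) < ⊤

/-- `ξ ∈ L^∞_{𝓕_s}(Ω; ℝᵏ)`. -/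
def MemLinfRnd {k : ℕ} (μ : Measure Ω) (F : Filtration ℝ mΩ) (s : ℝ)
    (ξ : Ω → Fin k → ℝ) : Prop :=
  (∀ i, Measurable[F s] fun ω => ξ ω i) ∧ ∃ c : ℝ, ∀ᵐ ω ∂μ, enorm2 (ξ ω) ≤ c

/-- scalar `φ ∈ L^∞_𝔽(Ω; L¹(a,b; ℝ))`. -/
def ScalMemLinfL1 (μ : Measure Ω) (F : Filtration ℝ mΩ) (a b : ℝ) (φ : ℝ → Ω → ℝ) : Prop :=
  (∀ t, Measurable[F t] (φ t)) ∧
  (Measurable fun p : ℝ × Ω => φ p.1 p.2) ∧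
  ∃ c : ℝ, ∀ᵐ ω ∂μ, IntegrableOn (fun r => |φ r ω|) (Icc a b) ∧
    (∫ r in a..b, |φ r ω|) ≤ c

/-- scalar `φ ∈ L^∞_𝔽(Ω; L²(a,b; ℝ))`. -/
def ScalMemLinfL2 (μ : Measure Ω) (F : Filtration ℝ mΩ) (a b : ℝ) (φ : ℝ → Ω → ℝ) : Prop :=
  (∀ t, Measurable[F t] (φ t)) ∧
  (Measurable fun p : ℝ × Ω => φ p.1 p.2) ∧
  ∃ c : ℝ, ∀ᵐ ω ∂μ, IntegrableOn (fun r => (φ r ω) ^ 2) (Icc a b) ∧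
    (∫ r in a..b, (φ r ω) ^ 2) ≤ c

/-- scalar `φ ∈ L^p_𝔽(Ω; L²(a,b; ℝ))` for all `p ≥ 1`. -/
def ScalMemLpAllL2 (μ : Measure Ω) (F : Filtration ℝ mΩ) (a b : ℝ) (φ : ℝ → Ω → ℝ) : Prop :=
  (∀ t, Measurable[F t] (φ t)) ∧
  (Measurable fun p : ℝ × Ω => φ p.1 p.2) ∧
  (∀ᵐ ω ∂μ, IntegrableOn (fun r => (φ r ω) ^ 2) (Icc a b)) ∧
  ∀ p : ℝ, 1 ≤ p →
    (∫⁻ ω, ENNReal.ofReal ((∫ r in a..b, (φ r ω) ^ 2) ^ (p / 2)) ∂μ) < ⊤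

/-- scalar `φ ∈ L^∞_𝔽(Ω; C([a,b]; ℝ))`. -/
def ScalMemLinfC (μ : Measure Ω) (F : Filtration ℝ mΩ) (a b : ℝ) (φ : ℝ → Ω → ℝ) : Prop :=
  (∀ t ∈ Icc a b, Measurable[F t] (φ t)) ∧
  (∀ᵐ ω ∂μ, ContinuousOn (fun t => φ t ω) (Icc a b)) ∧
  ∃ c : ℝ, ∀ᵐ ω ∂μ, ∀ t ∈ Icc a b, |φ t ω| ≤ c

/-- `X ∈ L²_𝔽(Ω; C([s,T]; ℝ^{n×n}))` (columnwise). -/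
def MatMemL2C {n : ℕ} (μ : Measure Ω) (F : Filtration ℝ mΩ) (s T : ℝ)
    (X : ℝ → Ω → Matrix (Fin n) (Fin n) ℝ) : Prop :=
  ∀ j, VecMemL2C μ F s T (fun t ω i => X t ω i j)

/-- `X` solves the linear matrix SDE `dX = 𝒜 X dt + 𝒞 X dW` on `[s,T]`, `X(s) = X₀`
(equivalently, every column of `X` solves the corresponding vector SDE). -/
def SolvesLinMatSDE {n : ℕ} (μ : Measure Ω) (F : Filtration ℝ mΩ) (W : ℝ → Ω → ℝ) (s T : ℝ)
    (𝒜 𝒞 : ℝ → Ω → Matrix (Fin n) (Fin n) ℝ) (X₀ : Matrix (Fin n) (Fin n) ℝ)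
    (X : ℝ → Ω → Matrix (Fin n) (Fin n) ℝ) : Prop :=
  ∀ j, SolvesSDE μ F W s T
    (fun r ω => 𝒜 r ω *ᵥ fun i => X r ω i j)
    (fun r ω => 𝒞 r ω *ᵥ fun i => X r ω i j)
    (fun _ω i => X₀ i j)
    (fun t ω i => X t ω i j)

/-- `(Y,Z)` solves the matrix BSDE `dY = f dt + Z dW` on `[s,T]`, `Y(T) = ξ` (columnwise). -/
def SolvesMatBSDE {n : ℕ} (μ : Measure Ω) (F : Filtration ℝ mΩ) (W : ℝ → Ω → ℝ) (s T : ℝ)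
    (f : ℝ → Ω → Matrix (Fin n) (Fin n) ℝ) (ξ : Ω → Matrix (Fin n) (Fin n) ℝ)
    (Y Z : ℝ → Ω → Matrix (Fin n) (Fin n) ℝ) : Prop :=
  ∀ j, SolvesBSDE μ F W s T
    (fun t ω i => f t ω i j) (fun ω i => ξ ω i j)
    (fun t ω i => Y t ω i j) (fun t ω i => Z t ω i j)

/-- `(P,Λ)` solves the scalar Riccati equation
`dP = (R+P)⁻¹ Λ² dt + Λ dW` on `[0,T]`, `P(T) = G`. -/
def SolvesScalarRiccati (μ : Measure Ω) (F : Filtration ℝ mΩ) (W : ℝ → Ω → ℝ) (T : ℝ)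
    (Rv : ℝ) (G : Ω → ℝ) (P Λ : ℝ → Ω → ℝ) : Prop :=
  (∀ t ∈ Icc (0:ℝ) T, Measurable[F t] (P t)) ∧
  (∀ᵐ ω ∂μ, ContinuousOn (fun t => P t ω) (Icc 0 T)) ∧
  (∀ᵐ ω ∂μ, IntegrableOn (fun r => (Rv + P r ω)⁻¹ * (Λ r ω) ^ 2) (Icc 0 T)) ∧
  ∃ M : ℝ → Ω → ℝ, IsItoInt μ F W 0 T Λ M ∧
    ∀ᵐ ω ∂μ, ∀ t ∈ Icc (0:ℝ) T,
      P t ω = G ω - (∫ r in t..T, (Rv + P r ω)⁻¹ * (Λ r ω) ^ 2) - (M T ω - M t ω)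

end SLQ

namespace SLQ

/-! ### Pathwise calculus of absolutely continuous functions -/

/-- `V` is, on `[s,T]`, a primitive of the integrable function `v`. -/
def Prim (s T : ℝ) (V v : ℝ → ℝ) : Prop :=
  IntervalIntegrable v volume s T ∧ ∀ t ∈ Icc s T, V t = V s + ∫ r in s..t, v r

lemma intervalIntegrable_sub {s T a b : ℝ} {v : ℝ → ℝ} (h : IntervalIntegrable v volume s T)
    (hsa : s ≤ a) (hab : a ≤ b) (hbT : b ≤ T) : IntervalIntegrable v volume a b := by
  refine h.mono_set ?_
  rw [uIcc_of_le hab, uIcc_of_le (hsa.trans (hab.trans hbT))]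
  exact Icc_subset_Icc hsa hbT

lemma Prim.sub_eq {s T : ℝ} {V v : ℝ → ℝ} (h : Prim s T V v) {a b : ℝ} (hsa : s ≤ a)
    (hab : a ≤ b) (hbT : b ≤ T) : V b - V a = ∫ r in a..b, v r := by
  rw [h.2 b ⟨hsa.trans hab, hbT⟩, h.2 a ⟨hsa, hab.trans hbT⟩,
    ← intervalIntegral.integral_add_adjacent_intervals
      (intervalIntegrable_sub h.1 le_rfl hsa (hab.trans hbT))
      (intervalIntegrable_sub h.1 hsa hab hbT)]
  ring

lemma prim_integral {s T : ℝ} {v : ℝ → ℝ} (h : IntervalIntegrable v volume s T) :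
    Prim s T (fun t => ∫ r in s..t, v r) v := ⟨h, fun t _ => by simp⟩

lemma absCont_of_prim {s T : ℝ} {v : ℝ → ℝ} (c : ℝ)
    (h : IntervalIntegrable v volume s T) :
    AbsolutelyContinuousOnInterval (fun t => c + ∫ r in s..t, v r) s T := by
  have h1 := h.absolutelyContinuousOnInterval_intervalIntegral (c := s) (by simp)
  have h2 : AbsolutelyContinuousOnInterval (fun _ : ℝ => c) s T :=
    (LipschitzWith.const c).lipschitzOnWith.absolutelyContinuousOnInterval
  exact h2.add h1

lemma Prim.continuousOn {s T : ℝ} (hsT : s ≤ T) {V v : ℝ → ℝ} (h : Prim s T V v) :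
    ContinuousOn V (Icc s T) := by
  have := (absCont_of_prim (V s) h.1).continuousOn
  rw [uIcc_of_le hsT] at this
  exact this.congr fun t ht => h.2 t ht

lemma prim_of_absCont {s T : ℝ} (hsT : s ≤ T) {V v : ℝ → ℝ}
    (hV : AbsolutelyContinuousOnInterval V s T)
    (hd : ∀ᵐ t, t ∈ Ioo s T → HasDerivAt V (v t) t) : Prim s T V v := by
  have hne : ∀ᵐ t : ℝ, t ≠ T := by simp [ae_iff]
  have hae : ∀ᵐ t, t ∈ uIoc s T → deriv V t = v t := by
    filter_upwards [hd, hne] with t h1 h2 h3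
    rw [uIoc_of_le hsT] at h3
    exact (h1 ⟨h3.1, lt_of_le_of_ne h3.2 h2⟩).deriv
  refine ⟨hV.intervalIntegrable_deriv.congr_ae ?_, fun t ht => ?_⟩
  · rw [EventuallyEq, ae_restrict_iff' measurableSet_uIoc]; exact hae
  · have hsub : AbsolutelyContinuousOnInterval V s t := hV.mono (by
      rw [uIcc_of_le ht.1, uIcc_of_le hsT]; exact Icc_subset_Icc le_rfl ht.2)
    have := hsub.integral_deriv_eq_sub
    rw [← intervalIntegral.integral_congr_ae (f := deriv V), this]
    · ring
    · filter_upwards [hae] with r hr h3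
      refine hr ?_
      rw [uIoc_of_le ht.1] at h3
      rw [uIoc_of_le hsT]
      exact ⟨h3.1, h3.2.trans ht.2⟩

lemma Prim.hat_hasDerivAt {s T : ℝ} (hsT : s ≤ T) {V v : ℝ → ℝ} (h : Prim s T V v) :
    ∀ᵐ t, t ∈ Ioo s T → HasDerivAt (fun t => V s + ∫ r in s..t, v r) (v t) t := by
  filter_upwards [h.1.ae_hasDerivAt_integral] with t ht htm
  have := ht (by rw [uIcc_of_le hsT]; exact Ioo_subset_Icc_self htm) s (by simp)
  exact this.const_add _

lemma Prim.congr {s T : ℝ} (hsT : s ≤ T) {V V' v : ℝ → ℝ} (h : Prim s T V v)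
    (he : ∀ t ∈ Icc s T, V' t = V t) : Prim s T V' v :=
  ⟨h.1, fun t ht => by rw [he t ht, he s ⟨le_rfl, hsT⟩]; exact h.2 t ht⟩

lemma Prim.congr_deriv {s T : ℝ} (hsT : s ≤ T) {V v v' : ℝ → ℝ} (h : Prim s T V v)
    (he : ∀ t ∈ Icc s T, v' t = v t) : Prim s T V v' := by
  refine ⟨h.1.congr fun t ht => ?_, fun t ht => ?_⟩
  · rw [uIoc_of_le hsT] at ht
    exact (he t (Ioc_subset_Icc_self ht)).symm
  · rw [h.2 t ht]
    congr 1
    refine intervalIntegral.integral_congr fun r hr => ?_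
    rw [uIcc_of_le ht.1] at hr
    exact (he r ⟨hr.1, hr.2.trans ht.2⟩).symm

lemma Prim.mul {s T : ℝ} (hsT : s ≤ T) {V v U u : ℝ → ℝ} (hV : Prim s T V v)
    (hU : Prim s T U u) : Prim s T (fun t => V t * U t) (fun t => v t * U t + V t * u t) := by
  have hac := (absCont_of_prim (V s) hV.1).fun_mul (absCont_of_prim (U s) hU.1)
  have := prim_of_absCont hsT (v := fun t => v t * (U s + ∫ r in s..t, u r) +
    (V s + ∫ r in s..t, v r) * u t) hac (by
      filter_upwards [hV.hat_hasDerivAt hsT, hU.hat_hasDerivAt hsT] with t h1 h2 ht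
      exact (h1 ht).mul (h2 ht))
  refine (this.congr hsT fun t ht => ?_).congr_deriv hsT fun t ht => ?_
  · rw [← hV.2 t ht, ← hU.2 t ht]
  · rw [← hV.2 t ht, ← hU.2 t ht]

lemma Prim.exp {s T : ℝ} (hsT : s ≤ T) {V v : ℝ → ℝ} (hV : Prim s T V v) :
    Prim s T (fun t => Real.exp (V t)) (fun t => v t * Real.exp (V t)) := by
  have hac := absCont_of_prim (V s) hV.1
  obtain ⟨K, hK⟩ := hac.exists_bound
  have hac2 : AbsolutelyContinuousOnInterval
      (fun t => Real.exp (V s + ∫ r in s..t, v r)) s T := by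
    rw [absolutelyContinuousOnInterval_iff] at hac ⊢
    intro ε hε
    obtain ⟨δ, hδ, h⟩ := hac (ε / Real.exp K) (by positivity)
    refine ⟨δ, hδ, fun E hE hE2 => ?_⟩
    have h3 := h E hE hE2
    rw [lt_div_iff₀ (Real.exp_pos K)] at h3
    refine lt_of_le_of_lt ?_ h3
    rw [Finset.sum_mul]
    refine Finset.sum_le_sum fun i hi => ?_
    have key : ∀ x y : ℝ, x ≤ K → y ≤ K → Real.exp x - Real.exp y ≤ |x - y| * Real.exp K := by
      intro x y hx hy
      have h1 : Real.exp x - Real.exp y ≤ (x - y) * Real.exp x := by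
        have := Real.add_one_le_exp (y - x)
        have h2 : Real.exp y = Real.exp (y - x) * Real.exp x := by rw [← Real.exp_add]; ring_nf
        rw [h2]; nlinarith [Real.exp_pos x]
      refine h1.trans ?_
      have := Real.exp_le_exp.2 hx
      exact mul_le_mul (le_abs_self _) this (Real.exp_pos _).le (abs_nonneg _)
    have hmem : (E.2 i).1 ∈ uIcc s T ∧ (E.2 i).2 ∈ uIcc s T := hE.1 i hi
    have k1 := (abs_le.1 (hK _ hmem.1)).2
    have k2 := (abs_le.1 (hK _ hmem.2)).2
    rw [Real.dist_eq, Real.dist_eq]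
    refine abs_sub_le_iff.2 ⟨key _ _ k1 k2, ?_⟩
    rw [abs_sub_comm]; exact key _ _ k2 k1
  have := prim_of_absCont hsT (v := fun t => v t * Real.exp (V s + ∫ r in s..t, v r)) hac2 (by
      filter_upwards [hV.hat_hasDerivAt hsT] with t h1 ht
      have := (h1 ht).exp
      rwa [mul_comm] at this)
  refine (this.congr hsT fun t ht => ?_).congr_deriv hsT fun t ht => ?_
  · rw [← hV.2 t ht]
  · rw [← hV.2 t ht]

lemma Prim.add {s T : ℝ} {V v U u : ℝ → ℝ} (hV : Prim s T V v)
    (hU : Prim s T U u) : Prim s T (fun t => V t + U t) (fun t => v t + u t) := by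
  refine ⟨hV.1.add hU.1, fun t ht => ?_⟩
  simp only
  rw [intervalIntegral.integral_add (intervalIntegrable_sub hV.1 le_rfl ht.1 ht.2)
    (intervalIntegrable_sub hU.1 le_rfl ht.1 ht.2), hV.2 t ht, hU.2 t ht]
  ring

end SLQ

namespace SLQ

set_option linter.unusedSectionVars false

/-! ### Martingales up to null sets and adapted integrals -/

section toolbox

variable {Ω : Type} {mΩ : MeasurableSpace Ω} {μ : Measure Ω} [IsProbabilityMeasure μ]
  {F : Filtration ℝ mΩ} {s T : ℝ}

/-- Martingale property on `[a,b]` without any pointwise measurability requirement: adaptedness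
only holds up to null sets (see `WM.aesm`). -/
def WM (μ : Measure Ω) (F : Filtration ℝ mΩ) (a b : ℝ) (N : ℝ → Ω → ℝ) : Prop :=
  (∀ t ∈ Icc a b, Integrable (N t) μ) ∧
  ∀ t u, a ≤ t → t ≤ u → u ≤ b → μ[N u | F t] =ᵐ[μ] N t

/-- Jointly measurable processes that are adapted up to null sets on `[s,T]`. -/
def Adp (μ : Measure Ω) (F : Filtration ℝ mΩ) (s T : ℝ) (φ : ℝ → Ω → ℝ) : Prop :=
  (∀ t ∈ Icc s T, AEStronglyMeasurable[F t] (φ t) μ) ∧ Measurable fun p : ℝ × Ω => φ p.1 p.2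

lemma aesm_of_raw {t : ℝ} {X : Ω → ℝ} (h : Measurable[F t] X) :
    AEStronglyMeasurable[F t] X μ := h.stronglyMeasurable.aestronglyMeasurable

lemma aesm_mono {a b : ℝ} (hab : a ≤ b) {X : Ω → ℝ} (h : AEStronglyMeasurable[F a] X μ) :
    AEStronglyMeasurable[F b] X μ := h.mono (F.mono hab)

lemma aesm_full {a : ℝ} {X : Ω → ℝ} (h : AEStronglyMeasurable[F a] X μ) :
    AEStronglyMeasurable X μ := h.mono (F.le a)

lemma WM.aesm {N : ℝ → Ω → ℝ} (h : WM μ F s T N) {t : ℝ} (ht : t ∈ Icc s T) :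
    AEStronglyMeasurable[F t] (N t) μ :=
  ⟨_, stronglyMeasurable_condExp, (h.2 t t ht.1 le_rfl ht.2).symm⟩

lemma int_mul_condExp {m : MeasurableSpace Ω} (hm : m ≤ mΩ) {Y X : Ω → ℝ}
    (hY : AEStronglyMeasurable[m] Y μ)
    (hX : Integrable X μ) (hYX : Integrable (fun ω => Y ω * X ω) μ) :
    Integrable (fun ω => Y ω * (μ[X|m]) ω) μ ∧
      ∫ ω, Y ω * (μ[X|m]) ω ∂μ = ∫ ω, Y ω * X ω ∂μ := by
  have h := condExp_mul_of_aestronglyMeasurable_left hY hYX hX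
  refine ⟨integrable_condExp.congr h, ?_⟩
  have h2 : ∫ ω, (μ[Y * X|m]) ω ∂μ = ∫ ω, Y ω * (μ[X|m]) ω ∂μ := integral_congr_ae h
  rw [← h2, integral_condExp hm]
  rfl

/-- Testing a martingale against an `F t`-measurable weight. -/
lemma WM.integral_mul {N : ℝ → Ω → ℝ} (h : WM μ F s T N) {t u : ℝ} (hst : s ≤ t) (htu : t ≤ u)
    (huT : u ≤ T) {Y : Ω → ℝ} (hY : AEStronglyMeasurable[F t] Y μ)
    (hYX : Integrable (fun ω => Y ω * N u ω) μ) :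
    Integrable (fun ω => Y ω * N t ω) μ ∧
      ∫ ω, Y ω * N t ω ∂μ = ∫ ω, Y ω * N u ω ∂μ := by
  obtain ⟨h1, h2⟩ := int_mul_condExp (F.le t) hY (h.1 u ⟨hst.trans htu, huT⟩) hYX
  have h3 : (fun ω => Y ω * (μ[N u|F t]) ω) =ᵐ[μ] fun ω => Y ω * N t ω := by
    filter_upwards [h.2 t u hst htu huT] with ω hω
    rw [hω]
  exact ⟨h1.congr h3, by rw [← h2]; exact (integral_congr_ae h3).symm⟩

lemma WM.setIntegral {N : ℝ → Ω → ℝ} (h : WM μ F s T N) {t u : ℝ} (hst : s ≤ t) (htu : t ≤ u)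
    (huT : u ≤ T) {A : Set Ω} (hA : MeasurableSet[F t] A) :
    ∫ ω in A, N t ω ∂μ = ∫ ω in A, N u ω ∂μ := by
  rw [← setIntegral_condExp (F.le t) (h.1 u ⟨hst.trans htu, huT⟩) hA]
  exact setIntegral_congr_ae (F.le t _ hA)
    ((h.2 t u hst htu huT).mono fun ω hω _ => hω.symm)

lemma wm_of_setIntegral {N : ℝ → Ω → ℝ} (h1 : ∀ t ∈ Icc s T, Integrable (N t) μ)
    (h2 : ∀ t ∈ Icc s T, AEStronglyMeasurable[F t] (N t) μ)
    (h3 : ∀ t u, s ≤ t → t ≤ u → u ≤ T → ∀ A, MeasurableSet[F t] A →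
      ∫ ω in A, N t ω ∂μ = ∫ ω in A, N u ω ∂μ) : WM μ F s T N := by
  refine ⟨h1, fun t u hst htu huT => ?_⟩
  symm
  exact ae_eq_condExp_of_forall_setIntegral_eq (F.le t) (h1 u ⟨hst.trans htu, huT⟩)
    (fun A _ _ => (h1 t ⟨hst, htu.trans huT⟩).integrableOn)
    (fun A hA _ => h3 t u hst htu huT A hA) (h2 t ⟨hst, htu.trans huT⟩)

lemma WM.congr {N N' : ℝ → Ω → ℝ} (h : WM μ F s T N) (he : ∀ t ∈ Icc s T, N' t =ᵐ[μ] N t) :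
    WM μ F s T N' := by
  refine ⟨fun t ht => (h.1 t ht).congr (he t ht).symm, fun t u hst htu huT => ?_⟩
  exact (condExp_congr_ae (he u ⟨hst.trans htu, huT⟩)).trans
    ((h.2 t u hst htu huT).trans (he t ⟨hst, htu.trans huT⟩).symm)

lemma WM.add {N N' : ℝ → Ω → ℝ} (h : WM μ F s T N) (h' : WM μ F s T N') :
    WM μ F s T (fun t ω => N t ω + N' t ω) := by
  refine ⟨fun t ht => (h.1 t ht).add (h'.1 t ht), fun t u hst htu huT => ?_⟩
  refine (condExp_add (h.1 u ⟨hst.trans htu, huT⟩) (h'.1 u ⟨hst.trans htu, huT⟩) (F t)).trans ?_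
  filter_upwards [h.2 t u hst htu huT, h'.2 t u hst htu huT] with ω h1 h2
  simp [h1, h2]

lemma WM.const_mul {N : ℝ → Ω → ℝ} (h : WM μ F s T N) (c : ℝ) :
    WM μ F s T (fun t ω => c * N t ω) := by
  refine ⟨fun t ht => (h.1 t ht).const_mul c, fun t u hst htu huT => ?_⟩
  refine (condExp_smul c (N u) (F t)).trans ?_
  filter_upwards [h.2 t u hst htu huT] with ω h1
  simp [h1]

lemma WM.sub {N N' : ℝ → Ω → ℝ} (h : WM μ F s T N) (h' : WM μ F s T N') :
    WM μ F s T (fun t ω => N t ω - N' t ω) :=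
  (h.add (h'.const_mul (-1))).congr fun t _ => ae_of_all _ fun ω => by ring

lemma WM.mul_left {N : ℝ → Ω → ℝ} (h : WM μ F s T N) {c : Ω → ℝ}
    (hc : AEStronglyMeasurable[F s] c μ)
    (hi : ∀ t ∈ Icc s T, Integrable (fun ω => c ω * N t ω) μ) :
    WM μ F s T (fun t ω => c ω * N t ω) := by
  refine ⟨hi, fun t u hst htu huT => ?_⟩
  refine (condExp_mul_of_aestronglyMeasurable_left (aesm_mono hst hc)
    (hi u ⟨hst.trans htu, huT⟩) (h.1 u ⟨hst.trans htu, huT⟩)).trans ?_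
  filter_upwards [h.2 t u hst htu huT] with ω h1
  simp [h1]

lemma WM.const {c : Ω → ℝ} (hc : AEStronglyMeasurable[F s] c μ) (hi : Integrable c μ) :
    WM μ F s T (fun _ ω => c ω) :=
  ⟨fun _ _ => hi, fun _ _ hst _ _ => condExp_of_aestronglyMeasurable' (F.le _)
    (aesm_mono hst hc) hi⟩

lemma WM.mono {N : ℝ → Ω → ℝ} (h : WM μ F s T N) {a b : ℝ} (ha : s ≤ a) (hb : b ≤ T) :
    WM μ F a b N :=
  ⟨fun t ht => h.1 t ⟨ha.trans ht.1, ht.2.trans hb⟩,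
    fun t u h1 h2 h3 => h.2 t u (ha.trans h1) h2 (h3.trans hb)⟩

lemma WM.glue {N : ℝ → Ω → ℝ} {m : ℝ} (h : WM μ F s m N) (h' : WM μ F m T N) :
    WM μ F s T N := by
  refine ⟨fun t ht => ?_, fun t u hst htu huT => ?_⟩
  · rcases le_total t m with h1 | h1
    · exact h.1 t ⟨ht.1, h1⟩
    · exact h'.1 t ⟨h1, ht.2⟩
  · rcases le_total u m with h1 | h1
    · exact h.2 t u hst htu h1
    rcases le_total m t with h2 | h2
    · exact h'.2 t u h2 htu huT
    · have e1 := h'.2 m u le_rfl h1 huT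
      have e2 := h.2 t m hst h2 le_rfl
      have := condExp_condExp_of_le (μ := μ) (f := N u) (F.mono h2) (F.le m)
      exact this.symm.trans ((condExp_congr_ae e1).trans e2)

lemma MartOn.wm {M : ℝ → Ω → ℝ} (h : MartOn μ F s T M) : WM μ F s T M := h.2

lemma WM.martOn {M : ℝ → Ω → ℝ} (h : WM μ F s T M) (hm : ∀ t ∈ Icc s T, Measurable[F t] (M t)) :
    MartOn μ F s T M := ⟨hm, h⟩

/-- The martingale property passes to pointwise-in-time `L¹` limits. -/
lemma wm_of_tendsto {N : ℕ → ℝ → Ω → ℝ} {N' : ℝ → Ω → ℝ} (h : ∀ n, WM μ F s T (N n))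
    (hi : ∀ t ∈ Icc s T, Integrable (N' t) μ)
    (hl : ∀ t ∈ Icc s T, Tendsto (fun n => ∫ ω, |N n t ω - N' t ω| ∂μ) atTop (nhds 0)) :
    WM μ F s T N' := by
  refine ⟨hi, fun t u hst htu huT => ?_⟩
  have hu : u ∈ Icc s T := ⟨hst.trans htu, huT⟩
  have ht : t ∈ Icc s T := ⟨hst, htu.trans huT⟩
  have key : ∀ n, ∫ ω, |(μ[N' u|F t]) ω - N' t ω| ∂μ ≤
      ∫ ω, |N n u ω - N' u ω| ∂μ + ∫ ω, |N n t ω - N' t ω| ∂μ := by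
    intro n
    have e : μ[N n u - N' u|F t] =ᵐ[μ] N n t - μ[N' u|F t] := by
      refine (condExp_sub ((h n).1 u hu) (hi u hu) (F t)).trans ?_
      filter_upwards [(h n).2 t u hst htu huT] with ω hω
      simp [hω]
    have b1 : ∫ ω, |(N n t - μ[N' u|F t]) ω| ∂μ ≤ ∫ ω, |N n u ω - N' u ω| ∂μ := by
      have e2 : ∫ ω, |(μ[N n u - N' u|F t]) ω| ∂μ = ∫ ω, |(N n t - μ[N' u|F t]) ω| ∂μ :=
        integral_congr_ae (e.mono fun ω hω => congrArg abs hω)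
      rw [← e2]
      exact integral_abs_condExp_le _
    refine le_trans ?_ (add_le_add_left b1 _)
    rw [← integral_add]
    · refine integral_mono (integrable_condExp.sub (hi t ht)).abs ?_ fun ω => ?_
      · exact (((h n).1 t ht).sub integrable_condExp).abs.add (((h n).1 t ht).sub (hi t ht)).abs
      · simp only [Pi.sub_apply]
        have := abs_sub_le ((μ[N' u|F t]) ω) (N n t ω) (N' t ω)
        rwa [abs_sub_comm ((μ[N' u|F t]) ω) (N n t ω)] at this
    · exact (((h n).1 t ht).sub integrable_condExp).abs
    · exact (((h n).1 t ht).sub (hi t ht)).abs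
  have lim := (hl u hu).add (hl t ht)
  have h0 : ∫ ω, |(μ[N' u|F t]) ω - N' t ω| ∂μ = 0 := by
    refine le_antisymm ?_ (integral_nonneg fun _ => abs_nonneg _)
    have := ge_of_tendsto' lim key
    simpa using this
  have h1 := (integral_eq_zero_iff_of_nonneg (fun _ => abs_nonneg _)
    ((integrable_condExp (m := F t) (f := N' u)).sub (hi t ht)).abs).1 h0
  filter_upwards [h1] with ω hω
  exact sub_eq_zero.1 (abs_eq_zero.1 hω)

end toolbox
end SLQ

namespace SLQ

set_option linter.unusedSectionVars false

/-! ### Adapted integrals and continuous versions -/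

section adapted

variable {Ω : Type} {mΩ : MeasurableSpace Ω} {μ : Measure Ω} [IsProbabilityMeasure μ]
  {F : Filtration ℝ mΩ} {s T : ℝ}

lemma aesm_of_tendsto {t : ℝ} {X : ℕ → Ω → ℝ} {Y : Ω → ℝ}
    (h : ∀ n, AEStronglyMeasurable[F t] (X n) μ)
    (hl : ∀ᵐ ω ∂μ, Tendsto (fun n => X n ω) atTop (nhds (Y ω))) :
    AEStronglyMeasurable[F t] Y μ := by
  choose Z hZ hXZ using h
  refine ⟨fun ω => limsup (fun n => Z n ω) atTop,
    (Measurable.limsup fun n => (hZ n).measurable).stronglyMeasurable, ?_⟩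
  filter_upwards [hl, ae_all_iff.2 hXZ] with ω h1 h2
  simp only [h2] at h1
  exact h1.limsup_eq.symm

lemma measurable_integral_left {φ : ℝ → Ω → ℝ} (h : Measurable fun p : ℝ × Ω => φ p.1 p.2)
    (a b : ℝ) : Measurable fun ω => ∫ r in a..b, φ r ω := by
  have h1 : ∀ ν : Measure ℝ, [SFinite ν] → Measurable fun ω => ∫ r, φ r ω ∂ν := fun ν _ =>
    (StronglyMeasurable.integral_prod_left (μ := ν) (f := φ) h.stronglyMeasurable).measurable
  simp only [intervalIntegral]
  exact (h1 _).sub (h1 _)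

lemma Adp.measurable_section {φ : ℝ → Ω → ℝ} (h : Adp μ F s T φ) (t : ℝ) : Measurable (φ t) :=
  h.2.comp (measurable_const.prodMk measurable_id)

/-- The running integral of a bounded adapted process is adapted: the deviation `D` from its
conditional expectation is orthogonal to every `φ r`, `r ≤ t`, hence to itself. -/
lemma aesm_integral_bdd {φ : ℝ → Ω → ℝ} (hφ : Adp μ F s T φ) {C : ℝ}
    (hb : ∀ r ω, |φ r ω| ≤ C) {a t : ℝ} (hsa : s ≤ a) (hat : a ≤ t) (htT : t ≤ T) :
    AEStronglyMeasurable[F t] (fun ω => ∫ r in a..t, φ r ω) μ := by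
  set G : Ω → ℝ := fun ω => ∫ r in a..t, φ r ω with hG
  have hGm : Measurable G := measurable_integral_left hφ.2 a t
  have hGb : ∀ ω, ‖G ω‖ ≤ C * |t - a| := fun ω =>
    intervalIntegral.norm_integral_le_of_norm_le_const fun r _ => hb r ω
  have hGi : Integrable G μ := Integrable.of_bound hGm.aestronglyMeasurable _ (ae_of_all _ hGb)
  set E := μ[G|F t] with hE
  have hEm : StronglyMeasurable[F t] E := stronglyMeasurable_condExp
  have hEi : Integrable E μ := integrable_condExp
  set D : Ω → ℝ := fun ω => G ω - E ω with hD
  have hDi : Integrable D μ := hGi.sub hEi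
  have hDr : ∀ r ∈ Ioc a t, ∫ ω, D ω * φ r ω ∂μ = 0 := by
    intro r hr
    have hm : AEStronglyMeasurable[F t] (φ r) μ :=
      aesm_mono hr.2 (hφ.1 r ⟨hsa.trans hr.1.le, hr.2.trans htT⟩)
    have hi : Integrable (fun ω => φ r ω * G ω) μ :=
      hGi.bdd_mul (hφ.measurable_section r).aestronglyMeasurable (ae_of_all _ fun ω => hb r ω)
    obtain ⟨h1, h2⟩ := int_mul_condExp (F.le t) hm hGi hi
    have : ∀ ω, D ω * φ r ω = φ r ω * G ω - φ r ω * E ω := fun ω => by simp only [hD]; ring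
    simp only [this]
    rw [integral_sub hi h1, h2, sub_self]
  have hDG : ∫ ω, D ω * G ω ∂μ = 0 := by
    have e1 : ∀ ω, D ω * G ω = ∫ r in Ioc a t, D ω * φ r ω := fun ω => by
      rw [integral_const_mul, ← intervalIntegral.integral_of_le hat]
    simp only [e1]
    rw [integral_integral_swap]
    · rw [← integral_zero ℝ ℝ (μ := volume.restrict (Ioc a t))]
      exact setIntegral_congr_fun measurableSet_Ioc hDr
    · have h1 : Integrable (fun p : Ω × ℝ => D p.1) (μ.prod (volume.restrict (Ioc a t))) :=
        hDi.comp_fst _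
      have h2 := h1.bdd_mul (f := fun p : Ω × ℝ => φ p.2 p.1)
        (hφ.2.comp measurable_swap).aestronglyMeasurable (ae_of_all _ fun p => hb p.2 p.1)
      exact h2.congr (ae_of_all _ fun p => by simp [Function.uncurry, mul_comm])
  have hi2 : Integrable (fun ω => E ω * G ω) μ :=
    (hEi.bdd_mul hGm.aestronglyMeasurable (ae_of_all _ hGb)).congr
      (ae_of_all _ fun ω => mul_comm _ _)
  obtain ⟨h3, h4⟩ := int_mul_condExp (F.le t) hEm.aestronglyMeasurable hGi hi2
  have hDE : ∫ ω, E ω * D ω ∂μ = 0 := by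
    have : ∀ ω, E ω * D ω = E ω * G ω - E ω * E ω := fun ω => by simp only [hD]; ring
    simp only [this]
    rw [integral_sub hi2 h3, h4, sub_self]
  have hGD : Integrable (fun ω => D ω * G ω) μ :=
    (hDi.bdd_mul hGm.aestronglyMeasurable (ae_of_all _ hGb)).congr
      (ae_of_all _ fun ω => mul_comm _ _)
  have hED : Integrable (fun ω => E ω * D ω) μ :=
    (hi2.sub h3).congr (ae_of_all _ fun ω => by simp only [hD, Pi.sub_apply]; ring)
  have h0 : ∫ ω, D ω * D ω ∂μ = 0 := by
    have : ∀ ω, D ω * D ω = D ω * G ω - E ω * D ω := fun ω => by simp only [hD]; ring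
    simp only [this]
    rw [integral_sub hGD hED, hDG, hDE, sub_self]
  have h5 := (integral_eq_zero_iff_of_nonneg (fun ω => mul_self_nonneg (D ω))
    ((hGD.sub hED).congr (ae_of_all _ fun ω => by simp only [hD, Pi.sub_apply]; ring))).1 h0
  refine ⟨E, hEm, ?_⟩
  filter_upwards [h5] with ω hω
  exact sub_eq_zero.1 (mul_self_eq_zero.1 hω)

lemma Adp.comp_cont {φ : ℝ → Ω → ℝ} (h : Adp μ F s T φ) {g : ℝ → ℝ} (hg : Continuous g) :
    Adp μ F s T (fun t ω => g (φ t ω)) :=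
  ⟨fun t ht => hg.comp_aestronglyMeasurable (h.1 t ht), hg.measurable.comp h.2⟩

lemma Adp.add {φ ψ : ℝ → Ω → ℝ} (h : Adp μ F s T φ) (h' : Adp μ F s T ψ) :
    Adp μ F s T (fun t ω => φ t ω + ψ t ω) :=
  ⟨fun t ht => (h.1 t ht).add (h'.1 t ht), h.2.add h'.2⟩

lemma Adp.sub {φ ψ : ℝ → Ω → ℝ} (h : Adp μ F s T φ) (h' : Adp μ F s T ψ) :
    Adp μ F s T (fun t ω => φ t ω - ψ t ω) :=
  ⟨fun t ht => (h.1 t ht).sub (h'.1 t ht), h.2.sub h'.2⟩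

lemma Adp.mul {φ ψ : ℝ → Ω → ℝ} (h : Adp μ F s T φ) (h' : Adp μ F s T ψ) :
    Adp μ F s T (fun t ω => φ t ω * ψ t ω) :=
  ⟨fun t ht => (h.1 t ht).mul (h'.1 t ht), h.2.mul h'.2⟩

lemma Adp.const (c : ℝ) : Adp μ F s T (fun _ _ => c) :=
  ⟨fun _ _ => aestronglyMeasurable_const, measurable_const⟩

lemma Adp.const_mul {φ : ℝ → Ω → ℝ} (h : Adp μ F s T φ) (c : ℝ) :
    Adp μ F s T (fun t ω => c * φ t ω) := (Adp.const c).mul h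

lemma Adp.sum {ι : Type} (I : Finset ι) {φ : ι → ℝ → Ω → ℝ} (h : ∀ i ∈ I, Adp μ F s T (φ i)) :
    Adp μ F s T (fun t ω => ∑ i ∈ I, φ i t ω) := by
  classical
  induction I using Finset.induction_on with
  | empty => simpa using Adp.const 0
  | insert i I hi ih =>
    simp only [Finset.sum_insert hi]
    exact (h i (by simp)).add (ih fun j hj => h j (by simp [hj]))

lemma aesm_integral {φ : ℝ → Ω → ℝ} (hφ : Adp μ F s T φ)
    (hi : ∀ᵐ ω ∂μ, IntervalIntegrable (fun r => φ r ω) volume s T)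
    {a t : ℝ} (hsa : s ≤ a) (hat : a ≤ t) (htT : t ≤ T) :
    AEStronglyMeasurable[F t] (fun ω => ∫ r in a..t, φ r ω) μ := by
  have h1 : ∀ n : ℕ, AEStronglyMeasurable[F t]
      (fun ω => ∫ r in a..t, max (-(n:ℝ)) (min (φ r ω) n)) μ := fun n =>
    aesm_integral_bdd (C := n)
      (hφ.comp_cont (g := fun x => max (-(n:ℝ)) (min x n)) (by fun_prop))
      (fun r ω => by
        have : (0:ℝ) ≤ n := Nat.cast_nonneg n
        rw [abs_le]; constructor
        · exact le_max_left _ _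
        · exact max_le (by linarith) (min_le_right _ _)) hsa hat htT
  refine aesm_of_tendsto h1 ?_
  filter_upwards [hi] with ω hω
  refine intervalIntegral.tendsto_integral_filter_of_dominated_convergence
    (fun r => |φ r ω|) ?_ ?_ ?_ ?_
  · refine Eventually.of_forall fun n => Measurable.aestronglyMeasurable ?_
    have : Measurable fun r => φ r ω := hφ.2.comp (measurable_id.prodMk measurable_const)
    fun_prop
  · refine Eventually.of_forall fun n => ae_of_all _ fun r _ => ?_
    have : (0:ℝ) ≤ n := Nat.cast_nonneg n
    rw [Real.norm_eq_abs, abs_le]; constructor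
    · rw [neg_le]
      rcases le_total (φ r ω) n with h | h
      · rw [min_eq_left h]
        have := le_max_right (-(n:ℝ)) (φ r ω)
        linarith [neg_abs_le (φ r ω)]
      · rw [min_eq_right h]
        have := le_max_right (-(n:ℝ)) n
        linarith [abs_nonneg (φ r ω)]
    · refine max_le (by linarith [abs_nonneg (φ r ω)]) ((min_le_left _ _).trans (le_abs_self _))
  · exact (intervalIntegrable_sub hω hsa hat htT).abs
  · refine ae_of_all _ fun r _ => tendsto_const_nhds.congr' ?_
    obtain ⟨n0, hn0⟩ := exists_nat_ge |φ r ω|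
    filter_upwards [eventually_ge_atTop n0] with n hn
    have h2 : |φ r ω| ≤ n := hn0.trans (by exact_mod_cast hn)
    rw [abs_le] at h2
    rw [min_eq_left h2.2, max_eq_right h2.1]

/-- Left dyadic approximation of `t` (clamped to `[s,T]`), started at `s`. -/
def dyad (s T : ℝ) (n : ℕ) (t : ℝ) : ℝ :=
  s + ⌊(max s (min t T) - s) * 2 ^ n⌋ / 2 ^ n

lemma dyad_le (n : ℕ) {t : ℝ} (ht : t ∈ Icc s T) :
    s ≤ dyad s T n t ∧ dyad s T n t ≤ t ∧ t - 1 / 2 ^ n ≤ dyad s T n t := by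
  have e : max s (min t T) = t := by rw [min_eq_left ht.2, max_eq_right ht.1]
  have h2 : (0:ℝ) < 2 ^ n := by positivity
  unfold dyad
  rw [e]
  have h0 : (0:ℝ) ≤ ⌊(t - s) * 2 ^ n⌋ := by
    exact_mod_cast Int.floor_nonneg.2 (mul_nonneg (by linarith [ht.1]) h2.le)
  refine ⟨by have := div_nonneg h0 h2.le; linarith, ?_, ?_⟩
  · have := (div_le_iff₀ h2).2 (Int.floor_le ((t - s) * 2 ^ n))
    linarith
  · have h3 := Int.lt_floor_add_one ((t - s) * 2 ^ n)
    have : t - s ≤ (⌊(t - s) * 2 ^ n⌋ + 1) / 2 ^ n := (le_div_iff₀ h2).2 h3.le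
    rw [add_div] at this
    linarith

lemma tendsto_dyad {t : ℝ} (ht : t ∈ Icc s T) :
    Tendsto (fun n => dyad s T n t) atTop (nhdsWithin t (Icc s T)) := by
  refine tendsto_nhdsWithin_iff.2 ⟨?_, Eventually.of_forall fun n =>
    ⟨(dyad_le n ht).1, (dyad_le n ht).2.1.trans ht.2⟩⟩
  refine tendsto_of_tendsto_of_tendsto_of_le_of_le (g := fun n : ℕ => t - 1 / 2 ^ n)
    (h := fun _ => t) ?_ tendsto_const_nhds (fun n => (dyad_le n ht).2.2)
    (fun n => (dyad_le n ht).2.1)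
  have : Tendsto (fun n : ℕ => ((1:ℝ)/2) ^ n) atTop (nhds 0) :=
    tendsto_pow_atTop_nhds_zero_of_lt_one (by norm_num) (by norm_num)
  simpa [one_div] using tendsto_const_nhds.sub this

/-- An a.s. continuous process adapted up to null sets has an indistinguishable version that is
genuinely adapted and jointly measurable. -/
lemma exists_version (hsT : s ≤ T) {X : ℝ → Ω → ℝ}
    (hX : ∀ t ∈ Icc s T, AEStronglyMeasurable[F t] (X t) μ)
    (hc : ∀ᵐ ω ∂μ, ContinuousOn (fun t => X t ω) (Icc s T)) :
    ∃ X' : ℝ → Ω → ℝ, (∀ t ∈ Icc s T, Measurable[F t] (X' t)) ∧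
      (Measurable fun p : ℝ × Ω => X' p.1 p.2) ∧
      ∀ᵐ ω ∂μ, ∀ t ∈ Icc s T, X' t ω = X t ω := by
  have hex : ∀ q, ∃ Y : Ω → ℝ, q ∈ Icc s T → Measurable[F q] Y ∧ X q =ᵐ[μ] Y := by
    intro q
    by_cases hq : q ∈ Icc s T
    · obtain ⟨Y, h1, h2⟩ := hX q hq
      exact ⟨Y, fun _ => ⟨h1.measurable, h2⟩⟩
    · exact ⟨0, fun h => absurd h hq⟩
  choose Y hY using hex
  have hmem : ∀ n t, dyad s T n t ∈ Icc s T := by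
    intro n t
    have h1 : max s (min t T) ∈ Icc s T := ⟨le_max_left _ _, max_le hsT (min_le_right _ _)⟩
    have h2 : dyad s T n t = dyad s T n (max s (min t T)) := by
      unfold dyad; rw [min_eq_left h1.2, max_eq_right h1.1]
    rw [h2]
    exact ⟨(dyad_le n h1).1, (dyad_le n h1).2.1.trans h1.2⟩
  refine ⟨fun t ω => limsup (fun n => Y (dyad s T n t) ω) atTop, fun t ht => ?_, ?_, ?_⟩
  · refine Measurable.limsup fun n => ?_
    exact ((hY _ (hmem n t)).1).mono (F.mono (dyad_le n ht).2.1) le_rfl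
  · refine Measurable.limsup fun n => ?_
    let g : ℤ × Ω → ℝ := fun p => if s + (p.1:ℝ) / 2 ^ n ∈ Icc s T then Y (s + (p.1:ℝ) / 2 ^ n) p.2
      else 0
    have hg : Measurable g := by
      refine measurable_from_prod_countable_right fun j => ?_
      by_cases hj : s + (j:ℝ) / 2 ^ n ∈ Icc s T
      · simp only [g, hj, if_true]
        exact (hY _ hj).1.mono (F.le _) le_rfl
      · simp only [g, hj, if_false]
        exact measurable_const
    have hq : Measurable fun p : ℝ × Ω =>
        ((⌊(max s (min p.1 T) - s) * 2 ^ n⌋ : ℤ), p.2) := by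
      refine Measurable.prodMk (Int.measurable_floor.comp ?_) measurable_snd
      fun_prop
    have := hg.comp hq
    convert this using 1
    ext p
    have hm := hmem n p.1
    simp only [dyad] at hm
    simp only [Function.comp, g, hm, if_true, dyad]
  · have hall : ∀ᵐ ω ∂μ, ∀ (n : ℕ) (j : ℤ), s + (j:ℝ) / 2 ^ n ∈ Icc s T →
        X (s + (j:ℝ) / 2 ^ n) ω = Y (s + (j:ℝ) / 2 ^ n) ω := by
      rw [ae_all_iff]; intro n
      rw [ae_all_iff]; intro j
      by_cases hj : s + (j:ℝ) / 2 ^ n ∈ Icc s T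
      · exact (hY _ hj).2.mono fun ω h _ => h
      · exact ae_of_all _ fun ω h => absurd h hj
    filter_upwards [hall, hc] with ω h1 h2 t ht
    refine Tendsto.limsup_eq ?_
    have h3 := ((h2 t ht).tendsto).comp (tendsto_dyad ht)
    refine h3.congr fun n => ?_
    exact h1 n _ (hmem n t)

end adapted
end SLQ

namespace SLQ

set_option linter.unusedSectionVars false

/-! ### Integration by parts for martingales -/

section ibp

variable {Ω : Type} {mΩ : MeasurableSpace Ω} {μ : Measure Ω} [IsProbabilityMeasure μ]
  {F : Filtration ℝ mΩ} {s T : ℝ}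

/-- The product measure `dt ⊗ μ` on `(s,T] × Ω`. -/
abbrev PM (μ : Measure Ω) (s T : ℝ) : Measure (ℝ × Ω) := (volume.restrict (Ioc s T)).prod μ

lemma PM.intervalIntegrable (hsT : s ≤ T) {f : ℝ → Ω → ℝ}
    (h : Integrable (fun p : ℝ × Ω => f p.1 p.2) (PM μ s T)) :
    ∀ᵐ ω ∂μ, IntervalIntegrable (fun r => f r ω) volume s T := by
  filter_upwards [h.prod_left_ae] with ω hω
  rw [intervalIntegrable_iff_integrableOn_Ioc_of_le hsT]
  exact hω

lemma PM.mono {f : ℝ × Ω → ℝ} (h : Integrable f (PM μ s T)) {a b : ℝ} (hsa : s ≤ a)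
    (hbT : b ≤ T) (A : Set Ω) :
    Integrable f ((volume.restrict (Ioc a b)).prod (μ.restrict A)) := by
  refine h.mono_measure (Measure.prod_mono ?_ Measure.restrict_le_self)
  exact Measure.restrict_mono (Ioc_subset_Ioc hsa hbT) le_rfl

lemma PM.integrable_integral {f : ℝ → Ω → ℝ}
    (h : Integrable (fun p : ℝ × Ω => f p.1 p.2) (PM μ s T)) {a b : ℝ} (hsa : s ≤ a)
    (hab : a ≤ b) (hbT : b ≤ T) : Integrable (fun ω => ∫ r in a..b, f r ω) μ := by
  have h1 := (PM.mono h hsa hbT univ).integral_prod_right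
  simp only [Measure.restrict_univ] at h1
  simpa only [intervalIntegral.integral_of_le hab] using h1

lemma PM.fubini {f : ℝ → Ω → ℝ}
    (h : Integrable (fun p : ℝ × Ω => f p.1 p.2) (PM μ s T)) {a b : ℝ} (hsa : s ≤ a)
    (hab : a ≤ b) (hbT : b ≤ T) (A : Set Ω) :
    ∫ ω in A, (∫ r in a..b, f r ω) ∂μ = ∫ r in Ioc a b, (∫ ω in A, f r ω ∂μ) := by
  simp only [intervalIntegral.integral_of_le hab]
  exact (integral_integral_swap (PM.mono h hsa hbT A)).symm

/-- A process with a.s. bounded total mass times a fixed integrable variable. -/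
lemma PM.integrable_mul (hsT : s ≤ T) {v : ℝ → Ω → ℝ}
    (hv : Measurable fun p : ℝ × Ω => v p.1 p.2) {C : ℝ}
    (hvi : ∀ᵐ ω ∂μ, IntervalIntegrable (fun r => v r ω) volume s T ∧ ∫ r in s..T, |v r ω| ≤ C)
    {X : Ω → ℝ} (hX : Integrable X μ) :
    Integrable (fun p : ℝ × Ω => v p.1 p.2 * X p.2) (PM μ s T) := by
  have hm : AEStronglyMeasurable (fun p : ℝ × Ω => v p.1 p.2 * X p.2) (PM μ s T) :=
    hv.aestronglyMeasurable.mul hX.aestronglyMeasurable.comp_snd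
  refine (integrable_prod_iff' hm).2 ⟨?_, ?_⟩
  · filter_upwards [hvi] with ω hω
    have := hω.1
    rw [intervalIntegrable_iff_integrableOn_Ioc_of_le hsT] at this
    exact this.mul_const (X ω)
  · refine (hX.norm.const_mul C).mono' hm.prod_swap.norm.integral_prod_right' ?_
    filter_upwards [hvi] with ω hω
    have e : ∫ r in Ioc s T, ‖v r ω * X ω‖ = (∫ r in s..T, |v r ω|) * ‖X ω‖ := by
      rw [intervalIntegral.integral_of_le hsT, ← integral_mul_const]
      simp only [norm_mul, Real.norm_eq_abs]
    rw [Real.norm_of_nonneg (integral_nonneg fun r => norm_nonneg _), e]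
    exact mul_le_mul_of_nonneg_right hω.2 (norm_nonneg _)

/-- Integration by parts of a martingale against an adapted process of bounded total variation:
`V N - ∫ N dV` is again a martingale. -/
lemma ibp (hsT : s ≤ T) {N v V : ℝ → Ω → ℝ} (hN : WM μ F s T N)
    (hNm : Measurable fun p : ℝ × Ω => N p.1 p.2) (hv : Adp μ F s T v) {C : ℝ}
    (hvi : ∀ᵐ ω ∂μ, IntervalIntegrable (fun r => v r ω) volume s T ∧ ∫ r in s..T, |v r ω| ≤ C)
    (hV : ∀ t ∈ Icc s T, ∀ᵐ ω ∂μ, V t ω = V s ω + ∫ r in s..t, v r ω)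
    (hVs : AEStronglyMeasurable[F s] (V s) μ) (hVb : ∀ᵐ ω ∂μ, |V s ω| ≤ C) :
    Integrable (fun p : ℝ × Ω => v p.1 p.2 * N p.1 p.2) (PM μ s T) ∧
    WM μ F s T (fun t ω => V t ω * N t ω - ∫ r in s..t, v r ω * N r ω) := by
  have hNs : ∀ t, Measurable (N t) := fun t => hNm.comp (measurable_const.prodMk measurable_id)
  have hprod : ∀ u ∈ Icc s T, Integrable (fun p : ℝ × Ω => v p.1 p.2 * N u p.2) (PM μ s T) :=
    fun u hu => PM.integrable_mul hsT hv.2 hvi (hN.1 u hu)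
  have hpt : ∀ u ∈ Icc s T, ∀ᵐ r ∂(volume.restrict (Ioc s T)), r ≤ u →
      Integrable (fun ω => v r ω * N r ω) μ ∧
      (∫ ω, |v r ω * N r ω| ∂μ ≤ ∫ ω, |v r ω * N u ω| ∂μ) ∧
      ∀ A, MeasurableSet[F r] A → ∫ ω in A, v r ω * N r ω ∂μ = ∫ ω in A, v r ω * N u ω ∂μ := by
    intro u hu
    filter_upwards [(hprod u hu).prod_right_ae, ae_restrict_mem measurableSet_Ioc] with r hr hrm hru
    have e1 : μ[(fun ω => v r ω * N u ω)|F r] =ᵐ[μ] fun ω => v r ω * N r ω := by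
      refine (condExp_mul_of_aestronglyMeasurable_left (hv.1 r ⟨hrm.1.le, hrm.2⟩) hr
        (hN.1 u hu)).trans ?_
      filter_upwards [hN.2 r u hrm.1.le hru hu.2] with ω hω
      simp [hω]
    refine ⟨integrable_condExp.congr e1, ?_, fun A hA => ?_⟩
    · have e2 : ∫ ω, |(μ[(fun ω => v r ω * N u ω)|F r]) ω| ∂μ = ∫ ω, |v r ω * N r ω| ∂μ :=
        integral_congr_ae (e1.mono fun ω hω => congrArg abs hω)
      rw [← e2]
      exact integral_abs_condExp_le _
    · rw [← setIntegral_condExp (F.le r) hr hA]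
      exact setIntegral_congr_ae (F.le r _ hA) (e1.mono fun ω hω _ => hω.symm)
  have hI : Integrable (fun p : ℝ × Ω => v p.1 p.2 * N p.1 p.2) (PM μ s T) := by
    have hm : AEStronglyMeasurable (fun p : ℝ × Ω => v p.1 p.2 * N p.1 p.2) (PM μ s T) :=
      (hv.2.mul hNm).aestronglyMeasurable
    refine (integrable_prod_iff hm).2 ⟨?_, ?_⟩
    · filter_upwards [hpt T ⟨hsT, le_rfl⟩, ae_restrict_mem measurableSet_Ioc] with r hr hrm
      exact (hr hrm.2).1
    · refine (((integrable_prod_iff (hprod T ⟨hsT, le_rfl⟩).1).1 (hprod T ⟨hsT, le_rfl⟩)).2).mono'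
        hm.norm.integral_prod_right' ?_
      filter_upwards [hpt T ⟨hsT, le_rfl⟩, ae_restrict_mem measurableSet_Ioc] with r hr hrm
      rw [Real.norm_of_nonneg (integral_nonneg fun r => norm_nonneg _)]
      exact (hr hrm.2).2.1
  refine ⟨hI, ?_⟩
  have hii := PM.intervalIntegrable (f := fun r ω => v r ω * N r ω) hsT hI
  have hvAdp : Adp μ F s T (fun r ω => v r ω * N r ω) :=
    ⟨fun t ht => (hv.1 t ht).mul (hN.aesm ht), hv.2.mul hNm⟩
  have hVa : ∀ t ∈ Icc s T, AEStronglyMeasurable[F t] (V t) μ := by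
    intro t ht
    have h1 := aesm_integral hv (hvi.mono fun ω h => h.1) le_rfl ht.1 ht.2
    exact ((aesm_mono ht.1 hVs).add h1).congr ((hV t ht).mono fun ω h => h.symm)
  have hVbd : ∀ t ∈ Icc s T, ∀ᵐ ω ∂μ, |V t ω| ≤ C + C := by
    intro t ht
    filter_upwards [hV t ht, hVb, hvi] with ω h1 h2 h3
    rw [h1]
    refine (abs_add_le _ _).trans (add_le_add h2 (le_trans ?_ h3.2))
    refine (intervalIntegral.abs_integral_le_integral_abs ht.1).trans ?_
    rw [← intervalIntegral.integral_add_adjacent_intervals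
      (intervalIntegrable_sub h3.1.abs le_rfl ht.1 ht.2)
      (intervalIntegrable_sub h3.1.abs ht.1 ht.2 le_rfl)]
    linarith [intervalIntegral.integral_nonneg (f := fun r => |v r ω|) (μ := volume) ht.2
      (fun r _ => abs_nonneg _)]
  have hVN : ∀ t ∈ Icc s T, ∀ u ∈ Icc s T, Integrable (fun ω => V t ω * N u ω) μ := by
    intro t ht u hu
    exact (hN.1 u hu).bdd_mul (aesm_full (hVa t ht)) (hVbd t ht)
  refine wm_of_setIntegral (fun t ht => ?_) (fun t ht => ?_) (fun t u hst htu huT A hA => ?_)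
  · exact (hVN t ht t ht).sub (PM.integrable_integral (f := fun r ω => v r ω * N r ω) hI le_rfl ht.1 ht.2)
  · exact ((hVa t ht).mul (hN.aesm ht)).sub (aesm_integral hvAdp hii le_rfl ht.1 ht.2)
  · have ht : t ∈ Icc s T := ⟨hst, htu.trans huT⟩
    have hu : u ∈ Icc s T := ⟨hst.trans htu, huT⟩
    have hA' : MeasurableSet A := F.le t _ hA
    have a1 : ∫ ω in A, V t ω * N t ω ∂μ = ∫ ω in A, V t ω * N u ω ∂μ := by
      have e1 : μ[(fun ω => V t ω * N u ω)|F t] =ᵐ[μ] fun ω => V t ω * N t ω := by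
        refine (condExp_mul_of_aestronglyMeasurable_left (hVa t ht) (hVN t ht u hu)
          (hN.1 u hu)).trans ?_
        filter_upwards [hN.2 t u hst htu huT] with ω hω
        simp [hω]
      rw [← setIntegral_condExp (F.le t) (hVN t ht u hu) hA]
      exact setIntegral_congr_ae hA' (e1.mono fun ω hω _ => hω.symm)
    have a2 : ∫ ω in A, (V u ω - V t ω) * N u ω ∂μ =
        ∫ ω in A, (∫ r in t..u, v r ω * N r ω) ∂μ := by
      have e1 : ∫ ω in A, (V u ω - V t ω) * N u ω ∂μ =
          ∫ ω in A, (∫ r in t..u, v r ω * N u ω) ∂μ := by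
        refine setIntegral_congr_ae hA' ?_
        filter_upwards [hV t ht, hV u hu, hvi] with ω h1 h2 h3 _
        rw [intervalIntegral.integral_mul_const, h1, h2,
          ← intervalIntegral.integral_add_adjacent_intervals
          (intervalIntegrable_sub h3.1 le_rfl hst ht.2)
          (intervalIntegrable_sub h3.1 hst htu huT)]
        ring
      rw [e1, PM.fubini (f := fun r ω => v r ω * N u ω) (hprod u hu) hst htu huT,
        PM.fubini (f := fun r ω => v r ω * N r ω) hI hst htu huT]
      refine setIntegral_congr_ae measurableSet_Ioc ?_
      have := (ae_restrict_iff' measurableSet_Ioc).1 (hpt u hu)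
      filter_upwards [this] with r hr hrm
      exact ((hr ⟨hst.trans_lt hrm.1, hrm.2.trans huT⟩ hrm.2).2.2 A (F.mono hrm.1.le _ hA)).symm
    have a3 : ∫ ω in A, (∫ r in t..u, v r ω * N r ω) ∂μ =
        ∫ ω in A, (∫ r in s..u, v r ω * N r ω) ∂μ - ∫ ω in A, (∫ r in s..t, v r ω * N r ω) ∂μ := by
      rw [← integral_sub (PM.integrable_integral (f := fun r ω => v r ω * N r ω) hI le_rfl hu.1 hu.2).integrableOn
        (PM.integrable_integral (f := fun r ω => v r ω * N r ω) hI le_rfl ht.1 ht.2).integrableOn]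
      refine setIntegral_congr_ae hA' ?_
      filter_upwards [hii] with ω h3 _
      rw [← intervalIntegral.integral_add_adjacent_intervals
          (intervalIntegrable_sub h3 le_rfl hst ht.2)
          (intervalIntegrable_sub h3 hst htu huT)]
      ring
    have a4 : ∫ ω in A, (V u ω - V t ω) * N u ω ∂μ =
        ∫ ω in A, V u ω * N u ω ∂μ - ∫ ω in A, V t ω * N u ω ∂μ := by
      rw [← integral_sub (hVN u hu u hu).integrableOn (hVN t ht u hu).integrableOn]
      simp only [sub_mul]
    rw [integral_sub (hVN t ht t ht).integrableOn
        (PM.integrable_integral (f := fun r ω => v r ω * N r ω) hI le_rfl ht.1 ht.2).integrableOn,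
      integral_sub (hVN u hu u hu).integrableOn
        (PM.integrable_integral (f := fun r ω => v r ω * N r ω) hI le_rfl hu.1 hu.2).integrableOn]
    linarith

end ibp
end SLQ

namespace SLQ

set_option linter.unusedSectionVars false

/-! ### The energy inequality -/

lemma path_exp {s T δ : ℝ} (hsT : s ≤ T) {ρ : ℝ → ℝ} (hρi : IntervalIntegrable ρ volume s T)
    (hδ : 0 < δ) :
    IntervalIntegrable (fun r => ρ r * Real.exp (-δ * ∫ x in s..r, ρ x)) volume s T ∧
    ∫ r in s..T, ρ r * Real.exp (-δ * ∫ x in s..r, ρ x) =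
      (1 - Real.exp (-δ * ∫ x in s..T, ρ x)) / δ := by
  have h1 : Prim s T (fun t => -δ * ∫ x in s..t, ρ x) (fun t => -δ * ρ t) :=
    ⟨hρi.const_mul _, fun t _ => by simp [intervalIntegral.integral_const_mul]⟩
  have h2 := h1.exp hsT
  have h3 := h2.sub_eq le_rfl hsT le_rfl
  have e : ∀ r, ρ r * Real.exp (-δ * ∫ x in s..r, ρ x) =
      (-δ⁻¹) * (-δ * ρ r * Real.exp (-δ * ∫ x in s..r, ρ x)) := fun r => by
    field_simp
  simp only [e]
  refine ⟨h2.1.const_mul _, ?_⟩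
  rw [intervalIntegral.integral_const_mul, ← h3]
  simp only [intervalIntegral.integral_same, mul_zero, Real.exp_zero]
  field_simp
  ring

lemma mul_exp_le {ε x : ℝ} (hε : 0 < ε) : x * Real.exp (-ε * x) ≤ 1 / ε := by
  have h := Real.add_one_le_exp (ε * x)
  rw [le_div_iff₀ hε, neg_mul, Real.exp_neg, mul_assoc, mul_comm _ ε, ← mul_assoc,
    ← div_eq_mul_inv, div_le_one (Real.exp_pos _)]
  linarith

/-- Pathwise bounds on the total variation of the exponential weight `B` and of `2 B V`. -/
lemma path_bounds {s T ε c : ℝ} (hsT : s ≤ T) (hε : 0 < ε) {a ρ g : ℝ → ℝ} (ha : ∀ r, 0 ≤ a r)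
    (hρ : ∀ r, 0 ≤ ρ r) (hg : ∀ r, |g r| ≤ ρ r) (hai : IntervalIntegrable a volume s T)
    (hρi : IntervalIntegrable ρ volume s T) (hgi : IntervalIntegrable g volume s T)
    (hc : ∫ r in s..T, a r ≤ c) {B V : ℝ → ℝ}
    (hB : ∀ t, B t = Real.exp (∫ r in s..t, (a r - ε * ρ r))) (hV : ∀ t, V t = ∫ r in s..t, g r) :
    (∀ t ∈ Icc s T, B t ≤ Real.exp c * Real.exp (-ε * ∫ r in s..t, ρ r)) ∧
    Prim s T B (fun r => (a r - ε * ρ r) * B r) ∧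
    (∫ r in s..T, |(a r - ε * ρ r) * B r| ≤ Real.exp c * (c + 1)) ∧
    Prim s T (fun t => 2 * (B t * V t)) (fun r => 2 * ((a r - ε * ρ r) * B r * V r + B r * g r)) ∧
    (∫ r in s..T, |2 * ((a r - ε * ρ r) * B r * V r + B r * g r)| ≤
      Real.exp c * (2 * c / ε + 12 / ε)) := by
  have hB0 : ∀ t, 0 < B t := fun t => by rw [hB]; exact Real.exp_pos _
  have hsub : ∀ {φ : ℝ → ℝ}, IntervalIntegrable φ volume s T → ∀ t ∈ Icc s T,
      IntervalIntegrable φ volume s t := fun h t ht => intervalIntegrable_sub h le_rfl ht.1 ht.2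
  have hac : ∀ t ∈ Icc s T, ∫ r in s..t, a r ≤ c := by
    intro t ht
    refine le_trans ?_ hc
    rw [← intervalIntegral.integral_add_adjacent_intervals (hsub hai t ht)
      (intervalIntegrable_sub hai ht.1 ht.2 le_rfl)]
    linarith [intervalIntegral.integral_nonneg (f := a) (μ := volume) ht.2 (fun r _ => ha r)]
  have hBle : ∀ t ∈ Icc s T, B t ≤ Real.exp c * Real.exp (-ε * ∫ r in s..t, ρ r) := by
    intro t ht
    rw [hB, ← Real.exp_add, intervalIntegral.integral_sub (hsub hai t ht)
      ((hsub hρi t ht).const_mul ε), intervalIntegral.integral_const_mul]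
    exact Real.exp_le_exp.2 (by linarith [hac t ht])
  have hbi : IntervalIntegrable (fun r => a r - ε * ρ r) volume s T := hai.sub (hρi.const_mul ε)
  have hBP : Prim s T B (fun r => (a r - ε * ρ r) * B r) := by
    have := (prim_integral hbi).exp hsT
    refine (this.congr hsT fun t _ => hB t).congr_deriv hsT fun t _ => by rw [hB]
  have hVP : Prim s T V g := (prim_integral hgi).congr hsT fun t _ => hV t
  have hBV : Prim s T (fun t => 2 * (B t * V t))
      (fun r => 2 * ((a r - ε * ρ r) * B r * V r + B r * g r)) := by
    have h1 := hBP.mul hsT hVP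
    refine ⟨h1.1.const_mul 2, fun t ht => ?_⟩
    have h2 := h1.2 t ht
    simp only at h2
    simp only
    rw [intervalIntegral.integral_const_mul, h2]
    ring
  have hR0 : ∀ t ∈ Icc s T, 0 ≤ ∫ r in s..t, ρ r := fun t ht =>
    intervalIntegral.integral_nonneg ht.1 fun r _ => hρ r
  have hVR : ∀ t ∈ Icc s T, |V t| ≤ ∫ r in s..t, ρ r := by
    intro t ht
    rw [hV]
    refine (intervalIntegral.abs_integral_le_integral_abs ht.1).trans ?_
    exact intervalIntegral.integral_mono_on ht.1 (hsub hgi.abs t ht) (hsub hρi t ht)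
      fun r _ => hg r
  have habs : ∀ r, |a r - ε * ρ r| ≤ a r + ε * ρ r := fun r => by
    have := mul_nonneg hε.le (hρ r)
    rw [abs_le]; constructor <;> linarith [ha r]
  have hc0 : 0 ≤ c := le_trans (intervalIntegral.integral_nonneg hsT fun r _ => ha r) hc
  refine ⟨hBle, hBP, ?_, hBV, ?_⟩
  · obtain ⟨i1, e1⟩ := path_exp hsT hρi hε
    have i2 : IntervalIntegrable (fun r => Real.exp c *
        (a r + ε * (ρ r * Real.exp (-ε * ∫ x in s..r, ρ x)))) volume s T :=
      (hai.add (i1.const_mul ε)).const_mul _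
    refine (intervalIntegral.integral_mono_on hsT hBP.1.abs i2 fun r hr => ?_).trans ?_
    · rw [abs_mul, abs_of_pos (hB0 r)]
      have k1 := hBle r hr
      have k3 : Real.exp (-ε * ∫ x in s..r, ρ x) ≤ 1 := Real.exp_le_one_iff.2 (by
        have := mul_nonneg hε.le (hR0 r hr); linarith)
      set E := Real.exp (-ε * ∫ x in s..r, ρ x)
      calc |a r - ε * ρ r| * B r ≤ (a r + ε * ρ r) * (Real.exp c * E) :=
            mul_le_mul (habs r) k1 (hB0 r).le (add_nonneg (ha r) (mul_nonneg hε.le (hρ r)))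
        _ = Real.exp c * (a r * E + ε * (ρ r * E)) := by ring
        _ ≤ _ := by
          refine mul_le_mul_of_nonneg_left ?_ (Real.exp_pos _).le
          linarith [mul_le_of_le_one_right (ha r) k3]
    · rw [intervalIntegral.integral_const_mul, intervalIntegral.integral_add hai (i1.const_mul ε),
        intervalIntegral.integral_const_mul, e1, mul_div_cancel₀ _ hε.ne']
      refine mul_le_mul_of_nonneg_left ?_ (Real.exp_pos _).le
      linarith [Real.exp_pos (-ε * ∫ x in s..T, ρ x)]
  · obtain ⟨i1, e1⟩ := path_exp hsT hρi (half_pos hε)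
    have i2 : IntervalIntegrable (fun r => Real.exp c * ((2 / ε) * a r +
        6 * (ρ r * Real.exp (-(ε/2) * ∫ x in s..r, ρ x)))) volume s T :=
      ((hai.const_mul _).add (i1.const_mul 6)).const_mul _
    refine (intervalIntegral.integral_mono_on hsT hBV.1.abs i2 fun r hr => ?_).trans ?_
    · have k1 := hBle r hr
      have hR := hR0 r hr
      have kV := hVR r hr
      set R := ∫ x in s..r, ρ x
      set E := Real.exp (-(ε/2) * R) with hE
      have hEE : Real.exp (-ε * R) = E * E := by rw [hE, ← Real.exp_add]; ring_nf
      have hE0 : 0 < E := Real.exp_pos _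
      have hE1 : E ≤ 1 := Real.exp_le_one_iff.2 (by
        have := mul_nonneg (half_pos hε).le hR; linarith)
      have k4 : R * Real.exp (-ε * R) ≤ 1 / ε := mul_exp_le hε
      have k5 : R * E ≤ 2 / ε := by
        have := mul_exp_le (x := R) (half_pos hε)
        rwa [one_div_div] at this
      have hec := Real.exp_pos c
      rw [abs_mul, abs_two]
      have s1 : |(a r - ε * ρ r) * B r * V r + B r * g r| ≤
          (a r + ε * ρ r) * (B r * R) + B r * ρ r := by
        refine (abs_add_le _ _).trans (add_le_add ?_ ?_)
        · rw [abs_mul, abs_mul, abs_of_pos (hB0 r), mul_assoc]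
          exact mul_le_mul (habs r) (mul_le_mul_of_nonneg_left kV (hB0 r).le)
            (mul_nonneg (hB0 r).le (abs_nonneg _)) (add_nonneg (ha r) (mul_nonneg hε.le (hρ r)))
        · rw [abs_mul, abs_of_pos (hB0 r)]
          exact mul_le_mul_of_nonneg_left (hg r) (hB0 r).le
      have s2 : B r * R ≤ Real.exp c * (1 / ε) := by
        calc B r * R ≤ Real.exp c * Real.exp (-ε * R) * R := mul_le_mul_of_nonneg_right k1 hR
          _ = Real.exp c * (R * Real.exp (-ε * R)) := by ring
          _ ≤ _ := mul_le_mul_of_nonneg_left k4 hec.le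
      have s3 : B r * R ≤ Real.exp c * ((2 / ε) * E) := by
        calc B r * R ≤ Real.exp c * Real.exp (-ε * R) * R := mul_le_mul_of_nonneg_right k1 hR
          _ = Real.exp c * (R * E * E) := by rw [hEE]; ring
          _ ≤ _ := mul_le_mul_of_nonneg_left (mul_le_mul_of_nonneg_right k5 hE0.le) hec.le
      have s4 : B r ≤ Real.exp c * E := by
        refine k1.trans (mul_le_mul_of_nonneg_left ?_ hec.le)
        rw [hEE]; exact mul_le_of_le_one_right hE0.le hE1
      have t1 := mul_le_mul_of_nonneg_left s2 (ha r)
      have t2 := mul_le_mul_of_nonneg_left s3 (mul_nonneg hε.le (hρ r))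
      have t3 := mul_le_mul_of_nonneg_right s4 (hρ r)
      have t4 : ε * ρ r * (Real.exp c * ((2 / ε) * E)) = Real.exp c * (2 * (ρ r * E)) := by
        field_simp
      calc 2 * |(a r - ε * ρ r) * B r * V r + B r * g r|
          ≤ 2 * (a r * (Real.exp c * (1 / ε)) + Real.exp c * (2 * (ρ r * E))
            + Real.exp c * E * ρ r) := by
            rw [← t4]; linarith
        _ = _ := by ring
    · rw [intervalIntegral.integral_const_mul,
        intervalIntegral.integral_add (hai.const_mul _) (i1.const_mul 6),
        intervalIntegral.integral_const_mul, intervalIntegral.integral_const_mul, e1]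
      refine mul_le_mul_of_nonneg_left ?_ (Real.exp_pos _).le
      have h1 : 2 / ε * ∫ r in s..T, a r ≤ 2 * c / ε := by
        rw [div_mul_eq_mul_div]
        gcongr
      have h2 : 6 * ((1 - Real.exp (-(ε/2) * ∫ x in s..T, ρ x)) / (ε / 2)) ≤ 12 / ε := by
        rw [div_div_eq_mul_div, mul_div_assoc', div_le_div_iff_of_pos_right hε]
        linarith [Real.exp_pos (-(ε/2) * ∫ x in s..T, ρ x)]
      exact add_le_add h1 h2

section energy

variable {Ω : Type} {mΩ : MeasurableSpace Ω} {μ : Measure Ω} [IsProbabilityMeasure μ]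
  {F : Filtration ℝ mΩ} {s T : ℝ}

lemma measurable_integral_joint {φ : ℝ → Ω → ℝ} (h : Measurable fun p : ℝ × Ω => φ p.1 p.2)
    (a : ℝ) : Measurable fun p : ℝ × Ω => ∫ r in a..p.1, φ r p.2 := by
  have h1 : ∀ S : Set ((ℝ × Ω) × ℝ), MeasurableSet S →
      Measurable fun p : ℝ × Ω => ∫ r, S.indicator (fun q => φ q.2 q.1.2) (p, r) := by
    intro S hS
    have hm : Measurable fun q : (ℝ × Ω) × ℝ => φ q.2 q.1.2 :=
      h.comp (measurable_snd.prodMk (measurable_snd.comp measurable_fst))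
    exact (StronglyMeasurable.integral_prod_right (f := fun p r => S.indicator
      (fun q : (ℝ × Ω) × ℝ => φ q.2 q.1.2) (p, r))
      (hm.indicator hS).stronglyMeasurable).measurable
  have hS1 : MeasurableSet {q : (ℝ × Ω) × ℝ | a < q.2 ∧ q.2 ≤ q.1.1} :=
    (measurableSet_lt measurable_const measurable_snd).inter
      (measurableSet_le measurable_snd (measurable_fst.comp measurable_fst))
  have hS2 : MeasurableSet {q : (ℝ × Ω) × ℝ | q.1.1 < q.2 ∧ q.2 ≤ a} :=
    (measurableSet_lt (measurable_fst.comp measurable_fst) measurable_snd).inter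
      (measurableSet_le measurable_snd measurable_const)
  have := (h1 _ hS1).sub (h1 _ hS2)
  convert this using 1
  ext p
  simp only [intervalIntegral, Pi.sub_apply]
  rw [← integral_indicator measurableSet_Ioc, ← integral_indicator measurableSet_Ioc]
  rfl

lemma Adp.integral {φ : ℝ → Ω → ℝ} (hφ : Adp μ F s T φ)
    (hi : ∀ᵐ ω ∂μ, IntervalIntegrable (fun r => φ r ω) volume s T) :
    Adp μ F s T (fun t ω => ∫ r in s..t, φ r ω) :=
  ⟨fun _ ht => aesm_integral hφ hi le_rfl ht.1 ht.2, measurable_integral_joint hφ.2 s⟩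

end energy
end SLQ

namespace SLQ

set_option linter.unusedSectionVars false

section energy2

variable {Ω : Type} {mΩ : MeasurableSpace Ω} {μ : Measure Ω} [IsProbabilityMeasure μ]
  {F : Filtration ℝ mΩ} {s T : ℝ}

/-- Scalar semimartingale data `Y = M + ∫ g` on `[s,T]`, where `M` is a martingale with quadratic
variation `∫ z²`. -/
structure Semi (μ : Measure Ω) (F : Filtration ℝ mΩ) (s T : ℝ) (Y M z g : ℝ → Ω → ℝ) : Prop where
  hz : Adp μ F s T z
  hg : Adp μ F s T g
  hzi : ∀ᵐ ω ∂μ, IntervalIntegrable (fun r => z r ω ^ 2) volume s T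
  hgi : ∀ᵐ ω ∂μ, IntervalIntegrable (fun r => g r ω) volume s T
  hMm : Measurable fun p : ℝ × Ω => M p.1 p.2
  hM : WM μ F s T M
  hM2 : WM μ F s T (fun t ω => M t ω ^ 2 - ∫ r in s..t, z r ω ^ 2)
  hYm : Measurable fun p : ℝ × Ω => Y p.1 p.2
  hY : ∀ᵐ ω ∂μ, ∀ t ∈ Icc s T, Y t ω = M t ω + ∫ r in s..t, g r ω

/-- Weighted Itô formula for `Y²`: the weight `exp (∫ (a - ε ρ))`, where `ρ` dominates `|g|`, damps
the paths enough to make all the products integrable. -/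
lemma Semi.weighted (hsT : s ≤ T) {Y M z g a ρ : ℝ → Ω → ℝ} (h : Semi μ F s T Y M z g)
    {ε c : ℝ} (hε : 0 < ε) (ha : Adp μ F s T a) (ha0 : ∀ r ω, 0 ≤ a r ω)
    (hai : ∀ᵐ ω ∂μ, IntervalIntegrable (fun r => a r ω) volume s T ∧ ∫ r in s..T, a r ω ≤ c)
    (hρ : Adp μ F s T ρ) (hρg : ∀ r ω, |g r ω| ≤ ρ r ω)
    (hρi : ∀ᵐ ω ∂μ, IntervalIntegrable (fun r => ρ r ω) volume s T)
    {B : ℝ → Ω → ℝ} (hB : ∀ t ω, B t ω = Real.exp (∫ r in s..t, (a r ω - ε * ρ r ω))) :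
    (∀ᵐ ω ∂μ, IntervalIntegrable (fun r => B r ω * ((a r ω - ε * ρ r ω) * Y r ω ^ 2
        + 2 * g r ω * Y r ω + z r ω ^ 2)) volume s T) ∧
    WM μ F s T (fun t ω => B t ω * Y t ω ^ 2 - ∫ r in s..t, B r ω * ((a r ω - ε * ρ r ω) * Y r ω ^ 2
        + 2 * g r ω * Y r ω + z r ω ^ 2)) := by
  have hρ0 : ∀ r ω, 0 ≤ ρ r ω := fun r ω => (abs_nonneg _).trans (hρg r ω)
  have hb : Adp μ F s T (fun r ω => a r ω - ε * ρ r ω) := ha.sub (hρ.const_mul ε)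
  have hbi : ∀ᵐ ω ∂μ, IntervalIntegrable (fun r => a r ω - ε * ρ r ω) volume s T := by
    filter_upwards [hai, hρi] with ω h1 h2
    exact h1.1.sub (h2.const_mul ε)
  have hBa : Adp μ F s T B := by
    have := (hb.integral hbi).comp_cont Real.continuous_exp
    have e : B = fun t ω => Real.exp (∫ r in s..t, (a r ω - ε * ρ r ω)) := by
      ext t ω; exact hB t ω
    rw [e]; exact this
  set V : ℝ → Ω → ℝ := fun t ω => ∫ r in s..t, g r ω with hVdef
  have hVa : Adp μ F s T V := h.hg.integral h.hgi
  set Q : ℝ → Ω → ℝ := fun t ω => ∫ r in s..t, z r ω ^ 2 with hQdef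
  have hz2 : Adp μ F s T (fun r ω => z r ω ^ 2) := h.hz.comp_cont (g := fun x => x ^ 2) (by fun_prop)
  have hQm : Measurable fun p : ℝ × Ω => Q p.1 p.2 := measurable_integral_joint (φ := fun r ω => z r ω ^ 2) hz2.2 s
  have hpath : ∀ᵐ ω ∂μ,
      (∀ t ∈ Icc s T, B t ω ≤ Real.exp c * Real.exp (-ε * ∫ r in s..t, ρ r ω)) ∧
      Prim s T (fun t => B t ω) (fun r => (a r ω - ε * ρ r ω) * B r ω) ∧
      (∫ r in s..T, |(a r ω - ε * ρ r ω) * B r ω| ≤ Real.exp c * (c + 1)) ∧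
      Prim s T (fun t => 2 * (B t ω * V t ω))
        (fun r => 2 * ((a r ω - ε * ρ r ω) * B r ω * V r ω + B r ω * g r ω)) ∧
      (∫ r in s..T, |2 * ((a r ω - ε * ρ r ω) * B r ω * V r ω + B r ω * g r ω)| ≤
        Real.exp c * (2 * c / ε + 12 / ε)) := by
    filter_upwards [hai, hρi, h.hgi] with ω h1 h2 h3
    exact path_bounds hsT hε (fun r => ha0 r ω) (fun r => hρ0 r ω) (fun r => hρg r ω) h1.1 h2 h3
      h1.2 (fun t => hB t ω) (fun t => rfl)
  have hBs : ∀ ω, B s ω = 1 := fun ω => by rw [hB]; simp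
  have hVs : ∀ ω, V s ω = 0 := fun ω => by simp [hVdef]
  have hQs : ∀ ω, Q s ω = 0 := fun ω => by simp [hQdef]
  -- integration by parts against `M² - Q` with coefficient `B`
  obtain ⟨I1, W1⟩ := ibp (C := max 1 (Real.exp c * (c + 1))) hsT h.hM2
    ((h.hMm.pow_const 2).sub hQm) (hb.mul hBa) (V := B)
    (by filter_upwards [hpath] with ω hω using ⟨hω.2.1.1, hω.2.2.1.trans (le_max_right _ _)⟩)
    (fun t ht => by filter_upwards [hpath] with ω hω using hω.2.1.2 t ht)
    (hBa.1 s ⟨le_rfl, hsT⟩) (ae_of_all _ fun ω => by rw [hBs]; simp)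
  -- integration by parts against `M` with coefficient `2 B V`
  obtain ⟨I2, W2⟩ := ibp (C := max 1 (Real.exp c * (2 * c / ε + 12 / ε))) hsT h.hM h.hMm
    (v := fun r ω => 2 * ((a r ω - ε * ρ r ω) * B r ω * V r ω + B r ω * g r ω))
    ((((hb.mul hBa).mul hVa).add (hBa.mul h.hg)).const_mul 2) (V := fun t ω => 2 * (B t ω * V t ω))
    (by filter_upwards [hpath] with ω hω using
      ⟨hω.2.2.2.1.1, hω.2.2.2.2.trans (le_max_right _ _)⟩)
    (fun t ht => by filter_upwards [hpath] with ω hω using hω.2.2.2.1.2 t ht)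
    ((((hBa.mul hVa).const_mul 2)).1 s ⟨le_rfl, hsT⟩)
    (ae_of_all _ fun ω => by rw [hVs]; simp)
  have J1 := PM.intervalIntegrable (f := fun r ω => (a r ω - ε * ρ r ω) * B r ω *
    (M r ω ^ 2 - Q r ω)) hsT I1
  have J2 := PM.intervalIntegrable (f := fun r ω =>
    2 * ((a r ω - ε * ρ r ω) * B r ω * V r ω + B r ω * g r ω) * M r ω) hsT I2
  have hall : ∀ᵐ ω ∂μ, IntervalIntegrable (fun r => B r ω * ((a r ω - ε * ρ r ω) * Y r ω ^ 2
        + 2 * g r ω * Y r ω + z r ω ^ 2)) volume s T ∧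
      ∀ t ∈ Icc s T, B t ω * Y t ω ^ 2 - ∫ r in s..t, B r ω * ((a r ω - ε * ρ r ω) * Y r ω ^ 2
        + 2 * g r ω * Y r ω + z r ω ^ 2) =
      (B t ω * (M t ω ^ 2 - Q t ω) - ∫ r in s..t, (a r ω - ε * ρ r ω) * B r ω *
        (M r ω ^ 2 - Q r ω)) + (2 * (B t ω * V t ω) * M t ω - ∫ r in s..t,
        2 * ((a r ω - ε * ρ r ω) * B r ω * V r ω + B r ω * g r ω) * M r ω) := by
    filter_upwards [hpath, J1, J2, h.hY, h.hgi, h.hzi] with ω hω j1 j2 hY hgi hzi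
    have PV : Prim s T (fun t => V t ω) (fun r => g r ω) := prim_integral hgi
    have PQ : Prim s T (fun t => Q t ω) (fun r => z r ω ^ 2) := prim_integral hzi
    have P3 := hω.2.1.mul hsT (PQ.add (PV.mul hsT PV))
    have e : ∀ r ∈ Icc s T, B r ω * ((a r ω - ε * ρ r ω) * Y r ω ^ 2
        + 2 * g r ω * Y r ω + z r ω ^ 2) = ((a r ω - ε * ρ r ω) * B r ω * (M r ω ^ 2 - Q r ω) +
        2 * ((a r ω - ε * ρ r ω) * B r ω * V r ω + B r ω * g r ω) * M r ω) +
        ((a r ω - ε * ρ r ω) * B r ω * (Q r ω + V r ω * V r ω) +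
          B r ω * (z r ω ^ 2 + (g r ω * V r ω + V r ω * g r ω))) := by
      intro r hr
      rw [hY r hr]
      simp only [hVdef]
      ring
    refine ⟨((j1.add j2).add P3.1).congr fun r hr => ?_, fun t ht => ?_⟩
    · rw [uIoc_of_le hsT] at hr
      exact (e r (Ioc_subset_Icc_self hr)).symm
    · have e2 : ∫ r in s..t, B r ω * ((a r ω - ε * ρ r ω) * Y r ω ^ 2
        + 2 * g r ω * Y r ω + z r ω ^ 2) = ∫ r in s..t, (((a r ω - ε * ρ r ω) * B r ω *
        (M r ω ^ 2 - Q r ω) +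
        2 * ((a r ω - ε * ρ r ω) * B r ω * V r ω + B r ω * g r ω) * M r ω) +
        ((a r ω - ε * ρ r ω) * B r ω * (Q r ω + V r ω * V r ω) +
          B r ω * (z r ω ^ 2 + (g r ω * V r ω + V r ω * g r ω)))) := by
        refine intervalIntegral.integral_congr fun r hr => ?_
        rw [uIcc_of_le ht.1] at hr
        exact e r ⟨hr.1, hr.2.trans ht.2⟩
      have k1 := intervalIntegrable_sub j1 le_rfl ht.1 ht.2
      have k2 := intervalIntegrable_sub j2 le_rfl ht.1 ht.2
      have k3 := intervalIntegrable_sub P3.1 le_rfl ht.1 ht.2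
      have e3 := P3.2 t ht
      simp only [hQs, hVs, mul_zero, add_zero, zero_add] at e3
      rw [e2, intervalIntegral.integral_add (k1.add k2) k3, intervalIntegral.integral_add k1 k2,
        ← e3, hY t ht]
      change B t ω * (M t ω + V t ω) ^ 2 - _ = _
      ring
  refine ⟨hall.mono fun ω h => h.1, (W1.add W2).congr fun t ht => ?_⟩
  filter_upwards [hall] with ω hω
  exact hω.2 t ht

end energy2
end SLQ

namespace SLQ

set_option linter.unusedSectionVars false

/-- Pathwise lower bound for the drift of the damped weighted square. -/
lemma path_energy {s T ε c K t : ℝ} (hsT : s ≤ T) (hε : 0 < ε) (ht : t ∈ Icc s T)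
    {a ρ y q e hh : ℝ → ℝ} (ha : ∀ r, 0 ≤ a r)
    (hρ : ∀ r, 0 ≤ ρ r) (hai : IntervalIntegrable a volume s T)
    (hρi : IntervalIntegrable ρ volume s T) (hc : ∫ r in s..T, a r ≤ c)
    (hy0 : ∀ r, 0 ≤ y r) (hyK : ∀ r ∈ Icc s T, y r ≤ K)
    (he0 : ∀ r, 0 ≤ e r) (hh0 : ∀ r, 0 ≤ hh r) (hhi : IntervalIntegrable hh volume s T)
    (hin : ∀ r ∈ Icc s T, e r ≤ a r * y r + q r + hh r)
    (hG : IntervalIntegrable (fun r => Real.exp (∫ x in s..r, (a x - ε * ρ x)) *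
      ((a r - ε * ρ r) * y r + q r)) volume s T) :
    0 ≤ (∫ r in t..T, Real.exp (∫ x in s..r, (a x - ε * ρ x)) * ((a r - ε * ρ r) * y r + q r)) +
      (∫ r in t..T, Real.exp (∫ x in s..r, a x) * hh r) +
      K * Real.exp c * (1 - Real.exp (-ε * ∫ x in s..T, ρ x)) ∧
    ∫⁻ r in Ioc t T, ENNReal.ofReal (Real.exp (-ε * ∫ x in s..T, ρ x) *
        (Real.exp (∫ x in s..r, a x) * e r)) ≤
      ENNReal.ofReal ((∫ r in t..T, Real.exp (∫ x in s..r, (a x - ε * ρ x)) *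
        ((a r - ε * ρ r) * y r + q r)) +
      (∫ r in t..T, Real.exp (∫ x in s..r, a x) * hh r) +
      K * Real.exp c * (1 - Real.exp (-ε * ∫ x in s..T, ρ x))) := by
  have hsub : ∀ {φ : ℝ → ℝ}, IntervalIntegrable φ volume s T → ∀ t ∈ Icc s T,
      IntervalIntegrable φ volume s t := fun h t ht => intervalIntegrable_sub h le_rfl ht.1 ht.2
  have hK0 : 0 ≤ K := (hy0 t).trans (hyK t ht)
  have hmon : ∀ {φ : ℝ → ℝ}, (∀ r, 0 ≤ φ r) → IntervalIntegrable φ volume s T → ∀ t ∈ Icc s T,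
      0 ≤ ∫ r in s..t, φ r ∧ ∫ r in s..t, φ r ≤ ∫ r in s..T, φ r := by
    intro φ h0 hi t ht
    rw [← intervalIntegral.integral_add_adjacent_intervals (hsub hi t ht)
      (intervalIntegrable_sub hi ht.1 ht.2 le_rfl)]
    have := intervalIntegral.integral_nonneg (f := φ) (μ := volume) ht.2 (fun r _ => h0 r)
    exact ⟨intervalIntegral.integral_nonneg ht.1 (fun r _ => h0 r), by linarith⟩
  obtain ⟨i1, e1⟩ := path_exp hsT hρi hε
  have hBc : ContinuousOn (fun r => Real.exp (∫ x in s..r, a x)) (Icc s T) :=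
    Real.continuous_exp.comp_continuousOn ((prim_integral hai).continuousOn hsT)
  have i2 : IntervalIntegrable (fun r => Real.exp (∫ x in s..r, a x) * hh r) volume s T :=
    hhi.continuousOn_mul (by rwa [uIcc_of_le hsT])
  set E : ℝ → ℝ := fun r => Real.exp (-ε * ∫ x in s..r, ρ x) with hE
  set B : ℝ → ℝ := fun r => Real.exp (∫ x in s..r, a x) with hB
  have hfac : ∀ r ∈ Icc s T, Real.exp (∫ x in s..r, (a x - ε * ρ x)) = B r * E r := by
    intro r hr
    rw [intervalIntegral.integral_sub (hsub hai r hr) ((hsub hρi r hr).const_mul ε),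
      intervalIntegral.integral_const_mul, hB, hE]
    simp only
    rw [← Real.exp_add]; ring_nf
  set R : ℝ → ℝ := fun r => Real.exp (∫ x in s..r, (a x - ε * ρ x)) * ((a r - ε * ρ r) * y r + q r)
    + B r * hh r + K * Real.exp c * ε * (ρ r * E r) with hR
  have hpt : ∀ r ∈ Icc s T, E T * (B r * e r) ≤ R r := by
    intro r hr
    have hE0 : 0 < E r := Real.exp_pos _
    have hB0 : 0 < B r := Real.exp_pos _
    have hE1 : E r ≤ 1 := Real.exp_le_one_iff.2 (by
      have := mul_nonneg hε.le (hmon hρ hρi r hr).1; linarith)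
    have hET : E T ≤ E r := Real.exp_le_exp.2 (by
      have := mul_le_mul_of_nonneg_left (hmon hρ hρi r hr).2 hε.le; linarith)
    have hBc : B r ≤ Real.exp c := Real.exp_le_exp.2 ((hmon ha hai r hr).2.trans hc)
    simp only [hR]
    rw [hfac r hr]
    have s1 : E T * (B r * e r) ≤ E r * (B r * e r) :=
      mul_le_mul_of_nonneg_right hET (mul_nonneg hB0.le (he0 r))
    have s2 : E r * (B r * e r) ≤ E r * (B r * (a r * y r + q r + hh r)) :=
      mul_le_mul_of_nonneg_left (mul_le_mul_of_nonneg_left (hin r hr) hB0.le) hE0.le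
    have s3 : E r * (B r * hh r) ≤ B r * hh r :=
      mul_le_of_le_one_left (mul_nonneg hB0.le (hh0 r)) hE1
    have s4 : B r * y r ≤ Real.exp c * K := mul_le_mul hBc (hyK r hr) (hy0 r) (Real.exp_pos c).le
    have s5 : (ε * (ρ r * E r)) * (B r * y r) ≤ (ε * (ρ r * E r)) * (Real.exp c * K) :=
      mul_le_mul_of_nonneg_left s4 (mul_nonneg hε.le (mul_nonneg (hρ r) hE0.le))
    nlinarith
  have hRi : IntervalIntegrable R volume s T := (hG.add i2).add (i1.const_mul _)
  have hRt := intervalIntegrable_sub hRi ht.1 ht.2 le_rfl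
  have hR0 : ∀ r ∈ Icc s T, 0 ≤ R r := fun r hr =>
    le_trans (mul_nonneg (Real.exp_pos _).le (mul_nonneg (Real.exp_pos _).le (he0 r))) (hpt r hr)
  have hle : ∫ r in t..T, R r ≤ (∫ r in t..T, Real.exp (∫ x in s..r, (a x - ε * ρ x)) *
        ((a r - ε * ρ r) * y r + q r)) + (∫ r in t..T, B r * hh r) +
      K * Real.exp c * (1 - E T) := by
    have j1 := intervalIntegrable_sub hG ht.1 ht.2 le_rfl
    have j2 := intervalIntegrable_sub i2 ht.1 ht.2 le_rfl
    have j3 := intervalIntegrable_sub i1 ht.1 ht.2 le_rfl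
    simp only [hR]
    rw [intervalIntegral.integral_add (j1.add j2) (j3.const_mul _),
      intervalIntegral.integral_add j1 j2, intervalIntegral.integral_const_mul]
    have k1 : ∫ r in t..T, ρ r * E r ≤ (1 - E T) / ε := by
      rw [← e1, ← intervalIntegral.integral_add_adjacent_intervals (hsub i1 t ht) j3]
      have := intervalIntegral.integral_nonneg (f := fun r => ρ r * E r) (μ := volume) ht.1
        (fun r _ => mul_nonneg (hρ r) (Real.exp_pos _).le)
      simp only [hE] at this ⊢
      linarith
    have k2 := mul_le_mul_of_nonneg_left k1
      (mul_nonneg (mul_nonneg hK0 (Real.exp_pos c).le) hε.le)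
    have k3 : K * Real.exp c * ε * ((1 - E T) / ε) = K * Real.exp c * (1 - E T) := by field_simp
    linarith
  refine ⟨le_trans (intervalIntegral.integral_nonneg ht.2 fun r hr => hR0 r ⟨ht.1.trans hr.1, hr.2⟩)
    hle, le_trans ?_ (ENNReal.ofReal_le_ofReal hle)⟩
  rw [intervalIntegral.integral_of_le ht.2, ofReal_integral_eq_lintegral_ofReal]
  · refine setLIntegral_mono_ae' measurableSet_Ioc (ae_of_all _ fun r hr =>
      ENNReal.ofReal_le_ofReal (hpt r ⟨ht.1.trans hr.1.le, hr.2⟩))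
  · rwa [intervalIntegrable_iff_integrableOn_Ioc_of_le ht.2] at hRt
  · exact (ae_restrict_iff' measurableSet_Ioc).2 (ae_of_all _ fun r hr =>
      hR0 r ⟨ht.1.trans hr.1.le, hr.2⟩)

end SLQ

namespace SLQ

set_option linter.unusedSectionVars false

section energy3

variable {Ω : Type} {mΩ : MeasurableSpace Ω} {μ : Measure Ω} [IsProbabilityMeasure μ]
  {F : Filtration ℝ mΩ} {s T : ℝ}

lemma WM.sum {ι : Type} (I : Finset ι) {N : ι → ℝ → Ω → ℝ} (h : ∀ i ∈ I, WM μ F s T (N i)) :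
    WM μ F s T (fun t ω => ∑ i ∈ I, N i t ω) := by
  classical
  induction I using Finset.induction_on with
  | empty =>
    have h0 : AEStronglyMeasurable[F s] (fun _ : Ω => (0 : ℝ)) μ := aestronglyMeasurable_const
    simpa using WM.const (T := T) h0 (integrable_zero _ _ _)
  | insert i I hi ih =>
    simp only [Finset.sum_insert hi]
    exact (h i (Finset.mem_insert_self _ _)).add (ih fun j hj => h j (Finset.mem_insert_of_mem hj))

lemma intervalIntegrable_sum {k : ℕ} {a b : ℝ} {f : Fin k → ℝ → ℝ}
    (h : ∀ i, IntervalIntegrable (f i) volume a b) :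
    IntervalIntegrable (fun r => ∑ i, f i r) volume a b := by
  have e : (fun r => ∑ i, f i r) = ∑ i, f i := by ext; simp
  rw [e]
  exact IntervalIntegrable.sum _ fun i _ => h i

/-- The data entering the energy inequality: a bounded vector semimartingale whose drift
satisfies a one-sided quadratic bound. -/
structure Energy (μ : Measure Ω) (F : Filtration ℝ mΩ) (s T : ℝ) {k : ℕ}
    (Y M z g : Fin k → ℝ → Ω → ℝ) (K c : ℝ) (a e hh : ℝ → Ω → ℝ) : Prop where
  semi : ∀ i, Semi μ F s T (Y i) (M i) (z i) (g i)
  bdd : ∀ᵐ ω ∂μ, ∀ t ∈ Icc s T, ∑ i, Y i t ω ^ 2 ≤ K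
  ha : Adp μ F s T a
  ha0 : ∀ r ω, 0 ≤ a r ω
  hai : ∀ᵐ ω ∂μ, IntervalIntegrable (fun r => a r ω) volume s T ∧ ∫ r in s..T, a r ω ≤ c
  hem : Measurable fun p : ℝ × Ω => e p.1 p.2
  he0 : ∀ r ω, 0 ≤ e r ω
  hh0 : ∀ r ω, 0 ≤ hh r ω
  hhi : Integrable (fun p : ℝ × Ω => hh p.1 p.2) (PM μ s T)
  hin : ∀ᵐ ω ∂μ, ∀ r ∈ Icc s T, e r ω ≤ a r ω * ∑ i, Y i r ω ^ 2 +
    (∑ i, (2 * g i r ω * Y i r ω + z i r ω ^ 2)) + hh r ω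

lemma adp_weight {a : ℝ → Ω → ℝ} (ha : Adp μ F s T a)
    (hai : ∀ᵐ ω ∂μ, IntervalIntegrable (fun r => a r ω) volume s T) :
    Adp μ F s T (fun t ω => Real.exp (∫ r in s..t, a r ω)) :=
  (ha.integral hai).comp_cont Real.continuous_exp

/-- The energy inequality with damping parameter `ε`. -/
lemma Energy.damped (hsT : s ≤ T) {k : ℕ} {Y M z g : Fin k → ℝ → Ω → ℝ} {K c : ℝ}
    {a e hh : ℝ → Ω → ℝ} (H : Energy μ F s T Y M z g K c a e hh) {ε : ℝ} (hε : 0 < ε)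
    {t : ℝ} (ht : t ∈ Icc s T) {A : Set Ω} (hA : MeasurableSet[F t] A) :
    ∫⁻ ω in A, ENNReal.ofReal (Real.exp (-ε * ∫ x in s..T, ∑ i, |g i x ω|)) *
      (ENNReal.ofReal (Real.exp (∫ x in s..t, a x ω) * ∑ i, Y i t ω ^ 2) +
        ∫⁻ r in Ioc t T, ENNReal.ofReal (Real.exp (∫ x in s..r, a x ω) * e r ω)) ∂μ ≤
    ENNReal.ofReal ((∫ ω in A, Real.exp (∫ x in s..T, a x ω) * ∑ i, Y i T ω ^ 2 ∂μ) +
      (∫ ω in A, (∫ r in t..T, Real.exp (∫ x in s..r, a x ω) * hh r ω) ∂μ) +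
      ∫ ω, K * Real.exp c * (1 - Real.exp (-ε * ∫ x in s..T, ∑ i, |g i x ω|)) ∂μ) := by
  have hAm : MeasurableSet A := F.le t _ hA
  set ρ : ℝ → Ω → ℝ := fun r ω => ∑ i, |g i r ω| with hρdef
  have hρ : Adp μ F s T ρ := Adp.sum _ fun i _ => (H.semi i).hg.comp_cont continuous_abs
  have hρ0 : ∀ r ω, 0 ≤ ρ r ω := fun r ω => Finset.sum_nonneg fun i _ => abs_nonneg _
  have hρi : ∀ᵐ ω ∂μ, IntervalIntegrable (fun r => ρ r ω) volume s T := by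
    have : ∀ᵐ ω ∂μ, ∀ i, IntervalIntegrable (fun r => g i r ω) volume s T :=
      ae_all_iff.2 fun i => (H.semi i).hgi
    filter_upwards [this] with ω hω
    exact intervalIntegrable_sum fun i => (hω i).abs
  set B : ℝ → Ω → ℝ := fun t ω => Real.exp (∫ r in s..t, (a r ω - ε * ρ r ω)) with hB
  set Bo : ℝ → Ω → ℝ := fun t ω => Real.exp (∫ r in s..t, a r ω) with hBo
  have hBoA : Adp μ F s T Bo := adp_weight H.ha (H.hai.mono fun ω h => h.1)
  have hBA : Adp μ F s T B := adp_weight (H.ha.sub (hρ.const_mul ε)) (by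
    filter_upwards [H.hai, hρi] with ω h1 h2 using h1.1.sub (h2.const_mul ε))
  have hw : ∀ i, _ := fun i => (H.semi i).weighted hsT hε H.ha H.ha0 H.hai hρ
    (fun r ω => Finset.single_le_sum (f := fun i => |g i r ω|) (fun i _ => abs_nonneg _)
      (Finset.mem_univ i)) hρi (B := B) (fun t ω => rfl)
  set y : ℝ → Ω → ℝ := fun r ω => ∑ i, Y i r ω ^ 2 with hy
  set q : ℝ → Ω → ℝ := fun r ω => ∑ i, (2 * g i r ω * Y i r ω + z i r ω ^ 2) with hq
  have hym : Measurable fun p : ℝ × Ω => y p.1 p.2 :=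
    Finset.measurable_sum _ fun i _ => (H.semi i).hYm.pow_const 2
  have hyt : ∀ t, Measurable (y t) := fun t => hym.comp (measurable_const.prodMk measurable_id)
  have hy0 : ∀ r ω, 0 ≤ y r ω := fun r ω => Finset.sum_nonneg fun i _ => sq_nonneg _
  have hGsum : ∀ r ω, B r ω * ((a r ω - ε * ρ r ω) * y r ω + q r ω) =
      ∑ i, B r ω * ((a r ω - ε * ρ r ω) * Y i r ω ^ 2 + 2 * g i r ω * Y i r ω + z i r ω ^ 2) := by
    intro r ω
    simp only [hy, hq]
    rw [Finset.mul_sum, ← Finset.sum_add_distrib, Finset.mul_sum]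
    exact Finset.sum_congr rfl fun i _ => by ring
  have hwi : ∀ᵐ ω ∂μ, ∀ i, IntervalIntegrable (fun r => B r ω * ((a r ω - ε * ρ r ω) * Y i r ω ^ 2
        + 2 * g i r ω * Y i r ω + z i r ω ^ 2)) volume s T := ae_all_iff.2 fun i => (hw i).1
  have hGi : ∀ᵐ ω ∂μ, IntervalIntegrable (fun r => B r ω * ((a r ω - ε * ρ r ω) * y r ω + q r ω))
      volume s T := by
    filter_upwards [hwi] with ω hω
    simp only [hGsum]
    exact intervalIntegrable_sum hω
  set I : ℝ → Ω → ℝ := fun t ω => ∫ r in s..t, B r ω * ((a r ω - ε * ρ r ω) * y r ω + q r ω)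
    with hI
  have hWM : WM μ F s T (fun t ω => B t ω * y t ω - I t ω) := by
    refine (WM.sum Finset.univ fun i _ => (hw i).2).congr fun t ht => ?_
    filter_upwards [hwi] with ω hω
    rw [Finset.sum_sub_distrib, ← intervalIntegral.integral_finsetSum fun i _ =>
      intervalIntegrable_sub (hω i) le_rfl ht.1 ht.2]
    simp only [hI, hGsum]
    simp only [hy, Finset.mul_sum]
  have hpath : ∀ᵐ ω ∂μ, ∀ r ∈ Icc s T, B r ω ≤ Bo r ω ∧ Bo r ω ≤ Real.exp c ∧
      B r ω = Bo r ω * Real.exp (-ε * ∫ x in s..r, ρ x ω) ∧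
      ∫ x in s..r, ρ x ω ≤ ∫ x in s..T, ρ x ω := by
    filter_upwards [H.hai, hρi] with ω h1 h2 r hr
    have k1 := intervalIntegrable_sub h1.1 le_rfl hr.1 hr.2
    have k2 := intervalIntegrable_sub h2 le_rfl hr.1 hr.2
    have k3 := intervalIntegral.integral_nonneg (μ := volume) hr.1 (fun x _ => hρ0 x ω)
    have k4 : ∫ x in s..r, a x ω ≤ ∫ x in s..T, a x ω := by
      rw [← intervalIntegral.integral_add_adjacent_intervals k1
        (intervalIntegrable_sub h1.1 hr.1 hr.2 le_rfl)]
      have := intervalIntegral.integral_nonneg (μ := volume) hr.2 (fun x _ => H.ha0 x ω)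
      linarith
    have k5 : ∫ x in s..r, ρ x ω ≤ ∫ x in s..T, ρ x ω := by
      rw [← intervalIntegral.integral_add_adjacent_intervals k2
        (intervalIntegrable_sub h2 hr.1 hr.2 le_rfl)]
      have := intervalIntegral.integral_nonneg (μ := volume) hr.2 (fun x _ => hρ0 x ω)
      linarith
    have e : ∫ x in s..r, (a x ω - ε * ρ x ω) =
        (∫ x in s..r, a x ω) + -ε * ∫ x in s..r, ρ x ω := by
      rw [intervalIntegral.integral_sub k1 (k2.const_mul ε), intervalIntegral.integral_const_mul]
      ring
    refine ⟨?_, Real.exp_le_exp.2 (k4.trans h1.2), ?_, k5⟩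
    · simp only [hB, hBo]
      rw [e]
      exact Real.exp_le_exp.2 (by have := mul_nonneg hε.le k3; linarith)
    · simp only [hB, hBo]
      rw [e, Real.exp_add]
  have hb1 : ∀ u ∈ Icc s T, Integrable (fun ω => Bo u ω * y u ω) μ := by
    intro u hu
    refine Integrable.of_bound (C := Real.exp c * K)
      ((hBoA.measurable_section u).mul (hyt u)).aestronglyMeasurable ?_
    filter_upwards [hpath, H.bdd] with ω h1 h2
    rw [Real.norm_of_nonneg (mul_nonneg (Real.exp_pos _).le (hy0 _ _))]
    exact mul_le_mul (h1 u hu).2.1 (h2 u hu) (hy0 _ _) (Real.exp_pos _).le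
  have hb2 : ∀ u ∈ Icc s T, Integrable (fun ω => B u ω * y u ω) μ := by
    intro u hu
    refine (hb1 u hu).mono' ((hBA.measurable_section u).mul (hyt u)).aestronglyMeasurable ?_
    filter_upwards [hpath] with ω h1
    rw [Real.norm_of_nonneg (mul_nonneg (Real.exp_pos _).le (hy0 _ _))]
    exact mul_le_mul_of_nonneg_right (h1 u hu).1 (hy0 _ _)
  have hIi : ∀ u ∈ Icc s T, Integrable (fun ω => I u ω) μ := fun u hu => by
    refine ((hb2 u hu).sub (hWM.1 u hu)).congr (ae_of_all _ fun ω => ?_)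
    simp
  have hTT : T ∈ Icc s T := ⟨hsT, le_rfl⟩
  have hset := hWM.setIntegral ht.1 ht.2 le_rfl hA
  rw [integral_sub (hb2 t ht).integrableOn (hIi t ht).integrableOn,
    integral_sub (hb2 T hTT).integrableOn (hIi T hTT).integrableOn] at hset
  have hBh : Integrable (fun p : ℝ × Ω => Bo p.1 p.2 * hh p.1 p.2) (PM μ s T) := by
    refine (H.hhi.const_mul (Real.exp c)).mono' (hBoA.2.aestronglyMeasurable.mul H.hhi.1) ?_
    have hae : ∀ᵐ p ∂(PM μ s T), Bo p.1 p.2 ≤ Real.exp c := by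
      have hms : MeasurableSet {p : ℝ × Ω | Bo p.1 p.2 ≤ Real.exp c} :=
        measurableSet_le hBoA.2 measurable_const
      refine (Measure.ae_prod_iff_ae_ae hms).2 ?_
      refine (ae_restrict_iff' measurableSet_Ioc).2 (ae_of_all _ fun r hr => ?_)
      filter_upwards [hpath] with ω h1 using (h1 r (Ioc_subset_Icc_self hr)).2.1
    filter_upwards [hae] with p hp
    rw [Real.norm_of_nonneg (mul_nonneg (Real.exp_pos _).le (H.hh0 _ _))]
    exact mul_le_mul_of_nonneg_right hp (H.hh0 _ _)
  have hBhi : Integrable (fun ω => ∫ r in t..T, Bo r ω * hh r ω) μ :=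
    PM.integrable_integral (f := fun r ω => Bo r ω * hh r ω) hBh ht.1 ht.2 le_rfl
  have hRm : Measurable fun ω => ∫ x in s..T, ρ x ω := measurable_integral_left hρ.2 s T
  have hK0 : 0 ≤ K := by
    obtain ⟨ω, hω⟩ := H.bdd.exists
    exact (hy0 t ω).trans (hω t ht)
  have herr0 : ∀ ω, 0 ≤ K * Real.exp c * (1 - Real.exp (-ε * ∫ x in s..T, ρ x ω)) := by
    intro ω
    refine mul_nonneg (mul_nonneg hK0 (Real.exp_pos _).le) (sub_nonneg.2 (Real.exp_le_one_iff.2 ?_))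
    have := mul_nonneg hε.le (intervalIntegral.integral_nonneg (μ := volume) hsT
      (fun x _ => hρ0 x ω))
    linarith
  have herri : Integrable
      (fun ω => K * Real.exp c * (1 - Real.exp (-ε * ∫ x in s..T, ρ x ω))) μ := by
    refine Integrable.of_bound (C := K * Real.exp c)
      (by fun_prop : Measurable _).aestronglyMeasurable (ae_of_all _ fun ω => ?_)
    rw [Real.norm_of_nonneg (herr0 ω)]
    refine mul_le_of_le_one_right (mul_nonneg hK0 (Real.exp_pos _).le) ?_
    linarith [Real.exp_pos (-ε * ∫ x in s..T, ρ x ω)]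
  set U : Ω → ℝ := fun ω => (I T ω - I t ω) + (∫ r in t..T, Bo r ω * hh r ω) +
      K * Real.exp c * (1 - Real.exp (-ε * ∫ x in s..T, ρ x ω)) with hU
  have hUi : Integrable U μ := (((hIi T hTT).sub (hIi t ht)).add hBhi).add herri
  have hkey : ∀ᵐ ω ∂μ, 0 ≤ U ω ∧ ENNReal.ofReal (Real.exp (-ε * ∫ x in s..T, ρ x ω)) *
      (ENNReal.ofReal (Bo t ω * y t ω) + ∫⁻ r in Ioc t T, ENNReal.ofReal (Bo r ω * e r ω)) ≤
      ENNReal.ofReal (B t ω * y t ω + U ω) := by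
    filter_upwards [H.hai, hρi, H.bdd, PM.intervalIntegrable (f := hh) hsT H.hhi, H.hin, hGi, hpath]
      with ω h1 h2 h3 h4 h5 h6 h7
    obtain ⟨p1, p2⟩ := path_energy hsT hε ht (fun r => H.ha0 r ω) (fun r => hρ0 r ω) h1.1 h2 h1.2
      (fun r => hy0 r ω) h3 (fun r => H.he0 r ω) (fun r => H.hh0 r ω) h4 h5 h6
    have e : I T ω - I t ω = ∫ r in t..T, B r ω * ((a r ω - ε * ρ r ω) * y r ω + q r ω) := by
      simp only [hI]
      rw [← intervalIntegral.integral_add_adjacent_intervals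
        (intervalIntegrable_sub h6 le_rfl ht.1 ht.2) (intervalIntegrable_sub h6 ht.1 ht.2 le_rfl)]
      ring
    have hU0 : 0 ≤ U ω := by
      simp only [hU]; rw [e]; exact p1
    refine ⟨hU0, ?_⟩
    rw [ENNReal.ofReal_add (mul_nonneg (Real.exp_pos _).le (hy0 _ _)) hU0, mul_add]
    refine add_le_add ?_ ?_
    · rw [← ENNReal.ofReal_mul (Real.exp_pos _).le]
      refine ENNReal.ofReal_le_ofReal ?_
      change _ ≤ B t ω * y t ω
      rw [(h7 t ht).2.2.1]
      have : Real.exp (-ε * ∫ x in s..T, ρ x ω) ≤ Real.exp (-ε * ∫ x in s..t, ρ x ω) :=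
        Real.exp_le_exp.2 (by
          have := mul_le_mul_of_nonneg_left (h7 t ht).2.2.2 hε.le; linarith)
      have h8 := mul_le_mul_of_nonneg_right this
        (mul_nonneg (Real.exp_pos (∫ r in s..t, a r ω)).le (hy0 t ω))
      simp only [hBo]
      linarith
    · have : ENNReal.ofReal (U ω) = ENNReal.ofReal ((∫ r in t..T, B r ω *
          ((a r ω - ε * ρ r ω) * y r ω + q r ω)) + (∫ r in t..T, Bo r ω * hh r ω) +
          K * Real.exp c * (1 - Real.exp (-ε * ∫ x in s..T, ρ x ω))) := by rw [← e]
      rw [this]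
      refine le_trans (le_of_eq ?_) p2
      rw [← lintegral_const_mul']
      · simp only [ENNReal.ofReal_mul (Real.exp_pos _).le, hBo]
      · exact ENNReal.ofReal_ne_top
  calc _ ≤ ∫⁻ ω in A, ENNReal.ofReal (B t ω * y t ω + U ω) ∂μ :=
        lintegral_mono_ae (ae_restrict_of_ae (hkey.mono fun ω h => h.2))
    _ = ENNReal.ofReal (∫ ω in A, (B t ω * y t ω + U ω) ∂μ) := by
        refine (ofReal_integral_eq_lintegral_ofReal ((hb2 t ht).add hUi).integrableOn ?_).symm
        exact ae_restrict_of_ae (hkey.mono fun ω h =>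
          add_nonneg (mul_nonneg (Real.exp_pos _).le (hy0 _ _)) h.1)
    _ ≤ _ := by
        refine ENNReal.ofReal_le_ofReal ?_
        rw [integral_add (hb2 t ht).integrableOn hUi.integrableOn]
        simp only [hU]
        have i1 : Integrable (fun ω => I T ω - I t ω) μ := (hIi T hTT).sub (hIi t ht)
        have i2 : Integrable (fun ω => (I T ω - I t ω) + ∫ r in t..T, Bo r ω * hh r ω) μ :=
          i1.add hBhi
        rw [integral_add i2.integrableOn herri.integrableOn,
          integral_add i1.integrableOn hBhi.integrableOn,
          integral_sub (hIi T hTT).integrableOn (hIi t ht).integrableOn]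
        have l1 : ∫ ω in A, B T ω * y T ω ∂μ ≤ ∫ ω in A, Bo T ω * y T ω ∂μ :=
          integral_mono_ae (hb2 T hTT).integrableOn (hb1 T hTT).integrableOn
            (ae_restrict_of_ae (hpath.mono fun ω h =>
              mul_le_mul_of_nonneg_right (h T hTT).1 (hy0 _ _)))
        have l2 := setIntegral_le_integral (s := A) herri (ae_of_all _ herr0)
        linarith

/-- The energy inequality, localized on `A ∈ 𝓕_t`. -/
lemma Energy.main (hsT : s ≤ T) {k : ℕ} {Y M z g : Fin k → ℝ → Ω → ℝ} {K c : ℝ}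
    {a e hh : ℝ → Ω → ℝ} (H : Energy μ F s T Y M z g K c a e hh)
    {t : ℝ} (ht : t ∈ Icc s T) {A : Set Ω} (hA : MeasurableSet[F t] A) :
    ∫⁻ ω in A, ENNReal.ofReal (Real.exp (∫ x in s..t, a x ω) * ∑ i, Y i t ω ^ 2) ∂μ +
      ∫⁻ ω in A, (∫⁻ r in Ioc t T, ENNReal.ofReal (Real.exp (∫ x in s..r, a x ω) * e r ω)) ∂μ ≤
    ∫⁻ ω in A, ENNReal.ofReal (Real.exp (∫ x in s..T, a x ω) * ∑ i, Y i T ω ^ 2) ∂μ +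
      ∫⁻ ω in A, (∫⁻ r in Ioc t T, ENNReal.ofReal (Real.exp (∫ x in s..r, a x ω) * hh r ω)) ∂μ := by
  have hTT : T ∈ Icc s T := ⟨hsT, le_rfl⟩
  set ρ : ℝ → Ω → ℝ := fun r ω => ∑ i, |g i r ω| with hρdef
  have hρ : Adp μ F s T ρ := Adp.sum _ fun i _ => (H.semi i).hg.comp_cont continuous_abs
  have hρ0 : ∀ r ω, 0 ≤ ρ r ω := fun r ω => Finset.sum_nonneg fun i _ => abs_nonneg _
  set R : Ω → ℝ := fun ω => ∫ x in s..T, ρ x ω with hR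
  have hRm : Measurable R := measurable_integral_left hρ.2 s T
  have hR0 : ∀ ω, 0 ≤ R ω := fun ω =>
    intervalIntegral.integral_nonneg (μ := volume) hsT (fun x _ => hρ0 x ω)
  have hai : ∀ᵐ ω ∂μ, IntervalIntegrable (fun r => a r ω) volume s T := H.hai.mono fun ω h => h.1
  set Bo : ℝ → Ω → ℝ := fun t ω => Real.exp (∫ r in s..t, a r ω) with hBo
  have hBoA : Adp μ F s T Bo := adp_weight H.ha hai
  have hBc : ∀ᵐ ω ∂μ, ∀ r ∈ Icc s T, Bo r ω ≤ Real.exp c := by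
    filter_upwards [H.hai] with ω h1 r hr
    refine Real.exp_le_exp.2 (le_trans ?_ h1.2)
    rw [← intervalIntegral.integral_add_adjacent_intervals
      (intervalIntegrable_sub h1.1 le_rfl hr.1 hr.2) (intervalIntegrable_sub h1.1 hr.1 hr.2 le_rfl)]
    have := intervalIntegral.integral_nonneg (μ := volume) hr.2 (fun x _ => H.ha0 x ω)
    linarith
  set y : ℝ → Ω → ℝ := fun r ω => ∑ i, Y i r ω ^ 2 with hy
  have hym : Measurable fun p : ℝ × Ω => y p.1 p.2 :=
    Finset.measurable_sum _ fun i _ => (H.semi i).hYm.pow_const 2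
  have hyt : ∀ t, Measurable (y t) := fun t => hym.comp (measurable_const.prodMk measurable_id)
  have hy0 : ∀ r ω, 0 ≤ y r ω := fun r ω => Finset.sum_nonneg fun i _ => sq_nonneg _
  have hb1 : Integrable (fun ω => Bo T ω * y T ω) μ := by
    refine Integrable.of_bound (C := Real.exp c * K)
      ((hBoA.measurable_section T).mul (hyt T)).aestronglyMeasurable ?_
    filter_upwards [hBc, H.bdd] with ω h1 h2
    rw [Real.norm_of_nonneg (mul_nonneg (Real.exp_pos _).le (hy0 _ _))]
    exact mul_le_mul (h1 T hTT) (h2 T hTT) (hy0 _ _) (Real.exp_pos _).le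
  have hBh : Integrable (fun p : ℝ × Ω => Bo p.1 p.2 * hh p.1 p.2) (PM μ s T) := by
    refine (H.hhi.const_mul (Real.exp c)).mono' (hBoA.2.aestronglyMeasurable.mul H.hhi.1) ?_
    have hae : ∀ᵐ p ∂(PM μ s T), Bo p.1 p.2 ≤ Real.exp c := by
      have hms : MeasurableSet {p : ℝ × Ω | Bo p.1 p.2 ≤ Real.exp c} :=
        measurableSet_le hBoA.2 measurable_const
      refine (Measure.ae_prod_iff_ae_ae hms).2 ?_
      refine (ae_restrict_iff' measurableSet_Ioc).2 (ae_of_all _ fun r hr => ?_)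
      filter_upwards [hBc] with ω h1 using h1 r (Ioc_subset_Icc_self hr)
    filter_upwards [hae] with p hp
    rw [Real.norm_of_nonneg (mul_nonneg (Real.exp_pos _).le (H.hh0 _ _))]
    exact mul_le_mul_of_nonneg_right hp (H.hh0 _ _)
  have hBhi : Integrable (fun ω => ∫ r in t..T, Bo r ω * hh r ω) μ :=
    PM.integrable_integral (f := fun r ω => Bo r ω * hh r ω) hBh ht.1 ht.2 le_rfl
  have hK0 : 0 ≤ K := by
    obtain ⟨ω, hω⟩ := H.bdd.exists
    exact (hy0 t ω).trans (hω t ht)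
  set ε : ℕ → ℝ := fun n => 1 / ((n : ℝ) + 1) with hεd
  have hε : ∀ n, 0 < ε n := fun n => Nat.one_div_pos_of_nat
  have hεl : Tendsto ε atTop (nhds 0) := tendsto_one_div_add_atTop_nhds_zero_nat
  have hwl : ∀ ω, Tendsto (fun n => Real.exp (-ε n * R ω)) atTop (nhds 1) := by
    intro ω
    have h1 : Tendsto (fun n => -ε n * R ω) atTop (nhds 0) := by
      simpa using (hεl.neg).mul_const (R ω)
    have h2 := (Real.continuous_exp.tendsto 0).comp h1
    rw [Real.exp_zero] at h2
    exact h2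
  set X : Ω → ENNReal := fun ω => ENNReal.ofReal (Bo t ω * y t ω) +
    ∫⁻ r in Ioc t T, ENNReal.ofReal (Bo r ω * e r ω) with hX
  have hXm1 : Measurable fun ω => ENNReal.ofReal (Bo t ω * y t ω) :=
    ((hBoA.measurable_section t).mul (hyt t)).ennreal_ofReal
  have hXm2 : Measurable fun ω => ∫⁻ r in Ioc t T, ENNReal.ofReal (Bo r ω * e r ω) :=
    ((hBoA.2.mul H.hem).ennreal_ofReal.comp measurable_swap).lintegral_prod_right'
  have hXm : Measurable X := hXm1.add hXm2
  have hRHS : ENNReal.ofReal ((∫ ω in A, Bo T ω * y T ω ∂μ) +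
      (∫ ω in A, (∫ r in t..T, Bo r ω * hh r ω) ∂μ)) =
      ∫⁻ ω in A, ENNReal.ofReal (Bo T ω * y T ω) ∂μ +
      ∫⁻ ω in A, (∫⁻ r in Ioc t T, ENNReal.ofReal (Bo r ω * hh r ω)) ∂μ := by
    have n1 : ∀ ω, 0 ≤ ∫ r in t..T, Bo r ω * hh r ω := fun ω =>
      intervalIntegral.integral_nonneg ht.2 fun r _ => mul_nonneg (Real.exp_pos _).le (H.hh0 _ _)
    rw [ENNReal.ofReal_add (integral_nonneg fun ω => mul_nonneg (Real.exp_pos _).le (hy0 _ _))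
      (integral_nonneg n1), ofReal_integral_eq_lintegral_ofReal hb1.integrableOn
        (ae_of_all _ fun ω => mul_nonneg (Real.exp_pos _).le (hy0 _ _)),
      ofReal_integral_eq_lintegral_ofReal hBhi.integrableOn (ae_of_all _ n1)]
    congr 1
    refine lintegral_congr_ae (ae_restrict_of_ae ?_)
    filter_upwards [PM.intervalIntegrable (f := fun r ω => Bo r ω * hh r ω) hsT hBh] with ω hω
    have h1 := intervalIntegrable_sub hω ht.1 ht.2 le_rfl
    rw [intervalIntegrable_iff_integrableOn_Ioc_of_le ht.2] at h1
    rw [intervalIntegral.integral_of_le ht.2, ofReal_integral_eq_lintegral_ofReal h1]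
    exact ae_of_all _ fun r => mul_nonneg (Real.exp_pos _).le (H.hh0 _ _)
  rw [← hRHS, ← lintegral_add_left hXm1]
  have hd : ∀ n, ∫⁻ ω in A, ENNReal.ofReal (Real.exp (-ε n * R ω)) * X ω ∂μ ≤
      ENNReal.ofReal ((∫ ω in A, Bo T ω * y T ω ∂μ) +
      (∫ ω in A, (∫ r in t..T, Bo r ω * hh r ω) ∂μ) +
      ∫ ω, K * Real.exp c * (1 - Real.exp (-ε n * R ω)) ∂μ) :=
    fun n => H.damped hsT (hε n) ht hA
  have herr : Tendsto (fun n => ∫ ω, K * Real.exp c * (1 - Real.exp (-ε n * R ω)) ∂μ) atTop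
      (nhds 0) := by
    have := tendsto_integral_of_dominated_convergence (μ := μ)
      (F := fun n ω => K * Real.exp c * (1 - Real.exp (-ε n * R ω))) (f := fun _ => (0:ℝ))
      (fun _ => K * Real.exp c) (fun n => (by fun_prop : Measurable _).aestronglyMeasurable)
      (integrable_const _) (fun n => ae_of_all _ fun ω => ?_) (ae_of_all _ fun ω => ?_)
    · simpa using this
    · have l1 : Real.exp (-ε n * R ω) ≤ 1 := Real.exp_le_one_iff.2 (by
        have := mul_nonneg (hε n).le (hR0 ω); linarith)
      rw [Real.norm_of_nonneg (mul_nonneg (mul_nonneg hK0 (Real.exp_pos _).le) (by linarith))]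
      exact mul_le_of_le_one_right (mul_nonneg hK0 (Real.exp_pos _).le)
        (by linarith [Real.exp_pos (-ε n * R ω)])
    · simpa using ((hwl ω).const_sub 1).const_mul (K * Real.exp c)
  have hlim := (ENNReal.continuous_ofReal.tendsto _).comp
    (herr.const_add ((∫ ω in A, Bo T ω * y T ω ∂μ) +
      (∫ ω in A, (∫ r in t..T, Bo r ω * hh r ω) ∂μ)))
  rw [add_zero] at hlim
  have hptl : ∀ ω, Tendsto (fun n => ENNReal.ofReal (Real.exp (-ε n * R ω)) * X ω) atTop
      (nhds (X ω)) := by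
    intro ω
    have h1 := (ENNReal.continuous_ofReal.tendsto _).comp (hwl ω)
    have h2 := ENNReal.Tendsto.mul_const (b := X ω) h1 (Or.inl (by simp))
    simpa using h2
  calc ∫⁻ ω in A, X ω ∂μ = ∫⁻ ω in A, liminf (fun n =>
        ENNReal.ofReal (Real.exp (-ε n * R ω)) * X ω) atTop ∂μ :=
        lintegral_congr fun ω => ((hptl ω).liminf_eq).symm
    _ ≤ liminf (fun n => ∫⁻ ω in A, ENNReal.ofReal (Real.exp (-ε n * R ω)) * X ω ∂μ) atTop :=
        lintegral_liminf_le fun n => by fun_prop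
    _ ≤ liminf (fun n => ENNReal.ofReal ((∫ ω in A, Bo T ω * y T ω ∂μ) +
      (∫ ω in A, (∫ r in t..T, Bo r ω * hh r ω) ∂μ) +
      ∫ ω, K * Real.exp c * (1 - Real.exp (-ε n * R ω)) ∂μ)) atTop :=
        liminf_le_liminf (Eventually.of_forall hd)
    _ = _ := hlim.liminf_eq

end energy3
end SLQ

namespace SLQ

set_option linter.unusedSectionVars false

/-! ### Brownian increments -/

section brown

variable {Ω : Type} {mΩ : MeasurableSpace Ω} {μ : Measure Ω} [IsProbabilityMeasure μ]
  {F : Filtration ℝ mΩ} {s T : ℝ} {W : ℝ → Ω → ℝ}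

lemma IsBrownian.measW (hW : IsBrownian μ F W) (t : ℝ) : Measurable (W t) :=
  (hW.meas t).mono (F.le t) le_rfl

lemma IsBrownian.memLp_incr (hW : IsBrownian μ F W) {a b : ℝ} (ha : 0 ≤ a) (hab : a ≤ b)
    (p : NNReal) : MemLp (fun ω => W b ω - W a ω) p μ := by
  have h := memLp_id_gaussianReal (μ := 0) (v := Real.toNNReal (b - a)) p
  rw [← hW.gauss a b ha hab] at h
  exact (memLp_map_measure_iff aestronglyMeasurable_id
    ((hW.measW b).sub (hW.measW a)).aemeasurable).1 h

lemma IsBrownian.memLp (hW : IsBrownian μ F W) {t : ℝ} (ht : 0 ≤ t) (p : NNReal) :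
    MemLp (W t) p μ := by
  refine (hW.memLp_incr le_rfl ht p).ae_eq ?_
  filter_upwards [hW.start] with ω h
  simp [h]

lemma IsBrownian.memLp_two (hW : IsBrownian μ F W) {t : ℝ} (ht : 0 ≤ t) : MemLp (W t) 2 μ :=
  hW.memLp ht 2

lemma IsBrownian.integral_incr (hW : IsBrownian μ F W) {a b : ℝ} (ha : 0 ≤ a) (hab : a ≤ b)
    {E : Type} [NormedAddCommGroup E] [NormedSpace ℝ E] {g : ℝ → E} (hg : StronglyMeasurable g) :
    ∫ ω, g (W b ω - W a ω) ∂μ = ∫ x, g x ∂(gaussianReal 0 (Real.toNNReal (b - a))) := by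
  have hm : AEMeasurable (fun ω => W b ω - W a ω) μ := ((hW.measW b).sub (hW.measW a)).aemeasurable
  rw [← hW.gauss a b ha hab, integral_map hm hg.aestronglyMeasurable]

lemma IsBrownian.mean_incr (hW : IsBrownian μ F W) {a b : ℝ} (ha : 0 ≤ a) (hab : a ≤ b) :
    ∫ ω, (W b ω - W a ω) ∂μ = 0 := by
  rw [hW.integral_incr ha hab (g := fun x => x) stronglyMeasurable_id]
  exact integral_id_gaussianReal

lemma IsBrownian.var_incr (hW : IsBrownian μ F W) {a b : ℝ} (ha : 0 ≤ a) (hab : a ≤ b) :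
    ∫ ω, (W b ω - W a ω) ^ 2 ∂μ = b - a := by
  rw [hW.integral_incr ha hab (g := fun x => x ^ 2) (by fun_prop)]
  have h := variance_id_gaussianReal (μ := 0) (v := Real.toNNReal (b - a))
  rw [variance_of_integral_eq_zero aemeasurable_id (by simp)] at h
  simpa [Real.coe_toNNReal _ (sub_nonneg.2 hab)] using h

lemma IsBrownian.condExp_incr (hW : IsBrownian μ F W) {a b : ℝ} (ha : 0 ≤ a) (hab : a ≤ b)
    {g : ℝ → ℝ} (hg : Measurable g) :
    μ[fun ω => g (W b ω - W a ω) | F a] =ᵐ[μ] fun _ => ∫ ω, g (W b ω - W a ω) ∂μ := by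
  refine condExp_indep_eq (m₁ := MeasurableSpace.comap (fun ω => W b ω - W a ω) (borel ℝ)) ?_
    (F.le a) ?_ (hW.indep a b ha hab)
  · rw [← BorelSpace.measurable_eq (α := ℝ)]
    exact ((hW.measW b).sub (hW.measW a)).comap_le
  · rw [← BorelSpace.measurable_eq (α := ℝ)]
    exact (hg.comp (comap_measurable _)).stronglyMeasurable

lemma IsBrownian.wm (hW : IsBrownian μ F W) (hs : 0 ≤ s) : WM μ F s T W := by
  have hi : ∀ t, 0 ≤ t → Integrable (W t) μ := fun t ht =>
    (hW.memLp ht 1).integrable (by norm_num)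
  refine ⟨fun t ht => hi t (hs.trans ht.1), fun t u h1 h2 h3 => ?_⟩
  have ht := hs.trans h1
  have e : W u = W t + fun ω => W u ω - W t ω := by ext; simp
  have hd : Integrable (fun ω => W u ω - W t ω) μ := (hi u (ht.trans h2)).sub (hi t ht)
  have h4 := hW.condExp_incr ht h2 (g := fun x => x) measurable_id
  have h5 := condExp_add (hi t ht) hd (F t)
  rw [← e] at h5
  have h6 : μ[W t | F t] = W t :=
    condExp_of_stronglyMeasurable (F.le t) (hW.meas t).stronglyMeasurable (hi t ht)
  filter_upwards [h4, h5] with ω h4 h5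
  rw [h5, Pi.add_apply, h6, h4, hW.mean_incr ht h2, add_zero]

lemma IsBrownian.wm_sq (hW : IsBrownian μ F W) (hs : 0 ≤ s) :
    WM μ F s T (fun t ω => W t ω * W t ω - ∫ _r in s..t, (1:ℝ)) := by
  have hi : ∀ t, 0 ≤ t → Integrable (fun ω => W t ω * W t ω) μ := fun t ht =>
    (hW.memLp_two ht).integrable_mul (hW.memLp_two ht)
  refine ⟨fun t ht => (hi t (hs.trans ht.1)).sub (integrable_const _), fun t u h1 h2 h3 => ?_⟩
  have ht := hs.trans h1
  have hd : MemLp (fun ω => W u ω - W t ω) 2 μ := hW.memLp_incr ht h2 2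
  have hN : Integrable (fun ω => (W t ω * W t ω - ∫ _r in s..t, (1:ℝ))) μ :=
    (hi t ht).sub (integrable_const _)
  have hP : Integrable ((2 * W t) * fun ω => (W u ω - W t ω)) μ := by
    exact ((hW.memLp_two ht).const_mul 2).integrable_mul hd
  have hQ : Integrable (fun ω => (W u ω - W t ω) ^ 2 - (u - t)) μ :=
    hd.integrable_sq.sub (integrable_const _)
  have e : (fun ω => W u ω * W u ω - ∫ _r in s..u, (1:ℝ)) =
      ((fun ω => (W t ω * W t ω - ∫ _r in s..t, (1:ℝ))) +
      ((2 * W t) * fun ω => (W u ω - W t ω))) + fun ω => (W u ω - W t ω) ^ 2 - (u - t) := by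
    ext ω
    simp
    ring
  have h4 := hW.condExp_incr ht h2 (g := fun x => x) measurable_id
  have h4' := hW.condExp_incr ht h2 (g := fun x => x ^ 2 - (u - t)) (by fun_prop)
  have h5 := condExp_add (hN.add hP) hQ (F t)
  have h6 := condExp_add hN hP (F t)
  have h7 : μ[(fun ω => (W t ω * W t ω - ∫ _r in s..t, (1:ℝ))) | F t] =
      (fun ω => (W t ω * W t ω - ∫ _r in s..t, (1:ℝ))) :=
    condExp_of_stronglyMeasurable (F.le t)
      (((hW.meas t).mul (hW.meas t)).sub_const _).stronglyMeasurable hN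
  have h8 := condExp_mul_of_stronglyMeasurable_left (m := F t) (μ := μ)
    (f := 2 * W t) (g := fun ω => W u ω - W t ω)
    ((hW.meas t).const_mul 2).stronglyMeasurable hP (hd.integrable (by norm_num))
  simp only
  rw [e]
  filter_upwards [h4, h4', h5, h6, h8] with ω h4 h4' h5 h6 h8
  rw [h5, Pi.add_apply, h6, Pi.add_apply, h7, h8, Pi.mul_apply, h4, h4', hW.mean_incr ht h2,
    integral_sub hd.integrable_sq (integrable_const _), hW.var_incr ht h2]
  simp

/-- Product formula for an increment and a variable known at its left endpoint. -/
lemma IsBrownian.integral_mul_incr (hW : IsBrownian μ F W) {a b : ℝ} (ha : 0 ≤ a) (hab : a ≤ b)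
    {X : Ω → ℂ} (hX : Measurable[F a] X) {g : ℝ → ℂ} (hg : Measurable g) :
    ∫ ω, X ω * g (W b ω - W a ω) ∂μ = (∫ ω, X ω ∂μ) * ∫ ω, g (W b ω - W a ω) ∂μ := by
  have hI : IndepFun X (fun ω => g (W b ω - W a ω)) μ := by
    have h := (hW.indep a b ha hab).symm
    rw [← BorelSpace.measurable_eq (α := ℝ)] at h
    rw [IndepFun_iff_Indep]
    refine indep_of_indep_of_le_left (indep_of_indep_of_le_right h ?_) hX.comap_le
    exact (hg.comp (comap_measurable _)).comap_le
  have := hI.integral_mul_eq_mul_integral ((hX.mono (F.le a) le_rfl).aestronglyMeasurable)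
    ((hg.comp ((hW.measW b).sub (hW.measW a))).aestronglyMeasurable)
  exact this

lemma IsBrownian.char_incr (hW : IsBrownian μ F W) {a b : ℝ} (ha : 0 ≤ a) (hab : a ≤ b) (l : ℝ) :
    ∫ ω, Complex.exp (Complex.I * (l * (W b ω - W a ω) : ℝ)) ∂μ =
      (Real.exp (-(l ^ 2 * (b - a) / 2)) : ℝ) := by
  have h := charFun_gaussianReal (μ := 0) (v := Real.toNNReal (b - a)) l
  rw [charFun_apply_real] at h
  rw [hW.integral_incr ha hab (g := fun x => Complex.exp (Complex.I * (l * x : ℝ))) (by fun_prop)]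
  rw [show (fun x : ℝ => Complex.exp (Complex.I * (l * x : ℝ))) =
    fun x : ℝ => Complex.exp (l * x * Complex.I) by ext x; push_cast; ring_nf, h]
  push_cast
  rw [show ((Real.toNNReal (b - a) : NNReal) : ℂ) = ((b - a : ℝ) : ℂ) by
    norm_cast; rw [Real.coe_toNNReal _ (sub_nonneg.2 hab)]]
  congr 1
  push_cast
  ring

/-- Fourth moment of an increment, by scaling. -/
lemma IsBrownian.fourth_incr (hW : IsBrownian μ F W) {a b : ℝ} (ha : 0 ≤ a) (hab : a ≤ b) :
    ∫ ω, (W b ω - W a ω) ^ 4 ∂μ = (b - a) ^ 2 * ∫ x, x ^ 4 ∂(gaussianReal 0 1) := by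
  rw [hW.integral_incr ha hab (g := fun x => x ^ 4) (by fun_prop)]
  have h := gaussianReal_map_const_mul (μ := 0) (v := 1) (Real.sqrt (b - a))
  have e : NNReal.mk (Real.sqrt (b - a) ^ 2) (sq_nonneg _) * 1 = Real.toNNReal (b - a) := by
    rw [mul_one]
    ext
    simp [Real.sq_sqrt (sub_nonneg.2 hab), hab]
  rw [e, mul_zero] at h
  rw [← h, integral_map (by fun_prop) (by fun_prop)]
  rw [← integral_const_mul]
  congr 1
  ext x
  have := Real.sq_sqrt (sub_nonneg.2 hab)
  rw [mul_pow, show Real.sqrt (b - a) ^ 4 = (Real.sqrt (b - a) ^ 2) ^ 2 by ring, this]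

end brown

end SLQ

namespace SLQ

set_option linter.unusedSectionVars false

/-! ### Stochastic integrals, characterized through covariations -/

section ito

variable {Ω : Type} {mΩ : MeasurableSpace Ω} {μ : Measure Ω} [IsProbabilityMeasure μ]
  {F : Filtration ℝ mΩ} {s T : ℝ} {W : ℝ → Ω → ℝ}

/-- A square-integrable martingale `N` whose covariation with `W` is `∫ ψ`. -/
structure TestN (μ : Measure Ω) (F : Filtration ℝ mΩ) (W : ℝ → Ω → ℝ) (s T : ℝ)
    (N ψ : ℝ → Ω → ℝ) : Prop where
  wm : WM μ F s T N
  l2 : ∀ t ∈ Icc s T, MemLp (N t) 2 μ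
  adp : Adp μ F s T ψ
  psi2 : MemLp (fun p : ℝ × Ω => ψ p.1 p.2) 2 (PM μ s T)
  cov : WM μ F s T (fun t ω => N t ω * W t ω - ∫ r in s..t, ψ r ω)

/-- Progressive measurability on `[s,T]`, without completing the filtration. -/
def Prog (F : Filtration ℝ mΩ) (s T : ℝ) (φ : ℝ → Ω → ℝ) : Prop :=
  (Measurable fun p : ℝ × Ω => φ p.1 p.2) ∧
  ∀ t ∈ Icc s T, @Measurable (ℝ × Ω) ℝ (@Prod.instMeasurableSpace ℝ Ω _ (F t)) _
    (fun p => φ (min p.1 t) p.2)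

lemma Prog.sec {φ : ℝ → Ω → ℝ} (h : Prog F s T φ) {t : ℝ} (ht : t ∈ Icc s T) :
    Measurable[F t] (φ t) := by
  have h1 := (h.2 t ht).comp (@measurable_prodMk_left ℝ Ω _ (F t) t)
  simpa [Function.comp_def] using h1

lemma Prog.adp {φ : ℝ → Ω → ℝ} (h : Prog F s T φ) : Adp μ F s T φ :=
  ⟨fun _ ht => aesm_of_raw (h.sec ht), h.1⟩

lemma Prog.comp {φ : ℝ → Ω → ℝ} (h : Prog F s T φ) {g : ℝ → ℝ} (hg : Measurable g) :
    Prog F s T (fun t ω => g (φ t ω)) :=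
  ⟨hg.comp h.1, fun t ht => hg.comp (h.2 t ht)⟩

lemma Prog.add {φ ψ : ℝ → Ω → ℝ} (h : Prog F s T φ) (h' : Prog F s T ψ) :
    Prog F s T (fun t ω => φ t ω + ψ t ω) :=
  ⟨h.1.add h'.1, fun t ht => (h.2 t ht).add (h'.2 t ht)⟩

lemma Prog.limsup {φ : ℕ → ℝ → Ω → ℝ} (h : ∀ n, Prog F s T (φ n)) :
    Prog F s T (fun t ω => Filter.limsup (fun n => φ n t ω) atTop) :=
  ⟨Measurable.limsup fun n => (h n).1, fun t ht => by
    letI : MeasurableSpace Ω := F t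
    exact Measurable.limsup fun n => (h n).2 t ht⟩

lemma Prog.integral {φ : ℝ → Ω → ℝ} (h : Prog F s T φ) {t : ℝ} (ht : t ∈ Icc s T) :
    Measurable[F t] (fun ω => ∫ r in s..t, φ r ω) := by
  have h1 := measurable_integral_left (mΩ := F t) (φ := fun r ω => φ (min r t) ω) (h.2 t ht) s t
  have e : (fun ω => ∫ r in s..t, φ r ω) = fun ω => ∫ r in s..t, φ (min r t) ω := by
    ext ω
    refine intervalIntegral.integral_congr fun r hr => ?_
    rw [uIcc_of_le ht.1] at hr
    simp [min_eq_left hr.2]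
  rw [e]; exact h1

/-- `M = M_s + ∫ φ dW`: a continuous square-integrable martingale having the covariation `∫ φ ψ`
with every square-integrable martingale whose covariation with `W` is `∫ ψ`. -/
structure Good (μ : Measure Ω) (F : Filtration ℝ mΩ) (W : ℝ → Ω → ℝ) (s T : ℝ)
    (M φ : ℝ → Ω → ℝ) : Prop where
  meas : ∀ t ∈ Icc s T, Measurable[F t] (M t)
  cont : ∀ᵐ ω ∂μ, ContinuousOn (fun t => M t ω) (Icc s T)
  wm : WM μ F s T M
  l2 : MemLp (M T) 2 μ
  prog : Prog F s T φ
  phi2 : MemLp (fun p : ℝ × Ω => φ p.1 p.2) 2 (PM μ s T)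
  cov : ∀ N ψ, TestN μ F W s T N ψ →
    WM μ F s T (fun t ω => M t ω * N t ω - ∫ r in s..t, φ r ω * ψ r ω)

lemma IsBrownian.test (hW : IsBrownian μ F W) (hs : 0 ≤ s) :
    TestN μ F W s T W (fun _ _ => 1) where
  wm := hW.wm hs
  l2 t ht := hW.memLp_two (hs.trans ht.1)
  adp := Adp.const 1
  psi2 := memLp_const 1
  cov := hW.wm_sq hs

lemma WM.memLp {M : ℝ → Ω → ℝ} (h : WM μ F s T M) (hT : MemLp (M T) 2 μ) {t : ℝ}
    (ht : t ∈ Icc s T) : MemLp (M t) 2 μ :=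
  (MemLp.condExp (m := F t) (by norm_num) hT).ae_eq (h.2 t T ht.1 ht.2 le_rfl)

lemma Good.memLp {M φ : ℝ → Ω → ℝ} (h : Good μ F W s T M φ) {t : ℝ} (ht : t ∈ Icc s T) :
    MemLp (M t) 2 μ := h.wm.memLp h.l2 ht

lemma Good.test (hW : IsBrownian μ F W) (hs : 0 ≤ s) {M φ : ℝ → Ω → ℝ}
    (h : Good μ F W s T M φ) : TestN μ F W s T M φ where
  wm := h.wm
  l2 _ ht := h.memLp ht
  adp := h.prog.adp
  psi2 := h.phi2
  cov := by simpa using h.cov _ _ (hW.test hs)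

lemma Good.sq (hW : IsBrownian μ F W) (hs : 0 ≤ s) {M φ : ℝ → Ω → ℝ}
    (h : Good μ F W s T M φ) : WM μ F s T (fun t ω => M t ω ^ 2 - ∫ r in s..t, φ r ω ^ 2) := by
  simpa [pow_two] using h.cov _ _ (h.test hW hs)

lemma PM.mul_ae (hsT : s ≤ T) {φ ψ : ℝ → Ω → ℝ}
    (h : MemLp (fun p : ℝ × Ω => φ p.1 p.2) 2 (PM μ s T))
    (h' : MemLp (fun p : ℝ × Ω => ψ p.1 p.2) 2 (PM μ s T)) :
    ∀ᵐ ω ∂μ, IntervalIntegrable (fun r => φ r ω * ψ r ω) volume s T :=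
  PM.intervalIntegrable (f := fun r ω => φ r ω * ψ r ω) hsT (h.integrable_mul h')

lemma Good.add (hsT : s ≤ T) {M φ M' φ' : ℝ → Ω → ℝ}
    (h : Good μ F W s T M φ) (h' : Good μ F W s T M' φ') :
    Good μ F W s T (fun t ω => M t ω + M' t ω) (fun t ω => φ t ω + φ' t ω) where
  meas t ht := (h.meas t ht).add (h'.meas t ht)
  cont := by
    filter_upwards [h.cont, h'.cont] with ω h1 h2 using h1.add h2
  wm := h.wm.add h'.wm
  l2 := h.l2.add h'.l2
  prog := h.prog.add h'.prog
  phi2 := h.phi2.add h'.phi2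
  cov N ψ hN := by
    refine ((h.cov N ψ hN).add (h'.cov N ψ hN)).congr fun t ht => ?_
    filter_upwards [PM.mul_ae hsT h.phi2 hN.psi2, PM.mul_ae hsT h'.phi2 hN.psi2] with ω h1 h2
    have h3 : ∫ r in s..t, (φ r ω + φ' r ω) * ψ r ω =
        (∫ r in s..t, φ r ω * ψ r ω) + ∫ r in s..t, φ' r ω * ψ r ω := by
      rw [← intervalIntegral.integral_add (intervalIntegrable_sub h1 le_rfl ht.1 ht.2)
        (intervalIntegrable_sub h2 le_rfl ht.1 ht.2)]
      simp only [add_mul]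
    simp only [h3]
    ring

lemma Good.const_mul {M φ : ℝ → Ω → ℝ}
    (h : Good μ F W s T M φ) (c : ℝ) :
    Good μ F W s T (fun t ω => c * M t ω) (fun t ω => c * φ t ω) where
  meas t ht := (h.meas t ht).const_mul c
  cont := by
    filter_upwards [h.cont] with ω h1 using h1.const_mul c
  wm := h.wm.const_mul c
  l2 := h.l2.const_mul c
  prog := h.prog.comp (g := fun x => c * x) (by fun_prop)
  phi2 := h.phi2.const_mul c
  cov N ψ hN := by
    refine ((h.cov N ψ hN).const_mul c).congr fun t ht => .of_forall fun ω => ?_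
    have h3 : ∫ r in s..t, c * φ r ω * ψ r ω = c * ∫ r in s..t, φ r ω * ψ r ω := by
      rw [← intervalIntegral.integral_const_mul]
      simp only [mul_assoc]
    simp only [h3]
    ring

lemma Good.sub (hsT : s ≤ T) {M φ M' φ' : ℝ → Ω → ℝ}
    (h : Good μ F W s T M φ) (h' : Good μ F W s T M' φ') :
    Good μ F W s T (fun t ω => M t ω - M' t ω) (fun t ω => φ t ω - φ' t ω) := by
  have := h.add hsT (h'.const_mul (-1))
  simpa [sub_eq_add_neg] using this

/-- Itô isometry. -/
lemma Good.isometry (hW : IsBrownian μ F W) (hs : 0 ≤ s) (hsT : s ≤ T) {M φ : ℝ → Ω → ℝ}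
    (h : Good μ F W s T M φ) :
    ∫ p, φ p.1 p.2 ^ 2 ∂(PM μ s T) ≤ ∫ ω, M T ω ^ 2 ∂μ := by
  have h1 := (h.sq hW hs).setIntegral le_rfl hsT le_rfl MeasurableSet.univ
  have hi : Integrable (fun p : ℝ × Ω => φ p.1 p.2 ^ 2) (PM μ s T) := h.phi2.integrable_sq
  have h2 : Integrable (fun ω => ∫ r in s..T, φ r ω ^ 2) μ :=
    PM.integrable_integral (f := fun r ω => φ r ω ^ 2) hi le_rfl hsT le_rfl
  simp only [intervalIntegral.integral_same, sub_zero, Measure.restrict_univ] at h1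
  rw [integral_sub h.l2.integrable_sq h2] at h1
  have h3 : ∫ ω, (∫ r in s..T, φ r ω ^ 2) ∂μ = ∫ p, φ p.1 p.2 ^ 2 ∂(PM μ s T) := by
    rw [integral_prod_symm _ hi]
    simp only [intervalIntegral.integral_of_le hsT]
  have h4 : 0 ≤ ∫ ω, M s ω ^ 2 ∂μ := integral_nonneg fun ω => sq_nonneg _
  linarith

lemma Good.const {c : Ω → ℝ} (hc : Measurable[F s] c) (h2 : MemLp c 2 μ) :
    Good μ F W s T (fun _ ω => c ω) (fun _ _ => 0) where
  meas t ht := hc.mono (F.mono ht.1) le_rfl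
  cont := .of_forall fun ω => continuousOn_const
  wm := WM.const (aesm_of_raw hc) (h2.integrable (by norm_num))
  l2 := h2
  prog := ⟨measurable_const, fun t ht => measurable_const⟩
  phi2 := memLp_const 0
  cov N ψ hN := by
    have := hN.wm.mul_left (c := c) (aesm_of_raw hc) fun t ht => h2.integrable_mul (hN.l2 t ht)
    simpa using this

end ito

end SLQ

namespace SLQ

set_option linter.unusedSectionVars false

/-! ### Integrals of elementary processes -/

section ito2

variable {Ω : Type} {mΩ : MeasurableSpace Ω} {μ : Measure Ω} [IsProbabilityMeasure μ]
  {F : Filtration ℝ mΩ} {s T : ℝ} {W : ℝ → Ω → ℝ}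

/-- The integral of the elementary integrand `X 1_{(a,b]}`. -/
lemma Good.simple (hW : IsBrownian μ F W) (hs : 0 ≤ s) {a b : ℝ} (hsa : s ≤ a) (hab : a ≤ b)
    (hbT : b ≤ T) {X : Ω → ℝ} (hX : Measurable[F a] X) {C : ℝ} (hXb : ∀ ω, |X ω| ≤ C) :
    Good μ F W s T (fun t ω => X ω * (W (max a (min t b)) ω - W a ω))
      (fun t ω => X ω * (Ioc a b).indicator (fun _ => 1) t) := by
  have ha : 0 ≤ a := hs.trans hsa
  have hXm : Measurable X := hX.mono (F.le a) le_rfl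
  have hXae : ∀ᵐ ω ∂μ, ‖X ω‖ ≤ C := .of_forall hXb
  have hsT : s ≤ T := hsa.trans (hab.trans hbT)
  have hind : Measurable (fun t : ℝ => (Ioc a b).indicator (fun _ => (1:ℝ)) t) :=
    measurable_const.indicator measurableSet_Ioc
  have hMm : ∀ t ∈ Icc s T, Measurable[F t] fun ω => X ω * (W (max a (min t b)) ω - W a ω) := by
    intro t ht
    rcases le_total t a with h | h
    · have : max a (min t b) = a := max_eq_left ((min_le_left _ _).trans h)
      simp only [this, sub_self, mul_zero]
      exact measurable_const
    · have h1 : max a (min t b) ≤ t := max_le h (min_le_left _ _)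
      exact (hX.mono (F.mono h) le_rfl).mul (((hW.meas _).mono (F.mono h1) le_rfl).sub
        ((hW.meas _).mono (F.mono h) le_rfl))
  have hM2 : ∀ t, MemLp (fun ω => X ω * (W (max a (min t b)) ω - W a ω)) 2 μ := by
    intro t
    refine MemLp.mul (p := ⊤) (q := 2) ?_ (memLp_top_of_bound hXm.aestronglyMeasurable C hXae)
    exact hW.memLp_incr ha (le_max_left _ _) 2
  -- the three time intervals on which the process has a simple form
  have hcov : ∀ N ψ, TestN μ F W s T N ψ → WM μ F s T (fun t ω =>
      X ω * (W (max a (min t b)) ω - W a ω) * N t ω -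
        ∫ r in s..t, X ω * (Ioc a b).indicator (fun _ => 1) r * ψ r ω) := by
    intro N ψ hN
    have hψi : Integrable (fun p : ℝ × Ω => ψ p.1 p.2) (PM μ s T) := hN.psi2.integrable (by norm_num)
    have hψint : ∀ᵐ ω ∂μ, IntervalIntegrable (fun r => ψ r ω) volume s T :=
      PM.intervalIntegrable (f := ψ) hsT hψi
    have hψ : ∀ a b, s ≤ a → a ≤ b → b ≤ T → Integrable (fun ω => ∫ r in a..b, ψ r ω) μ :=
      fun a b h1 h2 h3 => PM.integrable_integral (f := ψ) hψi h1 h2 h3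
    have hintW : ∀ t ∈ Icc s T, ∀ ω, ∫ r in s..t, X ω * (Ioc a b).indicator (fun _ => 1) r * ψ r ω =
        X ω * ∫ r in Ioc (max a s) (min b t), ψ r ω := by
      intro t ht ω
      rw [intervalIntegral.integral_of_le ht.1, ← integral_const_mul]
      have : ∀ r, X ω * (Ioc a b).indicator (fun _ => (1:ℝ)) r * ψ r ω =
          (Ioc a b).indicator (fun r => X ω * ψ r ω) r := by
        intro r
        by_cases h : r ∈ Ioc a b <;> simp [h]
      simp only [this]
      rw [setIntegral_indicator measurableSet_Ioc, Ioc_inter_Ioc]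
      congr 2
      rw [max_comm, min_comm]
    refine WM.glue (m := a) ?_ (WM.glue (m := b) ?_ ?_)
    · refine (WM.const (T := a) (c := fun _ => (0:ℝ)) aestronglyMeasurable_const
        (integrable_const _)).congr fun t ht => .of_forall fun ω => ?_
      have h1 : max a (min t b) = a := max_eq_left ((min_le_left _ _).trans ht.2)
      simp only [hintW t ⟨ht.1, ht.2.trans (hab.trans hbT)⟩]
      have h2 : Ioc (max a s) (min b t) = ∅ := by
        apply Ioc_eq_empty
        simp only [not_lt]
        exact ((min_le_right _ _).trans ht.2).trans (le_max_left _ _)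
      simp [h1, h2]
    · have h1 : WM μ F a b (fun t ω => X ω * (N t ω * W t ω - ∫ r in s..t, ψ r ω)) := by
        refine (hN.cov.mono hsa hbT).mul_left (aesm_of_raw hX) fun t ht => ?_
        exact (hN.cov.1 t ⟨hsa.trans ht.1, ht.2.trans hbT⟩).bdd_mul
          hXm.aestronglyMeasurable hXae
      have h2 : WM μ F a b (fun t ω => (X ω * W a ω) * N t ω) := by
        refine (hN.wm.mono hsa hbT).mul_left (aesm_of_raw (hX.mul (hW.meas a))) fun t ht => ?_
        refine MemLp.integrable_mul (p := 2) (q := 2) ?_ (hN.l2 t ⟨hsa.trans ht.1, ht.2.trans hbT⟩)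
        exact MemLp.mul (p := ⊤) (q := 2) (hW.memLp_two ha)
          (memLp_top_of_bound hXm.aestronglyMeasurable C hXae)
      have h3 : WM μ F a b (fun _ ω => X ω * ∫ r in s..a, ψ r ω) := by
        refine WM.const ?_ ?_
        · exact (aesm_of_raw hX).mul (aesm_integral hN.adp hψint le_rfl hsa (hab.trans hbT))
        · exact (hψ s a le_rfl hsa (hab.trans hbT)).bdd_mul hXm.aestronglyMeasurable hXae
      refine ((h1.sub h2).add h3).congr fun t ht => ?_
      filter_upwards [hψint] with ω hω
      have e1 : max a (min t b) = t := by rw [min_eq_left ht.2, max_eq_right ht.1]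
      have htT := ht.2.trans hbT
      rw [hintW t ⟨hsa.trans ht.1, htT⟩, max_eq_left hsa, min_eq_right ht.2,
        ← intervalIntegral.integral_of_le ht.1, e1,
        ← intervalIntegral.integral_add_adjacent_intervals
          (intervalIntegrable_sub hω le_rfl hsa (ht.1.trans htT))
          (intervalIntegrable_sub hω hsa ht.1 htT)]
      ring
    · have h2 : WM μ F b T (fun t ω => (X ω * (W b ω - W a ω)) * N t ω) := by
        refine (hN.wm.mono (hsa.trans hab) le_rfl).mul_left (aesm_of_raw ?_) fun t ht => ?_
        · exact (hX.mono (F.mono hab) le_rfl).mul ((hW.meas b).sub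
            ((hW.meas a).mono (F.mono hab) le_rfl))
        refine MemLp.integrable_mul (p := 2) (q := 2) ?_ (hN.l2 t ⟨(hsa.trans hab).trans ht.1, ht.2⟩)
        exact MemLp.mul (p := ⊤) (q := 2) (hW.memLp_incr ha hab 2)
          (memLp_top_of_bound hXm.aestronglyMeasurable C hXae)
      have h3 : WM μ F b T (fun _ ω => X ω * ∫ r in a..b, ψ r ω) := by
        refine WM.const ?_ ?_
        · exact (aesm_of_raw (hX.mono (F.mono hab) le_rfl)).mul (aesm_integral hN.adp hψint hsa hab hbT)
        · exact (hψ a b hsa hab hbT).bdd_mul hXm.aestronglyMeasurable hXae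
      refine (h2.sub h3).congr fun t ht => .of_forall fun ω => ?_
      simp only
      rw [hintW t ⟨(hsa.trans hab).trans ht.1, ht.2⟩, max_eq_left hsa, min_eq_left ht.1,
        min_eq_right ht.1, max_eq_right hab, ← intervalIntegral.integral_of_le hab]
  refine ⟨hMm, ?_, ?_, hM2 T, ⟨?_, ?_⟩, ?_, hcov⟩
  · filter_upwards [hW.cont] with ω hω
    have : Continuous fun t => W (max a (min t b)) ω := hω.comp (by fun_prop)
    exact ((this.sub continuous_const).const_mul (X ω)).continuousOn
  · have hone : TestN μ F W s T (fun _ _ => 1) (fun _ _ => 0) := by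
      refine ⟨WM.const aestronglyMeasurable_const (integrable_const _), fun t _ => memLp_const 1,
        Adp.const 0, memLp_const 0, ?_⟩
      simpa using hW.wm hs
    simpa using hcov _ _ hone
  · exact (hXm.comp measurable_snd).mul (hind.comp measurable_fst)
  · intro t ht
    letI : MeasurableSpace Ω := F t
    rcases le_total t a with h | h
    · have : (fun p : ℝ × Ω => X p.2 * (Ioc a b).indicator (fun _ => (1:ℝ)) (min p.1 t)) =
          fun _ => 0 := by
        ext p
        have : min p.1 t ∉ Ioc a b := fun h' => absurd ((min_le_right _ _).trans h) (not_le.2 h'.1)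
        simp [this]
      rw [this]
      exact measurable_const
    · have hX' : Measurable X := hX.mono (F.mono h) le_rfl
      exact (hX'.comp measurable_snd).mul (hind.comp (measurable_fst.min measurable_const))
  · refine MemLp.of_bound ?_ C (.of_forall fun p => ?_)
    · exact ((hXm.comp measurable_snd).mul (hind.comp measurable_fst)).aestronglyMeasurable
    · have h0 : |(Ioc a b).indicator (fun _ => (1:ℝ)) p.1| ≤ 1 := by
        by_cases h : p.1 ∈ Ioc a b <;> simp [h]
      rw [Real.norm_eq_abs, abs_mul]
      exact (mul_le_of_le_one_right (abs_nonneg _) h0).trans (hXb _)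

end ito2

end SLQ

namespace SLQ

set_option linter.unusedSectionVars false

/-! ### Doob's inequality -/

section doob

variable {Ω : Type} {mΩ : MeasurableSpace Ω} {μ : Measure Ω} [IsProbabilityMeasure μ]
  {F : Filtration ℝ mΩ} {s T : ℝ} {W : ℝ → Ω → ℝ}

/-- Doob's weak maximal inequality in continuous time. -/
lemma doob (hsT : s ≤ T) {M : ℝ → Ω → ℝ} (hm : ∀ t ∈ Icc s T, Measurable[F t] (M t))
    (hc : ∀ᵐ ω ∂μ, ContinuousOn (fun t => M t ω) (Icc s T)) (hM : WM μ F s T M)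
    {l : ℝ} (hl : 0 < l) :
    μ {ω | ∃ t ∈ Icc s T, l < |M t ω|} ≤ ENNReal.ofReal ((∫ ω, |M T ω| ∂μ) / l) := by
  set g : ℕ → ℕ → ℝ := fun n j => min T (s + j / 2 ^ n) with hg
  have hgm : ∀ n j, g n j ∈ Icc s T := fun n j =>
    ⟨le_min hsT (by have : (0:ℝ) ≤ j / 2 ^ n := by positivity
                    linarith), min_le_left _ _⟩
  have hgmono : ∀ n, Monotone (g n) := by
    intro n i j hij
    refine min_le_min le_rfl ?_
    have : (i:ℝ) / 2 ^ n ≤ j / 2 ^ n := by gcongr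
    linarith
  set A : ℕ → Set Ω := fun n => {ω | ∃ j, l ≤ |M (g n j) ω|} with hA
  have hAmono : Monotone A := by
    refine monotone_nat_of_le_succ fun n ω hω => ?_
    obtain ⟨j, hj⟩ := hω
    refine ⟨2 * j, ?_⟩
    have : g (n + 1) (2 * j) = g n j := by
      simp only [hg]
      congr 2
      push_cast
      rw [pow_succ]
      field_simp
    rw [this]; exact hj
  have hAm : ∀ n, μ (A n) ≤ ENNReal.ofReal ((∫ ω, |M T ω| ∂μ) / l) := by
    intro n
    let 𝒢 : Filtration ℕ mΩ := ⟨fun j => F (g n j), fun i j hij => F.mono (hgmono n hij),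
      fun j => F.le _⟩
    have hmart : Martingale (fun j => M (g n j)) 𝒢 μ :=
      ⟨fun j => (hm _ (hgm n j)).stronglyMeasurable,
        fun i j hij => hM.2 _ _ (hgm n i).1 (hgmono n hij) (hgm n j).2⟩
    have hsub := hmart.submartingale.sup hmart.neg.submartingale
    have hnn : 0 ≤ ((fun j => M (g n j)) ⊔ -(fun j => M (g n j))) := by
      intro j ω
      exact abs_nonneg (M (g n j) ω)
    obtain ⟨L, hL⟩ := exists_nat_ge ((T - s) * 2 ^ n)
    have hgL : ∀ j, L ≤ j → g n j = T := by
      intro j hj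
      refine min_eq_left ?_
      have h2 : (0:ℝ) < 2 ^ n := by positivity
      have : T - s ≤ j / 2 ^ n := by
        rw [le_div_iff₀ h2]
        exact hL.trans (by exact_mod_cast hj)
      linarith
    have h := maximal_ineq hsub hnn (ε := ⟨l, hl.le⟩) L
    have hsubset : A n ⊆ {ω | ((⟨l, hl.le⟩ : NNReal) : ℝ) ≤ (Finset.range (L + 1)).sup'
        Finset.nonempty_range_add_one fun k => ((fun j => M (g n j)) ⊔ -(fun j => M (g n j))) k ω} := by
      rintro ω ⟨j, hj⟩
      rw [mem_setOf_eq, Finset.le_sup'_iff]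
      refine ⟨min j L, by simp, ?_⟩
      have : g n (min j L) = g n j := by
        rcases le_total j L with h | h
        · rw [min_eq_left h]
        · rw [min_eq_right h, hgL j h, hgL L le_rfl]
      change l ≤ |M (g n (min j L)) ω|
      rw [this]; exact hj
    have hTi : Integrable (fun ω => |M T ω|) μ := (hM.1 T ⟨hsT, le_rfl⟩).abs
    have h2 : ENNReal.ofReal l * μ (A n) ≤ ENNReal.ofReal (∫ ω, |M T ω| ∂μ) := by
      refine le_trans (le_trans ?_ h) (ENNReal.ofReal_le_ofReal ?_)
      · refine mul_le_mul' (le_of_eq ?_) (measure_mono hsubset)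
        rw [ENNReal.ofReal]
        congr 1
        exact Real.toNNReal_of_nonneg hl.le
      · have e : ((fun j => M (g n j)) ⊔ -(fun j => M (g n j))) L = fun ω => |M T ω| := by
          ext ω
          rw [← hgL L le_rfl]
          rfl
        rw [e]
        exact setIntegral_le_integral hTi (.of_forall fun ω => abs_nonneg _)
    rw [ENNReal.ofReal_div_of_pos hl, ENNReal.le_div_iff_mul_le (by simp [hl]) (by simp), mul_comm]
    exact h2
  have hU : μ (⋃ n, A n) ≤ ENNReal.ofReal ((∫ ω, |M T ω| ∂μ) / l) := by
    rw [hAmono.measure_iUnion]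
    exact iSup_le hAm
  refine (measure_mono_ae ?_).trans hU
  filter_upwards [hc] with ω hω
  rintro ⟨t, ht, hlt⟩
  have h1 : Tendsto (fun n => |M (dyad s T n t) ω|) atTop (nhds |M t ω|) :=
    ((hω t ht).tendsto.comp (tendsto_dyad ht)).abs
  obtain ⟨n, hn⟩ := (h1.eventually (lt_mem_nhds hlt)).exists
  refine mem_iUnion.2 ⟨n, ⌊(t - s) * 2 ^ n⌋.toNat, ?_⟩
  have : g n ⌊(t - s) * 2 ^ n⌋.toNat = dyad s T n t := by
    have h0 : 0 ≤ ⌊(t - s) * 2 ^ n⌋ := Int.floor_nonneg.2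
      (mul_nonneg (by linarith [ht.1]) (by positivity))
    have h3 : dyad s T n t = s + (⌊(t - s) * 2 ^ n⌋.toNat : ℝ) / 2 ^ n := by
      unfold dyad
      rw [min_eq_left ht.2, max_eq_right ht.1]
      congr 2
      exact_mod_cast (Int.toNat_of_nonneg h0).symm
    rw [h3]
    refine min_eq_right ?_
    rw [← h3]
    exact (dyad_le n ht).2.1.trans ht.2
  rw [this]
  exact hn.le

end doob

end SLQ

namespace SLQ

set_option linter.unusedSectionVars false

/-! ### The set of terminal values of stochastic integrals is closed -/

section closed

variable {Ω : Type} {mΩ : MeasurableSpace Ω} {μ : Measure Ω} [IsProbabilityMeasure μ]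
  {F : Filtration ℝ mΩ} {s T : ℝ} {W : ℝ → Ω → ℝ}

/-- A sequence that is Cauchy in `L²` at a geometric rate converges almost everywhere and in
`L²` to its pointwise upper limit. -/
lemma l2_limit {α : Type*} [MeasurableSpace α] {ν : Measure α} {f : ℕ → α → ℝ}
    (hf : ∀ n, MemLp (f n) 2 ν)
    (hc : ∀ N n m : ℕ, N ≤ n → N ≤ m →
      eLpNorm (f n - f m) 2 ν < ENNReal.ofReal (3 * (1 / 4) ^ N)) :
    (∀ᵐ x ∂ν, Tendsto (fun n => f n x) atTop (nhds (limsup (fun n => f n x) atTop))) ∧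
    MemLp (fun x => limsup (fun n => f n x) atTop) 2 ν ∧
    Tendsto (fun n => eLpNorm (fun x => f n x - limsup (fun n => f n x) atTop) 2 ν)
      atTop (nhds 0) := by
  have hB : ∑' N : ℕ, ENNReal.ofReal (3 * (1 / 4) ^ N) ≠ ⊤ :=
    ((summable_geometric_of_lt_one (by norm_num : (0:ℝ) ≤ 1 / 4) (by norm_num)).mul_left
      3).tsum_ofReal_ne_top
  have h1 : ∀ᵐ x ∂ν, Tendsto (fun n => f n x) atTop
      (nhds (limsup (fun n => f n x) atTop)) := by
    filter_upwards [Lp.ae_tendsto_of_cauchy_eLpNorm (fun n => (hf n).1) (by norm_num) hB hc]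
      with x hx
    obtain ⟨l, hl⟩ := hx
    rw [hl.limsup_eq]; exact hl
  have h2 := Lp.cauchy_tendsto_of_tendsto (fun n => (hf n).1)
    (fun x => limsup (fun n => f n x) atTop) hB hc h1
  exact ⟨h1, Lp.memLp_of_cauchy_tendsto (by norm_num) hf _
    (aestronglyMeasurable_of_tendsto_ae atTop (fun n => (hf n).1) h1) h2, h2⟩

lemma eLpNorm_le_of_sq {α β : Type*} [MeasurableSpace α] [MeasurableSpace β] {ν : Measure α}
    {ν' : Measure β} {f : α → ℝ} {g : β → ℝ} (hf : MemLp f 2 ν) (hg : MemLp g 2 ν')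
    (h : ∫ x, f x ^ 2 ∂ν ≤ ∫ x, g x ^ 2 ∂ν') : eLpNorm f 2 ν ≤ eLpNorm g 2 ν' := by
  rw [hf.eLpNorm_eq_integral_rpow_norm (by norm_num) (by norm_num),
    hg.eLpNorm_eq_integral_rpow_norm (by norm_num) (by norm_num)]
  refine ENNReal.ofReal_le_ofReal ?_
  refine Real.rpow_le_rpow (integral_nonneg fun _ => by positivity) ?_ (by simp)
  simpa using h

/-- If `fₙ → f` in `L²` and `g ∈ L²` then `fₙ g → f g` in `L¹`. -/
lemma tendsto_l1_mul {α : Type*} [MeasurableSpace α] {ν : Measure α} {f : ℕ → α → ℝ}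
    {f' g : α → ℝ} (hf : ∀ n, MemLp (f n) 2 ν) (hf' : MemLp f' 2 ν) (hg : MemLp g 2 ν)
    (h : Tendsto (fun n => eLpNorm (fun x => f n x - f' x) 2 ν) atTop (nhds 0)) :
    Tendsto (fun n => ∫ x, |(f n x - f' x) * g x| ∂ν) atTop (nhds 0) := by
  have e : ∀ n, ∫ x, |(f n x - f' x) * g x| ∂ν =
      (eLpNorm (fun x => (f n x - f' x) * g x) 1 ν).toReal := by
    intro n
    rw [eLpNorm_one_eq_lintegral_enorm, ← integral_norm_eq_lintegral_enorm]
    · rfl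
    · exact (((hf n).sub hf').1.mul hg.1)
  simp only [e]
  have h0 : Tendsto (fun n => eLpNorm (fun x => f n x - f' x) 2 ν * eLpNorm g 2 ν)
      atTop (nhds 0) := by
    have := ENNReal.Tendsto.mul_const (b := eLpNorm g 2 ν) h (Or.inr hg.2.ne)
    simpa using this
  have h1 : Tendsto (fun n => eLpNorm (fun x => (f n x - f' x) * g x) 1 ν) atTop (nhds 0) := by
    refine tendsto_of_tendsto_of_tendsto_of_le_of_le tendsto_const_nhds h0
      (fun _ => zero_le) fun n => ?_
    exact eLpNorm_smul_le_mul_eLpNorm (p := 2) (q := 2) (r := 1) (f := g)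
      (φ := fun x => f n x - f' x) hg.1 ((hf n).sub hf').1
  simpa [Function.comp_def] using (ENNReal.tendsto_toReal ENNReal.zero_ne_top).comp h1

/-- Geometric `L²` convergence of terminal values upgrades to almost sure uniform convergence of
paths, by the maximal inequality. -/
lemma uniform_limit (hsT : s ≤ T) {M : ℕ → ℝ → Ω → ℝ}
    (hm : ∀ n, ∀ t ∈ Icc s T, Measurable[F t] (M n t))
    (hc : ∀ n, ∀ᵐ ω ∂μ, ContinuousOn (fun t => M n t ω) (Icc s T))
    (hM : ∀ n, WM μ F s T (M n))
    (hd : ∀ n, ∫ ω, |M n T ω - M (n + 1) T ω| ∂μ ≤ 3 * (1 / 4) ^ n) :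
    ∀ᵐ ω ∂μ, (∀ t ∈ Icc s T, Tendsto (fun n => M n t ω) atTop
        (nhds (limsup (fun n => M n t ω) atTop))) ∧
      ContinuousOn (fun t => limsup (fun n => M n t ω) atTop) (Icc s T) := by
  have h1 : ∀ n, μ {ω | ∃ t ∈ Icc s T, (1 / 2 : ℝ) ^ n < |M n t ω - M (n + 1) t ω|} ≤
      ENNReal.ofReal (3 * (1 / 2) ^ n) := by
    intro n
    have h := doob (μ := μ) (F := F) hsT (M := fun t ω => M n t ω - M (n + 1) t ω)
      (fun t ht => (hm n t ht).sub (hm (n + 1) t ht))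
      (by filter_upwards [hc n, hc (n + 1)] with ω h1 h2 using h1.sub h2)
      ((hM n).sub (hM (n + 1))) (l := (1 / 2) ^ n) (by positivity)
    refine h.trans (ENNReal.ofReal_le_ofReal ?_)
    rw [div_le_iff₀ (by positivity)]
    refine (hd n).trans (le_of_eq ?_)
    rw [mul_assoc, ← mul_pow]; norm_num
  have h2 : ∑' n, μ {ω | ∃ t ∈ Icc s T, (1 / 2 : ℝ) ^ n < |M n t ω - M (n + 1) t ω|} ≠ ⊤ := by
    refine ne_top_of_le_ne_top ?_ (ENNReal.tsum_le_tsum h1)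
    exact ((summable_geometric_of_lt_one (by norm_num : (0:ℝ) ≤ 1 / 2) (by norm_num)).mul_left
      3).tsum_ofReal_ne_top
  filter_upwards [ae_eventually_notMem h2, ae_all_iff.2 hc] with ω hω hcω
  obtain ⟨N, hN⟩ := eventually_atTop.1 hω
  have hN' : ∀ n, N ≤ n → ∀ t ∈ Icc s T, |M n t ω - M (n + 1) t ω| ≤ (1 / 2) ^ n := by
    intro n hn t ht
    by_contra hcon
    exact hN n hn ⟨t, ht, not_le.1 hcon⟩
  have hgeo : ∀ t ∈ Icc s T, ∀ k : ℕ, dist (M (k + N) t ω) (M (k + 1 + N) t ω) ≤ 2 / 2 / 2 ^ k := by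
    intro t ht k
    have := hN' (k + N) (by omega) t ht
    rw [Real.dist_eq, show k + 1 + N = k + N + 1 by ring]
    refine this.trans ?_
    rw [pow_add]
    have : (1 / 2 : ℝ) ^ N ≤ 1 := pow_le_one₀ (by norm_num) (by norm_num)
    calc (1 / 2 : ℝ) ^ k * (1 / 2) ^ N ≤ (1 / 2) ^ k * 1 := by gcongr
      _ = 2 / 2 / 2 ^ k := by simp
  have hlim : ∀ t ∈ Icc s T, Tendsto (fun n => M n t ω) atTop
        (nhds (limsup (fun n => M n t ω) atTop)) := by
    intro t ht
    obtain ⟨l, hl⟩ := cauchySeq_tendsto_of_complete (cauchySeq_of_le_geometric_two (hgeo t ht))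
    have hl' : Tendsto (fun n => M n t ω) atTop (nhds l) :=
      (tendsto_add_atTop_iff_nat (f := fun n => M n t ω) N).1 hl
    rw [hl'.limsup_eq]; exact hl'
  refine ⟨hlim, ?_⟩
  have hu : TendstoUniformlyOn (fun k t => M (k + N) t ω)
      (fun t => limsup (fun n => M n t ω) atTop) atTop (Icc s T) := by
    rw [Metric.tendstoUniformlyOn_iff]
    intro ε hε
    have h0 : Tendsto (fun k : ℕ => (2:ℝ) / 2 ^ k) atTop (nhds 0) := by
      have := (tendsto_pow_atTop_nhds_zero_of_lt_one (by norm_num : (0:ℝ) ≤ 1 / 2)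
        (by norm_num)).const_mul 2
      simpa [div_eq_mul_inv] using this
    filter_upwards [h0.eventually_lt_const hε] with k hk t ht
    rw [dist_comm]
    exact (dist_le_of_le_geometric_two_of_tendsto (hgeo t ht)
      ((tendsto_add_atTop_iff_nat (f := fun n => M n t ω) N).2 (hlim t ht)) k).trans_lt hk
  exact hu.continuousOn (Frequently.of_forall fun k => hcω _)

/-- A geometric `L²` rate makes the martingales converge uniformly in time almost surely, by Doob's
inequality; the integrands converge by the isometry. -/
lemma Good.closed (hW : IsBrownian μ F W) (hs : 0 ≤ s) (hsT : s ≤ T) {M φ : ℕ → ℝ → Ω → ℝ}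
    (h : ∀ n, Good μ F W s T (M n) (φ n)) {η : Ω → ℝ} (hη : MemLp η 2 μ)
    (hd : ∀ n, eLpNorm (fun ω => M n T ω - η ω) 2 μ ≤ ENNReal.ofReal ((1 / 4) ^ n)) :
    ∃ M' φ', Good μ F W s T M' φ' ∧ M' T =ᵐ[μ] η := by
  have hTT : T ∈ Icc s T := ⟨hsT, le_rfl⟩
  have c1 : ∀ N n m : ℕ, N ≤ n → N ≤ m →
      eLpNorm (M n T - M m T) 2 μ < ENNReal.ofReal (3 * (1 / 4) ^ N) := by
    intro N n m hn hm
    have e : M n T - M m T = (fun ω => M n T ω - η ω) - fun ω => M m T ω - η ω := by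
      ext ω; simp
    have hmono : ∀ n, N ≤ n → eLpNorm (fun ω => M n T ω - η ω) 2 μ ≤
        ENNReal.ofReal ((1 / 4) ^ N) := fun n hn => (hd n).trans (ENNReal.ofReal_le_ofReal
          (pow_le_pow_of_le_one (by norm_num) (by norm_num) hn))
    rw [e]
    refine (eLpNorm_sub_le ((h n).l2.sub hη).1 ((h m).l2.sub hη).1 (by norm_num)).trans_lt ?_
    refine (add_le_add (hmono n hn) (hmono m hm)).trans_lt ?_
    rw [← ENNReal.ofReal_add (by positivity) (by positivity)]
    refine ENNReal.ofReal_lt_ofReal_iff_of_nonneg (by positivity) |>.2 ?_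
    have : (0:ℝ) < (1 / 4) ^ N := by positivity
    linarith
  have c2 : ∀ t ∈ Icc s T, ∀ N n m : ℕ, N ≤ n → N ≤ m →
      eLpNorm (M n t - M m t) 2 μ < ENNReal.ofReal (3 * (1 / 4) ^ N) := by
    intro t ht N n m hn hm
    refine lt_of_le_of_lt ?_ (c1 N n m hn hm)
    have e := ((h n).wm.sub (h m).wm).2 t T ht.1 ht.2 le_rfl
    calc eLpNorm (M n t - M m t) 2 μ = eLpNorm (μ[M n T - M m T|F t]) 2 μ :=
          (eLpNorm_congr_ae e).symm
      _ ≤ _ := eLpNorm_condExp_le_eLpNorm _ (by norm_num)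
  have c3 : ∀ N n m : ℕ, N ≤ n → N ≤ m →
      eLpNorm ((fun p : ℝ × Ω => φ n p.1 p.2) - fun p => φ m p.1 p.2) 2 (PM μ s T) <
        ENNReal.ofReal (3 * (1 / 4) ^ N) := by
    intro N n m hn hm
    refine lt_of_le_of_lt ?_ (c1 N n m hn hm)
    have hg := (h n).sub hsT (h m)
    exact eLpNorm_le_of_sq hg.phi2 hg.l2 (hg.isometry hW hs hsT)
  have hd1 : ∀ n, ∫ ω, |M n T ω - M (n + 1) T ω| ∂μ ≤ 3 * (1 / 4) ^ n := by
    intro n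
    have a1 : AEStronglyMeasurable (fun ω => M n T ω - M (n + 1) T ω) μ :=
      ((h n).l2.sub (h (n + 1)).l2).1
    have e1 : ∫ ω, |M n T ω - M (n + 1) T ω| ∂μ =
        (eLpNorm (fun ω => M n T ω - M (n + 1) T ω) 1 μ).toReal := by
      rw [eLpNorm_one_eq_lintegral_enorm, ← integral_norm_eq_lintegral_enorm a1]
      rfl
    rw [e1]
    refine ENNReal.toReal_le_of_le_ofReal (by positivity) ?_
    refine (eLpNorm_le_eLpNorm_of_exponent_le (q := 2) (by norm_num) a1).trans ?_
    exact (c1 n n (n + 1) le_rfl (by omega)).le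
  have hun := uniform_limit hsT (fun n => (h n).meas) (fun n => (h n).cont)
    (fun n => (h n).wm) hd1
  set M' : ℝ → Ω → ℝ := fun t ω => limsup (fun n => M n t ω) atTop with hM'
  set φ' : ℝ → Ω → ℝ := fun t ω => limsup (fun n => φ n t ω) atTop with hφ'
  have L := fun t (ht : t ∈ Icc s T) => l2_limit (fun n => (h n).memLp ht) (c2 t ht)
  obtain ⟨-, P2, P3⟩ := l2_limit (fun n => (h n).phi2) c3
  refine ⟨M', φ', ⟨?_, ?_, ?_, ?_, Prog.limsup fun n => (h n).prog, P2, ?_⟩, ?_⟩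
  · intro t ht
    exact Measurable.limsup fun n => (h n).meas t ht
  · filter_upwards [hun] with ω hω using hω.2
  · refine wm_of_tendsto (fun n => (h n).wm) (fun t ht => (L t ht).2.1.integrable (by norm_num)) ?_
    intro t ht
    have := tendsto_l1_mul (fun n => (h n).memLp ht) (L t ht).2.1
      (memLp_const (1:ℝ)) (L t ht).2.2
    simpa using this
  · exact (L T hTT).2.1
  · intro N ψ hN
    have hi1 : ∀ t ∈ Icc s T, Integrable (fun ω => M' t ω * N t ω) μ := fun t ht =>
      (L t ht).2.1.integrable_mul (hN.l2 t ht)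
    have hi2 : Integrable (fun p : ℝ × Ω => φ' p.1 p.2 * ψ p.1 p.2) (PM μ s T) :=
      P2.integrable_mul hN.psi2
    refine wm_of_tendsto (fun n => (h n).cov N ψ hN) (fun t ht => (hi1 t ht).sub
      (PM.integrable_integral (f := fun r ω => φ' r ω * ψ r ω) hi2 le_rfl ht.1 ht.2)) ?_
    intro t ht
    have t1 := tendsto_l1_mul (fun n => (h n).memLp ht) (L t ht).2.1 (hN.l2 t ht) (L t ht).2.2
    have t2 := tendsto_l1_mul (fun n => (h n).phi2) P2 hN.psi2 P3
    have t3 := t1.add t2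
    rw [add_zero] at t3
    refine squeeze_zero (fun n => integral_nonneg fun _ => abs_nonneg _) (fun n => ?_) t3
    have j1 : Integrable (fun ω => |(M n t ω - M' t ω) * N t ω|) μ :=
      ((((h n).memLp ht).sub (L t ht).2.1).integrable_mul (hN.l2 t ht)).abs
    have j2 : Integrable (fun p : ℝ × Ω => |(φ n p.1 p.2 - φ' p.1 p.2) * ψ p.1 p.2|)
      (PM μ s T) := (((h n).phi2.sub P2).integrable_mul hN.psi2).abs
    have j3 : Integrable (fun ω => ∫ r in s..T, |(φ n r ω - φ' r ω) * ψ r ω|) μ :=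
      PM.integrable_integral (f := fun r ω => |(φ n r ω - φ' r ω) * ψ r ω|) j2 le_rfl hsT le_rfl
    have e3 : ∫ p : ℝ × Ω, |(φ n p.1 p.2 - φ' p.1 p.2) * ψ p.1 p.2| ∂(PM μ s T) =
        ∫ ω, (∫ r in s..T, |(φ n r ω - φ' r ω) * ψ r ω|) ∂μ := by
      rw [integral_prod_symm _ j2]
      simp only [intervalIntegral.integral_of_le hsT]
    have e3' : ∫ x : ℝ × Ω, |(φ n x.1 x.2 - limsup (fun n => φ n x.1 x.2) atTop) * ψ x.1 x.2|
        ∂(PM μ s T) = ∫ ω, (∫ r in s..T, |(φ n r ω - φ' r ω) * ψ r ω|) ∂μ := e3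
    rw [e3', ← integral_add j1 j3]
    refine integral_mono_of_nonneg (Eventually.of_forall fun _ => abs_nonneg _) (j1.add j3) ?_
    filter_upwards [PM.mul_ae hsT (h n).phi2 hN.psi2, PM.mul_ae (φ := φ') hsT P2 hN.psi2,
      PM.intervalIntegrable (f := fun r ω => |(φ n r ω - φ' r ω) * ψ r ω|) hsT j2] with ω g1 g2 g3
    have k1 : (∫ r in s..t, φ n r ω * ψ r ω) - ∫ r in s..t, φ' r ω * ψ r ω =
        ∫ r in s..t, (φ n r ω - φ' r ω) * ψ r ω := by
      rw [← intervalIntegral.integral_sub (intervalIntegrable_sub g1 le_rfl ht.1 ht.2)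
        (intervalIntegrable_sub g2 le_rfl ht.1 ht.2)]
      simp only [sub_mul]
    have k2 : |∫ r in s..t, (φ n r ω - φ' r ω) * ψ r ω| ≤
        ∫ r in s..T, |(φ n r ω - φ' r ω) * ψ r ω| := by
      refine (intervalIntegral.abs_integral_le_integral_abs ht.1).trans ?_
      exact intervalIntegral.integral_mono_interval le_rfl ht.1 ht.2
        (Eventually.of_forall fun _ => abs_nonneg _) g3
    have k3 : M n t ω * N t ω - (∫ r in s..t, φ n r ω * ψ r ω) -
        (M' t ω * N t ω - ∫ r in s..t, φ' r ω * ψ r ω) =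
        (M n t ω - M' t ω) * N t ω - ∫ r in s..t, (φ n r ω - φ' r ω) * ψ r ω := by
      rw [← k1]; ring
    show |M n t ω * N t ω - (∫ r in s..t, φ n r ω * ψ r ω) -
        (M' t ω * N t ω - ∫ r in s..t, φ' r ω * ψ r ω)| ≤ _
    rw [k3]
    exact (abs_sub _ _).trans (add_le_add le_rfl k2)
  · have t0 : Tendsto (fun n => eLpNorm (fun ω => M n T ω - η ω) 2 μ) atTop (nhds 0) := by
      refine tendsto_of_tendsto_of_tendsto_of_le_of_le tendsto_const_nhds ?_
        (fun _ => zero_le) hd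
      have := ENNReal.tendsto_ofReal (tendsto_pow_atTop_nhds_zero_of_lt_one
        (by norm_num : (0:ℝ) ≤ 1 / 4) (by norm_num))
      simpa using this
    have t1 := t0.add (L T hTT).2.2
    rw [add_zero] at t1
    have hle : ∀ n, eLpNorm (M' T - η) 2 μ ≤ eLpNorm (fun ω => M n T ω - η ω) 2 μ +
        eLpNorm (fun ω => M n T ω - limsup (fun n => M n T ω) atTop) 2 μ := by
      intro n
      have e : M' T - η = (fun ω => M n T ω - η ω) -
          fun ω => M n T ω - limsup (fun n => M n T ω) atTop := by
        ext ω; simp [hM']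
      rw [e]
      exact eLpNorm_sub_le ((h n).l2.sub hη).1 ((h n).l2.sub (L T hTT).2.1).1 (by norm_num)
    have h0 : eLpNorm (M' T - η) 2 μ = 0 :=
      le_antisymm (ge_of_tendsto' t1 hle) (zero_le)
    have h1 := (eLpNorm_eq_zero_iff ((L T hTT).2.1.sub hη).1 (by norm_num)).1 h0
    filter_upwards [h1] with ω hω
    simpa [sub_eq_zero] using hω

end closed

end SLQ

namespace SLQ

set_option linter.unusedSectionVars false

/-! ### Terminal values of stochastic integrals are total in `L²` -/

section density

variable {Ω : Type} {mΩ : MeasurableSpace Ω} {μ : Measure Ω} [IsProbabilityMeasure μ]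
  {F : Filtration ℝ mΩ} {s T : ℝ} {W : ℝ → Ω → ℝ}

lemma norm_exp_taylor_le (x : ℝ) :
    ‖Complex.exp (Complex.I * x) - 1 - Complex.I * x‖ ≤ 3 * x ^ 2 := by
  rcases le_total |x| 1 with h | h
  · have h1 : ‖Complex.I * (x:ℂ)‖ = |x| := by simp
    have h2 := Complex.norm_exp_sub_one_sub_id_le (x := Complex.I * x) (by rw [h1]; exact h)
    rw [h1, sq_abs] at h2
    nlinarith [sq_nonneg x]
  · have h2 : ‖Complex.exp (Complex.I * x) - 1‖ ≤ |x| := Real.norm_exp_I_mul_ofReal_sub_one_le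
    have h3 : ‖Complex.I * (x:ℂ)‖ = |x| := by simp
    have h4 := norm_sub_le (Complex.exp (Complex.I * x) - 1) (Complex.I * x)
    rw [h3] at h4
    have h5 : |x| ≤ x ^ 2 := by rw [← sq_abs]; nlinarith
    linarith

/-- The second-order remainder of the characteristic exponential of a Brownian increment of
length `h`. -/
def zeta (l h x : ℝ) : ℂ :=
  Complex.exp (Complex.I * (l * x : ℝ)) - (Real.exp (-(l ^ 2 * h / 2)) : ℝ) -
    Complex.I * (l * x : ℝ)

lemma measurable_zeta (l h : ℝ) : Measurable (zeta l h) := by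
  unfold zeta; fun_prop

lemma norm_zeta_le (l : ℝ) {h : ℝ} (hh : 0 ≤ h) (x : ℝ) :
    ‖zeta l h x‖ ≤ 3 * l ^ 2 * x ^ 2 + l ^ 2 * h / 2 := by
  have h1 := norm_exp_taylor_le (l * x)
  have e : zeta l h x = (Complex.exp (Complex.I * (l * x : ℝ)) - 1 - Complex.I * (l * x : ℝ)) +
      ((1 - Real.exp (-(l ^ 2 * h / 2)) : ℝ) : ℂ) := by
    unfold zeta; push_cast; ring
  have h2 : ‖((1 - Real.exp (-(l ^ 2 * h / 2)) : ℝ) : ℂ)‖ ≤ l ^ 2 * h / 2 := by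
    rw [Complex.norm_real, Real.norm_eq_abs, abs_le]
    have h3 := Real.one_sub_le_exp_neg (l ^ 2 * h / 2)
    have h4 : Real.exp (-(l ^ 2 * h / 2)) ≤ 1 := Real.exp_le_one_iff.2 (by
      have : 0 ≤ l ^ 2 * h / 2 := by positivity
      linarith)
    have : 0 ≤ l ^ 2 * h / 2 := by positivity
    constructor <;> linarith
  rw [e]
  refine (norm_add_le _ _).trans ?_
  rw [mul_pow] at h1
  linarith

/-- The constant bounding the second moment of `zeta`. -/
def zetaK (l : ℝ) : ℝ := 18 * l ^ 4 * (∫ x, x ^ 4 ∂(gaussianReal 0 1)) + l ^ 4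

lemma zetaK_nonneg (l : ℝ) : 0 ≤ zetaK l := by
  have : 0 ≤ ∫ x, x ^ 4 ∂(gaussianReal 0 1) := integral_nonneg fun x => by positivity
  unfold zetaK; positivity

lemma IsBrownian.int_fourth (hW : IsBrownian μ F W) {a b : ℝ} (ha : 0 ≤ a) (hab : a ≤ b) :
    Integrable (fun ω => (W b ω - W a ω) ^ 4) μ := by
  have h := (hW.memLp_incr ha hab 4).integrable_norm_pow (p := 4) (by norm_num)
  refine h.congr (.of_forall fun ω => ?_)
  simp only [Real.norm_eq_abs]
  exact Even.pow_abs (by decide) _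

lemma IsBrownian.zeta_sq (hW : IsBrownian μ F W) {a b : ℝ} (ha : 0 ≤ a) (hab : a ≤ b) (l : ℝ) :
    MemLp (fun ω => zeta l (b - a) (W b ω - W a ω)) 2 μ ∧
    ∫ ω, ‖zeta l (b - a) (W b ω - W a ω)‖ ^ 2 ∂μ ≤ zetaK l * (b - a) ^ 2 := by
  have hm : AEStronglyMeasurable (fun ω => zeta l (b - a) (W b ω - W a ω)) μ :=
    ((measurable_zeta l _).comp ((hW.measW b).sub (hW.measW a))).aestronglyMeasurable
  have h4 := hW.int_fourth ha hab
  have hb : ∀ ω, ‖zeta l (b - a) (W b ω - W a ω)‖ ^ 2 ≤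
      18 * l ^ 4 * (W b ω - W a ω) ^ 4 + l ^ 4 * (b - a) ^ 2 := by
    intro ω
    have h := norm_zeta_le l (sub_nonneg.2 hab) (W b ω - W a ω)
    set x := W b ω - W a ω
    have h0 := norm_nonneg (zeta l (b - a) x)
    calc ‖zeta l (b - a) x‖ ^ 2 ≤ (3 * l ^ 2 * x ^ 2 + l ^ 2 * (b - a) / 2) ^ 2 := by gcongr
      _ ≤ 2 * (3 * l ^ 2 * x ^ 2) ^ 2 + 2 * (l ^ 2 * (b - a) / 2) ^ 2 := by
        nlinarith [sq_nonneg (3 * l ^ 2 * x ^ 2 - l ^ 2 * (b - a) / 2)]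
      _ ≤ _ := by nlinarith [sq_nonneg (l ^ 2 * (b - a))]
  have hi : Integrable (fun ω => 18 * l ^ 4 * (W b ω - W a ω) ^ 4 + l ^ 4 * (b - a) ^ 2) μ :=
    (h4.const_mul _).add (integrable_const _)
  have hi2 : Integrable (fun ω => ‖zeta l (b - a) (W b ω - W a ω)‖ ^ 2) μ :=
    hi.mono' (hm.norm.pow 2) (.of_forall fun ω => by
      rw [Real.norm_of_nonneg (by positivity)]; exact hb ω)
  refine ⟨(memLp_two_iff_integrable_sq_norm hm).2 hi2, ?_⟩
  refine (integral_mono hi2 hi hb).trans (le_of_eq ?_)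
  rw [integral_add (h4.const_mul _) (integrable_const _), integral_const_mul,
    hW.fourth_incr ha hab]
  simp [zetaK]
  ring

lemma IsBrownian.zeta_mean (hW : IsBrownian μ F W) {a b : ℝ} (ha : 0 ≤ a) (hab : a ≤ b) (l : ℝ) :
    ∫ ω, zeta l (b - a) (W b ω - W a ω) ∂μ = 0 := by
  have h1 := hW.char_incr ha hab l
  have h2 : ∫ ω, Complex.I * ((l * (W b ω - W a ω) : ℝ) : ℂ) ∂μ = 0 := by
    rw [integral_const_mul, integral_complex_ofReal, integral_const_mul, hW.mean_incr ha hab]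
    simp
  have hd : Integrable (fun ω => W b ω - W a ω) μ :=
    (hW.memLp_incr ha hab 1).integrable (by norm_num)
  have hm : Measurable (fun ω => W b ω - W a ω) := (hW.measW b).sub (hW.measW a)
  have i1 : Integrable (fun ω => Complex.exp (Complex.I * (l * (W b ω - W a ω) : ℝ))) μ :=
    Integrable.of_bound (C := 1) (Complex.measurable_exp.comp ((Complex.measurable_ofReal.comp
      (hm.const_mul l)).const_mul _)).aestronglyMeasurable (.of_forall fun ω => by
      rw [Complex.norm_exp_I_mul_ofReal])
  have i2 : Integrable (fun ω => Complex.I * ((l * (W b ω - W a ω) : ℝ) : ℂ)) μ :=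
    ((hd.const_mul l).ofReal).const_mul _
  have i3 : Integrable (fun ω => Complex.exp (Complex.I * (l * (W b ω - W a ω) : ℝ)) -
    (Real.exp (-(l ^ 2 * (b - a) / 2)) : ℝ)) μ := i1.sub (integrable_const _)
  unfold zeta
  rw [integral_sub i3 i2, integral_sub i1 (integrable_const _), h1, h2]
  simp

/-- `q` is orthogonal to every terminal value of a stochastic integral. -/
def Orth (μ : Measure Ω) (F : Filtration ℝ mΩ) (W : ℝ → Ω → ℝ) (s T : ℝ) (q : Ω → ℝ) : Prop :=
  ∀ M φ, Good μ F W s T M φ → ∫ ω, q ω * M T ω ∂μ = 0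

lemma Orth.incr (hW : IsBrownian μ F W) (hs : 0 ≤ s) {q : Ω → ℝ} (hq : MemLp q 2 μ)
    (ho : Orth μ F W s T q) {a b : ℝ} (hsa : s ≤ a) (hab : a ≤ b) (hbT : b ≤ T)
    {Y : Ω → ℂ} (hY : Measurable[F a] Y) {C : ℝ} (hYb : ∀ ω, ‖Y ω‖ ≤ C) :
    ∫ ω, (q ω : ℂ) * Y ω * ((W b ω - W a ω : ℝ) : ℂ) ∂μ = 0 := by
  have ha := hs.trans hsa
  have hd : MemLp (fun ω => W b ω - W a ω) 2 μ := hW.memLp_incr ha hab 2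
  have key : ∀ Z : Ω → ℝ, Measurable[F a] Z → (∀ ω, |Z ω| ≤ C) →
      ∫ ω, q ω * (Z ω * (W b ω - W a ω)) ∂μ = 0 := by
    intro Z hZ hZb
    have h := ho _ _ (Good.simple hW hs hsa hab hbT hZ hZb)
    have e : max a (min T b) = b := by rw [min_eq_right hbT, max_eq_right hab]
    simpa only [e] using h
  have hYm : Measurable Y := hY.mono (F.le a) le_rfl
  have hi : Integrable (fun ω => (q ω : ℂ) * Y ω * ((W b ω - W a ω : ℝ) : ℂ)) μ := by
    have h1 : Integrable (fun ω => (((q ω * (W b ω - W a ω) : ℝ)) : ℂ)) μ :=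
      (hq.integrable_mul hd).ofReal
    refine (h1.bdd_mul (f := Y) (c := C) hYm.aestronglyMeasurable (.of_forall hYb)).congr
      (.of_forall fun ω => ?_)
    simp only; push_cast; ring
  have re := key (fun ω => (Y ω).re) (Complex.measurable_re.comp hY)
    fun ω => (Complex.abs_re_le_norm _).trans (hYb ω)
  have im := key (fun ω => (Y ω).im) (Complex.measurable_im.comp hY)
    fun ω => (Complex.abs_im_le_norm _).trans (hYb ω)
  apply Complex.ext
  · have h := integral_re hi
    simp only [RCLike.re_to_complex] at h
    rw [← h, Complex.zero_re, ← re]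
    refine integral_congr_ae (.of_forall fun ω => ?_)
    simp; ring
  · have h := integral_im hi
    simp only [RCLike.im_to_complex] at h
    rw [← h, Complex.zero_im, ← im]
    refine integral_congr_ae (.of_forall fun ω => ?_)
    simp; ring

/-- Increments of the closed martingale `E[q | F t]` are orthogonal. -/
lemma condExp_sq_incr {q : Ω → ℝ} (hq : MemLp q 2 μ) {a b : ℝ} (hab : a ≤ b) :
    ∫ ω, ((μ[q|F b]) ω - (μ[q|F a]) ω) ^ 2 ∂μ =
      ∫ ω, (μ[q|F b]) ω ^ 2 ∂μ - ∫ ω, (μ[q|F a]) ω ^ 2 ∂μ := by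
  have hb : MemLp (μ[q|F b]) 2 μ := MemLp.condExp (by norm_num) hq
  have ha : MemLp (μ[q|F a]) 2 μ := MemLp.condExp (by norm_num) hq
  have hab' : Integrable (fun ω => (μ[q|F a]) ω * (μ[q|F b]) ω) μ := ha.integrable_mul hb
  have e : ∫ ω, (μ[q|F a]) ω * (μ[q|F b]) ω ∂μ = ∫ ω, (μ[q|F a]) ω ^ 2 ∂μ := by
    have h := (int_mul_condExp (F.le a) (Y := μ[q|F a]) (X := μ[q|F b])
      stronglyMeasurable_condExp.aestronglyMeasurable (hb.integrable (by norm_num)) hab').2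
    rw [← h]
    refine integral_congr_ae ?_
    filter_upwards [condExp_condExp_of_le (μ := μ) (f := q) (F.mono hab) (F.le b)] with ω h1
    rw [h1]; ring
  have e2 : ∀ ω, ((μ[q|F b]) ω - (μ[q|F a]) ω) ^ 2 =
      (μ[q|F b]) ω ^ 2 - (2 * ((μ[q|F a]) ω * (μ[q|F b]) ω) - (μ[q|F a]) ω ^ 2) :=
    fun ω => by ring
  simp only [e2]
  have i1 : Integrable (fun ω => 2 * ((μ[q|F a]) ω * (μ[q|F b]) ω) - (μ[q|F a]) ω ^ 2) μ :=
    (hab'.const_mul 2).sub ha.integrable_sq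
  rw [integral_sub hb.integrable_sq i1,
    integral_sub (hab'.const_mul 2) ha.integrable_sq, integral_const_mul, e]
  ring

/-- One step of the computation of `E[q Y exp (i l (W b - W a))]`. -/
lemma Orth.step (hW : IsBrownian μ F W) (hs : 0 ≤ s) {q : Ω → ℝ} (hq : MemLp q 2 μ)
    (ho : Orth μ F W s T q) {a b : ℝ} (hsa : s ≤ a) (hab : a ≤ b) (hbT : b ≤ T)
    {Y : Ω → ℂ} (hY : Measurable[F a] Y) {C : ℝ} (hYb : ∀ ω, ‖Y ω‖ ≤ C) (l : ℝ) {ε : ℝ}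
    (hε : 0 < ε) :
    ‖∫ ω, (q ω : ℂ) * (Y ω * Complex.exp (Complex.I * (l * (W b ω - W a ω) : ℝ))) ∂μ -
      (Real.exp (-(l ^ 2 * (b - a) / 2)) : ℝ) * ∫ ω, (q ω : ℂ) * Y ω ∂μ‖ ≤
    C / 2 * (ε * (∫ ω, (μ[q|F b]) ω ^ 2 ∂μ - ∫ ω, (μ[q|F a]) ω ^ 2 ∂μ) +
      zetaK l * (b - a) ^ 2 / ε) := by
  have ha := hs.trans hsa
  have hC : 0 ≤ C := by
    obtain ⟨ω⟩ := (nonempty_of_measure_ne_zero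
      (μ := μ) (s := univ) (by simp)).to_type
    exact (norm_nonneg _).trans (hYb ω)
  have hYm : Measurable Y := hY.mono (F.le a) le_rfl
  have hd : MemLp (fun ω => W b ω - W a ω) 2 μ := hW.memLp_incr ha hab 2
  set z : Ω → ℂ := fun ω => zeta l (b - a) (W b ω - W a ω) with hz
  have hz2 := hW.zeta_sq ha hab l
  have hzm : Measurable z := (measurable_zeta l _).comp ((hW.measW b).sub (hW.measW a))
  have hYae : ∀ᵐ ω ∂μ, ‖Y ω‖ ≤ C := .of_forall hYb
  have hqc : MemLp (fun ω => (q ω : ℂ)) 2 μ := hq.ofReal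
  have hY2 : MemLp Y 2 μ := MemLp.of_bound hYm.aestronglyMeasurable C hYae
  have hdc : MemLp (fun ω => ((W b ω - W a ω : ℝ) : ℂ)) 2 μ := hd.ofReal
  have bd : ∀ {G : Ω → ℂ}, Integrable G μ → Integrable (fun ω => Y ω * G ω) μ := fun hG =>
    hG.bdd_mul (c := C) hYm.aestronglyMeasurable hYae
  have i1 : Integrable (fun ω => (q ω : ℂ) * Y ω) μ := hqc.integrable_mul hY2
  have i2 : Integrable (fun ω => (q ω : ℂ) * Y ω * ((W b ω - W a ω : ℝ) : ℂ)) μ :=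
    (bd (hqc.integrable_mul hdc)).congr (.of_forall fun ω => by
      simp only [Pi.mul_apply]; ring)
  have gen : ∀ {g : Ω → ℝ}, MemLp g 2 μ → Integrable (fun ω => (g ω : ℂ) * Y ω * z ω) μ :=
    fun hg => (bd (hg.ofReal (K := ℂ) |>.integrable_mul hz2.1)).congr (.of_forall fun ω => by
      simp only [Pi.mul_apply, hz, RCLike.ofReal_eq_complex_ofReal]; ring)
  have i3 := gen hq
  have e1 : ∫ ω, (q ω : ℂ) * (Y ω * Complex.exp (Complex.I * (l * (W b ω - W a ω) : ℝ))) ∂μ =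
      (Real.exp (-(l ^ 2 * (b - a) / 2)) : ℝ) * (∫ ω, (q ω : ℂ) * Y ω ∂μ) +
      ∫ ω, (q ω : ℂ) * Y ω * z ω ∂μ := by
    have h0 := ho.incr hW hs hq hsa hab hbT hY hYb
    have e : ∀ ω, (q ω : ℂ) * (Y ω * Complex.exp (Complex.I * (l * (W b ω - W a ω) : ℝ))) =
        (Real.exp (-(l ^ 2 * (b - a) / 2)) : ℝ) * ((q ω : ℂ) * Y ω) +
        (Complex.I * l) * ((q ω : ℂ) * Y ω * ((W b ω - W a ω : ℝ) : ℂ)) +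
        (q ω : ℂ) * Y ω * z ω := by
      intro ω
      simp only [hz, zeta]; push_cast; ring
    simp only [e]
    have i4 : Integrable (fun ω => ((Real.exp (-(l ^ 2 * (b - a) / 2)) : ℝ) : ℂ) *
      ((q ω : ℂ) * Y ω) + (Complex.I * l) * ((q ω : ℂ) * Y ω * ((W b ω - W a ω : ℝ) : ℂ))) μ :=
      (i1.const_mul _).add (i2.const_mul _)
    rw [integral_add i4 i3, integral_add (i1.const_mul _) (i2.const_mul _), integral_const_mul,
      integral_const_mul, h0]
    simp
  have hQb : MemLp (μ[q|F b]) 2 μ := MemLp.condExp (by norm_num) hq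
  have hQa : MemLp (μ[q|F a]) 2 μ := MemLp.condExp (by norm_num) hq
  have hzb : Measurable[F b] z := (measurable_zeta l _).comp ((hW.meas b).sub
    ((hW.meas a).mono (F.mono hab) le_rfl))
  have hYzb : Measurable[F b] (fun ω => Y ω * z ω) := (hY.mono (F.mono hab) le_rfl).mul hzb
  have hYz2 : MemLp (fun ω => Y ω * z ω) 2 μ := by
    refine (hz2.1.norm.const_mul C).of_le (hYm.mul hzm).aestronglyMeasurable (.of_forall fun ω => ?_)
    rw [norm_mul, Real.norm_of_nonneg (by positivity)]
    exact mul_le_mul_of_nonneg_right (hYb ω) (norm_nonneg _)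
  -- replacing `q` by its conditional expectation given `F b`
  have e2 : ∫ ω, (q ω : ℂ) * Y ω * z ω ∂μ = ∫ ω, ((μ[q|F b]) ω : ℂ) * Y ω * z ω ∂μ := by
    have hre : ∀ V : Ω → ℝ, Measurable[F b] V → MemLp V 2 μ →
        ∫ ω, V ω * (μ[q|F b]) ω ∂μ = ∫ ω, V ω * q ω ∂μ := fun V hV hV2 =>
      (int_mul_condExp (F.le b) hV.stronglyMeasurable.aestronglyMeasurable
        (hq.integrable (by norm_num)) (hV2.integrable_mul hq)).2
    have hr := hre _ (Complex.measurable_re.comp hYzb) hYz2.re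
    have hi := hre _ (Complex.measurable_im.comp hYzb) hYz2.im
    apply Complex.ext
    · have h1 := integral_re i3
      have h2 := integral_re (gen hQb)
      simp only [RCLike.re_to_complex] at h1 h2
      rw [← h1, ← h2]
      simp only [mul_assoc, Complex.re_ofReal_mul]
      simp only [mul_comm (q _), mul_comm ((μ[q|F b]) _)]
      exact hr.symm
    · have h1 := integral_im i3
      have h2 := integral_im (gen hQb)
      simp only [RCLike.im_to_complex] at h1 h2
      rw [← h1, ← h2]
      simp only [mul_assoc, Complex.im_ofReal_mul]
      simp only [mul_comm (q _), mul_comm ((μ[q|F b]) _)]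
      exact hi.symm
  -- the conditional expectation given `F a` does not contribute, by independence
  have e3 : ∫ ω, ((μ[q|F a]) ω : ℂ) * Y ω * z ω ∂μ = 0 := by
    have h := hW.integral_mul_incr ha hab (X := fun ω => ((μ[q|F a]) ω : ℂ) * Y ω)
      ((Complex.measurable_ofReal.comp stronglyMeasurable_condExp.measurable).mul hY)
      (measurable_zeta l (b - a))
    rw [hW.zeta_mean ha hab l, mul_zero] at h
    exact h
  have e4 : ∫ ω, (q ω : ℂ) * Y ω * z ω ∂μ =
      ∫ ω, (((μ[q|F b]) ω - (μ[q|F a]) ω : ℝ) : ℂ) * Y ω * z ω ∂μ := by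
    rw [e2, ← sub_zero (∫ ω, ((μ[q|F b]) ω : ℂ) * Y ω * z ω ∂μ), ← e3,
      ← integral_sub (gen hQb) (gen hQa)]
    refine integral_congr_ae (.of_forall fun ω => ?_)
    simp only; push_cast; ring
  rw [e1, add_sub_cancel_left, e4]
  refine (norm_integral_le_integral_norm _).trans ?_
  have i5 : Integrable (fun ω => ε * ((μ[q|F b]) ω - (μ[q|F a]) ω) ^ 2) μ :=
    (hQb.sub hQa).integrable_sq.const_mul ε
  have i6 : Integrable (fun ω => ‖z ω‖ ^ 2 / ε) μ := by
    have := ((memLp_two_iff_integrable_sq_norm hzm.aestronglyMeasurable).1 hz2.1).div_const ε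
    exact this
  have hb : ∀ ω, ‖(((μ[q|F b]) ω - (μ[q|F a]) ω : ℝ) : ℂ) * Y ω * z ω‖ ≤
      C / 2 * (ε * ((μ[q|F b]) ω - (μ[q|F a]) ω) ^ 2 + ‖z ω‖ ^ 2 / ε) := by
    intro ω
    rw [norm_mul, norm_mul, Complex.norm_real, Real.norm_eq_abs]
    set x := |(μ[q|F b]) ω - (μ[q|F a]) ω| with hx
    rw [← sq_abs, ← hx]
    have hx0 : 0 ≤ x := abs_nonneg _
    have am : x * ‖z ω‖ ≤ (ε * x ^ 2 + ‖z ω‖ ^ 2 / ε) / 2 := by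
      have : 0 ≤ (ε * x - ‖z ω‖) ^ 2 / ε := by positivity
      have e : (ε * x - ‖z ω‖) ^ 2 / ε = ε * x ^ 2 + ‖z ω‖ ^ 2 / ε - 2 * (x * ‖z ω‖) := by
        field_simp; ring
      linarith
    calc x * ‖Y ω‖ * ‖z ω‖ = ‖Y ω‖ * (x * ‖z ω‖) := by ring
      _ ≤ C * ((ε * x ^ 2 + ‖z ω‖ ^ 2 / ε) / 2) :=
        mul_le_mul (hYb ω) am (by positivity) hC
      _ = _ := by ring
  refine (integral_mono_of_nonneg (.of_forall fun _ => norm_nonneg _)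
    ((i5.add i6).const_mul _) (.of_forall hb)).trans ?_
  simp only [Pi.add_apply]
  rw [integral_const_mul, integral_add i5 i6, integral_const_mul, condExp_sq_incr hq hab,
    integral_div]
  have := hz2.2
  gcongr

end density

end SLQ

namespace SLQ

set_option linter.unusedSectionVars false

section density2

variable {Ω : Type} {mΩ : MeasurableSpace Ω} {μ : Measure Ω} [IsProbabilityMeasure μ]
  {F : Filtration ℝ mΩ} {s T : ℝ} {W : ℝ → Ω → ℝ}

/-- An element orthogonal to all stochastic integrals sees Brownian increments only through their
characteristic function: the errors in `Orth.step` along a partition of mesh `1/m²` sum up to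
`O(1/m)`. -/
lemma Orth.exp_incr (hW : IsBrownian μ F W) (hs : 0 ≤ s) {q : Ω → ℝ} (hq : MemLp q 2 μ)
    (ho : Orth μ F W s T q) {a b : ℝ} (hsa : s ≤ a) (hab : a ≤ b) (hbT : b ≤ T)
    {X : Ω → ℂ} (hX : Measurable[F a] X) {C : ℝ} (hXb : ∀ ω, ‖X ω‖ ≤ C) (l : ℝ) :
    ∫ ω, (q ω : ℂ) * (X ω * Complex.exp (Complex.I * (l * (W b ω - W a ω) : ℝ))) ∂μ =
      (Real.exp (-(l ^ 2 * (b - a) / 2)) : ℝ) * ∫ ω, (q ω : ℂ) * X ω ∂μ := by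
  set u : ℝ → ℂ := fun t =>
    ∫ ω, (q ω : ℂ) * (X ω * Complex.exp (Complex.I * (l * (W t ω - W a ω) : ℝ))) ∂μ with hu
  set u0 : ℂ := ∫ ω, (q ω : ℂ) * X ω ∂μ with hu0
  set B : ℝ := ∫ ω, (μ[q|F b]) ω ^ 2 ∂μ with hB
  have main : ∀ m : ℕ, 0 < m →
      ‖u b - (Real.exp (-(l ^ 2 * (b - a) / 2)) : ℝ) * u0‖ ≤
        C / 2 * (B + zetaK l * (b - a) ^ 2) / m := by
    intro m hm
    have hm' : (0:ℝ) < m := by exact_mod_cast hm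
    set h : ℝ := (b - a) / m ^ 2 with hh
    have hh0 : 0 ≤ h := div_nonneg (sub_nonneg.2 hab) (by positivity)
    set τ : ℕ → ℝ := fun j => a + j * h with hτ
    have hτn : τ (m ^ 2) = b := by
      simp only [hτ, hh]; push_cast; field_simp; ring
    have hτle : ∀ j, τ j ≤ τ (j + 1) := fun j => by simp only [hτ]; push_cast; linarith
    have hτmono : Monotone τ := monotone_nat_of_le_succ hτle
    have hτ0 : τ 0 = a := by simp [hτ]
    have ind : ∀ j, j ≤ m ^ 2 →
        ‖u (τ j) - (Real.exp (-(l ^ 2 * (τ j - a) / 2)) : ℝ) * u0‖ ≤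
        C / 2 * ((1 / m) * (∫ ω, (μ[q|F (τ j)]) ω ^ 2 ∂μ) + j * (zetaK l * h ^ 2 / (1 / m))) := by
      intro j
      induction j with
      | zero =>
        intro _
        have hC : 0 ≤ C := by
          obtain ⟨ω⟩ := (nonempty_of_measure_ne_zero
            (μ := μ) (s := univ) (by simp)).to_type
          exact (norm_nonneg _).trans (hXb ω)
        have e : u (τ 0) - (Real.exp (-(l ^ 2 * (τ 0 - a) / 2)) : ℝ) * u0 = 0 := by
          simp [hτ0, hu, hu0]
        rw [e, norm_zero]
        have : 0 ≤ ∫ ω, (μ[q|F (τ 0)]) ω ^ 2 ∂μ := integral_nonneg fun _ => sq_nonneg _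
        simp only [Nat.cast_zero, zero_mul, add_zero]
        positivity
      | succ j ih =>
        intro hj
        have ih := ih (by omega)
        have ha1 : a ≤ τ j := by rw [← hτ0]; exact hτmono (Nat.zero_le j)
        have hb1 : τ (j + 1) ≤ b := by rw [← hτn]; exact hτmono hj
        set Y : Ω → ℂ := fun ω => X ω * Complex.exp (Complex.I * (l * (W (τ j) ω - W a ω) : ℝ))
          with hY
        have hYm : Measurable[F (τ j)] Y :=
          (hX.mono (F.mono ha1) le_rfl).mul (Complex.measurable_exp.comp
            ((Complex.measurable_ofReal.comp (((hW.meas _).sub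
              ((hW.meas a).mono (F.mono ha1) le_rfl)).const_mul l)).const_mul _))
        have hYb : ∀ ω, ‖Y ω‖ ≤ C := fun ω => by
          simp only [hY]
          rw [norm_mul, Complex.norm_exp_I_mul_ofReal, mul_one]; exact hXb ω
        have st := ho.step hW hs hq (hsa.trans ha1) (hτle j) (hb1.trans hbT) hYm hYb l
          (ε := 1 / m) (by positivity)
        have d1 : τ (j + 1) - τ j = h := by simp only [hτ]; push_cast; ring
        have e1 : ∫ ω, (q ω : ℂ) * (Y ω * Complex.exp (Complex.I *
            (l * (W (τ (j + 1)) ω - W (τ j) ω) : ℝ))) ∂μ = u (τ (j + 1)) := by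
          simp only [hu, hY]
          refine integral_congr_ae (.of_forall fun ω => ?_)
          simp only
          rw [mul_assoc (X ω), ← Complex.exp_add]
          congr 3
          push_cast; ring
        have e2 : ∫ ω, (q ω : ℂ) * Y ω ∂μ = u (τ j) := rfl
        rw [e1, e2, d1] at st
        set θ : ℝ := Real.exp (-(l ^ 2 * h / 2)) with hθ
        have hθ1 : θ ≤ 1 := Real.exp_le_one_iff.2 (by
          have : 0 ≤ l ^ 2 * h / 2 := by positivity
          linarith)
        have hθ0 : 0 ≤ θ := (Real.exp_pos _).le
        have e3 : Real.exp (-(l ^ 2 * (τ (j + 1) - a) / 2)) =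
            θ * Real.exp (-(l ^ 2 * (τ j - a) / 2)) := by
          rw [hθ, ← Real.exp_add]; congr 1
          have : τ (j + 1) = τ j + h := by linarith
          rw [this]; ring
        have e4 : u (τ (j + 1)) - (Real.exp (-(l ^ 2 * (τ (j + 1) - a) / 2)) : ℝ) * u0 =
            (u (τ (j + 1)) - (θ : ℝ) * u (τ j)) +
            (θ : ℝ) * (u (τ j) - (Real.exp (-(l ^ 2 * (τ j - a) / 2)) : ℝ) * u0) := by
          rw [e3]; push_cast; ring
        rw [e4]
        refine (norm_add_le _ _).trans ?_
        rw [norm_mul, Complex.norm_real, Real.norm_of_nonneg hθ0]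
        have h5 := mul_le_of_le_one_left (norm_nonneg
          (u (τ j) - (Real.exp (-(l ^ 2 * (τ j - a) / 2)) : ℝ) * u0)) hθ1
        refine (add_le_add st (h5.trans ih)).trans (le_of_eq ?_)
        push_cast; ring
    have fin := ind (m ^ 2) le_rfl
    rw [hτn] at fin
    refine fin.trans (le_of_eq ?_)
    rw [← hB, hh]
    push_cast
    field_simp
  have lim : Tendsto (fun m : ℕ => C / 2 * (B + zetaK l * (b - a) ^ 2) / (m:ℝ)) atTop (nhds 0) :=
    tendsto_const_div_atTop_nhds_zero_nat _
  have h0 : ‖u b - (Real.exp (-(l ^ 2 * (b - a) / 2)) : ℝ) * u0‖ ≤ 0 := by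
    refine ge_of_tendsto lim ?_
    filter_upwards [eventually_gt_atTop 0] with m hm using main m hm
  exact sub_eq_zero.1 (norm_le_zero_iff.1 h0)

lemma Orth.const {q : Ω → ℝ} (hq : MemLp q 2 μ) (ho : Orth μ F W s T q)
    {X : Ω → ℂ} (hX : Measurable[F s] X) {C : ℝ} (hXb : ∀ ω, ‖X ω‖ ≤ C) :
    ∫ ω, (q ω : ℂ) * X ω ∂μ = 0 := by
  have hXm : Measurable X := hX.mono (F.le s) le_rfl
  have key : ∀ Z : Ω → ℝ, Measurable[F s] Z → (∀ ω, |Z ω| ≤ C) →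
      ∫ ω, q ω * Z ω ∂μ = 0 := by
    intro Z hZ hZb
    exact ho _ _ (Good.const hZ (MemLp.of_bound
      (hZ.mono (F.le s) le_rfl).aestronglyMeasurable C (.of_forall hZb)))
  have hX2 : MemLp X 2 μ := MemLp.of_bound hXm.aestronglyMeasurable C (.of_forall hXb)
  have hi : Integrable (fun ω => (q ω : ℂ) * X ω) μ := (hq.ofReal (K := ℂ)).integrable_mul hX2
  have re := key (fun ω => (X ω).re) (Complex.measurable_re.comp hX)
    fun ω => (Complex.abs_re_le_norm _).trans (hXb ω)
  have im := key (fun ω => (X ω).im) (Complex.measurable_im.comp hX)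
    fun ω => (Complex.abs_im_le_norm _).trans (hXb ω)
  apply Complex.ext
  · have h := integral_re hi
    simp only [RCLike.re_to_complex] at h
    rw [← h, Complex.zero_re, ← re]
    simp
  · have h := integral_im hi
    simp only [RCLike.im_to_complex] at h
    rw [← h, Complex.zero_im, ← im]
    simp

lemma IsBrownian.meas_sum (hW : IsBrownian μ F W) {a : ℝ} (I : Finset ℝ) (l : ℝ → ℝ) (c : ℝ)
    (hI : ∀ t ∈ I, t ≤ a) :
    Measurable[F a] fun ω => Complex.exp (Complex.I * (∑ t ∈ I, l t * W t ω + c * W a ω : ℝ)) := by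
  have h : Measurable[F a] fun ω => ∑ t ∈ I, l t * W t ω + c * W a ω := by
    refine Measurable.add ?_ ((hW.meas a).const_mul c)
    exact Finset.measurable_fun_sum I fun t ht =>
      ((hW.meas t).mono (F.mono (hI t ht)) le_rfl).const_mul _
  exact Complex.measurable_exp.comp ((Complex.measurable_ofReal.comp h).const_mul _)

/-- `Orth.exp_incr` iterated along finitely many times. -/
lemma Orth.finite (hW : IsBrownian μ F W) (hs : 0 ≤ s) {q : Ω → ℝ}
    (hq : MemLp q 2 μ) (ho : Orth μ F W s T q) (l : ℝ → ℝ) (I : Finset ℝ) :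
    ∀ a ∈ Icc s T, (∀ t ∈ I, t ≤ a) → ∀ c : ℝ,
    ∫ ω, (q ω : ℂ) * Complex.exp (Complex.I * (∑ t ∈ I, l t * W t ω + c * W a ω : ℝ)) ∂μ = 0 := by
  have hb1 : ∀ x : ℝ, ‖Complex.exp (Complex.I * (x:ℝ))‖ ≤ 1 := fun x =>
    (Complex.norm_exp_I_mul_ofReal x).le
  -- if all times of `J` lie before `b ≥ s`, the time `a ≥ b` can be replaced by `b`
  have red : ∀ (J : Finset ℝ) (b a : ℝ), s ≤ b → b ≤ a → a ≤ T → (∀ t ∈ J, t ≤ b) → ∀ c : ℝ,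
      ∫ ω, (q ω : ℂ) * Complex.exp (Complex.I * (∑ t ∈ J, l t * W t ω + c * W b ω : ℝ)) ∂μ = 0 →
      ∫ ω, (q ω : ℂ) * Complex.exp (Complex.I * (∑ t ∈ J, l t * W t ω + c * W a ω : ℝ)) ∂μ = 0 := by
    intro J b a hsb hba haT hJ c h0
    have h := ho.exp_incr hW hs hq hsb hba haT (hW.meas_sum J l c hJ) (fun ω => hb1 _) c
    rw [h0, mul_zero] at h
    rw [← h]
    refine integral_congr_ae (.of_forall fun ω => ?_)
    simp only
    rw [← Complex.exp_add]
    congr 2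
    push_cast; ring
  have cst : ∀ (J : Finset ℝ) (a : ℝ), s ≤ a → a ≤ T → (∀ t ∈ J, t ≤ s) → ∀ c : ℝ,
      ∫ ω, (q ω : ℂ) * Complex.exp (Complex.I * (∑ t ∈ J, l t * W t ω + c * W a ω : ℝ)) ∂μ = 0 :=
    fun J a hsa haT hJ c => red J s a le_rfl hsa haT hJ c
      (ho.const hq (hW.meas_sum J l c hJ) fun ω => hb1 _)
  induction I using Finset.induction_on_max with
  | empty =>
    intro a ha _ c
    exact cst ∅ a ha.1 ha.2 (by simp) c
  | insert b I hb ih =>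
    intro a ha hI c
    rcases le_total b s with hbs | hsb
    · refine cst _ a ha.1 ha.2 (fun t ht => ?_) c
      rcases Finset.mem_insert.1 ht with rfl | h
      · exact hbs
      · exact ((hb t h).le).trans hbs
    · have hba : b ≤ a := hI b (Finset.mem_insert_self _ _)
      refine red _ b a hsb hba ha.2 (fun t ht => ?_) c ?_
      · rcases Finset.mem_insert.1 ht with rfl | h
        · exact le_rfl
        · exact (hb t h).le
      · have h := ih b ⟨hsb, hba.trans ha.2⟩ (fun t ht => (hb t ht).le) (l b + c)
        rw [← h]
        refine integral_congr_ae (.of_forall fun ω => ?_)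
        simp only
        rw [Finset.sum_insert (fun hmem => lt_irrefl _ (hb b hmem))]
        congr 4
        ring

end density2

end SLQ

namespace SLQ

set_option linter.unusedSectionVars false

/-! ### The martingale representation theorem -/

section representation

variable {Ω : Type} {mΩ : MeasurableSpace Ω} {μ : Measure Ω} [IsProbabilityMeasure μ]
  {F : Filtration ℝ mΩ} {s T : ℝ} {W : ℝ → Ω → ℝ}

/-- The finite-dimensional distributions of `W` under the measures with densities `q⁺` and `q⁻`
have the same characteristic functions, hence these measures agree on `F T`. -/
lemma Orth.eq_zero (hW : IsBrownian μ F W) (hs : 0 ≤ s) (hsT : s ≤ T) {q : Ω → ℝ}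
    (hq : MemLp q 2 μ) (hqm : Measurable[F T] q) (ho : Orth μ F W s T q) : q =ᵐ[μ] 0 := by
  have hqm' : Measurable q := hqm.mono (F.le T) le_rfl
  have hqi : Integrable q μ := hq.integrable (by norm_num)
  set P : Ω → (Icc (0:ℝ) T → ℝ) := fun ω t => W t ω with hP
  have hPm : Measurable P := measurable_pi_lambda _ fun t => hW.measW t
  have hFT : F T = MeasurableSpace.comap P MeasurableSpace.pi := by
    rw [hW.natural T (hs.trans hsT)]
    unfold MeasurableSpace.pi
    rw [MeasurableSpace.comap_iSup, iSup_subtype']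
    simp only [MeasurableSpace.comap_comp, Function.comp_def, hP,
      BorelSpace.measurable_eq (α := ℝ)]
  set d : ℝ → Ω → ENNReal := fun σ ω => ENNReal.ofReal (σ * q ω) with hd
  have hdm : ∀ σ, Measurable (d σ) := fun σ => (hqm'.const_mul σ).ennreal_ofReal
  have hfin : ∀ σ, IsFiniteMeasure (μ.withDensity (d σ)) := fun σ =>
    isFiniteMeasure_withDensity_ofReal (hqi.const_mul σ).2
  have hmap : (μ.withDensity (d 1)).map P = (μ.withDensity (d (-1))).map P := by
    have := hfin 1
    have := hfin (-1)
    refine IsProjectiveLimit.unique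
      (P := fun I => ((μ.withDensity (d 1)).map P).map I.restrict) (fun I => rfl) (fun I => ?_)
    refine Measure.ext_of_charFunDual ?_
    ext L
    have hIm : Measurable (I.restrict (π := fun _ : Icc (0:ℝ) T => ℝ)) :=
      Finset.measurable_restrict I
    have hE : ∀ σ, charFunDual (((μ.withDensity (d σ)).map P).map I.restrict) L =
        ∫ ω, (max (σ * q ω) 0 : ℝ) • Complex.exp (L (I.restrict (P ω)) * Complex.I) ∂μ := by
      intro σ
      rw [charFunDual_apply, Measure.map_map hIm hPm, integral_map (hIm.comp hPm).aemeasurable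
        (by fun_prop), integral_withDensity_eq_integral_toReal_smul (hdm σ)
        (.of_forall fun ω => ENNReal.ofReal_lt_top)]
      simp only [hd, ENNReal.toReal_ofReal', Function.comp_def]
    rw [hE, hE, eq_comm]
    have hm : AEStronglyMeasurable (fun ω => Complex.exp (L (I.restrict (P ω)) * Complex.I)) μ := by
      have h1 : Measurable fun ω => L (I.restrict (P ω)) :=
        L.continuous.measurable.comp (hIm.comp hPm)
      exact (Complex.measurable_exp.comp
        ((Complex.measurable_ofReal.comp h1).mul_const _)).aestronglyMeasurable
    have hi : ∀ σ : ℝ, Integrable (fun ω => (max (σ * q ω) 0 : ℝ) •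
        Complex.exp (L (I.restrict (P ω)) * Complex.I)) μ := by
      intro σ
      have h1 : Integrable (fun ω => max (σ * q ω) 0) μ := (hqi.const_mul σ).pos_part
      refine h1.smul_of_top_left ?_
      refine memLp_top_of_bound hm 1 (.of_forall fun ω => ?_)
      rw [Complex.norm_exp_ofReal_mul_I]
    rw [← sub_eq_zero, ← integral_sub (hi _) (hi _)]
    -- the linear form `L` evaluated along the path
    classical
    set lam : ℝ → ℝ := fun t => if ht : ∃ h : t ∈ Icc (0:ℝ) T, (⟨t, h⟩ : Icc (0:ℝ) T) ∈ I
      then L (Pi.single ⟨⟨t, ht.1⟩, ht.2⟩ 1) else 0 with hlam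
    have hL : ∀ ω, L (I.restrict (P ω)) =
        ∑ t ∈ I.map (Function.Embedding.subtype _), lam t * W t ω := by
      intro ω
      rw [Finset.sum_map, ← Finset.sum_coe_sort I]
      conv_lhs => rw [← Finset.univ_sum_single (I.restrict (P ω))]
      rw [map_sum]
      refine Finset.sum_congr rfl fun t _ => ?_
      have h1 : lam (t : Icc (0:ℝ) T) = L (Pi.single t 1) := by
        simp only [hlam]
        rw [dif_pos ⟨t.1.2, t.2⟩]
      have h2 : (Pi.single t (I.restrict (P ω) t) : I → ℝ) = W (t : Icc (0:ℝ) T) ω •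
          (Pi.single t 1 : I → ℝ) := by
        rw [← Pi.single_smul]
        simp [hP]
      rw [h2, map_smul, smul_eq_mul, mul_comm]
      simp only [Function.Embedding.subtype_apply]
      rw [h1]
    have h0 := ho.finite hW hs hq lam (I.map (Function.Embedding.subtype _)) T ⟨hsT, le_rfl⟩
      (fun t ht => by
        obtain ⟨x, -, rfl⟩ := Finset.mem_map.1 ht
        exact x.2.2) 0
    rw [← h0]
    refine integral_congr_ae (.of_forall fun ω => ?_)
    simp only [hL, zero_mul, add_zero, one_mul, neg_mul, ← sub_smul]
    have : max (q ω) 0 - max (-q ω) 0 = q ω := max_zero_sub_max_neg_zero_eq_self (q ω)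
    rw [this, mul_comm Complex.I]
    simp
  have hA : ∀ A, MeasurableSet[F T] A → ∫⁻ ω in A, d 1 ω ∂μ = ∫⁻ ω in A, d (-1) ω ∂μ := by
    intro A hA
    have hA' : MeasurableSet A := F.le T A hA
    rw [hFT] at hA
    obtain ⟨B, hB, rfl⟩ := hA
    rw [← withDensity_apply _ hA', ← withDensity_apply _ hA', ← Measure.map_apply hPm hB,
      ← Measure.map_apply hPm hB, hmap]
  have key : ∀ σ : ℝ, (∀ A, MeasurableSet[F T] A →
      ∫⁻ ω in A, d σ ω ∂μ = ∫⁻ ω in A, d (-σ) ω ∂μ) → ∀ᵐ ω ∂μ, σ * q ω ≤ 0 := by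
    intro σ h
    have hm1 : MeasurableSet[F T] {ω | 0 < σ * q ω} :=
      @measurableSet_lt _ _ _ _ _ (F T) _ _ _ _ _ measurable_const (hqm.const_mul σ)
    have h1 := h _ hm1
    have h2 : ∫⁻ ω in {ω | 0 < σ * q ω}, d (-σ) ω ∂μ = 0 := by
      rw [setLIntegral_congr_fun (F.le T _ hm1) (g := fun _ => 0)]
      · simp
      · intro ω hω
        have hω' : 0 < σ * q ω := hω
        simp only [hd]
        exact ENNReal.ofReal_of_nonpos (by linarith)
    rw [h2, lintegral_eq_zero_iff (hdm σ), Filter.EventuallyEq, ae_restrict_iff' (F.le T _ hm1)] at h1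
    filter_upwards [h1] with ω hω
    by_contra hcon
    have hpos : 0 < σ * q ω := not_le.1 hcon
    have := hω hpos
    simp only [hd, Pi.zero_apply, ENNReal.ofReal_eq_zero] at this
    exact hcon this
  filter_upwards [key 1 hA, key (-1) fun A hA' => by
    rw [neg_neg]; exact (hA A hA').symm] with ω h1 h2
  simp only [Pi.zero_apply]
  linarith

/-- The terminal values of stochastic integrals, as a subspace of `L²`. -/
def terminal (μ : Measure Ω) [IsProbabilityMeasure μ] (F : Filtration ℝ mΩ) (W : ℝ → Ω → ℝ)
    (s T : ℝ) (hsT : s ≤ T) : Submodule ℝ (Lp ℝ 2 μ) where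
  carrier := {f | ∃ M φ, Good μ F W s T M φ ∧ M T =ᵐ[μ] f}
  add_mem' := by
    rintro f g ⟨M, φ, h, e⟩ ⟨M', φ', h', e'⟩
    refine ⟨_, _, h.add hsT h', ?_⟩
    filter_upwards [e, e', Lp.coeFn_add f g] with ω h1 h2 h3
    rw [h3, Pi.add_apply, h1, h2]
  zero_mem' := by
    refine ⟨_, _, Good.const (μ := μ) (F := F) (W := W) (s := s) (T := T) (c := fun _ => 0)
      measurable_const (memLp_const 0), ?_⟩
    filter_upwards [Lp.coeFn_zero ℝ 2 μ] with ω h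
    rw [h]; rfl
  smul_mem' := by
    rintro c f ⟨M, φ, h, e⟩
    refine ⟨_, _, h.const_mul c, ?_⟩
    filter_upwards [e, Lp.coeFn_smul c f] with ω h1 h2
    rw [h2, Pi.smul_apply, h1]; rfl

lemma terminal_closed (hW : IsBrownian μ F W) (hs : 0 ≤ s) (hsT : s ≤ T) :
    IsClosed (terminal μ F W s T hsT : Set (Lp ℝ 2 μ)) := by
  refine isClosed_of_closure_subset fun f hf => ?_
  rw [Metric.mem_closure_iff] at hf
  have h1 : ∀ n : ℕ, ∃ M φ, Good μ F W s T M φ ∧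
      eLpNorm (fun ω => M T ω - f ω) 2 μ ≤ ENNReal.ofReal ((1 / 4) ^ n) := by
    intro n
    obtain ⟨g, ⟨M, φ, hM, e⟩, hg⟩ := hf ((1 / 4) ^ n) (by positivity)
    refine ⟨M, φ, hM, ?_⟩
    rw [dist_comm, Lp.dist_def] at hg
    have e1 : eLpNorm (fun ω => M T ω - f ω) 2 μ = eLpNorm (⇑g - ⇑f) 2 μ := by
      refine eLpNorm_congr_ae ?_
      filter_upwards [e] with ω h1
      simp [h1]
    rw [e1, ENNReal.le_ofReal_iff_toReal_le _ (by positivity)]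
    · exact hg.le
    · exact ((Lp.memLp g).sub (Lp.memLp f)).2.ne
  choose M φ hM hd using h1
  exact Good.closed hW hs hsT hM (Lp.memLp f) hd

/-- The martingale representation theorem. -/
theorem representation (hW : IsBrownian μ F W) (hs : 0 ≤ s) (hsT : s ≤ T) {η : Ω → ℝ}
    (hη : MemLp η 2 μ) (hm : AEStronglyMeasurable[F T] η μ) :
    ∃ M φ, Good μ F W s T M φ ∧ M T =ᵐ[μ] η := by
  set K := terminal μ F W s T hsT with hK
  have : CompleteSpace K := (terminal_closed hW hs hsT).completeSpace_coe
  obtain ⟨y, ⟨M, φ, hM, e⟩, z, hz, hyz⟩ := K.exists_add_mem_mem_orthogonal (hη.toLp η)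
  refine ⟨M, φ, hM, ?_⟩
  obtain ⟨η', hη'm, hη'e⟩ := hm
  have hTT : T ∈ Icc s T := ⟨hsT, le_rfl⟩
  set q : Ω → ℝ := fun ω => η' ω - M T ω with hq
  have hqm : Measurable[F T] q := hη'm.measurable.sub (hM.meas T hTT)
  have hq2 : MemLp q 2 μ := (hη.ae_eq hη'e).sub hM.l2
  have hqz : q =ᵐ[μ] z := by
    have h1 := Lp.coeFn_add y z
    rw [← hyz] at h1
    filter_upwards [h1, hη.coeFn_toLp, e, hη'e] with ω a1 a2 a3 a4
    simp only [Pi.add_apply] at a1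
    simp only [hq]
    rw [← a4, ← a2, a1, a3]; ring
  have ho : Orth μ F W s T q := by
    intro N ψ hN
    have hmem : hN.l2.toLp (N T) ∈ K := ⟨N, ψ, hN, hN.l2.coeFn_toLp.symm⟩
    have h1 := (Submodule.mem_orthogonal K z).1 hz _ hmem
    rw [MeasureTheory.L2.inner_def] at h1
    rw [← h1]
    refine integral_congr_ae ?_
    filter_upwards [hqz, hN.l2.coeFn_toLp] with ω a1 a2
    rw [a1, a2]; simp
  filter_upwards [ho.eq_zero hW hs hsT hq2 hqm, hη'e] with ω h1 h2
  simp only [hq, Pi.zero_apply] at h1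
  linarith

end representation

end SLQ

namespace SLQ

set_option linter.unusedSectionVars false

/-! ### Bounded conditional tails and moments -/

section bmo

variable {Ω : Type} {mΩ : MeasurableSpace Ω} {μ : Measure Ω} [IsProbabilityMeasure μ]
  {F : Filtration ℝ mΩ} {s T : ℝ}

/-- `E[∫_t^T g⁺ dr | 𝓕_t] ≤ C` for every `t`, stated without conditional expectations. -/
def Bmo (μ : Measure Ω) (F : Filtration ℝ mΩ) (s T : ℝ) (g : ℝ → Ω → ℝ) (C : ENNReal) : Prop :=
  ∀ t ∈ Icc s T, ∀ A, MeasurableSet[F t] A →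
    ∫⁻ ω in A, (∫⁻ r in Ioc t T, ENNReal.ofReal (g r ω)) ∂μ ≤ C * μ A

lemma lintegral_mul_le_of_setLIntegral {m : MeasurableSpace Ω} (hm : m ≤ mΩ) {X : Ω → ENNReal}
    (hX : Measurable[mΩ] X) {C : ENNReal} (h : ∀ A, MeasurableSet[m] A → ∫⁻ ω in A, X ω ∂μ ≤ C * μ A)
    {Z : Ω → ℝ} (hZ : AEStronglyMeasurable[m] Z μ) :
    ∫⁻ ω, ENNReal.ofReal (Z ω) * X ω ∂μ ≤ C * ∫⁻ ω, ENNReal.ofReal (Z ω) ∂μ := by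
  obtain ⟨Z', hZ', he⟩ := hZ
  have hf : Measurable[m] fun ω => ENNReal.ofReal (Z' ω) :=
    ENNReal.measurable_ofReal.comp hZ'.measurable
  have hle : (μ.withDensity X).trim hm ≤ C • μ.trim hm := by
    refine Measure.le_iff.2 fun A hA => ?_
    rw [Measure.smul_apply, trim_measurableSet_eq hm hA, trim_measurableSet_eq hm hA,
      withDensity_apply _ (hm _ hA)]
    exact h A hA
  calc ∫⁻ ω, ENNReal.ofReal (Z ω) * X ω ∂μ = ∫⁻ ω, X ω * ENNReal.ofReal (Z' ω) ∂μ := by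
        refine lintegral_congr_ae ?_
        filter_upwards [he] with ω hω
        rw [hω, mul_comm]
    _ = ∫⁻ ω, ENNReal.ofReal (Z' ω) ∂(μ.withDensity X) := by
        have hf' : Measurable[mΩ] fun ω => ENNReal.ofReal (Z' ω) := fun A hA => hm _ (hf hA)
        rw [lintegral_withDensity_eq_lintegral_mul _ hX hf']
        rfl
    _ = ∫⁻ ω, ENNReal.ofReal (Z' ω) ∂((μ.withDensity X).trim hm) := (lintegral_trim hm hf).symm
    _ ≤ ∫⁻ ω, ENNReal.ofReal (Z' ω) ∂(C • μ.trim hm) := lintegral_mono' hle le_rfl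
    _ = C * ∫⁻ ω, ENNReal.ofReal (Z' ω) ∂μ := by
        rw [lintegral_smul_measure, lintegral_trim hm hf, smul_eq_mul]
    _ = C * ∫⁻ ω, ENNReal.ofReal (Z ω) ∂μ := by
        congr 1
        refine lintegral_congr_ae ?_
        filter_upwards [he] with ω hω
        rw [hω]

lemma ofReal_interval {g : ℝ → ℝ} (h0 : ∀ r, 0 ≤ g r) {a b : ℝ} (hab : a ≤ b)
    (hi : IntervalIntegrable g volume a b) :
    ENNReal.ofReal (∫ r in a..b, g r) = ∫⁻ r in Ioc a b, ENNReal.ofReal (g r) := by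
  rw [intervalIntegral.integral_of_le hab]
  exact ofReal_integral_eq_lintegral_ofReal ((intervalIntegrable_iff_integrableOn_Ioc_of_le hab).1 hi)
    (ae_of_all _ h0)

lemma measurable_lint {g : ℝ → Ω → ℝ} (h : Measurable fun p : ℝ × Ω => g p.1 p.2) (a b : ℝ) :
    Measurable fun ω => ∫⁻ r in Ioc a b, ENNReal.ofReal (g r ω) := by
  have : Measurable fun q : Ω × ℝ => ENNReal.ofReal (g q.2 q.1) :=
    ENNReal.measurable_ofReal.comp (h.comp measurable_swap)
  exact this.lintegral_prod_right'

/-- A nonnegative process with a.s. finite integral is a.s. integrable. -/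
lemma intervalIntegrable_of_lint (hsT : s ≤ T) {g : ℝ → Ω → ℝ}
    (h : Measurable fun p : ℝ × Ω => g p.1 p.2) (h0 : ∀ r ω, 0 ≤ g r ω)
    (hf : ∫⁻ ω, (∫⁻ r in Ioc s T, ENNReal.ofReal (g r ω)) ∂μ ≠ ⊤) :
    ∀ᵐ ω ∂μ, IntervalIntegrable (fun r => g r ω) volume s T := by
  filter_upwards [ae_lt_top (measurable_lint h s T) hf] with ω hω
  rw [intervalIntegrable_iff_integrableOn_Ioc_of_le hsT]
  refine ⟨(h.comp (measurable_id.prodMk measurable_const)).aestronglyMeasurable, ?_⟩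
  rw [hasFiniteIntegral_iff_ofReal (ae_of_all _ fun r => h0 r ω)]
  exact hω

lemma Bmo.lint_ne_top {g : ℝ → Ω → ℝ} {C : ENNReal} (hC : C ≠ ⊤) (hsT : s ≤ T)
    (h : Bmo μ F s T g C) : ∫⁻ ω, (∫⁻ r in Ioc s T, ENNReal.ofReal (g r ω)) ∂μ ≠ ⊤ := by
  have := h s ⟨le_rfl, hsT⟩ univ MeasurableSet.univ
  simp only [Measure.restrict_univ, measure_univ, mul_one] at this
  exact ne_top_of_le_ne_top hC this

lemma path_pow {s T : ℝ} (hsT : s ≤ T) {g : ℝ → ℝ} (hg : IntervalIntegrable g volume s T) (n : ℕ) :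
    Prim s T (fun t => (∫ r in s..t, g r) ^ (n + 1))
      (fun t => (n + 1) * (∫ r in s..t, g r) ^ n * g t) := by
  have hG := prim_integral hg
  induction n with
  | zero => simpa using hG
  | succ n ih =>
    have := Prim.mul hsT ih hG
    refine (this.congr hsT fun t _ => by ring).congr_deriv hsT fun t _ => ?_
    push_cast
    ring

lemma path_moment {s T : ℝ} (hsT : s ≤ T) {g : ℝ → ℝ} (hg : IntervalIntegrable g volume s T)
    (n : ℕ) :
    IntervalIntegrable (fun t => (n + 1) * (∫ r in s..t, g r) ^ n * g t * ∫ r in t..T, g r)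
        volume s T ∧
      (∫ r in s..T, g r) ^ (n + 2) =
        (n + 2) * ∫ t in s..T, (n + 1) * (∫ r in s..t, g r) ^ n * g t * ∫ r in t..T, g r := by
  set X := ∫ r in s..T, g r with hX
  have hG := prim_integral hg
  have h1 := path_pow hsT hg n
  have h2 := path_pow hsT hg (n + 1)
  have hc : Prim s T (fun t => X - ∫ r in s..t, g r) (fun t => - g t) := by
    refine ⟨hg.neg, fun t ht => ?_⟩
    simp [intervalIntegral.integral_neg]
    ring
  have h3 := Prim.mul hsT h1 hc
  have ec : ∀ t ∈ Icc s T, X - ∫ r in s..t, g r = ∫ r in t..T, g r := by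
    intro t ht
    rw [hX, ← intervalIntegral.integral_add_adjacent_intervals
      (intervalIntegrable_sub hg le_rfl ht.1 ht.2) (intervalIntegrable_sub hg ht.1 ht.2 le_rfl)]
    ring
  have e2 := h2.sub_eq le_rfl hsT le_rfl
  have e3 := h3.sub_eq le_rfl hsT le_rfl
  simp only [intervalIntegral.integral_same] at e2 e3
  have i4 : IntervalIntegrable (fun t => (n + 1) * (∫ r in s..t, g r) ^ n * g t * ∫ r in t..T, g r)
        volume s T := by
    have i5 := h3.1.add (h2.1.const_mul (1 / (n + 2 : ℝ)))
    refine i5.congr (fun t ht => ?_)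
    rw [uIoc_of_le hsT] at ht
    have := ec t ⟨ht.1.le, ht.2⟩
    have hn : (n + 2 : ℝ) ≠ 0 := by positivity
    simp only [← this]
    push_cast
    field_simp
    ring
  refine ⟨i4, ?_⟩
  have e5 : (∫ t in s..T, (n + 1) * (∫ r in s..t, g r) ^ n * g t * ∫ r in t..T, g r) =
      ∫ t in s..T, (((n + 1) * (∫ r in s..t, g r) ^ n * g t * (X - ∫ r in s..t, g r) +
        (∫ r in s..t, g r) ^ (n + 1) * -g t) + (1 / (n + 2 : ℝ)) *
        (((n + 1 : ℕ) + 1) * (∫ r in s..t, g r) ^ (n + 1) * g t)) := by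
    refine intervalIntegral.integral_congr fun t ht => ?_
    rw [uIcc_of_le hsT] at ht
    have := ec t ht
    have hn : (n + 2 : ℝ) ≠ 0 := by positivity
    simp only [← this]
    push_cast
    field_simp
    ring
  rw [e5, intervalIntegral.integral_add h3.1 (h2.1.const_mul _), ← e3,
    intervalIntegral.integral_const_mul, ← e2]
  have hn : (n + 2 : ℝ) ≠ 0 := by positivity
  rw [← hX]
  field_simp
  ring

/-- All moments of `∫ g` are finite when its conditional tails are bounded. -/
lemma Bmo.moments (hsT : s ≤ T) {g : ℝ → Ω → ℝ} (hg : Adp μ F s T g) (h0 : ∀ r ω, 0 ≤ g r ω)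
    {C : ENNReal} (hC : C ≠ ⊤) (h : Bmo μ F s T g C) (n : ℕ) :
    ∫⁻ ω, ENNReal.ofReal (∫ r in s..T, g r ω) ^ (n + 1) ∂μ < ⊤ := by
  have hi := intervalIntegrable_of_lint hsT hg.2 h0 (h.lint_ne_top hC hsT)
  induction n with
  | zero =>
    refine lt_of_eq_of_lt (lintegral_congr_ae ?_) (h.lint_ne_top hC hsT).lt_top
    filter_upwards [hi] with ω hω
    rw [zero_add, pow_one, ofReal_interval (fun r => h0 r ω) hsT hω]
  | succ n ih =>
    set Z : ℝ → Ω → ℝ := fun t ω => (n + 1) * (∫ r in s..t, g r ω) ^ n * g t ω with hZ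
    have hZA : Adp μ F s T Z :=
      (((hg.integral hi).comp_cont (continuous_pow n)).const_mul _).mul hg
    have hZ0 : ∀ t ∈ Icc s T, ∀ ω, 0 ≤ Z t ω := fun t ht ω => by
      have : 0 ≤ ∫ r in s..t, g r ω := intervalIntegral.integral_nonneg ht.1 fun r _ => h0 r ω
      have := h0 t ω
      positivity
    have mX : Measurable fun p : ℝ × Ω => ∫⁻ r in Ioc p.1 T, ENNReal.ofReal (g r p.2) := by
      have : (fun p : ℝ × Ω => ∫⁻ r in Ioc p.1 T, ENNReal.ofReal (g r p.2)) =
          fun p : ℝ × Ω => ∫⁻ r, (if p.1 < r ∧ r ≤ T then ENNReal.ofReal (g r p.2) else 0) := by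
        ext p
        rw [← lintegral_indicator measurableSet_Ioc]
        refine lintegral_congr fun r => ?_
        simp [Set.indicator_apply]
      rw [this]
      have h1 : Measurable fun q : (ℝ × Ω) × ℝ =>
          if q.1.1 < q.2 ∧ q.2 ≤ T then ENNReal.ofReal (g q.2 q.1.2) else 0 := by
        refine Measurable.ite ?_ ?_ measurable_const
        · exact (measurableSet_lt measurable_fst.fst measurable_snd).inter
            (measurableSet_le measurable_snd measurable_const)
        · exact ENNReal.measurable_ofReal.comp (hg.2.comp (measurable_snd.prodMk measurable_fst.snd))
      exact h1.lintegral_prod_right'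
    have mZ : Measurable fun p : ℝ × Ω => ENNReal.ofReal (Z p.1 p.2) :=
      ENNReal.measurable_ofReal.comp hZA.2
    have key : ∀ᵐ ω ∂μ, ENNReal.ofReal (∫ r in s..T, g r ω) ^ (n + 2) =
        ENNReal.ofReal (n + 2) * ∫⁻ t in Ioc s T, ENNReal.ofReal (Z t ω) *
          ∫⁻ r in Ioc t T, ENNReal.ofReal (g r ω) := by
      filter_upwards [hi] with ω hω
      obtain ⟨p1, p2⟩ := path_moment hsT hω n
      have hX0 : 0 ≤ ∫ r in s..T, g r ω := intervalIntegral.integral_nonneg hsT fun r _ => h0 r ω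
      rw [← ENNReal.ofReal_pow hX0, p2, ENNReal.ofReal_mul (by positivity)]
      congr 1
      rw [intervalIntegral.integral_of_le hsT, ofReal_integral_eq_lintegral_ofReal
        ((intervalIntegrable_iff_integrableOn_Ioc_of_le hsT).1 p1)]
      · refine setLIntegral_congr_fun measurableSet_Ioc fun t ht => ?_
        rw [ENNReal.ofReal_mul (hZ0 t ⟨ht.1.le, ht.2⟩ ω), ofReal_interval (fun r => h0 r ω) ht.2
          (intervalIntegrable_sub hω ht.1.le ht.2 le_rfl)]
      · filter_upwards [ae_restrict_mem measurableSet_Ioc] with t ht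
        exact mul_nonneg (hZ0 t ⟨ht.1.le, ht.2⟩ ω)
          (intervalIntegral.integral_nonneg ht.2 fun r _ => h0 r ω)
    have key1 : ∀ᵐ ω ∂μ, ENNReal.ofReal (∫ r in s..T, g r ω) ^ (n + 1) =
        ∫⁻ t in Ioc s T, ENNReal.ofReal (Z t ω) := by
      filter_upwards [hi] with ω hω
      have hX0 : 0 ≤ ∫ r in s..T, g r ω := intervalIntegral.integral_nonneg hsT fun r _ => h0 r ω
      have p2 := (path_pow hsT hω n).sub_eq le_rfl hsT le_rfl
      simp only [intervalIntegral.integral_same, ne_eq, Nat.add_eq_zero_iff, one_ne_zero, and_false,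
        not_false_eq_true, zero_pow, sub_zero] at p2
      rw [← ENNReal.ofReal_pow hX0, p2, intervalIntegral.integral_of_le hsT,
        ofReal_integral_eq_lintegral_ofReal
        ((intervalIntegrable_iff_integrableOn_Ioc_of_le hsT).1 (path_pow hsT hω n).1)]
      filter_upwards [ae_restrict_mem measurableSet_Ioc] with t ht
      exact hZ0 t ⟨ht.1.le, ht.2⟩ ω
    have swap : ∀ {u : ℝ → Ω → ENNReal}, (Measurable fun p : ℝ × Ω => u p.1 p.2) →
        ∫⁻ ω, (∫⁻ t in Ioc s T, u t ω) ∂μ = ∫⁻ t in Ioc s T, (∫⁻ ω, u t ω ∂μ) := fun hu =>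
      lintegral_lintegral_swap (f := fun ω t => _) (hu.comp measurable_swap).aemeasurable
    calc ∫⁻ ω, ENNReal.ofReal (∫ r in s..T, g r ω) ^ (n + 1 + 1) ∂μ
        = ENNReal.ofReal (n + 2) * ∫⁻ ω, (∫⁻ t in Ioc s T, ENNReal.ofReal (Z t ω) *
          ∫⁻ r in Ioc t T, ENNReal.ofReal (g r ω)) ∂μ := by
          rw [← lintegral_const_mul' _ _ ENNReal.ofReal_ne_top]
          exact lintegral_congr_ae key
      _ = ENNReal.ofReal (n + 2) * ∫⁻ t in Ioc s T, (∫⁻ ω, ENNReal.ofReal (Z t ω) *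
          (∫⁻ r in Ioc t T, ENNReal.ofReal (g r ω)) ∂μ) := by
          rw [swap (mZ.mul mX)]
      _ ≤ ENNReal.ofReal (n + 2) * ∫⁻ t in Ioc s T, C * (∫⁻ ω, ENNReal.ofReal (Z t ω) ∂μ) := by
          gcongr 1
          refine setLIntegral_mono' measurableSet_Ioc fun t ht => ?_
          have ht' : t ∈ Icc s T := ⟨ht.1.le, ht.2⟩
          exact lintegral_mul_le_of_setLIntegral (F.le t) (measurable_lint hg.2 t T)
            (h t ht') (hZA.1 t ht')
      _ = ENNReal.ofReal (n + 2) * (C * ∫⁻ ω, ENNReal.ofReal (∫ r in s..T, g r ω) ^ (n + 1) ∂μ) := by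
          rw [lintegral_const_mul' _ _ hC, ← swap mZ, lintegral_congr_ae key1]
      _ < ⊤ := ENNReal.mul_lt_top ENNReal.ofReal_lt_top (ENNReal.mul_lt_top hC.lt_top ih)

end bmo

end SLQ

namespace SLQ

set_option linter.unusedSectionVars false

/-! ### Euclidean norms and conditional tails -/

section enorm

lemma enorm2_nonneg {k : ℕ} (v : Fin k → ℝ) : 0 ≤ enorm2 v :=
  Finset.sum_nonneg fun _ _ => sq_nonneg _

lemma abs_le_sqrt_enorm2 {k : ℕ} (v : Fin k → ℝ) (i : Fin k) : |v i| ≤ Real.sqrt (enorm2 v) :=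
  Real.abs_le_sqrt (Finset.single_le_sum (f := fun i => v i ^ 2) (fun _ _ => sq_nonneg _)
    (Finset.mem_univ i))

lemma abs_dot_le {k : ℕ} (u v : Fin k → ℝ) :
    |∑ i, u i * v i| ≤ Real.sqrt (enorm2 u) * Real.sqrt (enorm2 v) := by
  rw [← Real.sqrt_mul (enorm2_nonneg u)]
  exact Real.abs_le_sqrt (Finset.sum_mul_sq_le_sq_mul_sq _ _ _)

lemma enorm2_add_le {k : ℕ} (u v : Fin k → ℝ) :
    enorm2 (u + v) ≤ 2 * enorm2 u + 2 * enorm2 v := by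
  simp only [enorm2, Finset.mul_sum, ← Finset.sum_add_distrib]
  refine Finset.sum_le_sum fun i _ => ?_
  simp only [Pi.add_apply]
  nlinarith [sq_nonneg (u i - v i)]

lemma enorm2_sub_le {k : ℕ} (u v : Fin k → ℝ) :
    enorm2 (u - v) ≤ 2 * enorm2 u + 2 * enorm2 v := by
  simp only [enorm2, Finset.mul_sum, ← Finset.sum_add_distrib]
  refine Finset.sum_le_sum fun i _ => ?_
  simp only [Pi.sub_apply]
  nlinarith [sq_nonneg (u i + v i)]

lemma enorm2_zero {k : ℕ} : enorm2 (0 : Fin k → ℝ) = 0 := by simp [enorm2]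

lemma continuous_enorm2 {k : ℕ} : Continuous (enorm2 : (Fin k → ℝ) → ℝ) := by
  unfold enorm2
  fun_prop

lemma eq_of_enorm2 {k : ℕ} {u v : Fin k → ℝ} (h : enorm2 (u - v) ≤ 0) : u = v := by
  ext i
  have := abs_le_sqrt_enorm2 (u - v) i
  rw [Real.sqrt_eq_zero_of_nonpos h] at this
  have := abs_nonpos_iff.1 this
  simp only [Pi.sub_apply] at this
  linarith

lemma sqrt_enorm2_add_le {k : ℕ} (u v : Fin k → ℝ) :
    Real.sqrt (enorm2 (u + v)) ≤ Real.sqrt (enorm2 u) + Real.sqrt (enorm2 v) := by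
  refine Real.sqrt_le_iff.2 ⟨by positivity, ?_⟩
  have h := (abs_le.1 (abs_dot_le u v)).2
  have e : enorm2 (u + v) = enorm2 u + 2 * (∑ i, u i * v i) + enorm2 v := by
    simp only [enorm2, Finset.mul_sum, ← Finset.sum_add_distrib, Pi.add_apply]
    exact Finset.sum_congr rfl fun i _ => by ring
  rw [e, add_sq, Real.sq_sqrt (enorm2_nonneg u), Real.sq_sqrt (enorm2_nonneg v)]
  linarith

end enorm

section bmo2

variable {Ω : Type} {mΩ : MeasurableSpace Ω} {μ : Measure Ω} [IsProbabilityMeasure μ]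
  {F : Filtration ℝ mΩ} {s T : ℝ} {W : ℝ → Ω → ℝ}

lemma Bmo.mono {g h : ℝ → Ω → ℝ} {C C' : ENNReal} (H : Bmo μ F s T g C)
    (hle : ∀ᵐ ω ∂μ, ∀ r ∈ Icc s T, h r ω ≤ g r ω) (hC : C ≤ C') : Bmo μ F s T h C' := by
  intro t ht A hA
  refine le_trans (lintegral_mono_ae (ae_restrict_of_ae ?_)) ((H t ht A hA).trans (by gcongr))
  filter_upwards [hle] with ω hω
  exact setLIntegral_mono' measurableSet_Ioc fun r hr =>
    ENNReal.ofReal_le_ofReal (hω r ⟨ht.1.trans hr.1.le, hr.2⟩)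

lemma Bmo.of_bound {g : ℝ → Ω → ℝ} {C : ENNReal}
    (h : ∀ᵐ ω ∂μ, ∫⁻ r in Ioc s T, ENNReal.ofReal (g r ω) ≤ C) : Bmo μ F s T g C := by
  intro t ht A hA
  calc ∫⁻ ω in A, (∫⁻ r in Ioc t T, ENNReal.ofReal (g r ω)) ∂μ ≤ ∫⁻ _ in A, C ∂μ := by
        refine lintegral_mono_ae (ae_restrict_of_ae ?_)
        filter_upwards [h] with ω hω
        exact (lintegral_mono_set (Ioc_subset_Ioc_left ht.1)).trans hω
    _ = C * μ A := by simp

lemma Bmo.of_integral (hsT : s ≤ T) {g : ℝ → Ω → ℝ} (h0 : ∀ r ω, 0 ≤ g r ω) {c : ℝ}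
    (h : ∀ᵐ ω ∂μ, IntervalIntegrable (fun r => g r ω) volume s T ∧ ∫ r in s..T, g r ω ≤ c) :
    Bmo μ F s T g (ENNReal.ofReal c) := by
  refine Bmo.of_bound ?_
  filter_upwards [h] with ω hω
  rw [← ofReal_interval (fun r => h0 r ω) hsT hω.1]
  exact ENNReal.ofReal_le_ofReal hω.2

lemma Bmo.add {g h : ℝ → Ω → ℝ} {C C' : ENNReal} (H : Bmo μ F s T g C) (H' : Bmo μ F s T h C')
    (hg : Measurable fun p : ℝ × Ω => g p.1 p.2) :
    Bmo μ F s T (fun r ω => g r ω + h r ω) (C + C') := by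
  intro t ht A hA
  calc ∫⁻ ω in A, (∫⁻ r in Ioc t T, ENNReal.ofReal (g r ω + h r ω)) ∂μ
      ≤ ∫⁻ ω in A, ((∫⁻ r in Ioc t T, ENNReal.ofReal (g r ω)) +
          ∫⁻ r in Ioc t T, ENNReal.ofReal (h r ω)) ∂μ := by
        refine lintegral_mono fun ω => ?_
        have hm : Measurable fun r => ENNReal.ofReal (g r ω) := ENNReal.measurable_ofReal.comp
          (hg.comp (measurable_id.prodMk measurable_const))
        rw [← lintegral_add_left hm]
        exact lintegral_mono fun r => ENNReal.ofReal_add_le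
    _ = (∫⁻ ω in A, (∫⁻ r in Ioc t T, ENNReal.ofReal (g r ω)) ∂μ) +
          ∫⁻ ω in A, (∫⁻ r in Ioc t T, ENNReal.ofReal (h r ω)) ∂μ :=
        lintegral_add_left (measurable_lint hg t T) _
    _ ≤ C * μ A + C' * μ A := add_le_add (H t ht A hA) (H' t ht A hA)
    _ = (C + C') * μ A := by rw [add_mul]

lemma Bmo.const_mul {g : ℝ → Ω → ℝ} {C : ENNReal} (H : Bmo μ F s T g C) {a : ℝ} (ha : 0 ≤ a) :
    Bmo μ F s T (fun r ω => a * g r ω) (ENNReal.ofReal a * C) := by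
  intro t ht A hA
  simp only [ENNReal.ofReal_mul ha]
  rw [mul_assoc]
  refine le_trans (le_of_eq ?_) (mul_le_mul_right (H t ht A hA) (ENNReal.ofReal a))
  rw [← lintegral_const_mul' _ _ ENNReal.ofReal_ne_top]
  refine lintegral_congr fun ω => ?_
  rw [lintegral_const_mul' _ _ ENNReal.ofReal_ne_top]

lemma Bmo.integrable (hsT : s ≤ T) {g : ℝ → Ω → ℝ} (hg : Measurable fun p : ℝ × Ω => g p.1 p.2)
    (h0 : ∀ r ω, 0 ≤ g r ω) {C : ENNReal} (hC : C ≠ ⊤) (h : Bmo μ F s T g C) :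
    Integrable (fun p : ℝ × Ω => g p.1 p.2) (PM μ s T) := by
  refine ⟨hg.aestronglyMeasurable, ?_⟩
  rw [hasFiniteIntegral_iff_ofReal (f := fun p : ℝ × Ω => g p.1 p.2)
    (ae_of_all _ fun p => h0 p.1 p.2)]
  have hm : Measurable fun p : ℝ × Ω => ENNReal.ofReal (g p.1 p.2) :=
    ENNReal.measurable_ofReal.comp hg
  rw [lintegral_prod_symm' _ hm]
  exact (h.lint_ne_top hC hsT).lt_top

lemma ae_forall_le_of_cont {X : ℝ → Ω → ℝ} {B : ℝ}
    (hc : ∀ᵐ ω ∂μ, ContinuousOn (fun t => X t ω) (Icc s T))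
    (h : ∀ t ∈ Icc s T, ∀ᵐ ω ∂μ, X t ω ≤ B) : ∀ᵐ ω ∂μ, ∀ t ∈ Icc s T, X t ω ≤ B := by
  obtain ⟨D, hD, hd⟩ := TopologicalSpace.exists_countable_dense (Icc s T)
  have h1 : ∀ᵐ ω ∂μ, ∀ t ∈ D, X t ω ≤ B := (ae_ball_iff hD).2 fun t _ => h t t.2
  filter_upwards [hc, h1] with ω hω h2 t ht
  have hcl : IsClosed {t : Icc s T | X t ω ≤ B} :=
    isClosed_le (continuousOn_iff_continuous_domRestrict.1 hω) continuous_const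
  have : (⟨t, ht⟩ : Icc s T) ∈ closure D := hd _
  exact closure_minimal (t := {t : Icc s T | X t ω ≤ B}) h2 hcl this

/-- A random variable whose averages over the sets of a sub-σ-algebra are at most `B` is at
most `B`. -/
lemma ae_le_of_sub {m : MeasurableSpace Ω} (hm : m ≤ mΩ) {X : Ω → ℝ} (hX : Measurable[m] X)
    (hi : Integrable X μ) {B : ℝ}
    (h : ∀ A, MeasurableSet[m] A → ∫ ω in A, X ω ∂μ ≤ B * μ.real A) : ∀ᵐ ω ∂μ, X ω ≤ B := by
  have hA : MeasurableSet[m] {ω | B < X ω} := hX measurableSet_Ioi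
  have hA' : MeasurableSet[mΩ] {ω | B < X ω} := hm _ hA
  have h1 := h _ hA
  have hi' : Integrable (fun ω => X ω - B) μ := hi.sub (integrable_const _)
  have h2 : ∫ ω in {ω | B < X ω}, (X ω - B) ∂μ ≤ 0 := by
    rw [integral_sub hi.integrableOn (integrable_const _)]
    simp only [integral_const, smul_eq_mul, measureReal_restrict_apply_univ]
    linarith
  have h3 : 0 ≤ᵐ[μ.restrict {ω | B < X ω}] fun ω => X ω - B := by
    filter_upwards [ae_restrict_mem hA'] with ω hω
    have : B < X ω := hω
    simp only [Pi.zero_apply]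
    linarith
  have h4 := (integral_eq_zero_iff_of_nonneg_ae h3 hi'.integrableOn).1
    (le_antisymm h2 (integral_nonneg_of_ae h3))
  have h5 := (ae_restrict_iff' hA').1 h4
  filter_upwards [h5] with ω hω
  by_contra hc
  push Not at hc
  have := hω hc
  simp only [Pi.zero_apply] at this
  linarith

lemma Good.version (hsT : s ≤ T) {M φ : ℝ → Ω → ℝ} (h : Good μ F W s T M φ) :
    ∃ M', Good μ F W s T M' φ ∧ (Measurable fun p : ℝ × Ω => M' p.1 p.2) ∧
      ∀ᵐ ω ∂μ, ∀ t ∈ Icc s T, M' t ω = M t ω := by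
  obtain ⟨M', h1, h2, h3⟩ := exists_version hsT (fun t ht => aesm_of_raw (h.meas t ht)) h.cont
  have h4 : ∀ t ∈ Icc s T, M' t =ᵐ[μ] M t := fun t ht => h3.mono fun ω hω => hω t ht
  refine ⟨M', ⟨h1, ?_, h.wm.congr h4, h.l2.ae_eq (h4 T ⟨hsT, le_rfl⟩).symm, h.prog, h.phi2, ?_⟩,
    h2, h3⟩
  · filter_upwards [h.cont, h3] with ω a b
    exact a.congr b
  · intro N ψ hN
    refine (h.cov N ψ hN).congr fun t ht => ?_
    filter_upwards [h4 t ht] with ω hω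
    rw [hω]

end bmo2

end SLQ

namespace SLQ

set_option linter.unusedSectionVars false

/-! ### The equation with frozen drift -/

section linear

variable {Ω : Type} {mΩ : MeasurableSpace Ω} {μ : Measure Ω} [IsProbabilityMeasure μ]
  {F : Filtration ℝ mΩ} {s T : ℝ} {W : ℝ → Ω → ℝ}

/-- `(Y, Z)` solves the equation with frozen drift `g` and terminal value `ξ`, with martingale
part `M`; `Y` is bounded and `∫ |Z|²` has bounded conditional tails. -/
structure Sol (μ : Measure Ω) (F : Filtration ℝ mΩ) (W : ℝ → Ω → ℝ) (s T : ℝ) {k : ℕ}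
    (ξ : Ω → Fin k → ℝ) (g Y Z M : ℝ → Ω → Fin k → ℝ) (K : ℝ) : Prop where
  good : ∀ i, Good μ F W s T (fun t ω => M t ω i) (fun t ω => Z t ω i)
  Mm : ∀ i, Measurable fun p : ℝ × Ω => M p.1 p.2 i
  Ymeas : ∀ i, ∀ t ∈ Icc s T, Measurable[F t] fun ω => Y t ω i
  Ym : ∀ i, Measurable fun p : ℝ × Ω => Y p.1 p.2 i
  gA : ∀ i, Adp μ F s T (fun t ω => g t ω i)
  gi : ∀ᵐ ω ∂μ, ∀ i, IntervalIntegrable (fun r => g r ω i) volume s T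
  eq : ∀ᵐ ω ∂μ, ∀ t ∈ Icc s T, ∀ i, Y t ω i = M t ω i + ∫ r in s..t, g r ω i
  term : ∀ᵐ ω ∂μ, ∀ i, Y T ω i = ξ ω i
  bdd : ∀ᵐ ω ∂μ, ∀ t ∈ Icc s T, enorm2 (Y t ω) ≤ K
  bmo : Bmo μ F s T (fun r ω => enorm2 (Z r ω)) (ENNReal.ofReal K)

lemma adp_comp {k : ℕ} {g : ℝ → Ω → Fin k → ℝ} (h : ∀ i, Adp μ F s T (fun t ω => g t ω i))
    {φ : (Fin k → ℝ) → ℝ} (hφ : Continuous φ) : Adp μ F s T (fun t ω => φ (g t ω)) := by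
  refine ⟨fun t ht => ?_, hφ.measurable.comp (measurable_pi_lambda _ fun i => (h i).2)⟩
  have h1 : ∀ i, ∃ X : Ω → ℝ, Measurable[F t] X ∧ (fun ω => g t ω i) =ᵐ[μ] X := fun i => by
    obtain ⟨X, a, b⟩ := (h i).1 t ht
    exact ⟨X, a.measurable, b⟩
  choose X hX he using h1
  have h2 : Measurable[F t] fun ω => φ (fun i => X i ω) := by
    let _ : MeasurableSpace Ω := F t
    exact hφ.measurable.comp (measurable_pi_lambda _ fun i => hX i)
  refine ⟨_, h2.stronglyMeasurable, ?_⟩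
  filter_upwards [ae_all_iff.2 he] with ω hω
  congr 1
  ext i
  exact hω i

lemma Adp.integrable_comp {k : ℕ} {g : ℝ → Ω → Fin k → ℝ}
    (h : ∀ i, Adp μ F s T (fun t ω => g t ω i))
    (hi : ∀ᵐ ω ∂μ, IntervalIntegrable (fun r => Real.sqrt (enorm2 (g r ω))) volume s T) :
    ∀ᵐ ω ∂μ, ∀ i, IntervalIntegrable (fun r => g r ω i) volume s T := by
  filter_upwards [hi] with ω hω i
  exact hω.mono_fun (((h i).2.comp (measurable_id.prodMk measurable_const)).aestronglyMeasurable)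
    (ae_of_all _ fun r => by
      simp only [Real.norm_eq_abs, abs_of_nonneg (Real.sqrt_nonneg _)]
      exact abs_le_sqrt_enorm2 _ i)

lemma semi_of_good {k : ℕ} (hW : IsBrownian μ F W) (hs : 0 ≤ s) (hsT : s ≤ T)
    {g Y Z M : ℝ → Ω → Fin k → ℝ}
    (good : ∀ i, Good μ F W s T (fun t ω => M t ω i) (fun t ω => Z t ω i))
    (Mm : ∀ i, Measurable fun p : ℝ × Ω => M p.1 p.2 i)
    (Ym : ∀ i, Measurable fun p : ℝ × Ω => Y p.1 p.2 i)
    (gA : ∀ i, Adp μ F s T (fun t ω => g t ω i))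
    (gi : ∀ᵐ ω ∂μ, ∀ i, IntervalIntegrable (fun r => g r ω i) volume s T)
    (eq : ∀ᵐ ω ∂μ, ∀ t ∈ Icc s T, ∀ i, Y t ω i = M t ω i + ∫ r in s..t, g r ω i) (i : Fin k) :
    Semi μ F s T (fun t ω => Y t ω i) (fun t ω => M t ω i) (fun t ω => Z t ω i)
      (fun t ω => g t ω i) where
  hz := (good i).prog.adp
  hg := gA i
  hzi := by simpa [pow_two] using PM.mul_ae hsT (good i).phi2 (good i).phi2
  hgi := gi.mono fun ω h => h i
  hMm := Mm i
  hM := (good i).wm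
  hM2 := (good i).sq hW hs
  hYm := Ym i
  hY := eq.mono fun ω h t ht => h t ht i

/-- Solvability for a frozen drift whose integral has bounded conditional tails. -/
lemma linear_bsde (hW : IsBrownian μ F W) (hs : 0 ≤ s) (hsT : s ≤ T) {k : ℕ}
    {ξ : Ω → Fin k → ℝ} (hξ : MemLinfRnd μ F T ξ) {g : ℝ → Ω → Fin k → ℝ}
    (hg : ∀ i, Adp μ F s T (fun t ω => g t ω i)) {C : ENNReal} (hC : C ≠ ⊤)
    (hb : Bmo μ F s T (fun r ω => Real.sqrt (enorm2 (g r ω))) C) :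
    ∃ (Y Z M : ℝ → Ω → Fin k → ℝ) (K : ℝ), Sol μ F W s T ξ g Y Z M K := by
  have hTT : T ∈ Icc s T := ⟨hsT, le_rfl⟩
  have hNA : Adp μ F s T (fun r ω => Real.sqrt (enorm2 (g r ω))) :=
    adp_comp hg (Real.continuous_sqrt.comp continuous_enorm2)
  have hN0 : ∀ r ω, 0 ≤ Real.sqrt (enorm2 (g r ω)) := fun r ω => Real.sqrt_nonneg _
  have hNi := intervalIntegrable_of_lint hsT hNA.2 hN0 (hb.lint_ne_top hC hsT)
  have hgi := Adp.integrable_comp hg hNi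
  obtain ⟨hξm, c, hξc⟩ := hξ
  have hξa : ∀ i, ∀ᵐ ω ∂μ, |ξ ω i| ≤ Real.sqrt c := fun i => by
    filter_upwards [hξc] with ω hω
    exact (abs_le_sqrt_enorm2 _ i).trans (Real.sqrt_le_sqrt hω)
  have hξ2 : ∀ i, MemLp (fun ω => ξ ω i) 2 μ := fun i =>
    MemLp.of_bound ((hξm i).mono (F.le T) le_rfl).aestronglyMeasurable _ (hξa i)
  -- second moment of the total drift
  have hI2 : MemLp (fun ω => ∫ r in s..T, Real.sqrt (enorm2 (g r ω))) 2 μ := by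
    rw [memLp_two_iff_integrable_sq_norm (measurable_integral_left hNA.2 s T).aestronglyMeasurable]
    refine ⟨((measurable_integral_left hNA.2 s T).norm.pow_const 2).aestronglyMeasurable, ?_⟩
    rw [hasFiniteIntegral_iff_ofReal (ae_of_all _ fun ω => sq_nonneg _)]
    refine lt_of_eq_of_lt (lintegral_congr fun ω => ?_) (hb.moments hsT hNA hN0 hC 1)
    have : 0 ≤ ∫ r in s..T, Real.sqrt (enorm2 (g r ω)) :=
      intervalIntegral.integral_nonneg hsT fun r _ => hN0 r ω
    rw [Real.norm_of_nonneg this, ENNReal.ofReal_pow this]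
  have habs : ∀ᵐ ω ∂μ, ∀ i a b, s ≤ a → a ≤ b → b ≤ T →
      |∫ r in a..b, g r ω i| ≤ ∫ r in a..b, Real.sqrt (enorm2 (g r ω)) := by
    filter_upwards [hNi] with ω hω i a b ha hab hb
    refine (intervalIntegral.abs_integral_le_integral_abs hab).trans ?_
    refine intervalIntegral.integral_mono_on_of_le_Ioo hab ?_ (intervalIntegrable_sub hω ha hab hb)
      fun r _ => abs_le_sqrt_enorm2 _ i
    refine IntervalIntegrable.abs ?_
    refine (intervalIntegrable_sub hω ha hab hb).mono_fun
      (((hg i).2.comp (measurable_id.prodMk measurable_const)).aestronglyMeasurable)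
      (ae_of_all _ fun r => ?_)
    simp only [Real.norm_eq_abs, abs_of_nonneg (Real.sqrt_nonneg _)]
    exact abs_le_sqrt_enorm2 _ i
  have hmonoN : ∀ᵐ ω ∂μ, ∀ a b, s ≤ a → a ≤ b → b ≤ T →
      ∫ r in a..b, Real.sqrt (enorm2 (g r ω)) ≤ ∫ r in s..T, Real.sqrt (enorm2 (g r ω)) := by
    filter_upwards [hNi] with ω hω a b ha hab hb
    exact intervalIntegral.integral_mono_interval ha hab hb (ae_of_all _ fun r => hN0 r ω) hω
  have hG2 : ∀ i a b, s ≤ a → a ≤ b → b ≤ T → MemLp (fun ω => ∫ r in a..b, g r ω i) 2 μ := by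
    intro i a b ha hab hb
    refine hI2.of_le (measurable_integral_left (hg i).2 a b).aestronglyMeasurable ?_
    filter_upwards [habs, hmonoN] with ω h1 h2
    rw [Real.norm_eq_abs]
    exact (h1 i a b ha hab hb).trans ((h2 a b ha hab hb).trans (le_abs_self _))
  have hrep : ∀ i, ∃ M φ, Good μ F W s T M φ ∧ (Measurable fun p : ℝ × Ω => M p.1 p.2) ∧
      ∀ᵐ ω ∂μ, M T ω = ξ ω i - ∫ r in s..T, g r ω i := by
    intro i
    have hη : MemLp (fun ω => ξ ω i - ∫ r in s..T, g r ω i) 2 μ :=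
      (hξ2 i).sub (hG2 i s T le_rfl hsT le_rfl)
    have hm : AEStronglyMeasurable[F T] (fun ω => ξ ω i - ∫ r in s..T, g r ω i) μ :=
      (aesm_of_raw (hξm i)).sub (aesm_integral (hg i) (hgi.mono fun ω h => h i) le_rfl hsT le_rfl)
    obtain ⟨M, φ, h1, h2⟩ := representation hW hs hsT hη hm
    obtain ⟨M', h3, h4, h5⟩ := h1.version hsT
    exact ⟨M', φ, h3, h4, by filter_upwards [h2, h5] with ω a b; rw [b T hTT, a]⟩
  choose M' φ' hgood hMm hMT using hrep
  have hver : ∀ i, ∃ X' : ℝ → Ω → ℝ, (∀ t ∈ Icc s T, Measurable[F t] (X' t)) ∧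
      (Measurable fun p : ℝ × Ω => X' p.1 p.2) ∧
      ∀ᵐ ω ∂μ, ∀ t ∈ Icc s T, X' t ω = M' i t ω + ∫ r in s..t, g r ω i := by
    intro i
    refine exists_version hsT (fun t ht => ?_) ?_
    · exact (aesm_of_raw ((hgood i).meas t ht)).add
        (aesm_integral (hg i) (hgi.mono fun ω h => h i) le_rfl ht.1 ht.2)
    · filter_upwards [(hgood i).cont, hgi] with ω h1 h2
      exact h1.add ((prim_integral (h2 i)).continuousOn hsT)
  choose Y' hY1 hY2 hY3 using hver
  set Y : ℝ → Ω → Fin k → ℝ := fun t ω i => Y' i t ω with hY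
  set Z : ℝ → Ω → Fin k → ℝ := fun t ω i => φ' i t ω with hZ
  set M : ℝ → Ω → Fin k → ℝ := fun t ω i => M' i t ω with hM
  have heq : ∀ᵐ ω ∂μ, ∀ t ∈ Icc s T, ∀ i, Y t ω i = M t ω i + ∫ r in s..t, g r ω i := by
    filter_upwards [ae_all_iff.2 hY3] with ω h t ht i using h i t ht
  have hterm : ∀ᵐ ω ∂μ, ∀ i, Y T ω i = ξ ω i := by
    filter_upwards [heq, ae_all_iff.2 hMT] with ω h1 h2 i
    rw [h1 T hTT i]
    simp only [hM, h2 i]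
    ring
  -- the conditional representation `Y_t = E[ξ - ∫_t^T g | 𝓕_t]` bounds `Y`
  have hYint : ∀ i, ∀ t ∈ Icc s T, Integrable (fun ω => Y t ω i) μ := by
    intro i t ht
    have h1 : Integrable (fun ω => M t ω i + ∫ r in s..t, g r ω i) μ :=
      ((hgood i).wm.1 t ht).add ((hG2 i s t le_rfl ht.1 ht.2).integrable (by norm_num))
    refine h1.congr ?_
    filter_upwards [heq] with ω h
    exact (h t ht i).symm
  have hYset : ∀ i, ∀ t ∈ Icc s T, ∀ A, MeasurableSet[F t] A →
      |∫ ω in A, Y t ω i ∂μ| ≤ (Real.sqrt c + C.toReal) * μ.real A := by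
    intro i t ht A hA
    have hAm := F.le t _ hA
    have e1 : ∫ ω in A, Y t ω i ∂μ = ∫ ω in A, (ξ ω i - ∫ r in t..T, g r ω i) ∂μ := by
      have j1 : IntegrableOn (fun ω => M t ω i) A μ := ((hgood i).wm.1 t ht).integrableOn
      have j2 : IntegrableOn (fun ω => M T ω i) A μ := ((hgood i).wm.1 T hTT).integrableOn
      have j3 : IntegrableOn (fun ω => ∫ r in s..t, g r ω i) A μ :=
        ((hG2 i s t le_rfl ht.1 ht.2).integrable (by norm_num)).integrableOn
      calc ∫ ω in A, Y t ω i ∂μ = ∫ ω in A, (M t ω i + ∫ r in s..t, g r ω i) ∂μ := by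
            refine integral_congr_ae (ae_restrict_of_ae ?_)
            filter_upwards [heq] with ω h using h t ht i
        _ = ∫ ω in A, (M T ω i + ∫ r in s..t, g r ω i) ∂μ := by
            rw [integral_add j1 j3, integral_add j2 j3]
            congr 1
            exact (hgood i).wm.setIntegral ht.1 ht.2 le_rfl hA
        _ = ∫ ω in A, (ξ ω i - ∫ r in t..T, g r ω i) ∂μ := by
            refine integral_congr_ae (ae_restrict_of_ae ?_)
            filter_upwards [hMT i, hgi] with ω h1 h2
            simp only [hM]
            rw [h1, ← intervalIntegral.integral_add_adjacent_intervals
              (intervalIntegrable_sub (h2 i) le_rfl ht.1 ht.2)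
              (intervalIntegrable_sub (h2 i) ht.1 ht.2 le_rfl)]
            ring
    have hIm : Measurable fun ω => ∫ r in t..T, Real.sqrt (enorm2 (g r ω)) :=
      measurable_integral_left hNA.2 t T
    have hIi : Integrable (fun ω => ∫ r in t..T, Real.sqrt (enorm2 (g r ω))) μ := by
      refine (hI2.integrable (by norm_num)).mono hIm.aestronglyMeasurable ?_
      filter_upwards [hmonoN] with ω h
      have : 0 ≤ ∫ r in t..T, Real.sqrt (enorm2 (g r ω)) :=
        intervalIntegral.integral_nonneg ht.2 fun r _ => hN0 r ω
      rw [Real.norm_of_nonneg this]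
      exact (h t T ht.1 ht.2 le_rfl).trans (le_abs_self _)
    have e2 : ∫ ω in A, (∫ r in t..T, Real.sqrt (enorm2 (g r ω))) ∂μ ≤ C.toReal * μ.real A := by
      rw [integral_eq_lintegral_of_nonneg_ae (ae_of_all _ fun ω =>
        intervalIntegral.integral_nonneg ht.2 fun r _ => hN0 r ω) hIm.aestronglyMeasurable]
      have := hb t ht A hA
      have e : ∫⁻ ω in A, ENNReal.ofReal (∫ r in t..T, Real.sqrt (enorm2 (g r ω))) ∂μ =
          ∫⁻ ω in A, (∫⁻ r in Ioc t T, ENNReal.ofReal (Real.sqrt (enorm2 (g r ω)))) ∂μ := by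
        refine lintegral_congr_ae (ae_restrict_of_ae ?_)
        filter_upwards [hNi] with ω h
        exact ofReal_interval (fun r => hN0 r ω) ht.2 (intervalIntegrable_sub h ht.1 ht.2 le_rfl)
      rw [e]
      refine (ENNReal.toReal_mono (ENNReal.mul_ne_top hC (measure_ne_top _ _)) this).trans ?_
      rw [ENNReal.toReal_mul, measureReal_def]
    rw [e1]
    calc |∫ ω in A, (ξ ω i - ∫ r in t..T, g r ω i) ∂μ|
        ≤ ∫ ω in A, |ξ ω i - ∫ r in t..T, g r ω i| ∂μ := abs_integral_le_integral_abs
      _ ≤ ∫ ω in A, (Real.sqrt c + ∫ r in t..T, Real.sqrt (enorm2 (g r ω))) ∂μ := by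
          have j1 : Integrable (fun ω => |ξ ω i - ∫ r in t..T, g r ω i|) μ :=
            (((hξ2 i).sub (hG2 i t T ht.1 ht.2 le_rfl)).integrable (by norm_num)).abs
          refine integral_mono_ae j1.integrableOn
            (((integrable_const _).add hIi).integrableOn) (ae_restrict_of_ae ?_)
          filter_upwards [hξa i, habs] with ω h1 h2
          exact (abs_sub _ _).trans (add_le_add h1 (h2 i t T ht.1 ht.2 le_rfl))
      _ ≤ (Real.sqrt c + C.toReal) * μ.real A := by
          rw [integral_add (integrable_const _) hIi.integrableOn]
          simp only [integral_const, smul_eq_mul, measureReal_restrict_apply_univ]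
          linarith
  set B := Real.sqrt c + C.toReal with hB
  have hYb : ∀ i, ∀ t ∈ Icc s T, ∀ᵐ ω ∂μ, Y t ω i ^ 2 ≤ B ^ 2 := by
    intro i t ht
    have h1 := ae_le_of_sub (F.le t) (hY1 i t ht) (hYint i t ht) (B := B)
      fun A hA => (le_abs_self _).trans (hYset i t ht A hA)
    have h2 := ae_le_of_sub (F.le t) (X := fun ω => -Y t ω i) (hY1 i t ht).neg
      (hYint i t ht).neg (B := B) fun A hA => by
        rw [integral_neg]
        exact (neg_le_abs _).trans (hYset i t ht A hA)
    filter_upwards [h1, h2] with ω a b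
    exact sq_le_sq' (by simp only [hY] at a b ⊢; linarith) a
  have hYcont : ∀ᵐ ω ∂μ, ∀ i, ContinuousOn (fun t => Y t ω i) (Icc s T) := by
    filter_upwards [ae_all_iff.2 fun i => (hgood i).cont, hgi, heq] with ω h1 h2 h3 i
    exact ((h1 i).add ((prim_integral (h2 i)).continuousOn hsT)).congr fun t ht => h3 t ht i
  have hYbd : ∀ᵐ ω ∂μ, ∀ t ∈ Icc s T, enorm2 (Y t ω) ≤ k * B ^ 2 := by
    refine ae_forall_le_of_cont ?_ fun t ht => ?_
    · filter_upwards [hYcont] with ω h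
      exact continuous_enorm2.comp_continuousOn (continuousOn_pi.2 h)
    · filter_upwards [ae_all_iff.2 fun i => hYb i t ht] with ω h
      refine (Finset.sum_le_sum fun i _ => h i).trans ?_
      simp
  set K := (k : ℝ) * B ^ 2 with hK
  -- energy estimate for `Z`
  have hEn : Energy μ F s T (fun i t ω => Y t ω i) (fun i t ω => M t ω i) (fun i t ω => Z t ω i)
      (fun i t ω => g t ω i) K 0 (fun _ _ => 0) (fun r ω => enorm2 (Z r ω))
      (fun r ω => 2 * Real.sqrt K * Real.sqrt (enorm2 (g r ω))) := by
    refine ⟨semi_of_good hW hs hsT hgood hMm hY2 hg hgi heq, hYbd, Adp.const 0,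
      fun _ _ => le_rfl, ae_of_all _ fun ω => ⟨intervalIntegrable_const, by simp⟩,
      continuous_enorm2.measurable.comp (measurable_pi_lambda _ fun i => (hgood i).prog.1),
      fun r ω => enorm2_nonneg _, fun r ω => by positivity, ?_, ?_⟩
    · exact (hb.integrable hsT hNA.2 hN0 hC).const_mul _
    · filter_upwards [hYbd] with ω h r hr
      have h1 := abs_dot_le (g r ω) (Y r ω)
      have h2 := Real.sqrt_le_sqrt (h r hr)
      have h3 := mul_le_mul_of_nonneg_left h2 (hN0 r ω)
      have h4 := (abs_le.1 h1).1
      rw [Finset.sum_add_distrib]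
      simp only [mul_assoc, ← Finset.mul_sum, zero_mul, zero_add]
      simp only [enorm2] at *
      nlinarith
  refine ⟨Y, Z, M, c ⊔ 0 + 2 * Real.sqrt K * C.toReal + K, hgood, hMm, hY1, hY2, hg, hgi, heq,
    hterm, ?_, ?_⟩
  · filter_upwards [hYbd] with ω h t ht
    have : 0 ≤ c ⊔ 0 := le_sup_right
    have h2 : 0 ≤ 2 * Real.sqrt K * C.toReal := by positivity
    linarith [h t ht]
  · intro t ht A hA
    have h1 := hEn.main hsT ht hA
    simp only [intervalIntegral.integral_zero, Real.exp_zero, one_mul] at h1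
    have h2 := le_trans le_add_self h1
    refine h2.trans ?_
    have h3 : ∫⁻ ω in A, ENNReal.ofReal (∑ i, Y T ω i ^ 2) ∂μ ≤ ENNReal.ofReal (c ⊔ 0) * μ A := by
      calc _ ≤ ∫⁻ _ in A, ENNReal.ofReal (c ⊔ 0) ∂μ := by
            refine lintegral_mono_ae (ae_restrict_of_ae ?_)
            filter_upwards [hterm, hξc] with ω a b
            refine ENNReal.ofReal_le_ofReal (le_trans ?_ le_sup_left)
            simpa only [a, enorm2] using b
        _ = _ := by simp
    have h4 := hb.const_mul (a := 2 * Real.sqrt K) (by positivity) t ht A hA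
    refine (add_le_add h3 h4).trans ?_
    rw [← add_mul]
    gcongr
    rw [← ENNReal.ofReal_toReal hC, ← ENNReal.ofReal_mul (by positivity),
      ← ENNReal.ofReal_add le_sup_right (by positivity)]
    refine ENNReal.ofReal_le_ofReal ?_
    have : 0 ≤ K := by positivity
    simp only [ENNReal.toReal_ofReal ENNReal.toReal_nonneg]
    linarith

end linear

end SLQ

namespace SLQ

set_option linter.unusedSectionVars false

/-! ### Contraction of the Picard map -/

section contraction

variable {Ω : Type} {mΩ : MeasurableSpace Ω} {μ : Measure Ω} [IsProbabilityMeasure μ]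
  {F : Filtration ℝ mΩ} {s T : ℝ} {W : ℝ → Ω → ℝ} {k : ℕ}

/-- The standing assumptions on the generator, with nonnegative Lipschitz coefficients `α`
(integrable in time) and `β` (square-integrable in time), all bounds being given by one
constant `c`. -/
structure Gen (μ : Measure Ω) (F : Filtration ℝ mΩ) (s T : ℝ)
    (f : ℝ → Ω → (Fin k → ℝ) → (Fin k → ℝ) → Fin k → ℝ) (α β : ℝ → Ω → ℝ) (c : ℝ) : Prop where
  meas : ∀ y z : Fin k → ℝ, (∀ t i, Measurable[F t] fun ω => f t ω y z i) ∧
      (∀ i, Measurable fun p : ℝ × Ω => f p.1 p.2 y z i)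
  lip : ∀ t ω, ∀ a₁ a₂ b₁ b₂ : Fin k → ℝ, Real.sqrt (enorm2 (f t ω a₁ a₂ - f t ω b₁ b₂)) ≤
        α t ω * Real.sqrt (enorm2 (a₁ - b₁)) + β t ω * Real.sqrt (enorm2 (a₂ - b₂))
  hα : Adp μ F s T α
  hβ : Adp μ F s T β
  α0 : ∀ t ω, 0 ≤ α t ω
  β0 : ∀ t ω, 0 ≤ β t ω
  c0 : 0 ≤ c
  int0 : ∀ᵐ ω ∂μ, IntervalIntegrable (fun r => Real.sqrt (enorm2 (f r ω 0 0))) volume s T ∧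
    ∫ r in s..T, Real.sqrt (enorm2 (f r ω 0 0)) ≤ c
  intα : ∀ᵐ ω ∂μ, IntervalIntegrable (fun r => α r ω) volume s T ∧ ∫ r in s..T, α r ω ≤ c
  intβ : ∀ᵐ ω ∂μ, IntervalIntegrable (fun r => β r ω ^ 2) volume s T ∧
    ∫ r in s..T, β r ω ^ 2 ≤ c

/-- The class of pairs on which the Picard map acts. -/
structure Inv (μ : Measure Ω) (F : Filtration ℝ mΩ) (s T : ℝ)
    (y z : ℝ → Ω → Fin k → ℝ) (K : ℝ) : Prop where
  yA : ∀ i, Adp μ F s T (fun t ω => y t ω i)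
  zA : ∀ i, Adp μ F s T (fun t ω => z t ω i)
  bdd : ∀ᵐ ω ∂μ, ∀ t ∈ Icc s T, enorm2 (y t ω) ≤ K
  bmo : Bmo μ F s T (fun r ω => enorm2 (z r ω)) (ENNReal.ofReal K)

variable {f : ℝ → Ω → (Fin k → ℝ) → (Fin k → ℝ) → Fin k → ℝ} {α β : ℝ → Ω → ℝ} {c : ℝ}

lemma Gen.continuous (G : Gen μ F s T f α β c) (t : ℝ) (ω : Ω) (i : Fin k) :
    Continuous fun p : (Fin k → ℝ) × (Fin k → ℝ) => f t ω p.1 p.2 i := by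
  rw [continuous_iff_continuousAt]
  intro q
  have h1 : Tendsto (fun p : (Fin k → ℝ) × (Fin k → ℝ) => α t ω * Real.sqrt (enorm2 (p.1 - q.1)) +
      β t ω * Real.sqrt (enorm2 (p.2 - q.2))) (nhds q) (nhds 0) := by
    have h2 : Continuous (fun p : (Fin k → ℝ) × (Fin k → ℝ) =>
        α t ω * Real.sqrt (enorm2 (p.1 - q.1)) + β t ω * Real.sqrt (enorm2 (p.2 - q.2))) := by
      unfold enorm2
      fun_prop
    simpa [enorm2_zero] using h2.tendsto q
  refine tendsto_iff_dist_tendsto_zero.2 (squeeze_zero (fun _ => dist_nonneg) (fun p => ?_) h1)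
  rw [Real.dist_eq]
  exact (abs_le_sqrt_enorm2 (f t ω p.1 p.2 - f t ω q.1 q.2) i).trans (G.lip t ω _ _ _ _)

lemma Gen.drift_adp (G : Gen μ F s T f α β c) {y z : ℝ → Ω → Fin k → ℝ}
    (hy : ∀ i, Adp μ F s T (fun t ω => y t ω i)) (hz : ∀ i, Adp μ F s T (fun t ω => z t ω i))
    (i : Fin k) : Adp μ F s T (fun t ω => f t ω (y t ω) (z t ω) i) := by
  constructor
  · intro t ht
    have h1 : ∀ i, ∃ X X' : Ω → ℝ, Measurable[F t] X ∧ Measurable[F t] X' ∧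
        (fun ω => y t ω i) =ᵐ[μ] X ∧ (fun ω => z t ω i) =ᵐ[μ] X' := fun i => by
      obtain ⟨X, a, b⟩ := (hy i).1 t ht
      obtain ⟨X', a', b'⟩ := (hz i).1 t ht
      exact ⟨X, X', a.measurable, a'.measurable, b, b'⟩
    choose X X' hX hX' he he' using h1
    have h2 : Measurable[F t] fun ω => f t ω (fun i => X i ω) (fun i => X' i ω) i := by
      let _ : MeasurableSpace Ω := F t
      have h3 := measurable_uncurry_of_continuous_of_measurable
        (u := fun (p : (Fin k → ℝ) × (Fin k → ℝ)) ω => f t ω p.1 p.2 i)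
        (fun ω => G.continuous t ω i) (fun p => (G.meas p.1 p.2).1 t i)
      exact h3.comp (((measurable_pi_lambda _ fun i => hX i).prodMk
        (measurable_pi_lambda _ fun i => hX' i)).prodMk measurable_id)
    refine ⟨_, h2.stronglyMeasurable, ?_⟩
    filter_upwards [ae_all_iff.2 he, ae_all_iff.2 he'] with ω h h'
    have e1 : y t ω = fun i => X i ω := funext h
    have e2 : z t ω = fun i => X' i ω := funext h'
    rw [e1, e2]
  · have h3 := measurable_uncurry_of_continuous_of_measurable
      (u := fun (p : (Fin k → ℝ) × (Fin k → ℝ)) (q : ℝ × Ω) => f q.1 q.2 p.1 p.2 i)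
      (fun q => G.continuous q.1 q.2 i) (fun p => (G.meas p.1 p.2).2 i)
    exact h3.comp (((measurable_pi_lambda _ fun i => (hy i).2).prodMk
      (measurable_pi_lambda _ fun i => (hz i).2)).prodMk measurable_id)

lemma Gen.norm_le (G : Gen μ F s T f α β c) (t : ℝ) (ω : Ω) (y z : Fin k → ℝ) :
    Real.sqrt (enorm2 (f t ω y z)) ≤ Real.sqrt (enorm2 (f t ω 0 0)) +
      α t ω * Real.sqrt (enorm2 y) + β t ω * Real.sqrt (enorm2 z) := by
  have h1 := G.lip t ω y z 0 0
  have h2 := sqrt_enorm2_add_le (f t ω 0 0) (f t ω y z - f t ω 0 0)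
  simp only [sub_zero] at h1
  simp only [add_sub_cancel] at h2
  linarith

lemma Gen.f0_adp (G : Gen μ F s T f α β c) :
    Adp μ F s T (fun r ω => Real.sqrt (enorm2 (f r ω 0 0))) :=
  adp_comp (g := fun r ω => f r ω 0 0)
    (fun i => ⟨fun t _ => aesm_of_raw ((G.meas 0 0).1 t i), (G.meas 0 0).2 i⟩)
    (Real.continuous_sqrt.comp continuous_enorm2)

lemma Gen.drift_bmo (G : Gen μ F s T f α β c) (hsT : s ≤ T) {y z : ℝ → Ω → Fin k → ℝ} {K : ℝ}
    (h : Inv μ F s T y z K) : ∃ C : ENNReal, C ≠ ⊤ ∧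
      Bmo μ F s T (fun r ω => Real.sqrt (enorm2 (f r ω (y r ω) (z r ω)))) C := by
  have b0 := Bmo.of_integral (F := F) hsT (fun r ω => Real.sqrt_nonneg (enorm2 (f r ω 0 0))) G.int0
  have b1 := (Bmo.of_integral (F := F) hsT G.α0 G.intα).const_mul (Real.sqrt_nonneg K)
  have b2 := Bmo.of_integral (F := F) hsT (fun r ω => sq_nonneg (β r ω)) G.intβ
  have m0 := G.f0_adp.2
  have m1 : Measurable fun p : ℝ × Ω => Real.sqrt K * α p.1 p.2 := G.hα.2.const_mul _
  have m2 : Measurable fun p : ℝ × Ω => β p.1 p.2 ^ 2 := G.hβ.2.pow_const 2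
  have b3 := ((b0.add b1 m0).add b2 (m0.add m1)).add h.bmo ((m0.add m1).add m2)
  refine ⟨_, ?_, b3.mono ?_ le_rfl⟩
  · exact ENNReal.add_ne_top.2 ⟨ENNReal.add_ne_top.2 ⟨ENNReal.add_ne_top.2
      ⟨ENNReal.ofReal_ne_top, ENNReal.mul_ne_top ENNReal.ofReal_ne_top ENNReal.ofReal_ne_top⟩,
      ENNReal.ofReal_ne_top⟩, ENNReal.ofReal_ne_top⟩
  · filter_upwards [h.bdd] with ω hω r hr
    have h1 := G.norm_le r ω (y r ω) (z r ω)
    have h2 := mul_le_mul_of_nonneg_left (Real.sqrt_le_sqrt (hω r hr)) (G.α0 r ω)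
    have h3 := Real.sq_sqrt (enorm2_nonneg (z r ω))
    nlinarith [sq_nonneg (β r ω - Real.sqrt (enorm2 (z r ω))), sq_nonneg (β r ω),
      sq_nonneg (Real.sqrt (enorm2 (z r ω)))]

lemma Gen.step (G : Gen μ F s T f α β c) (hW : IsBrownian μ F W) (hs : 0 ≤ s) (hsT : s ≤ T)
    {ξ : Ω → Fin k → ℝ} (hξ : MemLinfRnd μ F T ξ) {y z : ℝ → Ω → Fin k → ℝ} {K : ℝ}
    (h : Inv μ F s T y z K) : ∃ (Y Z M : ℝ → Ω → Fin k → ℝ) (K : ℝ),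
      Sol μ F W s T ξ (fun r ω => f r ω (y r ω) (z r ω)) Y Z M K := by
  obtain ⟨C, hC, hb⟩ := G.drift_bmo hsT h
  exact linear_bsde hW hs hsT hξ (G.drift_adp h.yA h.zA) hC hb

lemma Sol.inv {ξ : Ω → Fin k → ℝ} {g Y Z M : ℝ → Ω → Fin k → ℝ} {K : ℝ}
    (h : Sol μ F W s T ξ g Y Z M K) : Inv μ F s T Y Z K :=
  ⟨fun i => ⟨fun t ht => aesm_of_raw (h.Ymeas i t ht), h.Ym i⟩, fun i => (h.good i).prog.adp,
    h.bdd, h.bmo⟩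

lemma Sol.cont {ξ : Ω → Fin k → ℝ} {g Y Z M : ℝ → Ω → Fin k → ℝ} {K : ℝ} (hsT : s ≤ T)
    (h : Sol μ F W s T ξ g Y Z M K) : ∀ᵐ ω ∂μ, ContinuousOn (fun t => Y t ω) (Icc s T) := by
  filter_upwards [ae_all_iff.2 fun i => (h.good i).cont, h.gi, h.eq] with ω h1 h2 h3
  exact continuousOn_pi.2 fun i =>
    ((h1 i).add ((prim_integral (h2 i)).continuousOn hsT)).congr fun t ht => h3 t ht i

/-- The exponential weight `exp (17 ∫_s^r (α + β²))` making the Picard map a contraction. -/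
def wgt (s : ℝ) (α β : ℝ → Ω → ℝ) (r : ℝ) (ω : Ω) : ℝ :=
  Real.exp (∫ x in s..r, 17 * (α x ω + β x ω ^ 2))

/-- The weighted squared distance, at one instant, between pairs differing by `(u, v)`. -/
def quad (s : ℝ) (α β : ℝ → Ω → ℝ) (u v : ℝ → Ω → Fin k → ℝ) (r : ℝ) (ω : Ω) : ℝ :=
  wgt s α β r ω * ((α r ω + β r ω ^ 2) * enorm2 (u r ω) + enorm2 (v r ω))

lemma Gen.θ0 (G : Gen μ F s T f α β c) (r : ℝ) (ω : Ω) : 0 ≤ α r ω + β r ω ^ 2 :=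
  add_nonneg (G.α0 r ω) (sq_nonneg _)

lemma Gen.θA (G : Gen μ F s T f α β c) : Adp μ F s T (fun r ω => α r ω + β r ω ^ 2) :=
  G.hα.add (G.hβ.comp_cont (continuous_pow 2))

lemma Gen.θi (G : Gen μ F s T f α β c) : ∀ᵐ ω ∂μ,
    IntervalIntegrable (fun r => α r ω + β r ω ^ 2) volume s T ∧
      ∫ r in s..T, (α r ω + β r ω ^ 2) ≤ 2 * c := by
  filter_upwards [G.intα, G.intβ] with ω h1 h2
  refine ⟨h1.1.add h2.1, ?_⟩
  rw [intervalIntegral.integral_add h1.1 h2.1]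
  linarith [h1.2, h2.2]

lemma Gen.wgt_ge (G : Gen μ F s T f α β c) {r : ℝ} (hr : s ≤ r) (ω : Ω) : 1 ≤ wgt s α β r ω := by
  refine Real.one_le_exp (intervalIntegral.integral_nonneg hr fun x _ => ?_)
  have := G.θ0 x ω
  positivity

lemma Gen.wgt_le (G : Gen μ F s T f α β c) :
    ∀ᵐ ω ∂μ, ∀ r ∈ Icc s T, wgt s α β r ω ≤ Real.exp (34 * c) := by
  filter_upwards [G.θi] with ω h r hr
  refine Real.exp_le_exp.2 ?_
  rw [intervalIntegral.integral_const_mul]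
  have := intervalIntegral.integral_mono_interval (μ := volume) le_rfl hr.1 hr.2
    (ae_of_all _ fun x => G.θ0 x ω) h.1
  linarith [h.2]

lemma Gen.wgt_meas (G : Gen μ F s T f α β c) :
    Measurable fun p : ℝ × Ω => wgt s α β p.1 p.2 :=
  Real.measurable_exp.comp (measurable_integral_joint
    (φ := fun x ω => 17 * (α x ω + β x ω ^ 2)) (G.θA.const_mul 17).2 s)

lemma Gen.quad_meas (G : Gen μ F s T f α β c) {u v : ℝ → Ω → Fin k → ℝ}
    (hu : ∀ i, Measurable fun p : ℝ × Ω => u p.1 p.2 i)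
    (hv : ∀ i, Measurable fun p : ℝ × Ω => v p.1 p.2 i) :
    Measurable fun p : ℝ × Ω => quad s α β u v p.1 p.2 :=
  G.wgt_meas.mul ((G.θA.2.mul (continuous_enorm2.measurable.comp (measurable_pi_lambda _ hu))).add
    (continuous_enorm2.measurable.comp (measurable_pi_lambda _ hv)))

lemma Gen.quad_ge (G : Gen μ F s T f α β c) {u v : ℝ → Ω → Fin k → ℝ} {r : ℝ} (hr : s ≤ r) (ω : Ω) :
    (α r ω + β r ω ^ 2) * enorm2 (u r ω) + enorm2 (v r ω) ≤ quad s α β u v r ω := by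
  have h1 := mul_nonneg (G.θ0 r ω) (enorm2_nonneg (u r ω))
  have h2 := enorm2_nonneg (v r ω)
  have h3 := G.wgt_ge hr ω
  unfold quad
  nlinarith

lemma Gen.quad_nonneg (G : Gen μ F s T f α β c) {u v : ℝ → Ω → Fin k → ℝ} (r : ℝ) (ω : Ω) :
    0 ≤ quad s α β u v r ω :=
  mul_nonneg (Real.exp_pos _).le
    (add_nonneg (mul_nonneg (G.θ0 r ω) (enorm2_nonneg (u r ω))) (enorm2_nonneg (v r ω)))

lemma ae_le_of_lint {m : MeasurableSpace Ω} (hm : m ≤ mΩ) {X : Ω → ℝ} (hX : Measurable[m] X)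
    {D : ℝ} (hD : 0 ≤ D)
    (h : ∀ A, MeasurableSet[m] A → ∫⁻ ω in A, ENNReal.ofReal (X ω) ∂μ ≤ ENNReal.ofReal D * μ A) :
    ∀ᵐ ω ∂μ, X ω ≤ D := by
  have hX' : Measurable[m] fun ω => ENNReal.ofReal (X ω) := ENNReal.measurable_ofReal.comp hX
  have h1 := ae_le_of_forall_setLIntegral_le_of_sigmaFinite (m0 := m) (μ := μ.trim hm)
    (f := fun ω => ENNReal.ofReal (X ω)) (g := fun _ => ENNReal.ofReal D) hX' fun A hA _ => by
      rw [restrict_trim hm μ hA, lintegral_trim hm hX', lintegral_trim hm measurable_const]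
      simpa using h A hA
  filter_upwards [ae_of_ae_trim hm h1] with ω hω
  exact (ENNReal.ofReal_le_ofReal_iff hD).1 hω

/-- The Picard map divides the weighted squared distance by `16`. -/
lemma Gen.contract (G : Gen μ F s T f α β c) (hW : IsBrownian μ F W) (hs : 0 ≤ s) (hsT : s ≤ T)
    {ξ : Ω → Fin k → ℝ} {y z y' z' Y Z M Y' Z' M' : ℝ → Ω → Fin k → ℝ} {K₁ K₂ K₃ K₄ : ℝ}
    (hI : Inv μ F s T y z K₁) (hI' : Inv μ F s T y' z' K₂)
    (hS : Sol μ F W s T ξ (fun r ω => f r ω (y r ω) (z r ω)) Y Z M K₃)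
    (hS' : Sol μ F W s T ξ (fun r ω => f r ω (y' r ω) (z' r ω)) Y' Z' M' K₄)
    {D : ℝ} (hD : 0 ≤ D)
    (hb : Bmo μ F s T (quad s α β (fun r ω => y r ω - y' r ω) (fun r ω => z r ω - z' r ω))
      (ENNReal.ofReal D)) :
    Bmo μ F s T (quad s α β (fun r ω => Y r ω - Y' r ω) (fun r ω => Z r ω - Z' r ω))
      (ENNReal.ofReal (D / 16)) ∧
    ∀ᵐ ω ∂μ, ∀ t ∈ Icc s T, enorm2 (Y t ω - Y' t ω) ≤ D / 16 := by
  have hTT : T ∈ Icc s T := ⟨hsT, le_rfl⟩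
  set hh : ℝ → Ω → ℝ := fun r ω => (1 / 16) * ((α r ω + β r ω ^ 2) * enorm2 (y r ω - y' r ω) +
    enorm2 (z r ω - z' r ω)) with hhd
  set e : ℝ → Ω → ℝ := fun r ω => (α r ω + β r ω ^ 2) * enorm2 (Y r ω - Y' r ω) +
    enorm2 (Z r ω - Z' r ω) with hed
  have msub : ∀ {u v : ℝ → Ω → Fin k → ℝ}, (∀ i, Measurable fun p : ℝ × Ω => u p.1 p.2 i) →
      (∀ i, Measurable fun p : ℝ × Ω => v p.1 p.2 i) →
      Measurable fun p : ℝ × Ω => enorm2 (u p.1 p.2 - v p.1 p.2) := fun hu hv =>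
    continuous_enorm2.measurable.comp (measurable_pi_lambda _ fun i => (hu i).sub (hv i))
  have hhm : Measurable fun p : ℝ × Ω => (α p.1 p.2 + β p.1 p.2 ^ 2) *
      enorm2 (y p.1 p.2 - y' p.1 p.2) + enorm2 (z p.1 p.2 - z' p.1 p.2) :=
    (G.θA.2.mul (msub (fun i => (hI.yA i).2) (fun i => (hI'.yA i).2))).add
      (msub (fun i => (hI.zA i).2) (fun i => (hI'.zA i).2))
  have hEn : Energy μ F s T (fun i t ω => Y t ω i - Y' t ω i) (fun i t ω => M t ω i - M' t ω i)
      (fun i t ω => Z t ω i - Z' t ω i)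
      (fun i t ω => f t ω (y t ω) (z t ω) i - f t ω (y' t ω) (z' t ω) i)
      (2 * K₃ + 2 * K₄) (34 * c) (fun r ω => 17 * (α r ω + β r ω ^ 2)) e hh := by
    refine ⟨?_, ?_, G.θA.const_mul 17, fun r ω => mul_nonneg (by norm_num) (G.θ0 r ω), ?_, ?_,
      fun r ω => ?_, fun r ω => ?_, ?_, ?_⟩
    · refine semi_of_good (Y := fun t ω i => Y t ω i - Y' t ω i) (M := fun t ω i => M t ω i - M' t ω i)
        (Z := fun t ω i => Z t ω i - Z' t ω i)
        (g := fun t ω i => f t ω (y t ω) (z t ω) i - f t ω (y' t ω) (z' t ω) i) hW hs hsT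
        (fun i => (hS.good i).sub hsT (hS'.good i)) (fun i => (hS.Mm i).sub (hS'.Mm i))
        (fun i => (hS.Ym i).sub (hS'.Ym i)) (fun i => (hS.gA i).sub (hS'.gA i)) ?_ ?_
      · filter_upwards [hS.gi, hS'.gi] with ω a b i using (a i).sub (b i)
      · filter_upwards [hS.gi, hS'.gi, hS.eq, hS'.eq] with ω a b a' b' t ht i
        rw [intervalIntegral.integral_sub (intervalIntegrable_sub (a i) le_rfl ht.1 ht.2)
          (intervalIntegrable_sub (b i) le_rfl ht.1 ht.2), a' t ht i, b' t ht i]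
        ring
    · filter_upwards [hS.bdd, hS'.bdd] with ω a b t ht
      have := enorm2_sub_le (Y t ω) (Y' t ω)
      have h1 := a t ht
      have h2 := b t ht
      have h3 : enorm2 (Y t ω - Y' t ω) ≤ 2 * K₃ + 2 * K₄ := by linarith
      exact h3
    · filter_upwards [G.θi] with ω h
      refine ⟨h.1.const_mul 17, ?_⟩
      rw [intervalIntegral.integral_const_mul]
      linarith [h.2]
    · exact (G.θA.2.mul (msub hS.Ym hS'.Ym)).add
        (msub (fun i => (hS.good i).prog.1) (fun i => (hS'.good i).prog.1))
    · exact add_nonneg (mul_nonneg (G.θ0 r ω) (enorm2_nonneg _)) (enorm2_nonneg _)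
    · exact mul_nonneg (by norm_num)
        (add_nonneg (mul_nonneg (G.θ0 r ω) (enorm2_nonneg _)) (enorm2_nonneg _))
    · have h1 : Bmo μ F s T (fun r ω => (α r ω + β r ω ^ 2) * enorm2 (y r ω - y' r ω) +
          enorm2 (z r ω - z' r ω)) (ENNReal.ofReal D) :=
        hb.mono (ae_of_all _ fun ω r hr => G.quad_ge (u := fun r ω => y r ω - y' r ω)
          (v := fun r ω => z r ω - z' r ω) hr.1 ω) le_rfl
      exact (h1.integrable hsT hhm (fun r ω => add_nonneg (mul_nonneg (G.θ0 r ω) (enorm2_nonneg _))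
        (enorm2_nonneg _)) ENNReal.ofReal_ne_top).const_mul _
    · refine ae_of_all _ fun ω r hr => ?_
      set u := f r ω (y r ω) (z r ω) - f r ω (y' r ω) (z' r ω) with hu
      have h1 := (abs_le.1 (abs_dot_le u (Y r ω - Y' r ω))).1
      have h2 := G.lip r ω (y r ω) (z r ω) (y' r ω) (z' r ω)
      have e1 : ∑ i, (2 * (f r ω (y r ω) (z r ω) i - f r ω (y' r ω) (z' r ω) i) *
          (Y r ω i - Y' r ω i) + (Z r ω i - Z' r ω i) ^ 2) =
          2 * (∑ i, u i * (Y r ω - Y' r ω) i) + enorm2 (Z r ω - Z' r ω) := by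
        rw [Finset.sum_add_distrib, Finset.mul_sum]
        simp only [enorm2, hu, Pi.sub_apply, mul_assoc]
      have e2 : ∑ i, (Y r ω i - Y' r ω i) ^ 2 = enorm2 (Y r ω - Y' r ω) := by
        simp only [enorm2, Pi.sub_apply]
      rw [e1, e2]
      simp only [hhd, hed]
      have hα0 := G.α0 r ω
      have hβ0 := G.β0 r ω
      rw [← Real.sq_sqrt (enorm2_nonneg (Y r ω - Y' r ω)),
        ← Real.sq_sqrt (enorm2_nonneg (y r ω - y' r ω)),
        ← Real.sq_sqrt (enorm2_nonneg (z r ω - z' r ω))]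
      set a := Real.sqrt (enorm2 (y r ω - y' r ω))
      set b := Real.sqrt (enorm2 (z r ω - z' r ω))
      set x := Real.sqrt (enorm2 (Y r ω - Y' r ω))
      have hx : 0 ≤ x := Real.sqrt_nonneg _
      have h3 := mul_le_mul_of_nonneg_right h2 hx
      have h4 : 0 ≤ α r ω * (a / 4 - 4 * x) ^ 2 := mul_nonneg hα0 (sq_nonneg _)
      have h5 : 0 ≤ (b / 4 - 4 * (β r ω * x)) ^ 2 := sq_nonneg _
      have h6 : 0 ≤ β r ω ^ 2 * a ^ 2 := by positivity
      nlinarith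
  have hmain : ∀ t ∈ Icc s T, ∀ A, MeasurableSet[F t] A →
      ∫⁻ ω in A, ENNReal.ofReal (wgt s α β t ω * enorm2 (Y t ω - Y' t ω)) ∂μ +
        ∫⁻ ω in A, (∫⁻ r in Ioc t T, ENNReal.ofReal (wgt s α β r ω * e r ω)) ∂μ ≤
      ENNReal.ofReal (D / 16) * μ A := by
    intro t ht A hA
    refine (hEn.main hsT ht hA).trans ?_
    have h1 : ∫⁻ ω in A, ENNReal.ofReal (Real.exp (∫ x in s..T, 17 * (α x ω + β x ω ^ 2)) *
        ∑ i, (Y T ω i - Y' T ω i) ^ 2) ∂μ = 0 := by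
      refine (lintegral_congr_ae (ae_restrict_of_ae ?_)).trans lintegral_zero
      filter_upwards [hS.term, hS'.term] with ω a b
      simp [a, b]
    rw [h1, zero_add]
    have h2 := hb.const_mul (a := 1 / 16) (by norm_num) t ht A hA
    have e1 : ENNReal.ofReal (D / 16) = ENNReal.ofReal (1 / 16) * ENNReal.ofReal D := by
      rw [← ENNReal.ofReal_mul (by norm_num)]
      congr 1
      ring
    rw [e1]
    refine le_trans (le_of_eq ?_) h2
    refine lintegral_congr fun ω => lintegral_congr fun r => ?_
    congr 1
    simp only [hhd, quad, wgt]
    ring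
  refine ⟨fun t ht A hA => le_trans le_add_self (hmain t ht A hA), ?_⟩
  refine ae_forall_le_of_cont ?_ fun t ht => ?_
  · filter_upwards [hS.cont hsT, hS'.cont hsT] with ω a b
    exact continuous_enorm2.comp_continuousOn (a.sub b)
  · refine ae_le_of_lint (F.le t) ?_ (by positivity) fun A hA => ?_
    · let _ : MeasurableSpace Ω := F t
      exact continuous_enorm2.measurable.comp
        (measurable_pi_lambda _ fun i => (hS.Ymeas i t ht).sub (hS'.Ymeas i t ht))
    · refine le_trans (lintegral_mono fun ω => ENNReal.ofReal_le_ofReal ?_)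
        (le_trans le_self_add (hmain t ht A hA))
      exact le_mul_of_one_le_left (enorm2_nonneg _) (G.wgt_ge ht.1 ω)

end contraction

end SLQ

namespace SLQ

set_option linter.unusedSectionVars false

/-! ### The Picard iterates -/

section picard

variable {Ω : Type} {mΩ : MeasurableSpace Ω} {μ : Measure Ω} [IsProbabilityMeasure μ]
  {F : Filtration ℝ mΩ} {s T : ℝ} {W : ℝ → Ω → ℝ} {k : ℕ}
  {f : ℝ → Ω → (Fin k → ℝ) → (Fin k → ℝ) → Fin k → ℝ} {α β : ℝ → Ω → ℝ} {c : ℝ}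

lemma enorm2_neg (u : Fin k → ℝ) : enorm2 (-u) = enorm2 u := by
  simp [enorm2]

lemma enorm2_sub_comm (u v : Fin k → ℝ) : enorm2 (u - v) = enorm2 (v - u) := by
  rw [← enorm2_neg, neg_sub]

lemma quad_sub_comm {a a' b b' : ℝ → Ω → Fin k → ℝ} :
    quad s α β (fun r ω => a r ω - b r ω) (fun r ω => a' r ω - b' r ω) =
      quad s α β (fun r ω => b r ω - a r ω) (fun r ω => b' r ω - a' r ω) := by
  ext r ω
  simp only [quad, enorm2_sub_comm (a r ω), enorm2_sub_comm (a' r ω)]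

lemma Gen.quad_tri (G : Gen μ F s T f α β c) (a a' b b' d d' : ℝ → Ω → Fin k → ℝ) (r : ℝ) (ω : Ω) :
    quad s α β (fun r ω => a r ω - d r ω) (fun r ω => a' r ω - d' r ω) r ω ≤
      2 * quad s α β (fun r ω => a r ω - b r ω) (fun r ω => a' r ω - b' r ω) r ω +
      2 * quad s α β (fun r ω => b r ω - d r ω) (fun r ω => b' r ω - d' r ω) r ω := by
  have h1 := enorm2_add_le (a r ω - b r ω) (b r ω - d r ω)
  have h2 := enorm2_add_le (a' r ω - b' r ω) (b' r ω - d' r ω)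
  rw [sub_add_sub_cancel] at h1 h2
  have h3 := mul_le_mul_of_nonneg_left h1 (G.θ0 r ω)
  have h4 : 0 ≤ wgt s α β r ω := (Real.exp_pos _).le
  have h5 := mul_le_mul_of_nonneg_left (add_le_add h3 h2) h4
  unfold quad
  linarith

lemma Gen.bmo_tri (G : Gen μ F s T f α β c) {a a' b b' d d' : ℝ → Ω → Fin k → ℝ}
    (ha : ∀ i, Measurable fun p : ℝ × Ω => a p.1 p.2 i)
    (ha' : ∀ i, Measurable fun p : ℝ × Ω => a' p.1 p.2 i)
    (hb : ∀ i, Measurable fun p : ℝ × Ω => b p.1 p.2 i)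
    (hb' : ∀ i, Measurable fun p : ℝ × Ω => b' p.1 p.2 i) {D D' : ℝ} (hD : 0 ≤ D) (hD' : 0 ≤ D')
    (h : Bmo μ F s T (quad s α β (fun r ω => a r ω - b r ω) (fun r ω => a' r ω - b' r ω))
      (ENNReal.ofReal D))
    (h' : Bmo μ F s T (quad s α β (fun r ω => b r ω - d r ω) (fun r ω => b' r ω - d' r ω))
      (ENNReal.ofReal D')) :
    Bmo μ F s T (quad s α β (fun r ω => a r ω - d r ω) (fun r ω => a' r ω - d' r ω))
      (ENNReal.ofReal (2 * D + 2 * D')) := by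
  have h2 : (0:ℝ) ≤ 2 := by norm_num
  have hm := (G.quad_meas (u := fun r ω => a r ω - b r ω) (v := fun r ω => a' r ω - b' r ω)
    (fun i => (ha i).sub (hb i)) (fun i => (ha' i).sub (hb' i))).const_mul 2
  have h3 := (h.const_mul h2).add (h'.const_mul h2) hm
  refine h3.mono (ae_of_all _ fun ω r _ => G.quad_tri a a' b b' d d' r ω) (le_of_eq ?_)
  rw [ENNReal.ofReal_add (by positivity) (by positivity), ENNReal.ofReal_mul h2,
    ENNReal.ofReal_mul h2]

/-- Fatou's lemma for `Bmo`. -/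
lemma Bmo.of_tendsto {g : ℕ → ℝ → Ω → ℝ} {g' : ℝ → Ω → ℝ} {C : ENNReal}
    (hm : ∀ n, Measurable fun p : ℝ × Ω => g n p.1 p.2)
    (hl : ∀ᵐ ω ∂μ, ∀ᵐ r ∂(volume.restrict (Ioc s T)),
      Tendsto (fun n => g n r ω) atTop (nhds (g' r ω)))
    (h : ∀ n, Bmo μ F s T (g n) C) : Bmo μ F s T g' C := by
  intro t ht A hA
  have hm1 : ∀ n ω, Measurable fun r => ENNReal.ofReal (g n r ω) := fun n ω =>
    ENNReal.measurable_ofReal.comp ((hm n).comp (measurable_id.prodMk measurable_const))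
  have hm2 : ∀ n, Measurable fun ω => ∫⁻ r in Ioc t T, ENNReal.ofReal (g n r ω) := fun n =>
    measurable_lint (hm n) t T
  calc ∫⁻ ω in A, (∫⁻ r in Ioc t T, ENNReal.ofReal (g' r ω)) ∂μ
      ≤ ∫⁻ ω in A, liminf (fun n => ∫⁻ r in Ioc t T, ENNReal.ofReal (g n r ω)) atTop ∂μ := by
        refine lintegral_mono_ae (ae_restrict_of_ae ?_)
        filter_upwards [hl] with ω hω
        refine le_trans (le_of_eq ?_) (lintegral_liminf_le fun n => hm1 n ω)
        refine lintegral_congr_ae ?_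
        filter_upwards [ae_restrict_of_ae_restrict_of_subset (Ioc_subset_Ioc_left ht.1) hω] with r hr
        exact ((ENNReal.continuous_ofReal.tendsto _).comp hr).liminf_eq.symm
    _ ≤ liminf (fun n => ∫⁻ ω in A, (∫⁻ r in Ioc t T, ENNReal.ofReal (g n r ω)) ∂μ) atTop :=
        lintegral_liminf_le hm2
    _ ≤ C * μ A := by
        refine liminf_le_of_frequently_le' (Frequently.of_forall fun n => h n t ht A hA)

lemma Gen.bmo_start (G : Gen μ F s T f α β c) (hsT : s ≤ T) {y z y' z' : ℝ → Ω → Fin k → ℝ}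
    {K K' : ℝ} (h : Inv μ F s T y z K) (h' : Inv μ F s T y' z' K') : ∃ C : ℝ, 0 ≤ C ∧
      Bmo μ F s T (quad s α β (fun r ω => y r ω - y' r ω) (fun r ω => z r ω - z' r ω))
        (ENNReal.ofReal C) := by
  have hE : (0:ℝ) ≤ Real.exp (34 * c) := (Real.exp_pos _).le
  have b0 : Bmo μ F s T (fun r ω => α r ω + β r ω ^ 2) (ENNReal.ofReal (2 * c)) :=
    Bmo.of_integral (F := F) hsT G.θ0 G.θi
  have hKK : 0 ≤ 2 * |K| + 2 * |K'| := by positivity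
  have h2 : (0:ℝ) ≤ 2 := by norm_num
  have m1 : Measurable fun p : ℝ × Ω => (2 * |K| + 2 * |K'|) * (α p.1 p.2 + β p.1 p.2 ^ 2) :=
    G.θA.2.const_mul _
  have m2 : Measurable fun p : ℝ × Ω => 2 * enorm2 (z p.1 p.2) :=
    (adp_comp h.zA continuous_enorm2).2.const_mul 2
  have b1 := (((b0.const_mul hKK).add (h.bmo.const_mul h2) m1).add (h'.bmo.const_mul h2)
    (m1.add m2)).const_mul hE
  refine ⟨_, ENNReal.toReal_nonneg, b1.mono ?_ (le_of_eq (ENNReal.ofReal_toReal ?_).symm)⟩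
  · filter_upwards [G.wgt_le, h.bdd, h'.bdd] with ω h1 h2 h3 r hr
    have e1 := enorm2_sub_le (y r ω) (y' r ω)
    have e2 := enorm2_sub_le (z r ω) (z' r ω)
    have e3 : enorm2 (y r ω - y' r ω) ≤ 2 * |K| + 2 * |K'| := by
      linarith [h2 r hr, h3 r hr, le_abs_self K, le_abs_self K']
    have e4 := mul_le_mul_of_nonneg_left e3 (G.θ0 r ω)
    have e5 := mul_nonneg (G.θ0 r ω) (enorm2_nonneg (y r ω - y' r ω))
    have e6 := enorm2_nonneg (z r ω - z' r ω)
    exact mul_le_mul (h1 r hr) (by linarith) (by linarith) hE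
  · simp only [ne_eq, ENNReal.mul_eq_top, ENNReal.add_eq_top, ENNReal.ofReal_ne_top, false_and,
      and_false, or_false, not_false_eq_true]

lemma inv_zero : Inv μ F s T (fun _ _ => (0 : Fin k → ℝ)) (fun _ _ => 0) 0 where
  yA i := Adp.const 0
  zA i := Adp.const 0
  bdd := ae_of_all _ fun ω t _ => by simp [enorm2_zero]
  bmo := by
    intro t ht A hA
    simp [enorm2_zero]

/-- The Picard iterates, started late enough for the distances to be at most `16⁻ⁿ`. -/
lemma Gen.picard (G : Gen μ F s T f α β c) (hW : IsBrownian μ F W) (hs : 0 ≤ s) (hsT : s ≤ T)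
    {ξ : Ω → Fin k → ℝ} (hξ : MemLinfRnd μ F T ξ) :
    ∃ (g y z M : ℕ → ℝ → Ω → Fin k → ℝ) (K : ℕ → ℝ),
      (∀ n, Sol μ F W s T ξ (g n) (y n) (z n) (M n) (K n)) ∧
      (∀ n, g (n + 1) = fun r ω => f r ω (y n r ω) (z n r ω)) ∧
      ∀ n, Bmo μ F s T (quad s α β (fun r ω => y (n + 1) r ω - y n r ω)
        (fun r ω => z (n + 1) r ω - z n r ω)) (ENNReal.ofReal ((1 / 16) ^ n)) := by
  choose! Y Z M K hSol using fun (p : (ℝ → Ω → Fin k → ℝ) × (ℝ → Ω → Fin k → ℝ))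
    (h : ∃ K, Inv μ F s T p.1 p.2 K) => G.step hW hs hsT hξ h.choose_spec
  set q : ℕ → (ℝ → Ω → Fin k → ℝ) × (ℝ → Ω → Fin k → ℝ) :=
    fun n => Nat.rec (fun _ _ => 0, fun _ _ => 0) (fun _ p => (Y p, Z p)) n with hq
  have hq1 : ∀ n, q (n + 1) = (Y (q n), Z (q n)) := fun n => rfl
  have hInv : ∀ n, ∃ K, Inv μ F s T (q n).1 (q n).2 K := by
    intro n
    induction n with
    | zero => exact ⟨0, inv_zero⟩
    | succ n ih => exact ⟨_, (hSol (q n) ih).inv⟩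
  have hS := fun n => hSol (q n) (hInv n)
  obtain ⟨C, hC, hb⟩ := G.bmo_start hsT (hInv 1).choose_spec (hInv 0).choose_spec
  have hB : ∀ n, Bmo μ F s T (quad s α β (fun r ω => (q (n + 1)).1 r ω - (q n).1 r ω)
      (fun r ω => (q (n + 1)).2 r ω - (q n).2 r ω)) (ENNReal.ofReal (C * (1 / 16) ^ n)) := by
    intro n
    induction n with
    | zero => simpa using hb
    | succ n ih =>
      have := (G.contract hW hs hsT (hInv (n + 1)).choose_spec (hInv n).choose_spec
        (hS (n + 1)) (hS n) (by positivity) ih).1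
      rwa [mul_div_assoc, show (1 / 16 : ℝ) ^ n / 16 = (1 / 16) ^ (n + 1) by ring] at this
  obtain ⟨m, hm⟩ : ∃ m : ℕ, C * (1 / 16 : ℝ) ^ m ≤ 1 := by
    have h1 : Tendsto (fun m : ℕ => C * (1 / 16 : ℝ) ^ m) atTop (nhds (C * 0)) :=
      (tendsto_pow_atTop_nhds_zero_of_lt_one (by norm_num) (by norm_num)).const_mul C
    rw [mul_zero] at h1
    exact ((h1.eventually (gt_mem_nhds one_pos)).exists).imp fun _ h => h.le
  refine ⟨fun n r ω => f r ω ((q (n + m)).1 r ω) ((q (n + m)).2 r ω),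
    fun n => (q (n + m + 1)).1, fun n => (q (n + m + 1)).2, fun n => M (q (n + m)),
    fun n => K (q (n + m)), fun n => hS (n + m), fun n => ?_, fun n => ?_⟩
  · beta_reduce
    rw [show n + 1 + m = n + m + 1 by ring]
  · have h1 := hB (n + m + 1)
    beta_reduce
    rw [show n + 1 + m + 1 = n + m + 1 + 1 by ring]
    refine h1.mono (ae_of_all _ fun ω r _ => le_rfl) (ENNReal.ofReal_le_ofReal ?_)
    have h2 : (0:ℝ) ≤ (1 / 16) ^ n := by positivity
    have h3 : C * (1 / 16 : ℝ) ^ (n + m + 1) = C * (1 / 16) ^ m * (1 / 16) ^ n * (1 / 16) := by ring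
    have h4 : (0:ℝ) ≤ C * (1 / 16) ^ m := by positivity
    rw [h3]
    nlinarith [mul_le_mul_of_nonneg_right hm h2]

lemma eLpNorm_two_le {α : Type*} [MeasurableSpace α] {ν : Measure α} {g : α → ℝ} {D : ℝ}
    (hD : 0 ≤ D) (h : ∫⁻ x, ENNReal.ofReal (g x ^ 2) ∂ν ≤ ENNReal.ofReal (D ^ 2)) :
    eLpNorm g 2 ν ≤ ENNReal.ofReal D := by
  rw [eLpNorm_eq_lintegral_rpow_enorm_toReal (by norm_num) (by norm_num)]
  have e : ∀ x, ‖g x‖ₑ ^ (2 : ENNReal).toReal = ENNReal.ofReal (g x ^ 2) := fun x => by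
    rw [Real.enorm_eq_ofReal_abs, ENNReal.toReal_ofNat, ENNReal.rpow_ofNat,
      ← ENNReal.ofReal_pow (abs_nonneg _), sq_abs]
  simp only [e]
  refine (ENNReal.rpow_le_rpow h (by simp)).trans (le_of_eq ?_)
  rw [ENNReal.ofReal_rpow_of_nonneg (by positivity) (by simp)]
  congr 1
  rw [ENNReal.toReal_ofNat, ← Real.sqrt_eq_rpow, Real.sqrt_sq hD]

end picard
end SLQ

namespace SLQ

set_option linter.unusedSectionVars false

/-! ### Convergence of the Picard iterates -/

section limit

variable {Ω : Type} {mΩ : MeasurableSpace Ω} {μ : Measure Ω} [IsProbabilityMeasure μ]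
  {F : Filtration ℝ mΩ} {s T : ℝ} {W : ℝ → Ω → ℝ} {k : ℕ}
  {f : ℝ → Ω → (Fin k → ℝ) → (Fin k → ℝ) → Fin k → ℝ} {α β : ℝ → Ω → ℝ} {c : ℝ}

lemma sq_le_enorm2 (u : Fin k → ℝ) (i : Fin k) : u i ^ 2 ≤ enorm2 u := by
  have h := pow_le_pow_left₀ (abs_nonneg _) (abs_le_sqrt_enorm2 u i) 2
  rwa [sq_abs, Real.sq_sqrt (enorm2_nonneg u)] at h

lemma Bmo.lint_PM (hsT : s ≤ T) {g : ℝ → Ω → ℝ} (hg : Measurable fun p : ℝ × Ω => g p.1 p.2)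
    {C : ENNReal} (h : Bmo μ F s T g C) :
    ∫⁻ p, ENNReal.ofReal (g p.1 p.2) ∂(PM μ s T) ≤ C := by
  have hm : Measurable fun p : ℝ × Ω => ENNReal.ofReal (g p.1 p.2) :=
    ENNReal.measurable_ofReal.comp hg
  rw [lintegral_prod_symm' _ hm]
  have := h s ⟨le_rfl, hsT⟩ univ MeasurableSet.univ
  simpa using this

lemma PM.ae_ae {P : ℝ → Ω → Prop} (h : ∀ᵐ p ∂(PM μ s T), P p.1 p.2) :
    ∀ᵐ ω ∂μ, ∀ᵐ r ∂(volume.restrict (Ioc s T)), P r ω := by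
  have h1 := Measure.ae_ae_of_ae_prod
    ((Measure.measurePreserving_swap (μ := μ) (ν := volume.restrict (Ioc s T))).quasiMeasurePreserving.ae h)
  exact h1

lemma Bmo.ae_zero (hsT : s ≤ T) {g : ℝ → Ω → ℝ} (hg : Measurable fun p : ℝ × Ω => g p.1 p.2)
    (h : Bmo μ F s T g 0) : ∀ᵐ p ∂(PM μ s T), g p.1 p.2 ≤ 0 := by
  have hm : Measurable fun p : ℝ × Ω => ENNReal.ofReal (g p.1 p.2) :=
    ENNReal.measurable_ofReal.comp hg
  have h1 := le_antisymm (h.lint_PM hsT hg) (zero_le)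
  rw [lintegral_eq_zero_iff hm] at h1
  filter_upwards [h1] with p hp
  exact ENNReal.ofReal_eq_zero.1 hp

/-- Completeness of the class of pairs for the weighted distance. -/
lemma Gen.limit (G : Gen μ F s T f α β c) (hW : IsBrownian μ F W) (hs : 0 ≤ s) (hsT : s ≤ T)
    {ξ : Ω → Fin k → ℝ} {g y z M : ℕ → ℝ → Ω → Fin k → ℝ} {K : ℕ → ℝ}
    (hS : ∀ n, Sol μ F W s T ξ (g n) (y n) (z n) (M n) (K n))
    (hg : ∀ n, g (n + 1) = fun r ω => f r ω (y n r ω) (z n r ω))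
    (hB : ∀ n, Bmo μ F s T (quad s α β (fun r ω => y (n + 1) r ω - y n r ω)
        (fun r ω => z (n + 1) r ω - z n r ω)) (ENNReal.ofReal ((1 / 16) ^ n))) :
    ∃ (y' z' : ℝ → Ω → Fin k → ℝ) (K' : ℝ), Inv μ F s T y' z' K' ∧
      (∀ᵐ ω ∂μ, ∀ t ∈ Icc s T, Tendsto (fun n => y n t ω) atTop (nhds (y' t ω))) ∧
      ∀ n, Bmo μ F s T (quad s α β (fun r ω => y' r ω - y n r ω) (fun r ω => z' r ω - z n r ω))
        (ENNReal.ofReal (4 * (1 / 16) ^ n)) := by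
  have my : ∀ n i, Measurable fun p : ℝ × Ω => y n p.1 p.2 i := fun n i => (hS n).Ym i
  have mz : ∀ n i, Measurable fun p : ℝ × Ω => z n p.1 p.2 i := fun n i => ((hS n).good i).prog.1
  have hS' : ∀ n, Sol μ F W s T ξ (fun r ω => f r ω (y n r ω) (z n r ω)) (y (n + 1)) (z (n + 1))
      (M (n + 1)) (K (n + 1)) := fun n => by
    rw [← hg n]
    exact hS (n + 1)
  have hC : ∀ d n, Bmo μ F s T (quad s α β (fun r ω => y (n + d) r ω - y n r ω)
      (fun r ω => z (n + d) r ω - z n r ω)) (ENNReal.ofReal (4 * (1 / 16) ^ n)) := by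
    intro d
    induction d with
    | zero =>
      intro n t ht A hA
      simp [quad, enorm2_zero]
    | succ d ih =>
      intro n
      have h1 := ih (n + 1)
      rw [show n + 1 + d = n + (d + 1) by ring] at h1
      refine (G.bmo_tri (my _) (mz _) (my _) (mz _) (by positivity) (by positivity)
        h1 (hB n)).mono (ae_of_all _ fun ω r _ => le_rfl) (ENNReal.ofReal_le_ofReal ?_)
      have : (0:ℝ) ≤ (1 / 16) ^ n := by positivity
      rw [pow_succ]
      linarith
  have hY : ∀ᵐ ω ∂μ, ∀ n d, ∀ t ∈ Icc s T,
      enorm2 (y (n + 1 + d) t ω - y (n + 1) t ω) ≤ (1 / 16) ^ n := by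
    refine ae_all_iff.2 fun n => ae_all_iff.2 fun d => ?_
    have h1 := hS' (n + d)
    rw [show n + d + 1 = n + 1 + d by ring] at h1
    filter_upwards [(G.contract hW hs hsT (hS (n + d)).inv (hS n).inv h1 (hS' n)
      (by positivity) (hC d n)).2] with ω hω t ht
    refine (hω t ht).trans ?_
    have : (0:ℝ) ≤ (1 / 16) ^ n := by positivity
    linarith
  -- convergence of the first components, uniformly in time
  have hy : ∀ᵐ ω ∂μ, ∀ t ∈ Icc s T, ∀ i,
      Tendsto (fun n => y n t ω i) atTop (nhds (limsup (fun n => y n t ω i) atTop)) := by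
    filter_upwards [hY] with ω hω t ht i
    have hcs : CauchySeq fun n => y (n + 1) t ω i := by
      refine cauchySeq_of_le_geometric (1 / 4) 1 (by norm_num) fun n => ?_
      have h1 := (abs_le_sqrt_enorm2 _ i).trans (Real.sqrt_le_sqrt (hω n 1 t ht))
      rw [show (1 / 16 : ℝ) ^ n = ((1 / 4) ^ n) ^ 2 by rw [← pow_mul, mul_comm n 2, pow_mul]; norm_num,
        Real.sqrt_sq (by positivity)] at h1
      rw [dist_comm, Real.dist_eq, one_mul]
      exact h1
    obtain ⟨x, hx⟩ := cauchySeq_tendsto_of_complete hcs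
    have hx' : Tendsto (fun n => y n t ω i) atTop (nhds x) := (tendsto_add_atTop_iff_nat 1).1 hx
    rwa [hx'.limsup_eq]
  -- convergence of the second components in `L²`
  have hz : ∀ i, ∀ᵐ p ∂(PM μ s T),
      Tendsto (fun n => z n p.1 p.2 i) atTop (nhds (limsup (fun n => z n p.1 p.2 i) atTop)) := by
    intro i
    have key : ∀ n d, eLpNorm ((fun p : ℝ × Ω => z (n + d) p.1 p.2 i) - fun p => z n p.1 p.2 i) 2
        (PM μ s T) ≤ ENNReal.ofReal (2 * (1 / 4) ^ n) := by
      intro n d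
      refine eLpNorm_two_le (by positivity) ?_
      have hm := G.quad_meas (u := fun r ω => y (n + d) r ω - y n r ω)
        (v := fun r ω => z (n + d) r ω - z n r ω)
        (fun i => (my _ i).sub (my _ i)) (fun i => (mz _ i).sub (mz _ i))
      refine le_trans (lintegral_mono_ae ?_) (((hC d n).lint_PM hsT hm).trans (le_of_eq ?_))
      · have hms : ∀ᵐ p ∂(PM μ s T), p.1 ∈ Ioc s T :=
          Measure.quasiMeasurePreserving_fst.ae (ae_restrict_mem measurableSet_Ioc)
        filter_upwards [hms] with p hp
        refine ENNReal.ofReal_le_ofReal ?_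
        have h1 := G.quad_ge (u := fun r ω => y (n + d) r ω - y n r ω)
          (v := fun r ω => z (n + d) r ω - z n r ω) hp.1.le p.2
        have h2 := sq_le_enorm2 (z (n + d) p.1 p.2 - z n p.1 p.2) i
        have h3 := mul_nonneg (G.θ0 p.1 p.2) (enorm2_nonneg (y (n + d) p.1 p.2 - y n p.1 p.2))
        simp only [Pi.sub_apply] at h2 ⊢
        linarith
      · congr 1
        rw [mul_pow, ← pow_mul, mul_comm n 2, pow_mul]
        norm_num
    refine (l2_limit (f := fun n (p : ℝ × Ω) => z n p.1 p.2 i) (fun n => ((hS n).good i).phi2) ?_).1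
    have key2 : ∀ N n d : ℕ, N ≤ n →
        eLpNorm ((fun p : ℝ × Ω => z (n + d) p.1 p.2 i) - fun p => z n p.1 p.2 i) 2
        (PM μ s T) < ENNReal.ofReal (3 * (1 / 4) ^ N) := by
      intro N n d h
      refine (key n d).trans_lt ((ENNReal.ofReal_lt_ofReal_iff (by positivity)).2 ?_)
      have h1 : (1 / 4 : ℝ) ^ n ≤ (1 / 4) ^ N :=
        pow_le_pow_of_le_one (by norm_num) (by norm_num) h
      have h2 : (0 : ℝ) < (1 / 4) ^ N := by positivity
      linarith
    intro N n m hn hm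
    rcases le_total n m with h | h
    · obtain ⟨d, rfl⟩ := Nat.exists_eq_add_of_le h
      rw [eLpNorm_sub_comm]
      exact key2 N n d hn
    · obtain ⟨d, rfl⟩ := Nat.exists_eq_add_of_le h
      exact key2 N m d hm
  set y' : ℝ → Ω → Fin k → ℝ := fun t ω i => limsup (fun n => y n t ω i) atTop with hy'
  set z' : ℝ → Ω → Fin k → ℝ := fun t ω i => limsup (fun n => z n t ω i) atTop with hz'
  have hyv : ∀ᵐ ω ∂μ, ∀ t ∈ Icc s T, Tendsto (fun n => y n t ω) atTop (nhds (y' t ω)) := by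
    filter_upwards [hy] with ω hω t ht
    exact tendsto_pi_nhds.2 (hω t ht)
  have hzv : ∀ᵐ ω ∂μ, ∀ᵐ r ∂(volume.restrict (Ioc s T)),
      Tendsto (fun n => z n r ω) atTop (nhds (z' r ω)) := by
    refine PM.ae_ae (P := fun r ω => Tendsto (fun n => z n r ω) atTop (nhds (z' r ω))) ?_
    filter_upwards [ae_all_iff.2 hz] with p hp
    exact tendsto_pi_nhds.2 hp
  have hL : ∀ n, Bmo μ F s T (quad s α β (fun r ω => y' r ω - y n r ω)
      (fun r ω => z' r ω - z n r ω)) (ENNReal.ofReal (4 * (1 / 16) ^ n)) := by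
    intro n
    refine Bmo.of_tendsto (g := fun d => quad s α β (fun r ω => y (n + d) r ω - y n r ω)
      (fun r ω => z (n + d) r ω - z n r ω)) (fun d => ?_) ?_ fun d => hC d n
    · exact G.quad_meas (fun i => (my _ i).sub (my _ i)) (fun i => (mz _ i).sub (mz _ i))
    · filter_upwards [hyv, hzv] with ω h1 h2
      filter_upwards [h2, ae_restrict_mem measurableSet_Ioc] with r h3 hr
      have h4 := h1 r ⟨hr.1.le, hr.2⟩
      have e : Tendsto (fun d => n + d) atTop atTop :=
        tendsto_atTop_mono (fun d => Nat.le_add_left d n) tendsto_id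
      have t1 := (continuous_enorm2.tendsto _).comp ((h4.comp e).sub_const (y n r ω))
      have t2 := (continuous_enorm2.tendsto _).comp ((h3.comp e).sub_const (z n r ω))
      exact ((t1.const_mul (α r ω + β r ω ^ 2)).add t2).const_mul (wgt s α β r ω)
  have yA : ∀ i, Adp μ F s T (fun t ω => y' t ω i) := fun i =>
    ⟨fun t ht => aesm_of_raw (by
      let _ : MeasurableSpace Ω := F t
      exact Measurable.limsup fun n => (hS n).Ymeas i t ht), Measurable.limsup fun n => my n i⟩
  have zA : ∀ i, Adp μ F s T (fun t ω => z' t ω i) := fun i =>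
    (Prog.limsup fun n => ((hS n).good i).prog).adp
  refine ⟨y', z', max (2 + 2 * K 1) (8 + 2 * |K 0|), ⟨yA, zA, ?_, ?_⟩, hyv, hL⟩
  · filter_upwards [hyv, hY, (hS 1).bdd] with ω h1 h2 h3 t ht
    refine le_trans ?_ (le_max_left _ _)
    have e : Tendsto (fun d => 0 + 1 + d) atTop atTop :=
      tendsto_atTop_mono (fun d => Nat.le_add_left d _) tendsto_id
    have t1 := (continuous_enorm2.tendsto _).comp (((h1 t ht).comp e).sub_const (y (0 + 1) t ω))
    have t2 := le_of_tendsto t1 (Eventually.of_forall fun d => h2 0 d t ht)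
    have t3 := enorm2_add_le (y' t ω - y (0 + 1) t ω) (y (0 + 1) t ω)
    rw [sub_add_cancel] at t3
    have t4 := h3 t ht
    simp only [zero_add, pow_zero] at t2 t3
    linarith
  · have h2 : (0:ℝ) ≤ 2 := by norm_num
    have hm := (G.quad_meas (u := fun r ω => y' r ω - y 0 r ω) (v := fun r ω => z' r ω - z 0 r ω)
      (fun i => (yA i).2.sub (my 0 i)) (fun i => (zA i).2.sub (mz 0 i))).const_mul 2
    refine (((hL 0).const_mul h2).add ((hS 0).bmo.const_mul h2) hm).mono
      (ae_of_all _ fun ω r hr => ?_) ?_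
    · have t3 := enorm2_add_le (z' r ω - z 0 r ω) (z 0 r ω)
      rw [sub_add_cancel] at t3
      have h1 := G.quad_ge (u := fun r ω => y' r ω - y 0 r ω)
          (v := fun r ω => z' r ω - z 0 r ω) hr.1 ω
      have h3 := mul_nonneg (G.θ0 r ω) (enorm2_nonneg (y' r ω - y 0 r ω))
      linarith
    · rw [← ENNReal.ofReal_mul h2, ← ENNReal.ofReal_mul h2]
      refine le_trans (add_le_add le_rfl (ENNReal.ofReal_le_ofReal
        (mul_le_mul_of_nonneg_left (le_abs_self (K 0)) h2))) ?_
      rw [← ENNReal.ofReal_add (by positivity) (by positivity)]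
      refine ENNReal.ofReal_le_ofReal (le_trans (le_of_eq ?_) (le_max_right _ _))
      norm_num

/-- Existence: the Picard map has a fixed point. -/
theorem Gen.exists_sol (G : Gen μ F s T f α β c) (hW : IsBrownian μ F W) (hs : 0 ≤ s) (hsT : s ≤ T)
    {ξ : Ω → Fin k → ℝ} (hξ : MemLinfRnd μ F T ξ) :
    ∃ (Y Z M : ℝ → Ω → Fin k → ℝ) (K : ℝ),
      Sol μ F W s T ξ (fun r ω => f r ω (Y r ω) (Z r ω)) Y Z M K := by
  obtain ⟨g, y, z, M, K, hS, hg, hB⟩ := G.picard hW hs hsT hξ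
  obtain ⟨y', z', K', hI, hy, hL⟩ := G.limit hW hs hsT hS hg hB
  obtain ⟨Y, Z, N, J, hJ⟩ := G.step hW hs hsT hξ hI
  have hS' : ∀ n, Sol μ F W s T ξ (fun r ω => f r ω (y n r ω) (z n r ω)) (y (n + 1)) (z (n + 1))
      (M (n + 1)) (K (n + 1)) := fun n => by
    rw [← hg n]
    exact hS (n + 1)
  have hc := fun n => G.contract hW hs hsT hI (hS n).inv hJ (hS' n) (by positivity) (hL n)
  have hYy : ∀ᵐ ω ∂μ, ∀ t ∈ Icc s T, Y t ω = y' t ω := by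
    filter_upwards [ae_all_iff.2 fun n => (hc n).2, hy] with ω h1 h2 t ht
    refine eq_of_enorm2 ?_
    have t1 := (continuous_enorm2.tendsto _).comp
      (((h2 t ht).comp (tendsto_add_atTop_nat 1)).const_sub (Y t ω))
    have t2 : Tendsto (fun n : ℕ => 4 * (1 / 16 : ℝ) ^ n / 16) atTop (nhds (4 * 0 / 16)) :=
      ((tendsto_pow_atTop_nhds_zero_of_lt_one (by norm_num) (by norm_num)).const_mul 4).div_const 16
    have := le_of_tendsto_of_tendsto' t1 t2 fun n => h1 n t ht
    simpa using this
  have hq : Bmo μ F s T (quad s α β (fun r ω => Y r ω - y' r ω) (fun r ω => Z r ω - z' r ω)) 0 := by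
    have h1 : ∀ n : ℕ, Bmo μ F s T (quad s α β (fun r ω => Y r ω - y' r ω)
        (fun r ω => Z r ω - z' r ω)) (ENNReal.ofReal ((1 / 16) ^ n)) := fun n => by
      have h2 := hL (n + 1)
      rw [quad_sub_comm] at h2
      refine (G.bmo_tri (fun i => (hJ.inv.yA i).2) (fun i => (hJ.inv.zA i).2)
        (fun i => ((hS (n + 1)).inv.yA i).2) (fun i => ((hS (n + 1)).inv.zA i).2)
        (by positivity) (by positivity) (hc n).1 h2).mono (ae_of_all _ fun ω r _ => le_rfl)
        (ENNReal.ofReal_le_ofReal ?_)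
      rw [pow_succ]
      have : (0:ℝ) ≤ (1 / 16) ^ n := by positivity
      linarith
    intro t ht A hA
    have t2 : Tendsto (fun n : ℕ => ENNReal.ofReal ((1 / 16 : ℝ) ^ n) * μ A) atTop
        (nhds (ENNReal.ofReal 0 * μ A)) :=
      ENNReal.Tendsto.mul_const (ENNReal.tendsto_ofReal
        (tendsto_pow_atTop_nhds_zero_of_lt_one (by norm_num) (by norm_num)))
        (Or.inr (measure_ne_top _ _))
    rw [ENNReal.ofReal_zero] at t2
    exact ge_of_tendsto' t2 fun n => h1 n t ht A hA
  have hZz : ∀ᵐ ω ∂μ, ∀ᵐ r ∂(volume.restrict (Ioc s T)), Z r ω = z' r ω := by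
    have h1 := PM.ae_ae (P := fun r ω => quad s α β (fun r ω => Y r ω - y' r ω)
      (fun r ω => Z r ω - z' r ω) r ω ≤ 0) (hq.ae_zero hsT (G.quad_meas
      (fun i => (hJ.inv.yA i).2.sub (hI.yA i).2) (fun i => (hJ.inv.zA i).2.sub (hI.zA i).2)))
    filter_upwards [h1] with ω hω
    filter_upwards [hω, ae_restrict_mem measurableSet_Ioc] with r hr hr'
    refine eq_of_enorm2 ?_
    have h2 := G.quad_ge (u := fun r ω => Y r ω - y' r ω) (v := fun r ω => Z r ω - z' r ω) hr'.1.le ω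
    have h3 := mul_nonneg (G.θ0 r ω) (enorm2_nonneg (Y r ω - y' r ω))
    linarith
  have hf : ∀ᵐ ω ∂μ, ∀ᵐ r ∂(volume.restrict (Ioc s T)),
      f r ω (Y r ω) (Z r ω) = f r ω (y' r ω) (z' r ω) := by
    filter_upwards [hYy, hZz] with ω h1 h2
    filter_upwards [h2, ae_restrict_mem measurableSet_Ioc] with r h3 hr
    rw [h1 r ⟨hr.1.le, hr.2⟩, h3]
  refine ⟨Y, Z, N, J, hJ.good, hJ.Mm, hJ.Ymeas, hJ.Ym, G.drift_adp hJ.inv.yA hJ.inv.zA, ?_, ?_,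
    hJ.term, hJ.bdd, hJ.bmo⟩
  · filter_upwards [hf, hJ.gi] with ω h1 h2 i
    refine (h2 i).congr_ae ?_
    rw [uIoc_of_le hsT]
    filter_upwards [h1] with r hr
    simp only [hr]
  · filter_upwards [hf, hJ.eq] with ω h1 h2 t ht i
    rw [h2 t ht i]
    congr 1
    refine intervalIntegral.integral_congr_ae ?_
    rw [uIoc_of_le ht.1]
    have h3 := ae_restrict_of_ae_restrict_of_subset (Ioc_subset_Ioc_right ht.2) h1
    filter_upwards [(ae_restrict_iff' measurableSet_Ioc).1 h3] with r hr hr'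
    rw [hr hr']

end limit
end SLQ

namespace SLQ

set_option linter.unusedSectionVars false

/-! ### The limit is a solution in the required spaces -/

section existence

variable {Ω : Type} {mΩ : MeasurableSpace Ω} {μ : Measure Ω} [IsProbabilityMeasure μ]
  {F : Filtration ℝ mΩ} {s T : ℝ} {W : ℝ → Ω → ℝ} {k : ℕ}

lemma Good.ito (hW : IsBrownian μ F W) (hs : 0 ≤ s) (hsT : s ≤ T) {M φ : ℝ → Ω → ℝ}
    (h : Good μ F W s T M φ) : IsItoInt μ F W s T φ (fun t ω => M t ω - M s ω) := by
  have hss : s ∈ Icc s T := ⟨le_rfl, hsT⟩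
  have h1 : Good μ F W s T (fun t ω => M t ω - M s ω) φ := by
    simpa using h.sub hsT (Good.const (h.meas s hss) (h.memLp hss))
  refine ⟨ae_of_all _ fun ω => sub_self _, h1.cont, h1.wm.martOn h1.meas, ?_, ?_⟩
  · refine WM.martOn ?_ fun t ht =>
      ((h1.meas t ht).mul (hW.meas t)).sub (h1.prog.integral ht)
    simpa using h1.cov _ _ (hW.test hs)
  · refine (h1.sq hW hs).martOn fun t ht => ?_
    exact ((h1.meas t ht).pow_const 2).sub
      ((h1.prog.comp (measurable_id.pow_const 2)).integral ht)

lemma eval_intervalIntegral {g : ℝ → Fin k → ℝ} {a b : ℝ}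
    (h : ∀ i, IntervalIntegrable (fun r => g r i) volume a b) (i : Fin k) :
    (∫ r in a..b, g r) i = ∫ r in a..b, g r i := by
  rw [intervalIntegral.intervalIntegral_eq_integral_uIoc,
    intervalIntegral.intervalIntegral_eq_integral_uIoc, Pi.smul_apply,
    eval_integral fun i => (intervalIntegrable_iff.1 (h i))]

theorem Sol.solves (hW : IsBrownian μ F W) (hs : 0 ≤ s) (hsT : s ≤ T) {ξ : Ω → Fin k → ℝ}
    {g Y Z M : ℝ → Ω → Fin k → ℝ} {K : ℝ} (h : Sol μ F W s T ξ g Y Z M K) :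
    SolvesBSDE μ F W s T g ξ Y Z := by
  refine ⟨fun t ht i => h.Ymeas i t ht, fun t ht i => (h.good i).prog.sec ht, h.cont hsT, ?_,
    fun t ω i => M t ω i - M s ω i, fun i => (h.good i).ito hW hs hsT, ?_⟩
  · filter_upwards [h.gi] with ω hω
    exact Integrable.of_eval fun i => (intervalIntegrable_iff_integrableOn_Icc_of_le hsT).1 (hω i)
  · filter_upwards [h.gi, h.eq, h.term] with ω h1 h2 h3 t ht
    ext i
    have e1 := h2 t ht i
    have e2 := h2 T ⟨hsT, le_rfl⟩ i
    have e3 := h3 i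
    have i1 := intervalIntegrable_sub (h1 i) le_rfl ht.1 ht.2
    have i2 : ∀ i, IntervalIntegrable (fun r => g r ω i) volume t T := fun i =>
      intervalIntegrable_sub (h1 i) ht.1 ht.2 le_rfl
    have e4 := intervalIntegral.integral_add_adjacent_intervals i1 (i2 i)
    have e5 := eval_intervalIntegral i2 i
    simp only [Pi.sub_apply]
    rw [e5]
    linarith

theorem Sol.linfC (hsT : s ≤ T) {ξ : Ω → Fin k → ℝ}
    {g Y Z M : ℝ → Ω → Fin k → ℝ} {K : ℝ} (h : Sol μ F W s T ξ g Y Z M K) :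
    VecMemLinfC μ F s T Y :=
  ⟨fun t ht i => h.Ymeas i t ht, h.cont hsT, K, h.bdd⟩

/-- The energy bound, conditional on every `F t`, gives moments of every order. -/
theorem Sol.lpL2 (hsT : s ≤ T) {ξ : Ω → Fin k → ℝ}
    {g Y Z M : ℝ → Ω → Fin k → ℝ} {K : ℝ} (h : Sol μ F W s T ξ g Y Z M K) {p : ℝ} (hp : 0 ≤ p) :
    VecMemLpL2 μ F s T p Z := by
  have hA : Adp μ F s T (fun r ω => enorm2 (Z r ω)) := adp_comp h.inv.zA continuous_enorm2
  have h0 : ∀ r ω, 0 ≤ enorm2 (Z r ω) := fun r ω => enorm2_nonneg _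
  refine ⟨fun t ht i => (h.good i).prog.sec ht, fun i => (h.good i).prog.1, ?_, ?_⟩
  · filter_upwards [intervalIntegrable_of_lint hsT hA.2 h0
      (h.bmo.lint_ne_top ENNReal.ofReal_ne_top hsT)] with ω hω
    exact (intervalIntegrable_iff_integrableOn_Icc_of_le hsT).1 hω
  · obtain ⟨n, hn⟩ := exists_nat_ge (p / 2)
    have hm := h.bmo.moments hsT hA h0 ENNReal.ofReal_ne_top n
    refine lt_of_le_of_lt (b := ∫⁻ ω, (1 + ENNReal.ofReal (∫ r in s..T, enorm2 (Z r ω)) ^ (n + 1)) ∂μ)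
      (lintegral_mono fun ω => ?_) ?_
    · set x := ∫ r in s..T, enorm2 (Z r ω)
      have hx : 0 ≤ x := intervalIntegral.integral_nonneg hsT fun r _ => h0 r ω
      beta_reduce
      rw [← ENNReal.ofReal_pow hx, ← ENNReal.ofReal_one,
        ← ENNReal.ofReal_add zero_le_one (by positivity)]
      refine ENNReal.ofReal_le_ofReal ?_
      have hxn : 0 ≤ x ^ (n + 1) := by positivity
      rcases le_total x 1 with h1 | h1
      · have := Real.rpow_le_one hx h1 (by linarith : 0 ≤ p / 2)
        linarith
      · have := Real.rpow_le_rpow_of_exponent_le h1 (by push_cast; linarith : p / 2 ≤ ((n + 1 : ℕ) : ℝ))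
        rw [Real.rpow_natCast] at this
        linarith
    · rw [lintegral_add_left measurable_const]
      simpa using hm

end existence
end SLQ

namespace SLQ

set_option linter.unusedSectionVars false

/-! ### Uniqueness -/

section uniqueness

variable {Ω : Type} {mΩ : MeasurableSpace Ω} {μ : Measure Ω} [IsProbabilityMeasure μ]
  {F : Filtration ℝ mΩ} {s T : ℝ} {W : ℝ → Ω → ℝ} {k : ℕ}

/-- A bounded solution of the equation with drift `g`, after replacing `Y` and its martingale part
`M` by jointly measurable versions. Unlike in `Sol`, no square integrability of `Z` over
`[s,T] × Ω` is assumed. -/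
structure Cand (μ : Measure Ω) (F : Filtration ℝ mΩ) (W : ℝ → Ω → ℝ) (s T : ℝ) {k : ℕ}
    (ξ : Ω → Fin k → ℝ) (g Y Z M : ℝ → Ω → Fin k → ℝ) (K : ℝ) : Prop where
  semi : ∀ i, Semi μ F s T (fun t ω => Y t ω i) (fun t ω => M t ω i) (fun t ω => Z t ω i)
    (fun t ω => g t ω i)
  cov : ∀ i, WM μ F s T (fun t ω => M t ω i * W t ω - ∫ r in s..t, Z r ω i)
  Ymeas : ∀ i, ∀ t ∈ Icc s T, Measurable[F t] fun ω => Y t ω i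
  cont : ∀ᵐ ω ∂μ, ContinuousOn (fun t => Y t ω) (Icc s T)
  term : ∀ᵐ ω ∂μ, ∀ i, Y T ω i = ξ ω i
  bdd : ∀ᵐ ω ∂μ, ∀ t ∈ Icc s T, enorm2 (Y t ω) ≤ K

variable {f : ℝ → Ω → (Fin k → ℝ) → (Fin k → ℝ) → Fin k → ℝ} {α β : ℝ → Ω → ℝ} {c : ℝ}

/-- A solution in the sense of the statement yields the data `Cand`; continuity in time provides the
jointly measurable versions. -/
lemma cand_of_solves (G : Gen μ F s T f α β c) (hW : IsBrownian μ F W) (hs : 0 ≤ s) (hsT : s ≤ T)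
    {ξ : Ω → Fin k → ℝ} {y z : ℝ → Ω → Fin k → ℝ} {p : ℝ}
    (hsol : SolvesBSDE μ F W s T (fun t ω => f t ω (y t ω) (z t ω)) ξ y z)
    (hy : VecMemLinfC μ F s T y) (hz : VecMemLpL2 μ F s T p z) :
    ∃ (Y M : ℝ → Ω → Fin k → ℝ) (K : ℝ),
      Cand μ F W s T ξ (fun r ω => f r ω (Y r ω) (z r ω)) Y z M K ∧
      ∀ᵐ ω ∂μ, ∀ t ∈ Icc s T, Y t ω = y t ω := by
  have hss : s ∈ Icc s T := ⟨le_rfl, hsT⟩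
  have hTT : T ∈ Icc s T := ⟨hsT, le_rfl⟩
  obtain ⟨hym, hzm, hyc, hfi, N, hN, heq⟩ := hsol
  obtain ⟨-, -, K, hK⟩ := hy
  obtain ⟨-, hzj, hz2, -⟩ := hz
  have hYv : ∀ i, ∃ X' : ℝ → Ω → ℝ, (∀ t ∈ Icc s T, Measurable[F t] (X' t)) ∧
      (Measurable fun p : ℝ × Ω => X' p.1 p.2) ∧
      ∀ᵐ ω ∂μ, ∀ t ∈ Icc s T, X' t ω = y t ω i := fun i =>
    exists_version (X := fun t ω => y t ω i) hsT (fun t ht => aesm_of_raw (hym t ht i))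
      (hyc.mono fun ω h => (continuousOn_pi.1 h) i)
  have hNv : ∀ i, ∃ X' : ℝ → Ω → ℝ, (∀ t ∈ Icc s T, Measurable[F t] (X' t)) ∧
      (Measurable fun p : ℝ × Ω => X' p.1 p.2) ∧
      ∀ᵐ ω ∂μ, ∀ t ∈ Icc s T, X' t ω = N t ω i := fun i =>
    exists_version (X := fun t ω => N t ω i) hsT (fun t ht => aesm_of_raw ((hN i).2.2.1.1 t ht))
      (hN i).2.1
  choose Y' hY1 hY2 hY3 using hYv
  choose N' hN1 hN2 hN3 using hNv
  set Y : ℝ → Ω → Fin k → ℝ := fun t ω i => Y' i t ω with hYd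
  have hYy : ∀ᵐ ω ∂μ, ∀ t ∈ Icc s T, Y t ω = y t ω := by
    filter_upwards [ae_all_iff.2 hY3] with ω h t ht
    ext i
    exact h i t ht
  have hYb : ∀ᵐ ω ∂μ, ∀ t ∈ Icc s T, enorm2 (Y t ω) ≤ K := by
    filter_upwards [hYy, hK] with ω h1 h2 t ht
    rw [h1 t ht]
    exact h2 t ht
  have hYA : ∀ i, Adp μ F s T (fun t ω => Y t ω i) := fun i =>
    ⟨fun t ht => aesm_of_raw (hY1 i t ht), hY2 i⟩
  have hzA : ∀ i, Adp μ F s T (fun t ω => z t ω i) := fun i =>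
    ⟨fun t ht => aesm_of_raw (hzm t ht i), hzj i⟩
  have hgi : ∀ᵐ ω ∂μ, ∀ i, IntervalIntegrable (fun r => f r ω (Y r ω) (z r ω) i) volume s T := by
    filter_upwards [hfi, hYy] with ω h1 h2 i
    rw [intervalIntegrable_iff_integrableOn_Icc_of_le hsT]
    refine IntegrableOn.congr_fun (Integrable.eval h1 i) (fun r hr => ?_) measurableSet_Icc
    rw [h2 r hr]
  have hYs : ∀ i, ∀ᵐ ω ∂μ, ‖Y s ω i‖ ≤ Real.sqrt K := fun i => by
    filter_upwards [hYb] with ω hω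
    exact (abs_le_sqrt_enorm2 _ i).trans (Real.sqrt_le_sqrt (hω s hss))
  have hYsm : ∀ i, AEStronglyMeasurable[F s] (fun ω => Y s ω i) μ := fun i =>
    aesm_of_raw (hY1 i s hss)
  have hYsi : ∀ i, Integrable (fun ω => Y s ω i) μ := fun i =>
    Integrable.of_bound (aesm_full (hYsm i)) _ (hYs i)
  have hmul : ∀ i {X : Ω → ℝ}, Integrable X μ → Integrable (fun ω => Y s ω i * X ω) μ :=
    fun i X hX => hX.bdd_mul (aesm_full (hYsm i)) (hYs i)
  have hNw : ∀ i, WM μ F s T (N' i) := fun i =>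
    (hN i).2.2.1.wm.congr fun t ht => (hN3 i).mono fun ω h => h t ht
  refine ⟨Y, fun t ω i => Y s ω i + N' i t ω, K, ⟨fun i => ⟨hzA i, G.drift_adp hYA hzA i, ?_,
    hgi.mono fun ω h => h i, ?_, ?_, ?_, hY2 i, ?_⟩, fun i => ?_, fun i t ht => hY1 i t ht, ?_, ?_,
    hYb⟩, hYy⟩
  · filter_upwards [hz2] with ω h
    rw [intervalIntegrable_iff_integrableOn_Icc_of_le hsT]
    refine Integrable.mono' h (((hzj i).comp (measurable_id.prodMk measurable_const)).pow_const
      2).aestronglyMeasurable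
      (ae_of_all _ fun r => ?_)
    rw [Real.norm_of_nonneg (sq_nonneg _)]
    exact sq_le_enorm2 (z r ω) i
  · exact ((hY2 i).comp (measurable_const.prodMk measurable_snd)).add (hN2 i)
  · exact (WM.const (hYsm i) (hYsi i)).add (hNw i)
  · have h1 : WM μ F s T (fun t ω => Y s ω i * Y s ω i + (2 * (Y s ω i * N' i t ω) +
        (N t ω i ^ 2 - ∫ r in s..t, z r ω i ^ 2))) :=
      (WM.const ((hYsm i).mul (hYsm i) :) (hmul i (hYsi i))).add
        ((((hNw i).mul_left (hYsm i) fun t ht => hmul i ((hNw i).1 t ht)).const_mul 2).add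
          (hN i).2.2.2.2.wm)
    refine h1.congr fun t ht => ?_
    filter_upwards [hN3 i] with ω h
    rw [← h t ht]
    ring
  · filter_upwards [hYy, heq, hN3 i, (hN i).1, hgi] with ω h1 h2 h3 h4 h5 t ht
    have e0 : ∀ a b, a ∈ Icc s T → b ∈ Icc s T → a ≤ b →
        (∫ r in a..b, f r ω (y r ω) (z r ω)) i = ∫ r in a..b, f r ω (Y r ω) (z r ω) i := by
      intro a b ha hb hab
      rw [← eval_intervalIntegral (g := fun r => f r ω (Y r ω) (z r ω))
        fun i => intervalIntegrable_sub (h5 i) ha.1 hab hb.2]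
      refine congrFun (intervalIntegral.integral_congr fun r hr => ?_) i
      rw [uIcc_of_le hab] at hr
      rw [h1 r ⟨ha.1.trans hr.1, hr.2.trans hb.2⟩]
    have e1 := congrFun (h2 t ht) i
    have e2 := congrFun (h2 s hss) i
    simp only [Pi.sub_apply] at e1 e2
    rw [e0 t T ht hTT ht.2, ← h1 t ht] at e1
    rw [e0 s T hss hTT hsT, ← h1 s hss, h4] at e2
    have e3 := h3 t ht
    have e4 := intervalIntegral.integral_add_adjacent_intervals
      (intervalIntegrable_sub (h5 i) le_rfl ht.1 ht.2) (intervalIntegrable_sub (h5 i) ht.1 ht.2 le_rfl)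
    linarith
  · have h1 : WM μ F s T (fun t ω => Y s ω i * W t ω +
        (N t ω i * W t ω - ∫ r in s..t, z r ω i)) :=
      ((hW.wm hs).mul_left (hYsm i) fun t ht => hmul i ((hW.wm hs).1 t ht)).add (hN i).2.2.2.1.wm
    refine h1.congr fun t ht => ?_
    filter_upwards [hN3 i] with ω h
    rw [← h t ht]
    ring
  · filter_upwards [hyc, hYy] with ω h1 h2
    exact h1.congr fun t ht => h2 t ht
  · filter_upwards [heq, hYy] with ω h1 h2 i
    rw [h2 T hTT, h1 T hTT]
    simp

/-- The energy inequality with unit weight, giving `E ∫ |Z|² < ∞` for every bounded solution. -/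
lemma Cand.psi2 (G : Gen μ F s T f α β c) (hsT : s ≤ T) {ξ : Ω → Fin k → ℝ}
    {Y Z M : ℝ → Ω → Fin k → ℝ} {K : ℝ}
    (h : Cand μ F W s T ξ (fun r ω => f r ω (Y r ω) (Z r ω)) Y Z M K) (i : Fin k) :
    MemLp (fun p : ℝ × Ω => Z p.1 p.2 i) 2 (PM μ s T) := by
  have hss : s ∈ Icc s T := ⟨le_rfl, hsT⟩
  have hTT : T ∈ Icc s T := ⟨hsT, le_rfl⟩
  set κ := |K| with hκ
  have hκ0 : 0 ≤ κ := abs_nonneg K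
  have hb : ∀ᵐ ω ∂μ, ∀ t ∈ Icc s T, enorm2 (Y t ω) ≤ κ :=
    h.bdd.mono fun ω hω t ht => (hω t ht).trans (le_abs_self K)
  have hZm : Measurable fun p : ℝ × Ω => enorm2 (Z p.1 p.2) :=
    continuous_enorm2.measurable.comp (measurable_pi_lambda _ fun i => (h.semi i).hz.2)
  set hh : ℝ → Ω → ℝ := fun r ω => 2 * Real.sqrt κ * Real.sqrt (enorm2 (f r ω 0 0)) +
    2 * κ * α r ω + 2 * κ * β r ω ^ 2 with hhd
  have b0 := (Bmo.of_integral (F := F) hsT (fun r ω => Real.sqrt_nonneg (enorm2 (f r ω 0 0)))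
    G.int0).const_mul (a := 2 * Real.sqrt κ) (by positivity)
  have b1 := (Bmo.of_integral (F := F) hsT G.α0 G.intα).const_mul (a := 2 * κ) (by positivity)
  have b2 := (Bmo.of_integral (F := F) hsT (fun r ω => sq_nonneg (β r ω)) G.intβ).const_mul
    (a := 2 * κ) (by positivity)
  have m0 : Measurable fun p : ℝ × Ω => 2 * Real.sqrt κ * Real.sqrt (enorm2 (f p.1 p.2 0 0)) :=
    G.f0_adp.2.const_mul _
  have m1 : Measurable fun p : ℝ × Ω => 2 * κ * α p.1 p.2 := G.hα.2.const_mul _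
  have m2 : Measurable fun p : ℝ × Ω => 2 * κ * β p.1 p.2 ^ 2 := (G.hβ.2.pow_const 2).const_mul _
  have hh0 : ∀ r ω, 0 ≤ hh r ω := fun r ω => by
    have := G.α0 r ω
    simp only [hhd]
    positivity
  have hhb := (b0.add b1 m0).add b2 (m0.add m1)
  have hhi : Integrable (fun p : ℝ × Ω => hh p.1 p.2) (PM μ s T) :=
    hhb.integrable hsT ((m0.add m1).add m2) hh0 (ENNReal.add_ne_top.2 ⟨ENNReal.add_ne_top.2
      ⟨ENNReal.mul_ne_top ENNReal.ofReal_ne_top ENNReal.ofReal_ne_top,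
        ENNReal.mul_ne_top ENNReal.ofReal_ne_top ENNReal.ofReal_ne_top⟩,
        ENNReal.mul_ne_top ENNReal.ofReal_ne_top ENNReal.ofReal_ne_top⟩)
  have hEn : Energy μ F s T (fun i t ω => Y t ω i) (fun i t ω => M t ω i) (fun i t ω => Z t ω i)
      (fun i t ω => f t ω (Y t ω) (Z t ω) i) κ 0 (fun _ _ => 0)
      (fun r ω => (1 / 2) * enorm2 (Z r ω)) hh := by
    refine ⟨h.semi, hb, Adp.const 0, fun _ _ => le_rfl,
      ae_of_all _ fun ω => ⟨intervalIntegrable_const, by simp⟩, hZm.const_mul _,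
      fun r ω => mul_nonneg (by norm_num) (enorm2_nonneg _), hh0, hhi, ?_⟩
    filter_upwards [hb] with ω hω r hr
    have h1 := (abs_le.1 (abs_dot_le (f r ω (Y r ω) (Z r ω)) (Y r ω))).1
    have h2 := G.norm_le r ω (Y r ω) (Z r ω)
    have e1 : ∑ i, (2 * f r ω (Y r ω) (Z r ω) i * Y r ω i + Z r ω i ^ 2) =
        2 * (∑ i, f r ω (Y r ω) (Z r ω) i * Y r ω i) + enorm2 (Z r ω) := by
      rw [Finset.sum_add_distrib, Finset.mul_sum]
      simp only [enorm2, mul_assoc]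
    rw [e1, zero_mul, zero_add]
    simp only [hhd]
    have hx2 := hω r hr
    have hxk := Real.sqrt_le_sqrt hx2
    have hα0 := G.α0 r ω
    have hβ0 := G.β0 r ω
    rw [← Real.sq_sqrt (enorm2_nonneg (Y r ω))] at hx2
    rw [← Real.sq_sqrt (enorm2_nonneg (Z r ω))]
    have hf0 : 0 ≤ Real.sqrt (enorm2 (f r ω 0 0)) := Real.sqrt_nonneg _
    set x := Real.sqrt (enorm2 (Y r ω))
    set b := Real.sqrt (enorm2 (Z r ω))
    set φ := Real.sqrt (enorm2 (f r ω 0 0))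
    have hx : 0 ≤ x := Real.sqrt_nonneg _
    have h3 := mul_le_mul_of_nonneg_right h2 hx
    have h4 := mul_le_mul_of_nonneg_left hx2 hα0
    have h5 := mul_le_mul_of_nonneg_left hx2 (sq_nonneg (β r ω))
    have h6 := mul_le_mul_of_nonneg_left hxk hf0
    nlinarith [sq_nonneg (b - 2 * (β r ω * x))]
  have hmain := hEn.main hsT hss (A := univ) MeasurableSet.univ
  simp only [intervalIntegral.integral_zero, Real.exp_zero, one_mul, Measure.restrict_univ] at hmain
  have hfin : ∫⁻ ω, (∫⁻ r in Ioc s T, ENNReal.ofReal ((1 / 2) * enorm2 (Z r ω))) ∂μ < ⊤ := by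
    refine lt_of_le_of_lt (le_trans le_add_self hmain) (ENNReal.add_lt_top.2 ⟨?_, ?_⟩)
    · refine lt_of_le_of_lt (lintegral_mono_ae (g := fun _ => ENNReal.ofReal κ) ?_) (by simp)
      filter_upwards [hb] with ω hω
      exact ENNReal.ofReal_le_ofReal (hω T hTT)
    · have := hhb s hss univ MeasurableSet.univ
      simp only [Measure.restrict_univ] at this
      refine lt_of_le_of_lt this ?_
      simp only [measure_univ, mul_one]
      exact lt_top_iff_ne_top.2 (ENNReal.add_ne_top.2 ⟨ENNReal.add_ne_top.2
        ⟨ENNReal.mul_ne_top ENNReal.ofReal_ne_top ENNReal.ofReal_ne_top,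
        ENNReal.mul_ne_top ENNReal.ofReal_ne_top ENNReal.ofReal_ne_top⟩,
        ENNReal.mul_ne_top ENNReal.ofReal_ne_top ENNReal.ofReal_ne_top⟩)
  have hm : Measurable fun p : ℝ × Ω => ENNReal.ofReal ((1 / 2) * enorm2 (Z p.1 p.2)) :=
    ENNReal.measurable_ofReal.comp (hZm.const_mul _)
  rw [← lintegral_prod_symm' _ hm, ← hasFiniteIntegral_iff_ofReal
    (f := fun p : ℝ × Ω => (1 / 2) * enorm2 (Z p.1 p.2))
    (ae_of_all _ fun p => mul_nonneg (by norm_num) (enorm2_nonneg _))] at hfin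
  have hI : Integrable (fun p : ℝ × Ω => (1 / 2) * enorm2 (Z p.1 p.2)) (PM μ s T) :=
    ⟨(hZm.const_mul _).aestronglyMeasurable, hfin⟩
  rw [memLp_two_iff_integrable_sq (h.semi i).hz.2.aestronglyMeasurable]
  refine (hI.const_mul 2).mono' ((h.semi i).hz.2.pow_const 2).aestronglyMeasurable
    (ae_of_all _ fun p => ?_)
  rw [Real.norm_of_nonneg (sq_nonneg _)]
  linarith [sq_le_enorm2 (Z p.1 p.2) i]

lemma Cand.test (G : Gen μ F s T f α β c) (hsT : s ≤ T) {ξ : Ω → Fin k → ℝ}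
    {Y Z M : ℝ → Ω → Fin k → ℝ} {K : ℝ}
    (h : Cand μ F W s T ξ (fun r ω => f r ω (Y r ω) (Z r ω)) Y Z M K) (i : Fin k) :
    TestN μ F W s T (fun t ω => M t ω i) (fun t ω => Z t ω i) where
  wm := (h.semi i).hM
  l2 t ht := by
    rw [memLp_two_iff_integrable_sq (aesm_full ((h.semi i).hM.aesm ht))]
    have h1 := PM.integrable_integral (f := fun r ω => Z r ω i ^ 2) (h.psi2 G hsT i).integrable_sq
      le_rfl ht.1 ht.2
    refine (((h.semi i).hM2.1 t ht).add h1).congr (ae_of_all _ fun ω => ?_)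
    simp
  adp := (h.semi i).hz
  psi2 := h.psi2 G hsT i
  cov := h.cov i

/-- A bounded solution agrees with the one produced by the Picard iteration. -/
theorem Cand.unique (G : Gen μ F s T f α β c) (hW : IsBrownian μ F W) (hs : 0 ≤ s) (hsT : s ≤ T)
    {ξ : Ω → Fin k → ℝ} {Y Z M Y' Z' M' : ℝ → Ω → Fin k → ℝ} {K K' : ℝ}
    (hS : Sol μ F W s T ξ (fun r ω => f r ω (Y r ω) (Z r ω)) Y Z M K)
    (hC : Cand μ F W s T ξ (fun r ω => f r ω (Y' r ω) (Z' r ω)) Y' Z' M' K') :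
    (∀ᵐ ω ∂μ, ∀ t ∈ Icc s T, Y' t ω = Y t ω) ∧
      ∀ᵐ p ∂(PM μ s T), Z' p.1 p.2 = Z p.1 p.2 := by
  have hTT : T ∈ Icc s T := ⟨hsT, le_rfl⟩
  have hsemi := semi_of_good hW hs hsT hS.good hS.Mm hS.Ym hS.gA hS.gi hS.eq
  have hZm : Measurable fun p : ℝ × Ω => enorm2 (Z p.1 p.2 - Z' p.1 p.2) :=
    continuous_enorm2.measurable.comp
      (measurable_pi_lambda _ fun i => (hsemi i).hz.2.sub (hC.semi i).hz.2)
  have hEn : Energy μ F s T (fun i t ω => Y t ω i - Y' t ω i) (fun i t ω => M t ω i - M' t ω i)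
      (fun i t ω => Z t ω i - Z' t ω i)
      (fun i t ω => f t ω (Y t ω) (Z t ω) i - f t ω (Y' t ω) (Z' t ω) i)
      (2 * K + 2 * K') (4 * c) (fun r ω => 2 * (α r ω + β r ω ^ 2))
      (fun r ω => (1 / 2) * enorm2 (Z r ω - Z' r ω)) (fun _ _ => 0) := by
    refine ⟨fun i => ⟨(hsemi i).hz.sub (hC.semi i).hz, (hsemi i).hg.sub (hC.semi i).hg, ?_, ?_,
      (hsemi i).hMm.sub (hC.semi i).hMm, (hsemi i).hM.sub (hC.semi i).hM, ?_,
      (hsemi i).hYm.sub (hC.semi i).hYm, ?_⟩, ?_, G.θA.const_mul 2,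
      fun r ω => mul_nonneg (by norm_num) (G.θ0 r ω), ?_, hZm.const_mul _,
      fun r ω => mul_nonneg (by norm_num) (enorm2_nonneg _), fun _ _ => le_rfl,
      integrable_zero _ _ _, ?_⟩
    · have h1 := ((hS.good i).phi2.sub (hC.psi2 G hsT i))
      simpa [pow_two] using PM.mul_ae (φ := fun r ω => Z r ω i - Z' r ω i)
        (ψ := fun r ω => Z r ω i - Z' r ω i) hsT h1 h1
    · filter_upwards [(hsemi i).hgi, (hC.semi i).hgi] with ω a b using a.sub b
    · have h1 := (((hsemi i).hM2.sub (((hS.good i).cov _ _ (hC.test G hsT i)).const_mul 2)).add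
        (hC.semi i).hM2)
      refine h1.congr fun t ht => ?_
      filter_upwards [(hsemi i).hzi, (hC.semi i).hzi,
        PM.mul_ae (φ := fun r ω => Z r ω i) (ψ := fun r ω => Z' r ω i) hsT (hS.good i).phi2
          (hC.psi2 G hsT i)] with ω a b d
      have a' := intervalIntegrable_sub a le_rfl ht.1 ht.2
      have b' := intervalIntegrable_sub b le_rfl ht.1 ht.2
      have d' := intervalIntegrable_sub d le_rfl ht.1 ht.2
      have e1 : ∫ r in s..t, (Z r ω i - Z' r ω i) ^ 2 = (∫ r in s..t, Z r ω i ^ 2) -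
          2 * (∫ r in s..t, Z r ω i * Z' r ω i) + ∫ r in s..t, Z' r ω i ^ 2 := by
        rw [← intervalIntegral.integral_const_mul,
          ← intervalIntegral.integral_sub a' (d'.const_mul 2),
          ← intervalIntegral.integral_add (a'.sub (d'.const_mul 2)) b']
        exact intervalIntegral.integral_congr fun r _ => by ring
      rw [e1]
      ring
    · filter_upwards [(hsemi i).hgi, (hC.semi i).hgi, (hsemi i).hY, (hC.semi i).hY]
        with ω a b a' b' t ht
      rw [intervalIntegral.integral_sub (intervalIntegrable_sub a le_rfl ht.1 ht.2)
          (intervalIntegrable_sub b le_rfl ht.1 ht.2), a' t ht, b' t ht]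
      ring
    · filter_upwards [hS.bdd, hC.bdd] with ω a b t ht
      have := enorm2_sub_le (Y t ω) (Y' t ω)
      have h1 := a t ht
      have h2 := b t ht
      have h3 : enorm2 (Y t ω - Y' t ω) ≤ 2 * K + 2 * K' := by linarith
      exact h3
    · filter_upwards [G.θi] with ω h
      refine ⟨h.1.const_mul 2, ?_⟩
      rw [intervalIntegral.integral_const_mul]
      linarith [h.2]
    · refine ae_of_all _ fun ω r hr => ?_
      set u := f r ω (Y r ω) (Z r ω) - f r ω (Y' r ω) (Z' r ω) with hu
      have h1 := (abs_le.1 (abs_dot_le u (Y r ω - Y' r ω))).1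
      have h2 := G.lip r ω (Y r ω) (Z r ω) (Y' r ω) (Z' r ω)
      have e1 : ∑ i, (2 * (f r ω (Y r ω) (Z r ω) i - f r ω (Y' r ω) (Z' r ω) i) *
          (Y r ω i - Y' r ω i) + (Z r ω i - Z' r ω i) ^ 2) =
          2 * (∑ i, u i * (Y r ω - Y' r ω) i) + enorm2 (Z r ω - Z' r ω) := by
        rw [Finset.sum_add_distrib, Finset.mul_sum]
        simp only [enorm2, hu, Pi.sub_apply, mul_assoc]
      have e2 : ∑ i, (Y r ω i - Y' r ω i) ^ 2 = enorm2 (Y r ω - Y' r ω) := by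
        simp only [enorm2, Pi.sub_apply]
      rw [e1, e2]
      rw [← Real.sq_sqrt (enorm2_nonneg (Y r ω - Y' r ω)),
        ← Real.sq_sqrt (enorm2_nonneg (Z r ω - Z' r ω))]
      set x := Real.sqrt (enorm2 (Y r ω - Y' r ω))
      set b := Real.sqrt (enorm2 (Z r ω - Z' r ω))
      have hx : 0 ≤ x := Real.sqrt_nonneg _
      have h3 := mul_le_mul_of_nonneg_right h2 hx
      nlinarith [sq_nonneg (b - 2 * (β r ω * x))]
  have hw : ∀ t ∈ Icc s T, ∀ ω, 1 ≤ Real.exp (∫ x in s..t, 2 * (α x ω + β x ω ^ 2)) := fun t ht ω =>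
    Real.one_le_exp (intervalIntegral.integral_nonneg ht.1 fun r _ =>
      mul_nonneg (by norm_num) (G.θ0 r ω))
  have hmain : ∀ t ∈ Icc s T, ∀ A, MeasurableSet[F t] A →
      ∫⁻ ω in A, ENNReal.ofReal (enorm2 (Y t ω - Y' t ω)) ∂μ +
        ∫⁻ ω in A, (∫⁻ r in Ioc t T, ENNReal.ofReal ((1 / 2) * enorm2 (Z r ω - Z' r ω))) ∂μ ≤ 0 := by
    intro t ht A hA
    refine le_trans (add_le_add ?_ ?_) ((hEn.main hsT ht hA).trans (le_of_eq ?_))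
    · exact lintegral_mono fun ω => ENNReal.ofReal_le_ofReal
        (le_mul_of_one_le_left (enorm2_nonneg _) (hw t ht ω))
    · refine lintegral_mono fun ω => setLIntegral_mono' measurableSet_Ioc fun r hr =>
        ENNReal.ofReal_le_ofReal (le_mul_of_one_le_left
          (mul_nonneg (by norm_num) (enorm2_nonneg _)) (hw r ⟨ht.1.trans hr.1.le, hr.2⟩ ω))
    · have h1 : ∫⁻ ω in A, ENNReal.ofReal (Real.exp (∫ x in s..T, 2 * (α x ω + β x ω ^ 2)) *
          ∑ i, (Y T ω i - Y' T ω i) ^ 2) ∂μ = 0 := by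
        refine (lintegral_congr_ae (ae_restrict_of_ae ?_)).trans lintegral_zero
        filter_upwards [hS.term, hC.term] with ω a b
        simp [a, b]
      rw [h1]
      simp
  have hYle : ∀ᵐ ω ∂μ, ∀ t ∈ Icc s T, enorm2 (Y t ω - Y' t ω) ≤ 0 := by
    refine ae_forall_le_of_cont ?_ fun t ht => ?_
    · filter_upwards [hS.cont hsT, hC.cont] with ω a b
      exact continuous_enorm2.comp_continuousOn (a.sub b)
    · refine ae_le_of_lint (F.le t) ?_ le_rfl fun A hA => ?_
      · let _ : MeasurableSpace Ω := F t
        exact continuous_enorm2.measurable.comp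
          (measurable_pi_lambda _ fun i => (hS.Ymeas i t ht).sub (hC.Ymeas i t ht))
      · simpa using le_trans le_self_add (hmain t ht A hA)
  refine ⟨?_, ?_⟩
  · filter_upwards [hYle] with ω h t ht using (eq_of_enorm2 (h t ht)).symm
  · have hB : Bmo μ F s T (fun r ω => (1 / 2) * enorm2 (Z r ω - Z' r ω)) 0 := fun t ht A hA => by
      simpa using le_trans le_add_self (hmain t ht A hA)
    filter_upwards [hB.ae_zero hsT (hZm.const_mul _)] with p hp
    exact (eq_of_enorm2 (by linarith)).symm

end uniqueness
end SLQ

namespace SLQ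

/-- **Lemma 3.2.** Let `ξ ∈ L^∞_{𝓕_T}(Ω;ℝᵏ)` and let the generator `f(t,ω,y,z)` satisfy
`f(·,0,0) ∈ L^∞_𝔽(Ω;L¹(s,T;ℝᵏ))` and a stochastic Lipschitz condition with coefficients
`f₁ ∈ L^∞_𝔽(Ω;L¹(s,T;ℝ))`, `f₂ ∈ L^∞_𝔽(Ω;L²(s,T;ℝ))`.  Then for every `p > 1` the BSDE
`dy = f(t,y,z)dt + z dW` on `[s,T]`, `y(T) = ξ`, admits one and only one adapted solution
`(y,z) ∈ L^∞_𝔽(Ω;C([s,T];ℝᵏ)) × L^p_𝔽(Ω;L²(s,T;ℝᵏ))`. -/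
theorem stmt4 {Ω : Type} {mΩ : MeasurableSpace Ω} (μ : Measure Ω) [IsProbabilityMeasure μ]
    (F : Filtration ℝ mΩ) (W : ℝ → Ω → ℝ) (hW : IsBrownian μ F W)
    {k : ℕ} (s T : ℝ) (hs : 0 ≤ s) (hsT : s < T)
    (ξ : Ω → Fin k → ℝ) (hξ : MemLinfRnd μ F T ξ)
    (f : ℝ → Ω → (Fin k → ℝ) → (Fin k → ℝ) → Fin k → ℝ)
    (hfmeas : ∀ y z : Fin k → ℝ,
      (∀ t i, Measurable[F t] fun ω => f t ω y z i) ∧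
      (∀ i, Measurable fun p : ℝ × Ω => f p.1 p.2 y z i))
    (hf0 : VecMemLinfL1 μ F s T (fun t ω => f t ω 0 0))
    (f₁ f₂ : ℝ → Ω → ℝ)
    (hf₁ : ScalMemLinfL1 μ F s T f₁) (hf₂ : ScalMemLinfL2 μ F s T f₂)
    (hLip : ∀ t ω, ∀ a₁ a₂ b₁ b₂ : Fin k → ℝ,
      Real.sqrt (enorm2 (f t ω a₁ a₂ - f t ω b₁ b₂)) ≤
        f₁ t ω * Real.sqrt (enorm2 (a₁ - b₁)) + f₂ t ω * Real.sqrt (enorm2 (a₂ - b₂))) :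
    ∀ p : ℝ, 1 < p →
      ∃ y z : ℝ → Ω → Fin k → ℝ,
        (SolvesBSDE μ F W s T (fun t ω => f t ω (y t ω) (z t ω)) ξ y z ∧
          VecMemLinfC μ F s T y ∧ VecMemLpL2 μ F s T p z) ∧
        ∀ y' z' : ℝ → Ω → Fin k → ℝ,
          SolvesBSDE μ F W s T (fun t ω => f t ω (y' t ω) (z' t ω)) ξ y' z' →
          VecMemLinfC μ F s T y' → VecMemLpL2 μ F s T p z' →
          (∀ᵐ ω ∂μ, ∀ t ∈ Icc s T, y' t ω = y t ω) ∧
          (∀ᵐ q ∂(((volume : Measure ℝ).restrict (Icc s T)).prod μ),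
            z' q.1 q.2 = z q.1 q.2) := by
  have hsT' := hsT.le
  obtain ⟨-, -, c₀, h0⟩ := hf0
  obtain ⟨h1m, h1j, c₁, h1⟩ := hf₁
  obtain ⟨h2m, h2j, c₂, h2⟩ := hf₂
  have ii : ∀ {g : ℝ → ℝ}, IntegrableOn g (Icc s T) → IntervalIntegrable g volume s T := fun hg =>
    (intervalIntegrable_iff_integrableOn_Icc_of_le hsT').2 hg
  have G : Gen μ F s T f (fun t ω => |f₁ t ω|) (fun t ω => |f₂ t ω|)
      (max 0 (max c₀ (max c₁ c₂))) := by
    refine ⟨hfmeas, fun t ω a₁ a₂ b₁ b₂ => (hLip t ω a₁ a₂ b₁ b₂).trans ?_, ?_, ?_,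
      fun _ _ => abs_nonneg _, fun _ _ => abs_nonneg _, le_max_left _ _, ?_, ?_, ?_⟩
    · exact add_le_add (mul_le_mul_of_nonneg_right (le_abs_self _) (Real.sqrt_nonneg _))
        (mul_le_mul_of_nonneg_right (le_abs_self _) (Real.sqrt_nonneg _))
    · exact Adp.comp_cont (φ := f₁) ⟨fun t _ => aesm_of_raw (h1m t), h1j⟩ continuous_abs
    · exact Adp.comp_cont (φ := f₂) ⟨fun t _ => aesm_of_raw (h2m t), h2j⟩ continuous_abs
    · filter_upwards [h0] with ω h
      exact ⟨ii h.1, h.2.trans (by simp)⟩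
    · filter_upwards [h1] with ω h
      exact ⟨ii h.1, h.2.trans (by simp)⟩
    · filter_upwards [h2] with ω h
      simp only [sq_abs]
      exact ⟨ii h.1, h.2.trans (by simp)⟩
  intro p hp
  obtain ⟨Y, Z, M, K, hS⟩ := G.exists_sol hW hs hsT' hξ
  refine ⟨Y, Z, ⟨hS.solves hW hs hsT', hS.linfC hsT', hS.lpL2 hsT' (by linarith)⟩, ?_⟩
  intro y' z' hsol hy' hz'
  obtain ⟨Y', M', K', hC, hYy⟩ := cand_of_solves G hW hs hsT' hsol hy' hz'
  obtain ⟨h3, h4⟩ := hC.unique G hW hs hsT' hS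
  refine ⟨?_, ?_⟩
  · filter_upwards [h3, hYy] with ω a b t ht
    rw [← b t ht, a t ht]
  · rw [Measure.restrict_congr_set Ioc_ae_eq_Icc.symm]
    exact h4

end SLQ
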